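/- There exist real numbers ξ > 0 and λ₀ > 0 with the following property. Let 0 < λ ≤ λ₀, let S be a set, and let R be a subset of the free group F(S) such that: every element of R is nontrivial and cyclically reduced; R is closed under inversion and under cyclic permutation; and every piece of R has length strictly less than λ·T(R), where T(R) is the infimum of the word lengths of the elements of R (the classical C''(λ)-small cancellation condition). Then the quotient group G = F(S)/⟨⟨R⟩⟩ of F(S) by the normal closure of R has ξ-uniform uniform exponential growth: every finitely generated subgroup of G is either virtually nilpotent, or satisfies ω(U) > ξ for every finite symmetric generating set U of that subgroup. -/

import Mathlib

/-!
Write `F` for the free group, `K` for the normal closure of the relators, `G = F / K`. The free group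
acts on its Cayley tree, and each conjugate of a relator translates a line, its axis. The small
cancellation condition says that distinct axes overlap in segments that are very short compared to
all the translation lengths. This is axiomatised in `Setup` : a left-invariant tree metric on `F`,
an invariant family of lines covering the tree and overlapping in less than `u`, and rotations
translating lines by at least `Lam * u` that generate `K`. `FreeGroup.setup` is the instance coming
from a presentation; the tree is scaled there to have edges of length `Λ ≈ 1 / λ`, `u` is the
length of the shortest relator, and letters that start no relator get axes of their own.

*Greendlinger's lemma.* A windmill argument (`WM`) shows that each nontrivial `k ∈ K` moves each point
`x` along at least `9/10` of a period of some rotation axis (`Setup.greendlinger`). The subtree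
generated so far is extended by all the lines touching it, and the new rotations generate, together
with the old group, a group with normal forms alternating between different lines.

*A hyperbolic metric on `G`.* In the chain metric `D` on `F` one travels along lines, a step of tree length
`k` along a line costing `min (log (1 + k / u)) (log (1 + M))`. Lines have bounded diameter, the steps
along a geodesic that cannot be shortcut behave additively, and `D` satisfies the four point
condition with the absolute error `6` (`Setup.D_fp`). Since a step longer than `M u` costs the same
however long it is, rotating a geodesic at such a step does not change its cost. With Greendlinger's lemma this
allows quadrilaterals in the quotient to be lifted (`Setup.lift4`), so that the quotient metric `Db`
satisfies the same four point condition (`Setup.Db_fp`).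

*The trichotomy.* Let `U` be a finite symmetric subset of `G`.
* Some element of `U` or `U * U` is loxodromic for `Db`. A conjugate of it has a shortest lift `h` whose axis in the
  tree projects well to the quotient (`Good`). If `v ∈ U` moves the axis off itself, bounded powers of
  `h` and of its conjugate by `v` generate a free semigroup (`Hyp.step3`, `Hyp.SC.inj`). Otherwise the two
  axes fellow travel for long, and then commutators lift to elements translating the axis of `h`
  (`Setup.Good.acyl`), which forces `v` to centralise or invert `h` (`Setup.Good.lox_norm`). The centraliser
  of `h` is nilpotent of class at most two (`Setup.Good.comm3`).
* No such element is loxodromic. Then the displacement of the midpoint of `1` and the longest `u ∈ U` is controlled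
  (`Hyp.step2`), and `Setup.apex` finds either a point moved by less than the cap, or a line which is almost
  preserved by all of `U`. In the first case, after conjugation, all of `U` lifts to elements much shorter than the
  relators. Two such lifts either generate a free subsemigroup of `F` containing many words that
  follow no relator for long, which therefore stay distinct in `G` (`Setup.grow_of_pos`), or one
  normalises the other (`Setup.low_pair`). In the second case all elements of `U` have lifts that stabilise the
  line (`Setup.apex_stab`), hence commute (`Setup.stab_comm`).

So either there are `2 ^ n` elements in the ball of radius `84 n` (`Grow U 84`), and the growth rate exceeds
`log 2 / 168` (`growth_gt`), or the group generated by `U` is virtually nilpotent.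
-/

open Pointwise Filter

noncomputable section

universe u v

/-- The Gromov product `(x,y)_t`. -/
def gromov {X : Type*} [MetricSpace X] (x y t : X) : ℝ :=
  (dist x t + dist y t - dist x y) / 2

/-- `X` is `δ`-hyperbolic (four point inequality). -/
def IsDeltaHyperbolic (X : Type*) [MetricSpace X] (δ : ℝ) : Prop :=
  ∀ x y z t : X, min (gromov x y t) (gromov y z t) - δ ≤ gromov x z t

/-- `X` is a geodesic metric space: any two points are joined by an isometric
embedding of a closed real interval. -/
def IsGeodesicSpace (X : Type*) [MetricSpace X] : Prop :=
  ∀ x y : X, ∃ f : ℝ → X, f 0 = x ∧ f (dist x y) = y ∧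
    ∀ s ∈ Set.Icc (0 : ℝ) (dist x y), ∀ t ∈ Set.Icc (0 : ℝ) (dist x y),
      dist (f s) (f t) = |s - t|

/-- The action of `G` on `X` is by isometries. -/
def IsometricAction (G X : Type*) [Group G] [MetricSpace X] [MulAction G X] : Prop :=
  ∀ g : G, Isometry fun x : X => g • x

/-- The action of `G` on `X` is `(κ,N)`-acylindrical (relative to the
hyperbolicity constant `δ`). -/
def AcylindricalAction (G X : Type*) [Group G] [MetricSpace X] [MulAction G X]
    (δ κ N : ℝ) : Prop :=
  ∀ x y : X, κ ≤ dist x y →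
    {g : G | dist (g • x) x ≤ 100 * δ ∧ dist (g • y) y ≤ 100 * δ}.Finite ∧
    ({g : G | dist (g • x) x ≤ 100 * δ ∧ dist (g • y) y ≤ 100 * δ}.ncard : ℝ) ≤ N

/-- `L(U,x)`, the `ℓ^∞`-energy of `U` at `x`. -/
def energyAt {G X : Type*} [Group G] [MetricSpace X] [MulAction G X]
    (U : Set G) (x : X) : ℝ :=
  sSup ((fun u : G => dist (u • x) x) '' U)

/-- `L(U)`, the `ℓ^∞`-energy of `U`. -/
def energy {G : Type*} (X : Type*) [Group G] [MetricSpace X] [MulAction G X]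
    (U : Set G) : ℝ :=
  sInf (Set.range fun x : X => energyAt U x)

/-- The stable translation length `‖g‖^∞`, computed at the point `x` (for an
isometric action, by Fekete's subadditive lemma this infimum equals the limit of
`d(gⁿx,x)/n` and is independent of `x`). -/
def stableLength {G X : Type*} [Group G] [MetricSpace X] [MulAction G X]
    (g : G) (x : X) : ℝ :=
  ⨅ n : ℕ+, dist ((g ^ (n : ℕ)) • x) x / ((n : ℕ) : ℝ)

/-- `g` is loxodromic for the action on `X`. -/
def IsLoxodromic {G : Type*} (X : Type*) [Group G] [MetricSpace X] [MulAction G X]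
    (g : G) : Prop :=
  ∀ x : X, 0 < stableLength g x

/-- The translation length `‖g‖`. -/
def translationLength {G : Type*} (X : Type*) [Group G] [MetricSpace X] [MulAction G X]
    (g : G) : ℝ :=
  sInf (Set.range fun x : X => dist (g • x) x)

/-- The axis of `g`. -/
def axisOf {G X : Type*} [Group G] [MetricSpace X] [MulAction G X]
    (δ : ℝ) (g : G) : Set X :=
  {x : X | dist (g • x) x ≤ translationLength X g + 8 * δ}

/-- The exponential growth rate `ω(U) = limsup (1/n) log |Uⁿ|`. -/
def growthRate {G : Type*} [Group G] (U : Set G) : ℝ :=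
  limsup (fun n : ℕ => Real.log ((U ^ n).ncard : ℝ) / (n : ℝ)) atTop

/-- `S` is `α`-reduced at `p`. -/
def ReducedAt {G X : Type*} [Group G] [MetricSpace X] [MulAction G X]
    (δ α : ℝ) (S : Set G) (p : X) : Prop :=
  S ∩ S⁻¹ = ∅ ∧
  ∀ u₁ ∈ S ∪ S⁻¹, ∀ u₂ ∈ S ∪ S⁻¹, u₁ ≠ u₂ →
    gromov (u₁ • p) (u₂ • p) p <
      min (dist (u₁ • p) p) (dist (u₂ • p) p) / 2 - α - 50 * δ

/-- A group is virtually cyclic if it has a cyclic subgroup of finite index. -/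
def VirtuallyCyclic (H : Type*) [Group H] : Prop :=
  ∃ K : Subgroup H, IsCyclic K ∧ K.FiniteIndex

/-- A group is virtually nilpotent if it has a nilpotent subgroup of finite index. -/
def VirtuallyNilpotent (H : Type*) [Group H] : Prop :=
  ∃ K : Subgroup H, Group.IsNilpotent K ∧ K.FiniteIndex

/-- An `L`-local `(1,δ)`-quasi-geodesic line. -/
def IsLocalQuasiGeodesic {X : Type*} [MetricSpace X] (L δ : ℝ) (γ : ℝ → X) : Prop :=
  ∀ s t : ℝ, |s - t| ≤ L → dist (γ s) (γ t) ≤ |s - t| ∧ |s - t| ≤ dist (γ s) (γ t) + δ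

/-- `Y` is `σ`-quasi-convex. -/
def SigmaQuasiConvex {X : Type*} [MetricSpace X] (σ : ℝ) (Y : Set X) : Prop :=
  ∀ x : X, ∀ y ∈ Y, ∀ y' ∈ Y, Metric.infDist x Y ≤ gromov y y' x + σ

/-- `y` is a `δ`-projection of `x` on `Y`. -/
def IsDProj {X : Type*} [MetricSpace X] (δ : ℝ) (Y : Set X) (x y : X) : Prop :=
  y ∈ Y ∧ dist x y ≤ Metric.infDist x Y + δ

/-- `l` is a reduced word over `U ∪ U⁻¹`. -/
def IsWordOver {G : Type*} [Group G] (U : Set G) (l : List G) : Prop :=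
  (∀ a ∈ l, a ∈ U ∪ U⁻¹) ∧ l.Chain' fun a b => b ≠ a⁻¹

/-- `l` is a `τ`-shortening word over `Y` (relative to `U` and `p`). -/
def IsShorteningWord {G X : Type*} [Group G] [MetricSpace X] [MulAction G X]
    (δ τ : ℝ) (U : Set G) (p : X) (Y : Set X) (l : List G) : Prop :=
  l ≠ [] ∧ IsWordOver U l ∧
  ∃ y₀ y₁ : X, IsDProj δ Y p y₀ ∧ IsDProj δ Y (l.prod • p) y₁ ∧
    τ < dist y₀ y₁ ∧
    (∀ a ∈ l.head?, dist p y₀ ≤ dist (a • p) p / 2 - 200 * δ) ∧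
    (∀ a ∈ l.getLast?, dist (l.prod • p) y₁ ≤ dist (a • p) p / 2 - 200 * δ)

/-- `l` is a `τ`-shortening-free word relative to the family `Ys`. -/
def ShorteningFreeWord {G X : Type*} [Group G] [MetricSpace X] [MulAction G X]
    (δ τ : ℝ) (U : Set G) (p : X) (Ys : Set (Set X)) (l : List G) : Prop :=
  IsWordOver U l ∧
  ∀ Y ∈ Ys, ∀ l₀ l₁ l₂ : List G, l = l₀ ++ l₁ ++ l₂ → ¬ IsShorteningWord δ τ U p Y l₁

/-- The word length of an element of a free group. -/
def fgNorm {α : Type*} (w : FreeGroup α) : ℕ :=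
  letI := Classical.decEq α
  w.toWord.length

/-- `w` is a prefix of `r` in the free group. -/
def FGPrefix {α : Type*} (w r : FreeGroup α) : Prop :=
  fgNorm r = fgNorm w + fgNorm (w⁻¹ * r)

/-- `r'` is a cyclic permutation of `r`. -/
def IsCyclicPerm {α : Type*} (r r' : FreeGroup α) : Prop :=
  ∃ w v : FreeGroup α, r = w * v ∧ fgNorm r = fgNorm w + fgNorm v ∧
    r' = v * w ∧ fgNorm r' = fgNorm v + fgNorm w

/-- `q` is a piece of the set of relators `R`. -/
def IsPiece {α : Type*} (R : Set (FreeGroup α)) (q : FreeGroup α) : Prop :=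
  q ≠ 1 ∧ ∃ r₁ ∈ R, ∃ r₂ ∈ R, r₁ ≠ r₂ ∧ FGPrefix q r₁ ∧ FGPrefix q r₂

/-- `ξ`-uniform uniform exponential growth: every finitely generated subgroup is
either virtually nilpotent or has `ξ`-uniform exponential growth. -/
def UUEG (ξ : ℝ) (Q : Type*) [Group Q] : Prop :=
  ∀ H : Subgroup Q, H.FG →
    (VirtuallyNilpotent H ∨
      ∀ U : Set H, U.Finite → U⁻¹ = U → Subgroup.closure U = ⊤ → ξ < growthRate U)

/-! ### Tree metrics -/

/-- An integer-valued tree metric on the vertices of a tree all of whose edges have length `s`: a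
`0`-hyperbolic metric (`fp`) with medians (`med`) in which distinct points are joined by edge
paths (`step`). -/
structure TreeD (V : Type u) where
  d : V → V → ℕ
  s : ℕ
  spos : 0 < s
  self : ∀ x, d x x = 0
  eq_of : ∀ {x y}, d x y = 0 → x = y
  comm : ∀ x y, d x y = d y x
  tri : ∀ x y z, d x z ≤ d x y + d y z
  fp : ∀ x y z t, d x z + d y t ≤ d x y + d z t ∨ d x z + d y t ≤ d x t + d y z
  med : ∀ x y z, ∃ m, d x m + d m y = d x y ∧ d y m + d m z = d y z ∧ d x m + d m z = d x z
  step : ∀ {x y}, x ≠ y → ∃ z, d x z = s ∧ s + d z y = d x y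

namespace TreeD
variable {V : Type u} (T : TreeD V)

/-- `c` lies on the segment `[x,y]`. -/
def B (x c y : V) : Prop := T.d x c + T.d c y = T.d x y

/-- Convex subsets. -/
def Cvx (W : Set V) : Prop := ∀ x ∈ W, ∀ y ∈ W, ∀ c, T.B x c y → c ∈ W

/-- `g` is the gate (nearest-point projection) of `x` in `W`. -/
def Gt (W : Set V) (x g : V) : Prop := g ∈ W ∧ ∀ w ∈ W, T.B x g w

variable {T}
theorem B.symm {x c y} (h : T.B x c y) : T.B y c x := by
  unfold B at *; grind [T.comm]
theorem B_self_left (x y) : T.B x x y := by simp [B, T.self]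
theorem B_self_right (x y) : T.B x y y := by simp [B, T.self]
theorem B.uniq {x y c c'} (h : T.B x c y) (h' : T.B x c' y) (e : T.d x c = T.d x c') : c = c' := by
  apply T.eq_of
  unfold B at *
  have := T.fp x c y c'
  grind [T.comm]
theorem B.dist_of_le {x y c c'} (h : T.B x c y) (h' : T.B x c' y) (e : T.d x c ≤ T.d x c') :
    T.d x c + T.d c c' = T.d x c' := by
  unfold B at *
  have := T.fp x c y c'
  have := T.tri x c c'
  grind [T.comm]
theorem B.mid {x y c c'} (h : T.B x c y) (h' : T.B x c' y) (e : T.d x c ≤ T.d x c') :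
    T.B c c' y := by
  have := h.dist_of_le h' e
  unfold B at *
  omega
/-- A segment is covered by the segments from a third point. -/
theorem B.cover {a c b} (h : T.B a c b) (w) : T.B a c w ∨ T.B w c b := by
  unfold B at *
  have := T.fp a c b w
  have := T.tri a c w
  have := T.tri w c b
  grind [T.comm]
theorem B.left {x c y e} (h : T.B x c y) (h' : T.B x e c) : T.B x e y := by
  unfold B at *
  have := T.tri x e y
  have := T.tri e c y
  omega
theorem B.right {x c y e} (h : T.B x c y) (h' : T.B c e y) : T.B x e y :=
  (h.symm.left h'.symm).symm
/-- If `e ∈ [x,c]` and `c ∈ [x,y]` then `c ∈ [e,y]`. -/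
theorem B.drop {x c y e} (h : T.B x c y) (h' : T.B x e c) : T.B e c y := by
  unfold B at *
  have := T.tri x e y
  have := T.tri e c y
  omega
theorem B.anti {x c y} (h : T.B x c y) (h' : T.B x y c) : c = y := by
  apply T.eq_of
  unfold B at *
  have := T.comm y c
  omega
theorem ne_iff {x y} : x ≠ y ↔ 0 < T.d x y := by
  constructor
  · intro h; by_contra h'; exact h (T.eq_of (by omega))
  · rintro h rfl; rw [T.self] at h; omega

theorem Cvx.gate {W : Set V} (h : T.Cvx W) (hne : W.Nonempty) (x) : ∃ g, T.Gt W x g := by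
  obtain ⟨g, hg, hm⟩ : ∃ g ∈ W, ∀ w ∈ W, T.d x g ≤ T.d x w := by
    have hne' : ((fun w => T.d x w) '' W).Nonempty := hne.image _
    obtain ⟨g, hg, e⟩ := Nat.sInf_mem hne'
    refine ⟨g, hg, fun w hw => ?_⟩
    have : sInf ((fun w => T.d x w) '' W) ≤ T.d x w := Nat.sInf_le ⟨w, hw, rfl⟩
    simp only at e; omega
  refine ⟨g, hg, fun w hw => ?_⟩
  obtain ⟨m, h1, h2, h3⟩ := T.med x g w
  have hmW : m ∈ W := h g hg w hw m h2
  have := hm m hmW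
  have : m = g := T.eq_of (by omega)
  subst this
  exact h3
theorem Gt.uniq {W : Set V} {x g g'} (h : T.Gt W x g) (h' : T.Gt W x g') : g = g' := by
  have h1 := h.2 _ h'.1
  have h2 := h'.2 _ h.1
  exact h1.anti h2
theorem Gt.of_mem {W : Set V} {x} (h : x ∈ W) : T.Gt W x x := ⟨h, fun _ _ => B_self_left _ _⟩
theorem Gt.eq_of_mem {W : Set V} {x g} (h : T.Gt W x g) (hx : x ∈ W) : g = x := h.uniq (.of_mem hx)
/-- If two gates differ, the geodesic runs through both of them. -/
theorem Gt.path {W : Set V} {x y gx gy} (hx : T.Gt W x gx) (hy : T.Gt W y gy) (hne : gx ≠ gy) :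
    T.d x y = T.d x gx + T.d gx gy + T.d gy y := by
  have h1 := hx.2 _ hy.1
  have h2 := hy.2 _ hx.1
  rw [ne_iff (T := T)] at hne
  unfold B at *
  have := T.fp x y gy gx
  have := T.tri x gx y
  have := T.tri gx gy y
  grind [T.comm]
theorem Gt.pathB {W : Set V} {x y gx gy} (hx : T.Gt W x gx) (hy : T.Gt W y gy) (hne : gx ≠ gy) :
    T.B x gx y ∧ T.B x gy y ∧ T.B gx gy y ∧ T.B x gx gy := by
  have h := hx.path hy hne
  have h1 := hx.2 _ hy.1
  have h2 := hy.2 _ hx.1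
  unfold B at *
  grind [T.comm]
theorem Gt.mono {W : Set V} {x y c gx gy gc} (hW : T.Cvx W) (hx : T.Gt W x gx) (hy : T.Gt W y gy)
    (hc : T.Gt W c gc) (h : T.B x c y) : T.B gx gc gy := by
  by_cases e : gx = gc
  · subst e; exact B_self_left _ _
  by_cases e' : gc = gy
  · subst e'; exact B_self_right _ _
  by_cases e'' : gx = gy
  · subst e''
    have := hx.path hc e
    have := hy.path hc e
    have := T.tri x gx y
    have e := (ne_iff (T := T)).1 e
    unfold B at *
    grind [T.comm]
  have := hx.path hc e
  have := hc.path hy e'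
  have := hx.path hy e''
  have := T.tri gx gc gy
  unfold B at *
  omega
/-- The gate of a point of `W` into a convex set meeting `W` stays in `W`. -/
theorem Gt.mem {W A : Set V} {x g} (hW : T.Cvx W) (hx : x ∈ W) (h : T.Gt A x g)
    (hne : (W ∩ A).Nonempty) : g ∈ W := by
  obtain ⟨a, ha, ha'⟩ := hne
  exact hW x hx a ha g (h.2 a ha')
theorem Gt.le {W : Set V} {x y gx gy} (hx : T.Gt W x gx) (hy : T.Gt W y gy) :
    T.d gx gy ≤ T.d x y := by
  by_cases e : gx = gy
  · subst e; simp [T.self]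
  · have := hx.path hy e; omega
theorem Cvx.union {A W : Set V} (hA : T.Cvx A) (hW : T.Cvx W) (hne : (A ∩ W).Nonempty) :
    T.Cvx (A ∪ W) := by
  obtain ⟨w, hwA, hwW⟩ := hne
  rintro x (hx | hx) y (hy | hy) c hc
  · exact .inl (hA _ hx _ hy _ hc)
  · rcases hc.cover w with h | h
    · exact .inl (hA _ hx _ hwA _ h)
    · exact .inr (hW _ hwW _ hy _ h)
  · rcases hc.cover w with h | h
    · exact .inr (hW _ hx _ hwW _ h)
    · exact .inl (hA _ hwA _ hy _ h)
  · exact .inr (hW _ hx _ hy _ hc)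
theorem Cvx.seg (x y) : T.Cvx {c | T.B x c y} := by
  intro a ha b hb c hc
  simp only [Set.mem_ofPred_eq] at *
  rcases le_total (T.d x a) (T.d x b) with h | h
  · exact (ha.right ((ha.mid hb h).left hc))
  · exact (hb.right ((hb.mid ha h).left hc.symm))
/-- Geodesics have points at every multiple of `s`. -/
theorem exists_pt {x y} (k : ℕ) (h : T.s * k ≤ T.d x y) : ∃ z, T.d x z = T.s * k ∧ T.B x z y := by
  induction k generalizing x with
  | zero => exact ⟨x, by simp [T.self], B_self_left _ _⟩
  | succ k ih =>
    have hs := T.spos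
    have hne : x ≠ y := by
      rw [ne_iff (T := T)]; nlinarith
    obtain ⟨z, h1, h2⟩ := T.step hne
    obtain ⟨w, h3, h4⟩ := ih (x := z) (by rw [mul_add] at h; omega)
    have hz : T.B x z y := by unfold B; omega
    have h5 := hz.right h4
    refine ⟨w, ?_, h5⟩
    have := (hz.dist_of_le h5 (by unfold B at *; omega))
    rw [mul_add]; omega
theorem dvd (x y) : T.s ∣ T.d x y := by
  induction h : T.d x y using Nat.strong_induction_on generalizing x with
  | _ n ih =>
    rcases Nat.eq_zero_or_pos n with h0 | h0
    · subst h0; simp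
    · have hne : x ≠ y := by rw [ne_iff (T := T)]; omega
      obtain ⟨z, h1, h2⟩ := T.step hne
      have := T.spos
      have := ih (T.d z y) (by omega) z rfl
      rw [← h, ← h2]; exact dvd_add (dvd_refl _) this

end TreeD

/-! ### Lines and rotations -/

/-- The geometric data: a group `F` with a left-invariant tree metric, an invariant family of lines
(bi-infinite geodesics) covering the edges, with overlaps shorter than `u`, and an invariant family
of rotations. `Rot g A n` says that `g` is a rotation translating the line `A` by `n`, which is at
least `Lam * u`; a line has at most one rotation, up to inversion. `M` is the tree length, in units
of `u`, from which on the cost of a step along a line is constant. -/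
structure Setup (F : Type u) [Group F] extends TreeD F where
  inv : ∀ g x y, d (g * x) (g * y) = d x y
  u : ℕ
  Lam : ℕ
  upos : 0 < u
  big : 1000 ≤ Lam
  M : ℕ
  hM : 40 * (M + 2) ≤ Lam
  lines : Set (Set F)
  param : ∀ A ∈ lines, ∃ γ : ℤ → F, (∀ i j, (d (γ i) (γ j) : ℤ) = s * |i - j|) ∧ Set.range γ = A
  smul_line : ∀ g : F, ∀ A ∈ lines, g • A ∈ lines
  ov : ∀ A ∈ lines, ∀ B ∈ lines, A ≠ B → ∀ p ∈ A, p ∈ B → ∀ q ∈ A, q ∈ B → d p q < u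
  cov : ∀ p q, d p q = s → ∃ A ∈ lines, p ∈ A ∧ q ∈ A
  Rot : F → Set F → ℕ → Prop
  rot_line : ∀ {g A n}, Rot g A n → A ∈ lines
  rot_tr : ∀ {g A n}, Rot g A n → ∃ γ : ℤ → F, (∀ i j, (d (γ i) (γ j) : ℤ) = s * |i - j|) ∧
    Set.range γ = A ∧ ∃ m : ℕ, n = s * m ∧ ∀ i, g * γ i = γ (i + m)
  rot_len : ∀ {g A n}, Rot g A n → Lam * u ≤ n
  rot_conj : ∀ {g A n} (f : F), Rot g A n → Rot (f * g * f⁻¹) (f • A) n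
  rot_inv : ∀ {g A n}, Rot g A n → Rot g⁻¹ A n
  rot_uniq : ∀ {g g' A n n'}, Rot g A n → Rot g' A n' → g' = g ∨ g' = g⁻¹
  tf : ∀ f : F, f * f = 1 → f = 1

namespace Setup
open TreeD
variable {F : Type u} [Group F] (T : Setup F)

/-- The normal subgroup generated by the rotations. -/
def K : Subgroup F := Subgroup.closure {g | ∃ A n, T.Rot g A n}

variable {T}

theorem mem_sm {g x : F} {A : Set F} : x ∈ g • A ↔ g⁻¹ * x ∈ A := by
  rw [Set.mem_smul_set_iff_inv_smul_mem, smul_eq_mul]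
theorem mul_mem_sm {g x : F} {A : Set F} : g * x ∈ g • A ↔ x ∈ A := by
  rw [mem_sm, inv_mul_cancel_left]

theorem inv' (g x y : F) : T.d (g⁻¹ * x) y = T.d x (g * y) := by
  rw [← T.inv g, mul_inv_cancel_left]

theorem B_sm {g x c y : F} : T.B (g * x) (g * c) (g * y) ↔ T.B x c y := by
  simp [TreeD.B, T.inv]

theorem cvx_sm {g : F} {W : Set F} (h : T.Cvx W) : T.Cvx (g • W) := by
  intro x hx y hy c hc
  rw [mem_sm] at *
  exact h _ hx _ hy _ (B_sm.2 hc)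

theorem gt_sm {g x y : F} {W : Set F} (h : T.Gt W x y) : T.Gt (g • W) (g * x) (g * y) := by
  refine ⟨mul_mem_sm.2 h.1, fun w hw => ?_⟩
  rw [mem_sm] at hw
  have := (B_sm (T := T) (g := g)).2 (h.2 _ hw)
  rwa [mul_inv_cancel_left] at this

theorem line_cvx {A : Set F} (hA : A ∈ T.lines) : T.Cvx A := by
  obtain ⟨γ, h, rfl⟩ := T.param A hA
  rintro _ ⟨i, rfl⟩ _ ⟨j, rfl⟩ c hc
  obtain ⟨k, hk⟩ := T.dvd (γ i) c
  have hs := T.spos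
  have hij := h i j
  have hle : T.d (γ i) c ≤ T.d (γ i) (γ j) := by unfold TreeD.B at hc; omega
  have hk' : (k : ℤ) ≤ |i - j| := by
    have : (T.s : ℤ) * k ≤ T.s * |i - j| := by rw [← hij]; exact_mod_cast hk ▸ hle
    exact le_of_mul_le_mul_left this (by exact_mod_cast hs)
  have key : ∀ l : ℤ, |i - l| = k → |i - l| + |l - j| = |i - j| → c = γ l := by
    intro l h1 h2
    refine (hc.uniq (c' := γ l) ?_ ?_)
    · have := h i l
      have := h l j
      unfold TreeD.B
      zify
      rw [h, h, h, ← h2]; ring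
    · zify; rw [h, h1, hk]; push_cast; ring
  rcases le_total i j with hl | hl
  · exact ⟨i + k, (key _ (by simp) (by
      rw [abs_of_nonpos (a := i - j) (by omega)] at hk' ⊢
      rw [abs_of_nonpos (a := i + k - j) (by omega), abs_of_nonpos (by omega)]; ring)).symm⟩
  · exact ⟨i - k, (key _ (by simp) (by
      rw [abs_of_nonneg (a := i - j) (by omega)] at hk' ⊢
      rw [abs_of_nonneg (a := i - k - j) (by omega), abs_of_nonneg (by omega)]; ring)).symm⟩

theorem line_ne {A : Set F} (hA : A ∈ T.lines) : A.Nonempty := by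
  obtain ⟨γ, h, rfl⟩ := T.param A hA
  exact ⟨γ 0, 0, rfl⟩

theorem line_gate {A : Set F} (hA : A ∈ T.lines) (x) : ∃ g, T.Gt A x g :=
  (line_cvx hA).gate (line_ne hA) x

theorem line_unbdd {A : Set F} (hA : A ∈ T.lines) (k : ℕ) : ∃ p ∈ A, ∃ q ∈ A, k ≤ T.d p q := by
  obtain ⟨γ, h, rfl⟩ := T.param A hA
  refine ⟨γ 0, ⟨_, rfl⟩, γ k, ⟨_, rfl⟩, ?_⟩
  have := h 0 k
  have hs := T.spos
  zify
  rw [this]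
  simp
  nlinarith [Int.natCast_nonneg k, (by exact_mod_cast hs : (0:ℤ) < T.s)]

theorem rot_zpow {g : F} {A : Set F} {n : ℕ} (h : T.Rot g A n) (j : ℤ) :
    (∀ p ∈ A, g ^ j * p ∈ A ∧ (T.d p (g ^ j * p) : ℤ) = n * |j|) := by
  obtain ⟨γ, h1, h2, m, h3, h4⟩ := T.rot_tr h
  have key : ∀ j : ℤ, ∀ i, g ^ j * γ i = γ (i + m * j) := by
    intro j
    induction j using Int.induction_on with
    | zero => simp
    | succ j ih => intro i; rw [zpow_add_one, mul_assoc, h4, ih]; congr 1; ring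
    | pred j ih =>
      intro i
      have := h4 (i - m)
      rw [zpow_sub_one, mul_assoc]
      have : g⁻¹ * γ i = γ (i - m) := by rw [inv_mul_eq_iff_eq_mul, this]; congr 1; ring
      rw [this, ih]; congr 1; ring
  subst h2
  rintro _ ⟨i, rfl⟩
  rw [key]
  refine ⟨⟨_, rfl⟩, ?_⟩
  rw [h1, h3]
  simp [abs_mul]
  ring

theorem rot_pos {g : F} {A : Set F} {n : ℕ} (h : T.Rot g A n) : 1000 * T.u ≤ n ∧ 0 < n := by
  have := T.rot_len h
  have := T.big
  have := T.upos
  have : 1000 * T.u ≤ T.Lam * T.u := Nat.mul_le_mul_right _ T.big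
  omega

theorem rot_smul {g : F} {A : Set F} {n : ℕ} (h : T.Rot g A n) (j : ℤ) : g ^ j • A = A := by
  ext x
  rw [mem_sm]
  constructor
  · intro hx
    have := (rot_zpow h j _ hx).1
    simpa using this
  · intro hx
    have := (rot_zpow h (-j) _ hx).1
    simpa using this

/-! ### The windmill -/

/-- Subgroup generated by rotations with axis inside `W`. -/
def KW (T : Setup F) (W : Set F) : Subgroup F :=
  Subgroup.closure {g | ∃ A n, T.Rot g A n ∧ A ⊆ W}

/-- The conclusion of Greendlinger's lemma for `k` at `x`: the projections of `x` and `k x` to the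
axis of some rotation are at least `9/10` of its translation length apart. -/
def Arc (T : Setup F) (x k : F) : Prop :=
  ∃ g A n, T.Rot g A n ∧ ∃ p q, T.Gt A x p ∧ T.Gt A (k * x) q ∧ 9 * n ≤ 10 * T.d p q

/-- A windmill around `x0`: a convex set `W` preserved by the rotations of the lines inside `W`, which meets the
other lines in at most `2 * u`, and for whose group Greendlinger's lemma holds at `x0`. -/
structure WM (T : Setup F) (x0 : F) (W : Set F) : Prop where
  cvx : T.Cvx W
  mem : x0 ∈ W
  stab : ∀ k ∈ T.KW W, ∀ w ∈ W, k * w ∈ W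
  small : ∀ A ∈ T.lines, ¬ A ⊆ W → ∀ p ∈ A, p ∈ W → ∀ q ∈ A, q ∈ W → T.d p q ≤ 2 * T.u
  gr : ∀ k ∈ T.KW W, k ≠ 1 → T.Arc x0 k

/-- Lines touching `W` without being contained in it. -/
def NL (T : Setup F) (W : Set F) : Set (Set F) :=
  {A | A ∈ T.lines ∧ ¬ A ⊆ W ∧ ∃ a ∈ A, a ∈ W}

/-- `τ` is a nontrivial power of a rotation of the line `A` touching `W`. -/
def Tw (T : Setup F) (W : Set F) (A : Set F) (τ : F) : Prop :=
  A ∈ T.NL W ∧ ∃ g n, T.Rot g A n ∧ ∃ j : ℤ, j ≠ 0 ∧ τ = g ^ j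

/-- Nonempty normal forms of given length, with first line `A` and last line `Z`. -/
inductive NF (T : Setup F) (W : Set F) : ℕ → Set F → Set F → F → Prop
  | one {A τ} : T.Tw W A τ → NF T W 0 A A τ
  | cons {A B Z τ h n} : T.Tw W A τ → NF T W n B Z h → A ≠ B → NF T W (n + 1) A Z (τ * h)

/-- The subgroup generated at the next stage. -/
def KN (T : Setup F) (W : Set F) : Subgroup F :=
  Subgroup.closure ({g | ∃ A n, T.Rot g A n ∧ (A ⊆ W ∨ A ∈ T.NL W)})

/-- The next stage of the windmill. -/
def nextW (T : Setup F) (W : Set F) : Set F :=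
  {x | ∃ k ∈ T.KN W, k⁻¹ * x ∈ W ∨ ∃ A ∈ T.NL W, k⁻¹ * x ∈ A}

section step
variable {x0 : F} {W : Set F}

theorem Tw.smul {A τ} (h : T.Tw W A τ) : τ • A = A := by
  obtain ⟨_, g, n, hg, j, _, rfl⟩ := h
  exact rot_smul hg j
theorem Tw.line {A τ} (h : T.Tw W A τ) : A ∈ T.lines := h.1.1
theorem Tw.mem {A τ x} (h : T.Tw W A τ) (hx : x ∈ A) : τ * x ∈ A := by
  have := (mul_mem_sm (g := τ)).2 hx
  rwa [h.smul] at this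
theorem Tw.mem' {A τ x} (h : T.Tw W A τ) (hx : x ∈ A) : τ⁻¹ * x ∈ A := by
  rw [← h.smul] at hx
  exact mem_sm.1 hx
theorem Tw.KN {A τ} (h : T.Tw W A τ) : τ ∈ T.KN W := by
  obtain ⟨hA, g, n, hg, j, _, rfl⟩ := h
  exact Subgroup.zpow_mem _ (Subgroup.subset_closure (show g ∈ {g | ∃ A n, T.Rot g A n ∧ (A ⊆ W ∨ A ∈ T.NL W)} from ⟨A, n, hg, .inr hA⟩)) _
theorem NF.tw {n A Z h} (H : NF T W n A Z h) : A ∈ T.NL W := by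
  cases H with
  | one h => exact h.1
  | cons h _ _ => exact h.1
theorem Tw.far {A τ x} (h : T.Tw W A τ) (hx : x ∈ A) :
    ∃ g n, T.Rot g A n ∧ n ≤ T.d x (τ * x) := by
  obtain ⟨_, g, n, hg, j, hj, rfl⟩ := h
  refine ⟨g, n, hg, ?_⟩
  have := (rot_zpow hg j x hx).2
  have h1 : 1 ≤ |j| := Int.one_le_abs hj
  zify; rw [this]; nlinarith [Int.natCast_nonneg n]

theorem NF.KN {n A Z h} (H : NF T W n A Z h) : h ∈ T.KN W := by
  induction H with
  | one h => exact h.KN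
  | cons h _ _ ih => exact mul_mem h.KN ih

theorem KW_le_KN : T.KW W ≤ T.KN W := by
  apply Subgroup.closure_mono
  rintro g ⟨A, n, h1, h2⟩
  exact ⟨A, n, h1, .inl h2⟩


theorem WM.smulW (H : WM T x0 W) {k} (hk : k ∈ T.KW W) : k • W = W := by
  ext x
  rw [mem_sm]
  exact ⟨fun h => by simpa using H.stab k hk _ h, fun h => H.stab _ (inv_mem hk) _ h⟩

theorem WM.smulNL (H : WM T x0 W) {k} (hk : k ∈ T.KW W) {A} (hA : A ∈ T.NL W) : k • A ∈ T.NL W := by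
  obtain ⟨h1, h2, a, h3, h4⟩ := hA
  refine ⟨T.smul_line _ _ h1, fun hs => h2 ?_, k * a, mul_mem_sm.2 h3, H.stab _ hk _ h4⟩
  rw [← H.smulW hk] at hs
  exact Set.smul_set_subset_smul_set_iff.1 hs

theorem WM.tw_conj (H : WM T x0 W) {k} (hk : k ∈ T.KW W) {A τ} (h : T.Tw W A τ) :
    T.Tw W (k • A) (k * τ * k⁻¹) := by
  obtain ⟨hA, g, n, hg, j, hj, rfl⟩ := h
  refine ⟨H.smulNL hk hA, _, n, T.rot_conj k hg, j, hj, ?_⟩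
  rw [conj_zpow]

theorem WM.nf_conj (H : WM T x0 W) {k} (hk : k ∈ T.KW W) {n A Z h} (hN : NF T W n A Z h) :
    NF T W n (k • A) (k • Z) (k * h * k⁻¹) := by
  induction hN with
  | one h => exact .one (H.tw_conj hk h)
  | cons h _ hne ih =>
    have := NF.cons (H.tw_conj hk h) ih (by simpa using hne)
    convert this using 1
    group

theorem Tw.merge {A τ σ} (h : T.Tw W A τ) (h' : T.Tw W A σ) : τ * σ = 1 ∨ T.Tw W A (τ * σ) := by
  obtain ⟨hA, g, n, hg, j, hj, rfl⟩ := h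
  obtain ⟨_, g', n', hg', j', hj', rfl⟩ := h'
  have : ∃ l : ℤ, g ^ j * g' ^ j' = g ^ l := by
    rcases T.rot_uniq hg hg' with rfl | rfl
    · exact ⟨j + j', (zpow_add _ _ _).symm⟩
    · exact ⟨j - j', by rw [inv_zpow', ← zpow_add]; rfl⟩
  obtain ⟨l, hl⟩ := this
  by_cases h0 : l = 0
  · left; rw [hl, h0, zpow_zero]
  · right; exact ⟨hA, g, n, hg, l, h0, hl⟩

/-- The group of the next stage is the product of the normal forms and the group of `W`. -/
theorem WM.normal (H : WM T x0 W) {k} (hk : k ∈ T.KN W) :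
    k ∈ T.KW W ∨ ∃ n A Z h, NF T W n A Z h ∧ ∃ g ∈ T.KW W, k = h * g := by
  -- left multiplication of a normal form by a single twist
  have mulTw : ∀ {A τ k}, T.Tw W A τ →
      (k ∈ T.KW W ∨ ∃ n A Z h, NF T W n A Z h ∧ ∃ g ∈ T.KW W, k = h * g) →
      (τ * k ∈ T.KW W ∨ ∃ n A Z h, NF T W n A Z h ∧ ∃ g ∈ T.KW W, τ * k = h * g) := by
    intro A τ k hτ hk
    rcases hk with hk | ⟨n, B, Z, h, hN, g, hg, rfl⟩
    · exact .inr ⟨_, _, _, _, .one hτ, k, hk, rfl⟩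
    by_cases e : A = B
    · subst e
      cases hN with
      | one h' =>
        rcases hτ.merge h' with e | e
        · left; rwa [← mul_assoc, e, one_mul]
        · right; exact ⟨_, _, _, _, .one e, g, hg, by rw [mul_assoc]⟩
      | cons h' hN hne =>
        rcases hτ.merge h' with e | e
        · right
          exact ⟨_, _, _, _, hN, g, hg, by rw [← mul_assoc, ← mul_assoc, e, one_mul]⟩
        · right; exact ⟨_, _, _, _, .cons e hN hne, g, hg, by simp only [mul_assoc]⟩
    · right; exact ⟨_, _, _, _, .cons hτ hN e, g, hg, by rw [mul_assoc]⟩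
  have mulR : ∀ g k, (∃ A n, T.Rot g A n ∧ (A ⊆ W ∨ A ∈ T.NL W)) →
      (k ∈ T.KW W ∨ ∃ n A Z h, NF T W n A Z h ∧ ∃ g ∈ T.KW W, k = h * g) →
      (g * k ∈ T.KW W ∨ ∃ n A Z h, NF T W n A Z h ∧ ∃ g' ∈ T.KW W, g * k = h * g') := by
    rintro g k ⟨A, n, hg, hA | hA⟩ hk
    · have hgW : g ∈ T.KW W := Subgroup.subset_closure ⟨A, n, hg, hA⟩
      rcases hk with hk | ⟨n, B, Z, h, hN, g', hg', rfl⟩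
      · exact .inl (mul_mem hgW hk)
      · exact .inr ⟨_, _, _, _, H.nf_conj hgW hN, g * g', mul_mem hgW hg', by group⟩
    · exact mulTw ⟨hA, g, n, hg, 1, one_ne_zero, by simp⟩ hk
  induction hk using Subgroup.closure_induction_left with
  | one => exact .inl (one_mem _)
  | mul_left x hx y hy ih => exact mulR x y hx ih
  | inv_mul_cancel x hx y hy ih =>
    obtain ⟨A, n, h1, h2⟩ := hx
    exact mulR _ y ⟨A, n, T.rot_inv h1, h2⟩ ih

/-- gates of points of `W` or of another touching line are close to `A ∩ W`. -/
theorem WM.gate_near (H : WM T x0 W) {A} (hA : A ∈ T.NL W) {p g} (hg : T.Gt A p g)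
    (hp : p ∈ W ∨ ∃ B ∈ T.NL W, B ≠ A ∧ p ∈ B) : ∃ s ∈ A, s ∈ W ∧ T.d g s ≤ T.u := by
  obtain ⟨hAl, _, a, ha, haW⟩ := hA
  rcases hp with hp | ⟨B, hB, hne, hp⟩
  · exact ⟨g, hg.1, hg.mem H.cvx hp ⟨a, haW, ha⟩, by simp [T.self]⟩
  · obtain ⟨hBl, _, b, hb, hbW⟩ := hB
    obtain ⟨g', hg'⟩ := line_gate hAl b
    refine ⟨g', hg'.1, hg'.mem H.cvx hbW ⟨a, haW, ha⟩, ?_⟩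
    by_cases e : g = g'
    · simp [e, T.self]
    · have := hg.pathB hg' e
      exact (T.ov A hAl B hBl hne.symm g hg.1 (line_cvx hBl _ hp _ hb _ this.1) g' hg'.1
        (line_cvx hBl _ hp _ hb _ this.2.1)).le

theorem WM.arc_of_near (H : WM T x0 W) {A τ} (hτ : T.Tw W A τ) {p q gp gq : F} (hgp : T.Gt A p gp)
    (hgq : T.Gt A q gq) (hp : p ∈ W ∨ ∃ B ∈ T.NL W, B ≠ A ∧ p ∈ B)
    (hq : ∃ s ∈ A, s ∈ W ∧ T.d (τ⁻¹ * gq) s ≤ T.u) :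
    ∃ g n, T.Rot g A n ∧ n ≤ T.d gp gq + 4 * T.u := by
  obtain ⟨s, hs, hsW, hd⟩ := hq
  obtain ⟨s', hs', hsW', hd'⟩ := H.gate_near hτ.1 hgp hp
  obtain ⟨g, n, hg, hn⟩ := hτ.far hs
  refine ⟨g, n, hg, ?_⟩
  have h1 := H.small A hτ.line hτ.1.2.1 s hs hsW s' hs' hsW'
  rw [inv'] at hd
  have h2 := T.tri s s' (τ * s)
  have h3 := T.tri s' gp (τ * s)
  have h4 := T.tri gp gq (τ * s)
  have h5 := T.comm s' gp
  omega

/-- The projection to the first line `A` of a normal form of a point reached by it is close to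
the translate of `W ∩ A` by a nontrivial power of the rotation. -/
theorem WM.chain (H : WM T x0 W) {n A Z h} (hN : NF T W n A Z h) : ∀ q,
    (h⁻¹ * q ∈ W ∨ ∃ B ∈ T.NL W, B ≠ Z ∧ h⁻¹ * q ∈ B) →
    ∀ gq, T.Gt A q gq → ∃ τ, T.Tw W A τ ∧ ∃ s ∈ A, s ∈ W ∧ T.d (τ⁻¹ * gq) s ≤ T.u := by
  induction hN with
  | @one A τ hτ =>
    intro q hq gq hgq
    have : T.Gt A (τ⁻¹ * q) (τ⁻¹ * gq) := by
      have := gt_sm (g := τ⁻¹) hgq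
      rwa [inv_smul_eq_iff.2 hτ.smul.symm] at this
    exact ⟨τ, hτ, H.gate_near hτ.1 this hq⟩
  | @cons A A2 Z τ h n hτ hN hne ih =>
    intro q hq gq hgq
    have hg : T.Gt A (τ⁻¹ * q) (τ⁻¹ * gq) := by
      have := gt_sm (g := τ⁻¹) hgq
      rwa [inv_smul_eq_iff.2 hτ.smul.symm] at this
    refine ⟨τ, hτ, ?_⟩
    rw [mul_inv_rev, mul_assoc] at hq
    generalize τ⁻¹ * q = q' at *
    generalize τ⁻¹ * gq = g at *
    obtain ⟨y0, hy0⟩ := H.cvx.gate ⟨x0, H.mem⟩ q'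
    obtain ⟨a, ha⟩ := line_gate hτ.line y0
    have haW : a ∈ W := ha.mem H.cvx hy0.1 (by
      obtain ⟨b, hb, hb'⟩ := hτ.1.2.2; exact ⟨b, hb', hb⟩)
    refine ⟨a, ha.1, haW, ?_⟩
    by_cases e : g = a
    · simp [e, T.self]
    have hp := hg.pathB ha e
    -- `a` lies on `[q', y0]` and in `W`, so it is the gate `y0`
    have e0 : a = y0 := by
      have h1 := hy0.2 a haW
      have h2 := hp.2.1
      exact h2.anti h1
    subst e0
    have hl2 : A2 ∈ T.lines := hN.tw.1
    obtain ⟨b, hb⟩ := line_gate hl2 a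
    obtain ⟨c, hc⟩ := line_gate hl2 q'
    obtain ⟨σ, hσ, hnear⟩ := ih q' hq c hc
    obtain ⟨r, n', hr, hlen⟩ := H.arc_of_near hσ hb hc (.inl haW) hnear
    have hbig := rot_pos hr
    have hbW : b ∈ W := hb.mem H.cvx haW (by
      obtain ⟨b, hb, hb'⟩ := hN.tw.2.2; exact ⟨b, hb', hb⟩)
    have hu := T.upos
    have hbc : b ≠ c := by
      rintro rfl
      rw [T.self] at hlen; omega
    have hp2 := hb.pathB hc hbc
    have e1 : b = a := hp2.1.symm.anti (hy0.2 b hbW)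
    subst e1
    -- `[b,c] ⊆ A2` and `[b,g] ⊆ A` are initial segments of `[b,q']`
    have hg' : T.B b g q' := hp.1.symm
    have hc' : T.B b c q' := hp2.2.1
    rw [T.comm]
    rcases le_total (T.d b g) (T.d b c) with hle | hle
    · have hgA2 : g ∈ A2 := line_cvx hl2 _ hb.1 _ hc.1 g (by
        have := hg'.dist_of_le hc' hle
        unfold TreeD.B; omega)
      exact (T.ov A hτ.line A2 hl2 hne b ha.1 hb.1 g hg.1 hgA2).le
    · have hcA : c ∈ A := line_cvx hτ.line _ ha.1 _ hg.1 c (by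
        have := hc'.dist_of_le hg' hle
        unfold TreeD.B; omega)
      have := T.ov A hτ.line A2 hl2 hne b ha.1 hb.1 c hcA hc.1
      omega

/-- The two ends of a normal form project to its first line almost a full period apart. -/
theorem WM.arc (H : WM T x0 W) {n A Z h} (hN : NF T W n A Z h) {p q gp gq}
    (hp : p ∈ W ∨ ∃ B ∈ T.NL W, B ≠ A ∧ p ∈ B)
    (hq : h⁻¹ * q ∈ W ∨ ∃ B ∈ T.NL W, B ≠ Z ∧ h⁻¹ * q ∈ B)
    (hgp : T.Gt A p gp) (hgq : T.Gt A q gq) : ∃ g n, T.Rot g A n ∧ n ≤ T.d gp gq + 4 * T.u := by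
  obtain ⟨σ, hσ, hnear⟩ := H.chain hN q hq gq hgq
  exact H.arc_of_near hσ hgp hgq hp hnear

theorem WM.gr' (H : WM T x0 W) {k} (hk : k ∈ T.KN W) (h1 : k ≠ 1) : T.Arc x0 k := by
  rcases H.normal hk with hk | ⟨n, A, Z, h, hN, g, hg, rfl⟩
  · exact H.gr k hk h1
  obtain ⟨gp, hgp⟩ := line_gate hN.tw.1 x0
  obtain ⟨gq, hgq⟩ := line_gate hN.tw.1 (h * g * x0)
  obtain ⟨r, n', hr, hl⟩ := H.arc hN (.inl H.mem) (.inl (by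
    rw [mul_assoc, inv_mul_cancel_left]; exact H.stab _ hg _ H.mem)) hgp hgq
  have := rot_pos hr
  exact ⟨r, A, n', hr, gp, gq, hgp, hgq, by omega⟩

theorem mem_next_of_W {x} (hx : x ∈ W) : x ∈ T.nextW W := ⟨1, one_mem _, .inl (by simpa using hx)⟩
theorem mem_next_of_NL {x A} (hA : A ∈ T.NL W) (hx : x ∈ A) : x ∈ T.nextW W :=
  ⟨1, one_mem _, .inr ⟨A, hA, by simpa using hx⟩⟩
theorem mul_mem_next {k x} (hk : k ∈ T.KN W) (hx : x ∈ T.nextW W) : k * x ∈ T.nextW W := by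
  obtain ⟨k', hk', h⟩ := hx
  refine ⟨k * k', mul_mem hk hk', ?_⟩
  simpa [mul_assoc] using h

/-- A point of `nextW` may be written with the element of `KN` trivial or in normal form. -/
theorem WM.next_cases (H : WM T x0 W) {x} (hx : x ∈ T.nextW W) :
    (x ∈ W ∨ ∃ B ∈ T.NL W, x ∈ B) ∨
    ∃ n A Z h, NF T W n A Z h ∧ (h⁻¹ * x ∈ W ∨ ∃ B ∈ T.NL W, h⁻¹ * x ∈ B) := by
  obtain ⟨k, hk, hx⟩ := hx
  have aux : ∀ g ∈ T.KW W, ∀ y, (g⁻¹ * y ∈ W ∨ ∃ B ∈ T.NL W, g⁻¹ * y ∈ B) →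
      (y ∈ W ∨ ∃ B ∈ T.NL W, y ∈ B) := by
    rintro g hg y (h | ⟨B, hB, h⟩)
    · left; simpa using H.stab g hg _ h
    · right; exact ⟨g • B, H.smulNL hg hB, mem_sm.2 h⟩
  rcases H.normal hk with hk | ⟨n, A, Z, h, hN, g, hg, rfl⟩
  · exact .inl (aux k hk x hx)
  · right
    refine ⟨n, A, Z, h, hN, aux g hg _ ?_⟩
    simpa [mul_assoc] using hx

theorem WM.seg0 (H : WM T x0 W) {x y c} (hx : x ∈ W ∨ ∃ B ∈ T.NL W, x ∈ B) (hy : y ∈ W)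
    (hc : T.B x c y) : c ∈ T.nextW W := by
  rcases hx with hx | ⟨B, hB, hx⟩
  · exact mem_next_of_W (H.cvx x hx y hy c hc)
  · obtain ⟨hBl, _, b, hb, hbW⟩ := id hB
    rcases (line_cvx hBl).union H.cvx ⟨b, hb, hbW⟩ x (.inl hx) y (.inr hy) c hc with h | h
    · exact mem_next_of_NL hB h
    · exact mem_next_of_W h

theorem WM.cvx_aux (H : WM T x0 W) {n A Z h} (hN : NF T W n A Z h) : ∀ z ∈ W, ∀ b,
    (h⁻¹ * b ∈ W ∨ ∃ B ∈ T.NL W, h⁻¹ * b ∈ B) → ∀ c, T.B z c b → c ∈ T.nextW W := by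
  -- common part: pass through `a` and `τ a`, with `a ∈ A ∩ W`
  have common : ∀ {A τ b}, T.Tw W A τ →
      (∀ a ∈ W, ∀ c, T.B a c (τ⁻¹ * b) → c ∈ T.nextW W) →
      ∀ z ∈ W, ∀ c, T.B z c b → c ∈ T.nextW W := by
    intro A τ b hτ hb z hz c hc
    obtain ⟨a, ha, haW⟩ := hτ.1.2.2
    rcases hc.cover a with h1 | h1
    · exact mem_next_of_W (H.cvx z hz a haW c h1)
    rcases h1.cover (τ * a) with h2 | h2
    · exact mem_next_of_NL hτ.1 (line_cvx hτ.line _ ha _ (hτ.mem ha) c h2)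
    · have := hb a haW (τ⁻¹ * c) (by
        have := (B_sm (T := T) (g := τ⁻¹)).2 h2
        simpa using this)
      simpa using mul_mem_next hτ.KN this
  induction hN with
  | one hτ =>
    intro z hz b hb
    exact common hτ (fun a ha c hc => H.seg0 hb ha hc.symm) z hz
  | cons hτ hN hne ih =>
    intro z hz b hb
    exact common hτ (fun a ha c hc => ih a ha _ (by simpa [mul_assoc] using hb) c hc) z hz

theorem WM.cvx' (H : WM T x0 W) : T.Cvx (T.nextW W) := by
  -- every segment from `W` into `nextW` stays there
  have h1 : ∀ z ∈ W, ∀ b ∈ T.nextW W, ∀ c, T.B z c b → c ∈ T.nextW W := by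
    intro z hz b hb c hc
    rcases H.next_cases hb with hb | ⟨n, A, Z, h, hN, hb⟩
    · exact H.seg0 hb hz hc.symm
    · exact H.cvx_aux hN z hz b hb c hc
  intro x hx y hy c hc
  obtain ⟨k, hk, hx'⟩ := hx
  have hy' := mul_mem_next (inv_mem hk) hy
  have hc' : T.B (k⁻¹ * x) (k⁻¹ * c) (k⁻¹ * y) := B_sm.2 hc
  suffices k⁻¹ * c ∈ T.nextW W by simpa using mul_mem_next hk this
  rcases hc'.cover x0 with h | h
  · exact H.seg0 hx' H.mem h
  · exact h1 x0 H.mem _ hy' _ h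

theorem NF.last {n A Z h} (hN : NF T W n A Z h) :
    (∃ τ, T.Tw W Z τ ∧ h = τ ∧ n = 0 ∧ A = Z) ∨
    ∃ m Z' h' τ, NF T W m A Z' h' ∧ T.Tw W Z τ ∧ h = h' * τ ∧ n = m + 1 := by
  induction hN with
  | one hτ => exact .inl ⟨_, hτ, rfl, rfl, rfl⟩
  | @cons A B Z τ h n hτ hN hne ih =>
    right
    rcases ih with ⟨σ, hσ, rfl, rfl, rfl⟩ | ⟨m, Z', h', σ, hN', hσ, rfl, rfl⟩
    · exact ⟨0, A, τ, h, .one hτ, hσ, rfl, rfl⟩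
    · exact ⟨m + 1, Z', τ * h', σ, .cons hτ hN' hne, hσ, by rw [mul_assoc], rfl⟩

/-- A line is old if it is a translate of a line contained in or touching `W`. -/
def Old (T : Setup F) (W : Set F) (C : Set F) : Prop :=
  ∃ k ∈ T.KN W, ∃ A, (A ⊆ W ∨ A ∈ T.NL W) ∧ C = k • A

theorem Old.sub {C} (h : Old T W C) : C ⊆ T.nextW W := by
  obtain ⟨k, hk, A, hA, rfl⟩ := h
  intro x hx
  rw [mem_sm] at hx
  refine ⟨k, hk, ?_⟩
  rcases hA with hA | hA
  · exact .inl (hA hx)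
  · exact .inr ⟨A, hA, hx⟩
theorem Old.smul {C k} (h : Old T W C) (hk : k ∈ T.KN W) : Old T W (k • C) := by
  obtain ⟨k', hk', A, hA, rfl⟩ := h
  exact ⟨k * k', mul_mem hk hk', A, hA, by rw [mul_smul]⟩
theorem not_old_sm {C k} (h : ¬ Old T W C) (hk : k ∈ T.KN W) : ¬ Old T W (k • C) := by
  intro h'
  have := h'.smul (inv_mem hk)
  rw [inv_smul_smul] at this
  exact h this
theorem not_old_W {C} (hC : C ∈ T.lines) (h : ¬ Old T W C) {x} (hx : x ∈ C) : x ∉ W := by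
  intro hxW
  apply h
  refine ⟨1, one_mem _, C, ?_, (one_smul _ _).symm⟩
  by_cases e : C ⊆ W
  · exact .inl e
  · exact .inr ⟨hC, e, x, hx, hxW⟩

theorem WM.small0 (H : WM T x0 W) {C} (hC : C ∈ T.lines) (ho : ¬ Old T W C) {p q} (hp : p ∈ C) (hq : q ∈ C)
    {A B} (hA : A ∈ T.NL W) (hB : B ∈ T.NL W) (hpA : p ∈ A) (hqB : q ∈ B) :
    T.d p q ≤ 2 * T.u := by
  have hCA : C ≠ A := by
    rintro rfl; exact ho ⟨1, one_mem _, C, .inr hA, (one_smul _ _).symm⟩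
  have hCB : C ≠ B := by
    rintro rfl; exact ho ⟨1, one_mem _, C, .inr hB, (one_smul _ _).symm⟩
  obtain ⟨a, ha⟩ := H.cvx.gate ⟨x0, H.mem⟩ p
  obtain ⟨b, hb⟩ := H.cvx.gate ⟨x0, H.mem⟩ q
  by_cases e : a = b
  · subst e
    have haA : a ∈ A := ha.mem (line_cvx hA.1) hpA (by
      obtain ⟨z, h1, h2⟩ := hA.2.2; exact ⟨z, h1, h2⟩)
    have haB : a ∈ B := hb.mem (line_cvx hB.1) hqB (by
      obtain ⟨z, h1, h2⟩ := hB.2.2; exact ⟨z, h1, h2⟩)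
    obtain ⟨m, h1, h2, h3⟩ := T.med p q a
    have hmC := line_cvx hC _ hp _ hq m h1
    have := T.ov C hC A hA.1 hCA p hp hpA m hmC (line_cvx hA.1 _ hpA _ haA m h3)
    have := T.ov C hC B hB.1 hCB m hmC (line_cvx hB.1 _ hqB _ haB m h2) q hq hqB
    omega
  · have := (ha.pathB hb e).1
    exact absurd ha.1 (not_old_W hC ho (line_cvx hC _ hp _ hq a this))

/-- A line that is not old meets the next stage of the windmill in a short segment, the case
of points on translates of lines touching `W`. -/
theorem WM.small1 (H : WM T x0 W) (n : ℕ) : ∀ {A Z h}, NF T W n A Z h → ∀ {C}, C ∈ T.lines → ¬ Old T W C →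
    ∀ {p q}, p ∈ C → q ∈ C → ∀ {A' B'}, A' ∈ T.NL W → B' ∈ T.NL W → p ∈ A' → h⁻¹ * q ∈ B' →
    T.d p q ≤ 2 * T.u := by
  induction n using Nat.strong_induction_on with
  | _ n ih =>
  intro A Z h hN C hC ho p q hp hq A' B' hA' hB' hpA hqB
  by_cases e1 : A' = A
  · subst e1
    have common : ∀ {τ}, T.Tw W A' τ → (∀ {C}, C ∈ T.lines → ¬ Old T W C →
        ∀ {p}, p ∈ C → τ⁻¹ * q ∈ C → p ∈ A' → T.d p (τ⁻¹ * q) ≤ 2 * T.u) →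
        T.d p q ≤ 2 * T.u := by
      intro τ hτ h
      have := h (C := τ⁻¹ • C) (T.smul_line _ _ hC) (not_old_sm ho (inv_mem hτ.KN))
        (mul_mem_sm.2 hp) (mul_mem_sm.2 hq) (hτ.mem' hpA)
      rwa [T.inv] at this
    cases hN with
    | one hτ => exact common hτ fun hC ho p hp hq hpA => H.small0 hC ho hp hq hA' hB' hpA hqB
    | cons hτ hN hne =>
      exact common hτ fun hC ho p hp hq hpA => ih _ (by omega) hN hC ho hp hq hA' hB' hpA
        (by simpa [mul_assoc] using hqB)
  by_cases e2 : B' = Z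
  · subst e2
    rcases hN.last with ⟨τ, hτ, rfl, _, _⟩ | ⟨m, Z', h', τ, hN', hτ, rfl, rfl⟩
    · exact H.small0 hC ho hp hq hA' hB' hpA (by simpa using hτ.mem hqB)
    · exact ih m (by omega) hN' hC ho hp hq hA' hB' hpA (by
        have := hτ.mem hqB
        simpa [mul_assoc] using this)
  obtain ⟨gp, hgp⟩ := line_gate hN.tw.1 p
  obtain ⟨gq, hgq⟩ := line_gate hN.tw.1 q
  obtain ⟨r, n', hr, hl⟩ := H.arc hN (.inr ⟨A', hA', e1, hpA⟩) (.inr ⟨B', hB', e2, hqB⟩) hgp hgq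
  have hb := rot_pos hr
  have := T.upos
  have hne : gp ≠ gq := by
    rintro rfl
    rw [T.self] at hl; omega
  have hP := hgp.pathB hgq hne
  have hCA : C ≠ A := by
    rintro rfl; exact ho ⟨1, one_mem _, C, .inr hN.tw, (one_smul _ _).symm⟩
  have := T.ov C hC A hN.tw.1 hCA gp (line_cvx hC _ hp _ hq _ hP.1) hgp.1 gq
    (line_cvx hC _ hp _ hq _ hP.2.1) hgq.1
  omega

theorem WM.small2 (H : WM T x0 W) {C} (hC : C ∈ T.lines) (ho : ¬ Old T W C) {p q} (hp : p ∈ C) (hq : q ∈ C)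
    (hpW : p ∈ T.nextW W) (hqW : q ∈ T.nextW W) : T.d p q ≤ 2 * T.u := by
  obtain ⟨k, hk, hpk⟩ := hpW
  have hq' := mul_mem_next (inv_mem hk) hqW
  have hC' := T.smul_line k⁻¹ _ hC
  have ho' := not_old_sm ho (inv_mem hk)
  have hp1 : k⁻¹ * p ∈ k⁻¹ • C := mul_mem_sm.2 hp
  have hq1 : k⁻¹ * q ∈ k⁻¹ • C := mul_mem_sm.2 hq
  rw [← T.inv k⁻¹]
  rcases hpk with hpk | ⟨A, hA, hpA⟩
  · exact absurd hpk (not_old_W hC' ho' hp1)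
  rcases H.next_cases hq' with (hb | ⟨B, hB, hb⟩) | ⟨n, A', Z, h, hN, hb | ⟨B, hB, hb⟩⟩
  · exact absurd hb (not_old_W hC' ho' hq1)
  · exact H.small0 hC' ho' hp1 hq1 hA hB hpA hb
  · exact absurd hb (not_old_W (T.smul_line h⁻¹ _ hC') (not_old_sm ho' (inv_mem hN.KN))
      (mul_mem_sm.2 hq1))
  · exact H.small1 n hN hC' ho' hp1 hq1 hA hB hpA hb

theorem WM.KW_next (H : WM T x0 W) : T.KW (T.nextW W) ≤ T.KN W := by
  refine (Subgroup.closure_le _).2 ?_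
  rintro g ⟨A, n, hg, hA⟩
  have hAl := T.rot_line hg
  have : Old T W A := by
    by_contra ho
    obtain ⟨p, hp, q, hq, hd⟩ := line_unbdd hAl (2 * T.u + 1)
    have := H.small2 hAl ho hp hq (hA hp) (hA hq)
    omega
  obtain ⟨k, hk, B, hB, rfl⟩ := this
  have h1 := T.rot_conj k⁻¹ hg
  rw [inv_smul_smul] at h1
  have h2 : k⁻¹ * g * k⁻¹⁻¹ ∈ T.KN W := Subgroup.subset_closure ⟨B, n, h1, hB⟩
  have h3 := mul_mem (mul_mem hk h2) (inv_mem hk)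
  have e : k * (k⁻¹ * g * k⁻¹⁻¹) * k⁻¹ = g := by group
  rwa [e] at h3

theorem WM.next (H : WM T x0 W) : WM T x0 (T.nextW W) where
  cvx := H.cvx'
  mem := mem_next_of_W H.mem
  stab k hk w hw := mul_mem_next (H.KW_next hk) hw
  small A hA hs p hp hpW q hq hqW := H.small2 hA (fun h => hs h.sub) hp hq hpW hqW
  gr k hk h1 := H.gr' (H.KW_next hk) h1

end step

theorem wm_zero (x0 : F) : WM T x0 {x0} := by
  have hno : ∀ A ∈ T.lines, ¬ A ⊆ {x0} := by
    intro A hA h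
    obtain ⟨p, hp, q, hq, hd⟩ := line_unbdd hA 1
    have h1 := h hp
    have h2 := h hq
    simp only [Set.mem_singleton_iff] at h1 h2
    subst h1 h2
    rw [T.self] at hd; omega
  have hK : T.KW {x0} = ⊥ := by
    unfold KW
    rw [Subgroup.closure_eq_bot_iff]
    rintro g ⟨A, n, h1, h2⟩
    exact absurd h2 (hno A (T.rot_line h1))
  refine ⟨?_, rfl, ?_, ?_, ?_⟩
  · intro x hx y hy c hc
    rw [Set.mem_singleton_iff] at *
    subst hx hy
    unfold TreeD.B at hc
    rw [T.self] at hc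
    exact (T.eq_of (by omega : T.d _ c = 0)).symm
  · intro k hk w hw
    rw [hK, Subgroup.mem_bot] at hk
    simpa [hk] using hw
  · rintro A _ _ p _ rfl q _ rfl
    simp [T.self]
  · intro k hk h1
    rw [hK, Subgroup.mem_bot] at hk
    exact absurd hk h1

/-- **Greendlinger's lemma.** Each nontrivial element of `K` moves each point along at least `9/10` of a
period of some rotation axis. -/
theorem greendlinger {k : F} (hk : k ∈ T.K) (h1 : k ≠ 1) (x : F) : T.Arc x k := by
  let Ws : ℕ → Set F := fun n => Nat.rec {x} (fun _ W => T.nextW W) n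
  have hW : ∀ n, WM T x (Ws n) := by
    intro n
    induction n with
    | zero => exact wm_zero x
    | succ n ih => exact ih.next
  have hmono : Monotone Ws := monotone_nat_of_le_succ fun n y hy => mem_next_of_W hy
  have hline : ∀ A ∈ T.lines, ∀ n, ∀ a ∈ A, a ∈ Ws n → A ⊆ Ws (n + 1) := by
    intro A hA n a ha haW
    rcases Classical.em (A ⊆ Ws n) with h | h
    · exact h.trans (hmono (Nat.le_succ n))
    · exact fun y hy => mem_next_of_NL ⟨hA, h, a, ha, haW⟩ hy
  have hall : ∀ m, ∀ y, T.d x y = m → ∃ n, y ∈ Ws n := by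
    intro m
    induction m using Nat.strong_induction_on with
    | _ m ih =>
      intro y hy
      by_cases e : y = x
      · exact ⟨0, e⟩
      · obtain ⟨z, hz1, hz2⟩ := T.step e
        have := T.spos
        have h3 := T.comm x y
        have h4 := T.comm z x
        obtain ⟨n, hn⟩ := ih (T.d x z) (by omega) z rfl
        obtain ⟨A, hA, hyA, hzA⟩ := T.cov y z hz1
        exact ⟨n + 1, hline A hA n z hzA hn hyA⟩
  have hKW : ∃ n, k ∈ T.KW (Ws n) := by
    induction hk using Subgroup.closure_induction with
    | mem g hg =>
      obtain ⟨A, n, hg⟩ := hg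
      obtain ⟨a, ha⟩ := line_ne (T.rot_line hg)
      obtain ⟨m, hm⟩ := hall _ a rfl
      exact ⟨m + 1, Subgroup.subset_closure ⟨A, n, hg, hline A (T.rot_line hg) m a ha hm⟩⟩
    | one => exact ⟨0, one_mem _⟩
    | inv g _ ih =>
      by_cases e : g = 1
      · exact ⟨0, by rw [e]; simp⟩
      · obtain ⟨n, hn⟩ := ih e
        exact ⟨n, inv_mem hn⟩
    | mul g g' _ _ ih ih' =>
      by_cases e : g = 1
      · subst e; simp only [one_mul] at h1 ⊢; exact ih' h1
      by_cases e' : g' = 1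
      · subst e'; simp only [mul_one] at h1 ⊢; exact ih h1
      obtain ⟨n, hn⟩ := ih e
      obtain ⟨m, hm⟩ := ih' e'
      have mon : ∀ {a b}, a ≤ b → T.KW (Ws a) ≤ T.KW (Ws b) := fun hab =>
        Subgroup.closure_mono (by rintro g ⟨A, n, h, h'⟩; exact ⟨A, n, h, h'.trans (hmono hab)⟩)
      exact ⟨max n m, mul_mem (mon (le_max_left _ _) hn) (mon (le_max_right _ _) hm)⟩
  obtain ⟨n, hn⟩ := hKW
  exact (hW n).gr k hn h1

end Setup

/-! ### The cost of a step along a line -/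

namespace Setup
open TreeD
variable {F : Type u} [Group F] (T : Setup F)

/-- The largest cost of a step along a line. -/
def cap : ℝ := Real.log (1 + T.M)

/-- The cost of a step of tree length `k` along a line. -/
def ph (k : ℕ) : ℝ := min (Real.log (1 + k / T.u)) T.cap

/-- Chains from `x` to `y` in `W` of total cost at most `r`, each step staying in one line. -/
inductive Ch (W : Set F) : F → F → ℝ → Prop
  | nil {x r} : x ∈ W → 0 ≤ r → Ch W x x r
  | cons {x y z A r r'} : x ∈ W → A ∈ T.lines → x ∈ A → y ∈ A → Ch W y z r' →
      T.ph (T.d x y) + r' ≤ r → Ch W x z r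

/-- The chain metric. -/
def D (x y : F) : ℝ := sInf {r | T.Ch Set.univ x y r}

variable {T}
theorem u_pos : (0 : ℝ) < T.u := by exact_mod_cast T.upos
theorem cap_nonneg : 0 ≤ T.cap := Real.log_nonneg (by
  have : (0 : ℝ) ≤ T.M := Nat.cast_nonneg _
  linarith)
theorem div_nn (k : ℕ) : (0 : ℝ) ≤ k / T.u := div_nonneg (Nat.cast_nonneg _) u_pos.le
theorem ph_nonneg (k : ℕ) : 0 ≤ T.ph k := by
  refine le_min (Real.log_nonneg ?_) cap_nonneg
  linarith [div_nn (T := T) k]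
theorem ph_zero : T.ph 0 = 0 := by simp [ph, cap_nonneg]
theorem ph_le_cap (k : ℕ) : T.ph k ≤ T.cap := min_le_right _ _
theorem ph_mono {a b : ℕ} (h : a ≤ b) : T.ph a ≤ T.ph b := by
  have hu := u_pos (T := T)
  refine min_le_min_right _ (Real.log_le_log (by linarith [div_nn (T := T) a]) ?_)
  have : (a : ℝ) ≤ b := by exact_mod_cast h
  gcongr
theorem ph_le_div (k : ℕ) : T.ph k ≤ k / T.u := by
  refine (min_le_left _ _).trans ?_
  have := Real.log_le_sub_one_of_pos (x := 1 + k / T.u) (by linarith [div_nn (T := T) k])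
  linarith
theorem ph_le_nat {k θ : ℕ} (h : k ≤ θ * T.u) : T.ph k ≤ θ := by
  refine (ph_le_div k).trans ?_
  rw [div_le_iff₀ u_pos]; exact_mod_cast h
theorem ph_cap {k : ℕ} (h : T.M * T.u ≤ k) : T.ph k = T.cap := by
  refine min_eq_right ?_
  refine Real.log_le_log (by positivity) ?_
  have : (T.M : ℝ) ≤ k / T.u := by
    rw [le_div_iff₀ u_pos]; exact_mod_cast h
  linarith
theorem ph_lt_cap {k : ℕ} {c : ℝ} (h : T.ph k ≤ c) (hc : c < T.cap) : (k : ℝ) ≤ Real.exp c * T.u := by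
  have h1 : Real.log (1 + k / T.u) ≤ c := by
    rcases min_le_iff.1 h with h | h
    · exact h
    · linarith
  have h2 : 1 + (k : ℝ) / T.u ≤ Real.exp c := by
    rwa [← Real.log_le_iff_le_exp (by linarith [div_nn (T := T) k])]
  have h3 : (k : ℝ) / T.u ≤ Real.exp c := by linarith
  rwa [div_le_iff₀ u_pos] at h3
theorem ph_add (a b : ℕ) : T.ph (a + b) ≤ T.ph a + T.ph b := by
  have ha := div_nn (T := T) a
  have hb := div_nn (T := T) b
  by_cases h1 : T.cap ≤ Real.log (1 + a / T.u)
  · have : T.ph a = T.cap := min_eq_right h1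
    linarith [ph_le_cap (T := T) (a + b), ph_nonneg (T := T) b]
  by_cases h2 : T.cap ≤ Real.log (1 + b / T.u)
  · have : T.ph b = T.cap := min_eq_right h2
    linarith [ph_le_cap (T := T) (a + b), ph_nonneg (T := T) a]
  have e1 : T.ph a = _ := min_eq_left (not_le.1 h1).le
  have e2 : T.ph b = _ := min_eq_left (not_le.1 h2).le
  rw [e1, e2, ← Real.log_mul (by linarith) (by linarith)]
  refine (min_le_left _ _).trans (Real.log_le_log ?_ ?_)
  · linarith [div_nn (T := T) (a + b)]
  · push_cast
    rw [add_div]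
    nlinarith [mul_nonneg ha hb]
theorem ph_add_max (a b : ℕ) : T.ph (a + b) ≤ max (T.ph a) (T.ph b) + 1 := by
  have key : ∀ a b : ℕ, a ≤ b → T.ph (a + b) ≤ T.ph b + 1 := by
    intro a b h
    have hb := div_nn (T := T) b
    by_cases h2 : T.cap ≤ Real.log (1 + b / T.u)
    · have : T.ph b = T.cap := min_eq_right h2
      linarith [ph_le_cap (T := T) (a + b)]
    have e2 : T.ph b = _ := min_eq_left (not_le.1 h2).le
    rw [e2]
    refine (min_le_left _ _).trans ?_
    have h3 : Real.log (1 + ((a + b : ℕ) : ℝ) / T.u) ≤ Real.log (2 * (1 + b / T.u)) := by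
      refine Real.log_le_log (by linarith [div_nn (T := T) (a + b)]) ?_
      have : (a : ℝ) / T.u ≤ b / T.u := by
        have := u_pos (T := T)
        gcongr
      push_cast
      rw [add_div]; linarith
    rw [Real.log_mul (by norm_num) (by linarith)] at h3
    linarith [Real.log_two_lt_d9]
  rcases le_total a b with h | h
  · linarith [key a b h, le_max_right (T.ph a) (T.ph b)]
  · rw [add_comm]; linarith [key b a h, le_max_left (T.ph a) (T.ph b)]

/-! ### Chains -/

theorem Ch.nonneg {W : Set F} {x y r} (h : T.Ch W x y r) : 0 ≤ r := by
  induction h with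
  | nil _ h => exact h
  | @cons x y _ _ _ _ _ _ _ _ _ h ih => linarith [ph_nonneg (T := T) (T.d x y)]
theorem Ch.mono {W : Set F} {x y r r'} (h : T.Ch W x y r) (h' : r ≤ r') : T.Ch W x y r' := by
  cases h with
  | nil h1 h => exact .nil h1 (by linarith)
  | cons h0 h1 h2 h3 h4 h => exact .cons h0 h1 h2 h3 h4 (by linarith)
theorem Ch.trans {W : Set F} {x y z r r'} (h : T.Ch W x y r) (h' : T.Ch W y z r') :
    T.Ch W x z (r + r') := by
  induction h with
  | nil _ h => exact h'.mono (by linarith)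
  | cons h0 h1 h2 h3 _ h ih => exact .cons h0 h1 h2 h3 (ih h') (by linarith)
theorem Ch.single {A : Set F} {x y} (hA : A ∈ T.lines) (hx : x ∈ A) (hy : y ∈ A) :
    T.Ch Set.univ x y (T.ph (T.d x y)) :=
  .cons trivial hA hx hy (.nil trivial le_rfl) (by simp)
theorem Ch.symm {x y r} (h : T.Ch Set.univ x y r) : T.Ch Set.univ y x r := by
  induction h with
  | nil h0 h => exact .nil h0 h
  | cons h0 h1 h2 h3 _ h ih =>
    refine (ih.trans (Ch.single h1 h3 h2)).mono ?_
    rw [T.comm]; linarith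
theorem Ch.smul {x y r} (g : F) (h : T.Ch Set.univ x y r) : T.Ch Set.univ (g * x) (g * y) r := by
  induction h with
  | nil h0 h => exact .nil trivial h
  | cons h0 h1 h2 h3 _ h ih =>
    exact .cons trivial (T.smul_line g _ h1) (mul_mem_sm.2 h2) (mul_mem_sm.2 h3) ih
      (by rwa [T.inv])
theorem Ch.lb {x y r} (h : T.Ch Set.univ x y r) : T.ph (T.d x y) ≤ r := by
  induction h with
  | nil _ h => rwa [T.self, ph_zero]
  | @cons x y z A r r' h0 h1 h2 h3 _ h ih =>
    have h5 := ph_mono (T := T) (T.tri x y z)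
    linarith [ph_add (T := T) (T.d x y) (T.d y z)]
theorem exists_ch (x y : F) : T.Ch Set.univ x y (T.d x y / T.u) := by
  induction h : T.d x y using Nat.strong_induction_on generalizing x with
  | _ n ih =>
    by_cases e : x = y
    · subst e; exact .nil trivial (div_nn _)
    · obtain ⟨z, h1, h2⟩ := T.step e
      have := T.spos
      obtain ⟨A, hA, hx, hz⟩ := T.cov x z h1
      refine .cons trivial hA hx hz (ih (T.d z y) (by omega) z rfl) ?_
      have := ph_le_div (T := T) (T.d x z)
      rw [h1] at this ⊢
      rw [← h, ← h2]; push_cast; rw [add_div]; linarith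

theorem D_le {x y r} (h : T.Ch Set.univ x y r) : T.D x y ≤ r :=
  csInf_le ⟨0, fun _ h => h.nonneg⟩ h
theorem le_D {x y c} (h : ∀ r, T.Ch Set.univ x y r → c ≤ r) : c ≤ T.D x y :=
  le_csInf ⟨_, exists_ch x y⟩ h
theorem exists_lt {x y c} (h : T.D x y < c) : ∃ r, T.Ch Set.univ x y r ∧ r < c :=
  exists_lt_of_csInf_lt ⟨_, exists_ch x y⟩ h
theorem D_nonneg (x y : F) : 0 ≤ T.D x y := le_D fun _ h => h.nonneg
theorem D_self (x : F) : T.D x x = 0 :=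
  le_antisymm (D_le (.nil trivial le_rfl)) (D_nonneg _ _)
theorem D_comm (x y : F) : T.D x y = T.D y x :=
  le_antisymm (le_D fun _ h => D_le h.symm) (le_D fun _ h => D_le h.symm)
theorem D_tri (x y z : F) : T.D x z ≤ T.D x y + T.D y z := by
  refine le_of_forall_pos_le_add fun e he => ?_
  obtain ⟨r, h1, h2⟩ := exists_lt (T := T) (x := x) (y := y) (c := T.D x y + e / 2) (by linarith)
  obtain ⟨r', h1', h2'⟩ := exists_lt (T := T) (x := y) (y := z) (c := T.D y z + e / 2) (by linarith)
  linarith [D_le (h1.trans h1')]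
theorem D_smul (g x y : F) : T.D (g * x) (g * y) = T.D x y := by
  refine le_antisymm (le_D fun _ h => D_le (h.smul g)) (le_D fun _ h => D_le ?_)
  simpa using h.smul g⁻¹
theorem D_lb (x y : F) : T.ph (T.d x y) ≤ T.D x y := le_D fun _ h => h.lb
theorem D_le_div (x y : F) : T.D x y ≤ T.d x y / T.u := D_le (exists_ch x y)
theorem D_line {A : Set F} {x y} (hA : A ∈ T.lines) (hx : x ∈ A) (hy : y ∈ A) :
    T.D x y = T.ph (T.d x y) := le_antisymm (D_le (.single hA hx hy)) (D_lb _ _)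
theorem D_le_nat {x y : F} {θ : ℕ} (h : T.d x y ≤ θ * T.u) : T.D x y ≤ θ := by
  refine (D_le_div x y).trans ?_
  rw [div_le_iff₀ u_pos]; exact_mod_cast h

theorem Ch.proj {W : Set F} (hne : W.Nonempty) (hW : T.Cvx W) {x y r gx gy}
    (h : T.Ch Set.univ x y r) (hx : T.Gt W x gx) (hy : T.Gt W y gy) : T.Ch W gx gy r := by
  induction h generalizing gx with
  | nil _ h => rw [hx.uniq hy]; exact .nil hy.1 h
  | @cons x z y A r r' _ hA hxA hzA _ hr ih =>
    obtain ⟨gz, hz⟩ := hW.gate hne z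
    have hle := hx.le hz
    by_cases e : gx = gz
    · rw [e]
      exact (ih hz hy).mono (by linarith [ph_nonneg (T := T) (T.d x z)])
    · have hp := hx.pathB hz e
      exact .cons hx.1 hA (line_cvx hA _ hxA _ hzA _ hp.1) (line_cvx hA _ hxA _ hzA _ hp.2.1)
        (ih hz hy) (by linarith [ph_mono (T := T) hle])

theorem Ch.univ {W : Set F} {x y r} (h : T.Ch W x y r) : T.Ch Set.univ x y r := by
  induction h with
  | nil _ h => exact .nil trivial h
  | cons h0 h1 h2 h3 _ h ih => exact .cons trivial h1 h2 h3 ih h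
theorem Ch.mem {W : Set F} {x y r} (h : T.Ch W x y r) : x ∈ W := by
  cases h <;> assumption

/-- Projections to convex sets do not increase `D`. -/
theorem D_proj {W : Set F} (hW : T.Cvx W) {x y gx gy} (hx : T.Gt W x gx) (hy : T.Gt W y gy) :
    T.D gx gy ≤ T.D x y := le_D fun _ h => D_le (h.proj ⟨_, hx.1⟩ hW hx hy).univ

theorem gt_seg {x c y : F} (h : T.B x c y) : T.Gt {e | T.B x e c} y c := by
  refine ⟨B_self_right _ _, fun w hw => ?_⟩
  exact (h.drop hw).symm
theorem D_mono {x c y : F} (h : T.B x c y) : T.D x c ≤ T.D x y :=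
  D_proj (Cvx.seg x c) (.of_mem (B_self_left _ _)) (gt_seg h)
theorem D_mono' {x c y : F} (h : T.B x c y) : T.D c y ≤ T.D x y := by
  rw [D_comm c, D_comm x]; exact D_mono h.symm

/-- The step of a chain crossing a point `c` of the geodesic. -/
theorem Ch.cross {x y r} (h : T.Ch Set.univ x y r) {c} (hc : T.B x c y) :
    ∃ z z' r2, T.B x z c ∧ T.B c z' y ∧ (z = c ∧ z' = c ∨ ∃ A ∈ T.lines, z ∈ A ∧ z' ∈ A) ∧
      T.D x z + T.ph (T.d z z') + r2 ≤ r ∧ T.Ch Set.univ z' y r2 := by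
  have h' : T.Ch {e | T.B x e y} x y r :=
    h.proj ⟨x, B_self_left _ _⟩ (Cvx.seg x y) (.of_mem (B_self_left _ _)) (.of_mem (B_self_right _ _))
  -- the statement for chains starting at some point before `c`
  have key : ∀ {a b r}, T.Ch {e | T.B x e y} a b r → b = y → T.B x a c →
      ∃ z z' r2, T.B x z c ∧ T.B c z' y ∧ (z = c ∧ z' = c ∨ ∃ A ∈ T.lines, z ∈ A ∧ z' ∈ A) ∧
      T.D a z + T.ph (T.d z z') + r2 ≤ r ∧ T.Ch Set.univ z' y r2 := by
    intro a b r h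
    induction h with
    | @nil b r hb hr =>
      rintro rfl ha
      have : c = b := hc.anti ha
      subst this
      exact ⟨c, c, 0, ha, B_self_left _ _, .inl ⟨rfl, rfl⟩, by simpa [D_self, T.self, ph_zero] using hr,
        .nil trivial le_rfl⟩
    | @cons a a' b A r r' h0 hA haA haA' hch hr ih =>
      rintro rfl ha
      have h1 : T.B x a' b := hch.mem
      rcases le_total (T.d x a') (T.d x c) with hle | hle
      · have h2 : T.B x a' c := by
          have := h1.dist_of_le hc hle
          unfold TreeD.B; omega
        obtain ⟨z, z', r2, e1, e2, e3, e4, e5⟩ := ih rfl h2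
        refine ⟨z, z', r2, e1, e2, e3, ?_, e5⟩
        have := D_tri (T := T) a a' z
        rw [D_line hA haA haA'] at this
        linarith
      · refine ⟨a, a', r', ha, hc.mid h1 hle, .inr ⟨A, hA, haA, haA'⟩, ?_, hch.univ⟩
        rw [D_self]; linarith
  exact key h' rfl (B_self_left _ _)

/-- A line runs through `c ∈ [x,y]` for at least `θ * u` on both sides. -/
def Sig (T : Setup F) (θ : ℕ) (x c y : F) : Prop :=
  ∃ A ∈ T.lines, ∃ a ∈ A, ∃ b ∈ A, T.B x a c ∧ T.B c b y ∧ θ * T.u ≤ T.d a c ∧ θ * T.u ≤ T.d c b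

theorem Sig.symm {θ : ℕ} {x c y : F} (h : T.Sig θ x c y) : T.Sig θ y c x := by
  obtain ⟨A, hA, a, ha, b, hb, h1, h2, h3, h4⟩ := h
  exact ⟨A, hA, b, hb, a, ha, h2.symm, h1.symm, by rwa [T.comm], by rwa [T.comm]⟩

theorem b_inner {x z c z' y : F} (hc : T.B x c y) (h1 : T.B x z c) (h2 : T.B c z' y) :
    T.B z c z' := by
  have := T.tri z c z'
  have := T.tri z z' y
  have := T.tri x z y
  unfold TreeD.B at *; omega

/-- Points that no line crosses substantially are almost cut points for `D`. -/
theorem near_cut {θ : ℕ} {x c y : F} (hc : T.B x c y) (hs : ¬ T.Sig θ x c y) :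
    T.D x c + T.D c y - θ ≤ T.D x y := by
  refine le_D fun r h => ?_
  obtain ⟨z, z', r2, h1, h2, h3, h4, h5⟩ := h.cross hc
  have h6 := D_le h5
  rcases h3 with ⟨rfl, rfl⟩ | ⟨A, hA, hz, hz'⟩
  · have := ph_nonneg (T := T) (T.d z' z')
    have : (0 : ℝ) ≤ θ := Nat.cast_nonneg _
    linarith
  have hcA : c ∈ A := line_cvx hA _ hz _ hz' _ (b_inner hc h1 h2)
  have e := b_inner hc h1 h2
  have t1 := D_tri (T := T) x z c
  have t2 := D_tri (T := T) c z' y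
  rw [D_line hA hz hcA] at t1
  rw [D_line hA hcA hz'] at t2
  have : T.ph (T.d z c) ≤ θ ∨ T.ph (T.d c z') ≤ θ := by
    by_contra hcon
    push Not at hcon
    apply hs
    refine ⟨A, hA, z, hz, z', hz', h1, h2, ?_, ?_⟩
    · by_contra hh; linarith [ph_le_nat (T := T) (not_le.1 hh).le]
    · by_contra hh; linarith [ph_le_nat (T := T) (not_le.1 hh).le]
  have m1 : T.ph (T.d z c) ≤ T.ph (T.d z z') := ph_mono (by unfold TreeD.B at e; omega)
  have m2 : T.ph (T.d c z') ≤ T.ph (T.d z z') := ph_mono (by unfold TreeD.B at e; omega)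
  rcases this with h | h <;> linarith

theorem not_sig_gate {A : Set F} (hA : A ∈ T.lines) {x y p r : F} (hp : T.Gt A x p) (hr : r ∈ A)
    (hpr : T.B p r y) (hu : T.u ≤ T.d p r) : ¬ T.Sig 1 x p y ∧ T.B x p y := by
  have hpos := T.upos
  have hxy : T.B x p y := by
    have h1 := hp.2 r hr
    have h2 := T.fp x p y r
    have := T.tri x p y
    have h3 := T.fp x y p r
    have h4 := T.fp x y r p
    unfold TreeD.B at *
    grind [T.comm]
  refine ⟨?_, hxy⟩
  rintro ⟨B, hB, a, ha, b, hb, h1, h2, h3, h4⟩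
  have hpB : p ∈ B := line_cvx hB _ ha _ hb _ (b_inner hxy h1 h2)
  have hAB : A ≠ B := by
    rintro rfl
    have h5 := hp.2 a ha
    have := h1.anti h5
    subst this
    rw [T.self] at h3; omega
  rcases le_total (T.d p r) (T.d p b) with hle | hle
  · have : r ∈ B := line_cvx hB _ hpB _ hb _ (by
      have := hpr.dist_of_le h2 hle; unfold TreeD.B; omega)
    have := T.ov A hA B hB hAB p hp.1 hpB r hr this
    omega
  · have : b ∈ A := line_cvx hA _ hp.1 _ hr _ (by
      have := h2.dist_of_le hpr hle; unfold TreeD.B; omega)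
    have := T.ov A hA B hB hAB p hp.1 hpB b this hb
    omega

/-- `D` is additive up to `2` along a line arc of length at least `u`. -/
theorem arc_sum {A : Set F} (hA : A ∈ T.lines) {x y p q : F} (hp : T.Gt A x p) (hq : T.Gt A y q)
    (hu : T.u ≤ T.d p q) : T.D x p + T.ph (T.d p q) + T.D q y - 2 ≤ T.D x y := by
  have hne : p ≠ q := by
    rintro rfl; rw [T.self] at hu; have := T.upos; omega
  have hP := hp.pathB hq hne
  obtain ⟨s1, b1⟩ := not_sig_gate hA hp hq.1 hP.2.2.1 hu
  obtain ⟨s2, b2⟩ := not_sig_gate hA hq hp.1 (B_self_right q p) (by rwa [T.comm])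
  have h1 := near_cut b1 s1
  have h2 := near_cut b2 s2
  rw [D_line hA hq.1 hp.1, T.comm, D_comm y q, D_comm y p] at h2
  push_cast at h1 h2
  linarith

theorem arc_le {A : Set F} (hA : A ∈ T.lines) {x y p q : F} (hp : p ∈ A) (hq : q ∈ A) :
    T.D x y ≤ T.D x p + T.ph (T.d p q) + T.D q y := by
  have h1 := D_tri (T := T) x p y
  have h2 := D_tri (T := T) p q y
  rw [D_line hA hp hq] at h2
  linarith

/-- `D` is additive along very long line arcs. -/
theorem arc_cap {A : Set F} (hA : A ∈ T.lines) {x y p q : F} (hp : T.Gt A x p) (hq : T.Gt A y q)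
    (hu : (T.M + 2) * T.u ≤ T.d p q) : T.D x p + T.cap + T.D q y ≤ T.D x y := by
  have hpos := T.upos
  have hu' : T.M * T.u + 2 * T.u ≤ T.d p q := by rw [← add_mul]; exact hu
  have hne : p ≠ q := by
    rintro rfl; rw [T.self] at hu'; omega
  have hP := hp.pathB hq hne
  obtain ⟨s1, b1⟩ := not_sig_gate hA hp hq.1 hP.2.2.1 (by omega)
  refine le_D fun r h => ?_
  obtain ⟨z, z', r2, h1, h2, h3, h4, h5⟩ := h.cross b1
  -- the chain passes from `p` to a point `z'` closer than `u`
  obtain ⟨c', r3, hc', hcu, hr3, hch⟩ : ∃ c' r3, T.B p c' y ∧ T.d p c' ≤ T.u ∧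
      T.D x p + r3 ≤ r ∧ T.Ch Set.univ c' y r3 := by
    rcases h3 with ⟨rfl, rfl⟩ | ⟨B, hB, hz, hz'⟩
    · refine ⟨z', r2, h2, by simp [T.self], ?_, h5⟩
      linarith [ph_nonneg (T := T) (T.d z' z')]
    by_cases e : z = p
    · subst e
      refine ⟨z, _, B_self_left _ _, by simp [T.self], ?_, (Ch.single hB hz hz').trans h5⟩
      linarith
    · have hpB : p ∈ B := line_cvx hB _ hz _ hz' _ (b_inner b1 h1 h2)
      have hAB : A ≠ B := by
        rintro rfl
        exact e (h1.anti (hp.2 z hz))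
      have hzz : T.d p z' < T.u := by
        rcases le_total (T.d p q) (T.d p z') with hle | hle
        · have : q ∈ B := line_cvx hB _ hpB _ hz' _ (by
            have := hP.2.2.1.dist_of_le h2 hle; unfold TreeD.B; omega)
          have := T.ov A hA B hB hAB p hp.1 hpB q hq.1 this
          omega
        · have : z' ∈ A := line_cvx hA _ hp.1 _ hq.1 _ (by
            have := h2.dist_of_le hP.2.2.1 hle; unfold TreeD.B; omega)
          exact T.ov A hA B hB hAB p hp.1 hpB z' this hz'
      refine ⟨z', r2, h2, hzz.le, ?_, h5⟩
      have t1 := D_tri (T := T) x z p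
      rw [D_line hB hz hpB] at t1
      have m1 : T.ph (T.d z p) ≤ T.ph (T.d z z') := ph_mono (by
        have := b_inner b1 h1 h2
        unfold TreeD.B at this; omega)
      linarith
  have hcq : T.d p c' + T.d c' q = T.d p q := hc'.dist_of_le hP.2.2.1 (by omega)
  have hbq : T.B c' q y := hc'.mid hP.2.2.1 (by omega)
  obtain ⟨w, w', r4, g1, g2, g3, g4, g5⟩ := hch.cross hbq
  suffices T.cap + T.D q y ≤ r3 by linarith
  have g6 := D_le g5
  have lb := D_lb (T := T) c' w
  rcases g3 with ⟨rfl, rfl⟩ | ⟨B, hB, hw, hw'⟩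
  · rw [ph_cap (by omega)] at lb
    linarith [ph_nonneg (T := T) (T.d w' w')]
  have hqB : q ∈ B := line_cvx hB _ hw _ hw' _ (b_inner hbq g1 g2)
  have in2 := b_inner hbq g1 g2
  by_cases e : w' = q
  · subst e
    have t1 := D_tri (T := T) c' w w'
    rw [D_line hB hw hw'] at t1
    have := D_lb (T := T) c' w'
    rw [ph_cap (by omega)] at this
    linarith
  · have hAB : A ≠ B := by
      rintro rfl
      exact e (g2.symm.anti (hq.2 w' hw'))
    have hwA : w ∈ A := by
      have hc'A : c' ∈ A := line_cvx hA _ hp.1 _ hq.1 _ hcq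
      exact line_cvx hA _ hc'A _ hq.1 _ g1
    have hwq := T.ov A hA B hB hAB w hwA hw q hq.1 hqB
    have g1' := g1
    unfold TreeD.B at g1' in2
    rw [ph_cap (by omega)] at lb
    have t2 := D_tri (T := T) q w' y
    rw [D_line hB hqB hw'] at t2
    have m2 : T.ph (T.d q w') ≤ T.ph (T.d w w') := ph_mono (by omega)
    linarith

/-- Rotating the end point across a very long arc does not increase `D`. -/
theorem D_rot {A : Set F} {g : F} {n : ℕ} (hg : T.Rot g A n) {x y p q : F} (hp : T.Gt A x p)
    (hq : T.Gt A y q) (hu : (T.M + 2) * T.u ≤ T.d p q) (j : ℤ) : T.D x (g ^ j * y) ≤ T.D x y := by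
  have hA := T.rot_line hg
  have h1 := arc_cap hA hp hq hu
  have h2 := arc_le hA (x := x) (y := g ^ j * y) hp.1 (rot_zpow hg j q hq.1).1
  rw [D_smul] at h2
  linarith [ph_le_cap (T := T) (T.d p (g ^ j * q))]

end Setup

/-! ### The four point condition for the chain metric -/

namespace Setup
open TreeD
variable {F : Type u} [Group F] {T : Setup F}

/-- Lines contain no tripods. -/
theorem no_tripod {A : Set F} (hA : A ∈ T.lines) {c p q r : F} (hc : c ∈ A) (hp : p ∈ A)
    (hq : q ∈ A) (hr : r ∈ A) (h1 : T.B p c q) (h2 : T.B p c r) (h3 : T.B q c r) :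
    T.d p c = 0 ∨ T.d q c = 0 ∨ T.d r c = 0 := by
  obtain ⟨γ, h, rfl⟩ := T.param A hA
  obtain ⟨i, rfl⟩ := hc
  obtain ⟨j, rfl⟩ := hp
  obtain ⟨k, rfl⟩ := hq
  obtain ⟨l, rfl⟩ := hr
  have hs : (0 : ℤ) < T.s := by exact_mod_cast T.spos
  unfold TreeD.B at h1 h2 h3
  zify at h1 h2 h3 ⊢
  simp only [h] at *
  simp only [← mul_add, mul_eq_mul_left_iff, hs.ne', or_false, mul_eq_zero, false_or] at *
  grind

/-- The tree spanned by `x, y, z, t` has the shape of an H with centres `c`, `c'`. -/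
structure Hc (T : Setup F) (x y z t c c' : F) : Prop where
  xy : T.B x c y
  zt : T.B z c' t
  xz : T.d x z = T.d x c + T.d c c' + T.d c' z
  xt : T.d x t = T.d x c + T.d c c' + T.d c' t
  yz : T.d y z = T.d y c + T.d c c' + T.d c' z
  yt : T.d y t = T.d y c + T.d c c' + T.d c' t

namespace Hc
variable {x y z t c c' : F}
theorem sw1 (h : T.Hc x y z t c c') : T.Hc y x z t c c' :=
  ⟨h.xy.symm, h.zt, h.yz, h.yt, h.xz, h.xt⟩
theorem sw2 (h : T.Hc x y z t c c') : T.Hc x y t z c c' :=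
  ⟨h.xy, h.zt.symm, h.xt, h.xz, h.yt, h.yz⟩
theorem flip (h : T.Hc x y z t c c') : T.Hc z t x y c' c := by
  obtain ⟨h1, h2, h3, h4, h5, h6⟩ := h
  refine ⟨h2, h1, ?_, ?_, ?_, ?_⟩ <;> grind [T.comm]
theorem b1 (h : T.Hc x y z t c c') : T.B x c z := by
  have := T.tri c c' z
  have := T.tri x c z
  have := h.xz
  unfold TreeD.B; omega
theorem b2 (h : T.Hc x y z t c c') : T.B c c' z := by
  have := T.tri c c' z
  have := T.tri x c z
  have := h.xz
  unfold TreeD.B; omega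
theorem b3 (h : T.Hc x y z t c c') : T.B x c c' := by
  have := T.tri x c c'
  have := T.tri x c' z
  have := h.xz
  unfold TreeD.B; omega
theorem b4 (h : T.Hc x y z t c c') : T.B x c' z := by
  have := T.tri x c c'
  have := T.tri x c' z
  have := h.xz
  unfold TreeD.B; omega
end Hc

/-- The two largest of the three sums of opposite distances differ by at most `6`. -/
def FP (T : Setup F) (x y z t : F) : Prop :=
  let P1 := T.D x y + T.D z t
  let P2 := T.D x z + T.D y t
  let P3 := T.D x t + T.D y z
  P1 ≤ max P2 P3 + 6 ∧ P2 ≤ max P1 P3 + 6 ∧ P3 ≤ max P1 P2 + 6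

theorem FP.sw1 {x y z t : F} (h : T.FP x y z t) : T.FP y x z t := by
  unfold FP at *
  rw [D_comm y x]; simp only at *
  refine ⟨?_, ?_, ?_⟩ <;> grind
theorem FP.sw2 {x y z t : F} (h : T.FP x y z t) : T.FP x y t z := by
  unfold FP at *
  rw [D_comm t z]; simp only at *
  refine ⟨?_, ?_, ?_⟩ <;> grind
theorem FP.flip {x y z t : F} (h : T.FP x y z t) : T.FP z t x y := by
  unfold FP at *
  rw [D_comm z x, D_comm z y, D_comm t x, D_comm t y]; simp only at *
  refine ⟨?_, ?_, ?_⟩ <;> grind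
theorem FP.rot {x y z t : F} (h : T.FP x y z t) : T.FP x z y t := by
  unfold FP at *
  rw [D_comm z y]; simp only at *
  refine ⟨?_, ?_, ?_⟩ <;> grind

/-- The four point condition if no line crosses the point `w` separating `x, y` from `z, t`. -/
theorem fp_cut {x y z t w : F} (h1 : T.B x w z) (h2 : T.B x w t) (h3 : T.B y w z) (h4 : T.B y w t)
    (s1 : ¬ T.Sig 1 x w z) (s2 : ¬ T.Sig 1 x w t) (s3 : ¬ T.Sig 1 y w z) (s4 : ¬ T.Sig 1 y w t) :
    T.FP x y z t := by
  have e1 := near_cut h1 s1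
  have e2 := near_cut h2 s2
  have e3 := near_cut h3 s3
  have e4 := near_cut h4 s4
  have f1 := D_tri (T := T) x w z
  have f2 := D_tri (T := T) x w t
  have f3 := D_tri (T := T) y w z
  have f4 := D_tri (T := T) y w t
  have f5 := D_tri (T := T) x w y
  have f6 := D_tri (T := T) z w t
  rw [D_comm z w] at f6
  rw [D_comm w y] at f5
  push_cast at *
  refine ⟨?_, ?_, ?_⟩
  · refine le_trans ?_ (add_le_add_left (le_max_left _ _) _); linarith
  · refine le_trans ?_ (add_le_add_left (le_max_right _ _) _); linarith
  · refine le_trans ?_ (add_le_add_left (le_max_right _ _) _); linarith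

/-- Two lines sharing a long initial part of a segment agree. -/
theorem line_eq {A B : Set F} (hA : A ∈ T.lines) (hB : B ∈ T.lines) {c a b x : F}
    (hcA : c ∈ A) (hcB : c ∈ B) (ha : a ∈ A) (hb : b ∈ B) (h1 : T.B c a x) (h2 : T.B c b x)
    (u1 : T.u ≤ T.d c a) (u2 : T.u ≤ T.d c b) : A = B := by
  by_contra hne
  rcases le_total (T.d c a) (T.d c b) with hle | hle
  · have : a ∈ B := line_cvx hB _ hcB _ hb _ (by
      have := h1.dist_of_le h2 hle; unfold TreeD.B; omega)
    have := T.ov A hA B hB hne c hcA hcB a ha this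
    omega
  · have : b ∈ A := line_cvx hA _ hcA _ ha _ (by
      have := h2.dist_of_le h1 hle; unfold TreeD.B; omega)
    have := T.ov A hA B hB hne c hcA hcB b this hb
    omega

/-- A line running through `c` and `c'`, for a while on the arms of `x` and `z`. -/
def Spn (T : Setup F) (x c c' z : F) : Prop :=
  ∃ A ∈ T.lines, ∃ a ∈ A, ∃ b ∈ A, c ∈ A ∧ c' ∈ A ∧ T.B x a c ∧ T.B c' b z ∧
    T.u ≤ T.d a c ∧ T.u ≤ T.d c' b

theorem Spn.flip {x c c' z : F} (h : T.Spn x c c' z) : T.Spn z c' c x := by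
  obtain ⟨A, hA, a, ha, b, hb, hc, hc', h1, h2, h3, h4⟩ := h
  exact ⟨A, hA, b, hb, a, ha, hc', hc, h2.symm, h1.symm, by rwa [T.comm], by rwa [T.comm]⟩

/-- The points adjacent to a median in a tripod. -/
theorem b_arm {x c y a b : F} (h : T.B x c y) (h1 : T.B x a c) (h2 : T.B c b y) : T.B a c b :=
  b_inner h h1 h2

/-- The four point condition for a long crossbar along which a line runs from the arm of `x` to
the arm of `z`. -/
theorem fp_span {x y z t c c' : F} (h : T.Hc x y z t c c') (hm : T.u ≤ T.d c c')
    (hs : T.Spn x c c' z) : T.FP x y z t := by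
  obtain ⟨A, hA, a, ha, b, hb, hc, hc', h1, h2, h3, h4⟩ := hs
  have hu := T.upos
  obtain ⟨x', hx⟩ := line_gate hA x
  obtain ⟨z', hz⟩ := line_gate hA z
  have gy : T.Gt A y c := by
    obtain ⟨g, hg⟩ := line_gate hA y
    have e := hg.2 c hc
    have := no_tripod hA hc ha hc' hg.1 (h.b3.drop h1) (b_inner h.xy h1 e.symm)
      (h.sw1.b3.drop e).symm
    have : g = c := by
      rcases this with h | h | h
      · omega
      · rw [T.comm] at h; omega
      · exact T.eq_of h
    subst this; exact hg
  have gt : T.Gt A t c' := by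
    obtain ⟨g, hg⟩ := line_gate hA t
    have e := hg.2 c' hc'
    have := no_tripod hA hc' hb hc hg.1 (h.flip.b3.drop h2.symm) (b_inner h.zt h2.symm e.symm)
      (h.flip.sw1.b3.drop e).symm
    have : g = c' := by
      rcases this with h | h | h
      · rw [T.comm] at h; omega
      · omega
      · exact T.eq_of h
    subst this; exact hg
  have bx := hx.2 c hc
  have bz := hz.2 c' hc'
  have bx' := hx.2 a ha
  have bz' := hz.2 b hb
  have dx : T.u ≤ T.d x' c := by
    have := h1.symm
    unfold TreeD.B at *; omega
  have dz : T.u ≤ T.d c' z' := by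
    have := T.comm z' c'
    have := T.comm z c'
    have := T.comm b z
    unfold TreeD.B at *; omega
  have d1 : T.d x' c' = T.d x' c + T.d c c' := Eq.symm (h.b3.drop bx)
  have d2 : T.d c z' = T.d c c' + T.d c' z' := by
    have := h.flip.b3.drop bz
    unfold TreeD.B at this
    have := T.comm z' c'
    have := T.comm z' c
    have := T.comm c c'
    omega
  have d3 : T.d x' z' = T.d x' c + T.d c c' + T.d c' z' := by
    have := b_inner h.b1 bx (h.b2.right bz.symm)
    unfold TreeD.B at this; omega
  have P1 := arc_sum hA hx gy dx
  have P1' := arc_sum hA hz gt (by rwa [T.comm])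
  have P2 := arc_sum hA hx hz (by omega)
  have P2' := arc_sum hA gy gt hm
  have P3 := arc_sum hA hx gt (by omega)
  have P3' := arc_sum hA gy hz (by omega)
  have R1 := arc_le hA (x := x) (y := y) hx.1 hc
  have R1' := arc_le hA (x := z) (y := t) hz.1 hc'
  have R2 := arc_le hA (x := x) (y := z) hx.1 hz.1
  have R2' := arc_le hA (x := y) (y := t) hc hc'
  have R3 := arc_le hA (x := x) (y := t) hx.1 hc'
  have R3' := arc_le hA (x := y) (y := z) hc hz.1
  rw [D_comm c y] at *
  rw [D_comm z z'] at *
  rw [T.comm z' c'] at *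
  rw [d3] at P2 R2
  rw [d1] at P3 R3
  rw [d2] at P3' R3'
  generalize T.d x' c = α at *
  generalize T.d c c' = m at *
  generalize T.d c' z' = β at *
  have m1 : T.ph α ≤ T.ph (α + m) := ph_mono (by omega)
  have m2 : T.ph β ≤ T.ph (m + β) := ph_mono (by omega)
  have m3 : T.ph m ≤ T.ph (α + m) := ph_mono (by omega)
  have m4 : T.ph m ≤ T.ph (m + β) := ph_mono (by omega)
  have m5 : T.ph (α + m) ≤ T.ph (α + m + β) := ph_mono (by omega)
  have m6 : T.ph (m + β) ≤ T.ph (α + m + β) := ph_mono (by omega)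
  have n1 := ph_add_max (T := T) (α + m) β
  have n2 := ph_add_max (T := T) α m
  have n3 := ph_add_max (T := T) m β
  refine ⟨?_, ?_, ?_⟩
  · refine le_trans ?_ (add_le_add_left (le_max_right _ _) _); linarith
  · refine le_trans ?_ (add_le_add_left (le_max_right _ _) _)
    rcases max_cases (T.ph (α + m)) (T.ph β) with ⟨e, _⟩ | ⟨e, _⟩ <;> rw [e] at n1 <;> linarith
  · by_cases hα : m ≤ α
    · by_cases hβ : m ≤ β
      · refine le_trans ?_ (add_le_add_left (le_max_left _ _) _)
        rw [max_eq_left (ph_mono hα)] at n2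
        rw [max_eq_right (ph_mono hβ)] at n3
        linarith
      · refine le_trans ?_ (add_le_add_left (le_max_right _ _) _)
        rw [max_eq_left (ph_mono (not_le.1 hβ).le)] at n3
        linarith
    · refine le_trans ?_ (add_le_add_left (le_max_right _ _) _)
      rw [max_eq_right (ph_mono (not_le.1 hα).le)] at n2
      linarith

/-- A substantial crossing at `c` towards `z` uses an initial part of `[c,c']`. -/
theorem sig_norm {x y z t c c' : F} (h : T.Hc x y z t c c') (hm : T.u ≤ T.d c c')
    (hs : T.Sig 1 x c z) : ∃ A ∈ T.lines, ∃ a ∈ A, ∃ e ∈ A, c ∈ A ∧ T.B x a c ∧ T.B c e c' ∧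
      T.u ≤ T.d a c ∧ T.u ≤ T.d c e := by
  obtain ⟨A, hA, a, ha, b, hb, h1, h2, h3, h4⟩ := hs
  have hc : c ∈ A := line_cvx hA _ ha _ hb _ (b_inner h.b1 h1 h2)
  rw [one_mul] at h3 h4
  rcases le_total (T.d c c') (T.d c b) with hle | hle
  · refine ⟨A, hA, a, ha, c', ?_, hc, h1, B_self_right _ _, h3, hm⟩
    exact line_cvx hA _ hc _ hb _ (h.b2.dist_of_le h2 hle)
  · exact ⟨A, hA, a, ha, b, hb, hc, h1, h2.dist_of_le h.b2 hle, h3, h4⟩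

theorem fp_sig {x y z t c c' : F} (h : T.Hc x y z t c c') (hm : T.u ≤ T.d c c')
    (hs : T.Sig 1 x c z) : T.FP x y z t := by
  have hu := T.upos
  obtain ⟨A, hA, a, ha, e, he, hc, h1, h2, h3, h4⟩ := sig_norm h hm hs
  by_cases hc' : c' ∈ A
  · -- `A` contains `[c,c']`; look at crossings at `c'`
    have key : ∀ {x' y' z' t'}, T.Hc x' y' z' t' c c' → T.Sig 1 z' c' x' →
        ∃ b ∈ A, T.B c' b z' ∧ T.u ≤ T.d c' b := by
      intro x' y' z' t' h' hs'
      obtain ⟨A', hA', a', ha', e', he', hc1, g1, g2, g3, g4⟩ :=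
        sig_norm h'.flip (by rwa [T.comm]) hs'
      have : A = A' := line_eq hA hA' hc' hc1 hc he' (B_self_right _ _) g2 (by rwa [T.comm]) g4
      subst this
      exact ⟨a', ha', g1.symm, by rwa [T.comm]⟩
    by_cases s1 : T.Sig 1 z c' x
    · obtain ⟨b, hb, g1, g2⟩ := key h s1
      exact fp_span h hm ⟨A, hA, a, ha, b, hb, hc, hc', h1, g1, h3, g2⟩
    by_cases s2 : T.Sig 1 z c' y
    · obtain ⟨b, hb, g1, g2⟩ := key h.sw1 s2
      exact fp_span h hm ⟨A, hA, a, ha, b, hb, hc, hc', h1, g1, h3, g2⟩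
    by_cases s3 : T.Sig 1 t c' x
    · obtain ⟨b, hb, g1, g2⟩ := key h.sw2 s3
      exact (fp_span h.sw2 hm ⟨A, hA, a, ha, b, hb, hc, hc', h1, g1, h3, g2⟩).sw2
    by_cases s4 : T.Sig 1 t c' y
    · obtain ⟨b, hb, g1, g2⟩ := key h.sw1.sw2 s4
      exact (fp_span h.sw2 hm ⟨A, hA, a, ha, b, hb, hc, hc', h1, g1, h3, g2⟩).sw2
    exact (fp_cut h.flip.b1 h.sw1.flip.b1 h.sw2.flip.b1 h.sw1.sw2.flip.b1 s1 s2 s3 s4).flip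
  · -- the point where `A` leaves `[c,c']`
    obtain ⟨w, hw⟩ := line_gate hA c'
    have hwc := hw.2 c hc
    have hwe := hw.2 e he
    have hwu : T.u ≤ T.d w c := by
      have := h2.symm
      have := T.comm c e
      unfold TreeD.B at *; omega
    have key : ∀ {x' y' z' t'}, T.Hc x' y' z' t' c c' → T.B x' w z' ∧ ¬ T.Sig 1 x' w z' := by
      intro x' y' z' t' h'
      have gz : T.Gt A z' w := by
        obtain ⟨g, hg⟩ := line_gate hA z'
        by_cases e0 : g = w
        · subst e0; exact hg
        · have p1 := hg.path hw e0
          have p2 := hg.2 c hc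
          have p3 := h'.flip.b3
          unfold TreeD.B at p2 p3 hwc
          have : T.d w c' = 0 := by
            have := T.comm w c'
            have := T.tri g w c
            omega
          have : w = c' := T.eq_of this
          subst this; exact absurd hw.1 hc'
      have e1 : T.B w c x' := by
        exact (h'.b3.symm.drop hwc)
      obtain ⟨s, b⟩ := not_sig_gate hA gz hc e1 hwu
      exact ⟨b.symm, fun hh => s hh.symm⟩
    exact fp_cut (key h).1 (key h.sw2).1 (key h.sw1).1 (key h.sw1.sw2).1
      (key h).2 (key h.sw2).2 (key h.sw1).2 (key h.sw1.sw2).2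

/-- The four point condition for an H with a long crossbar. -/
theorem fp_far {x y z t c c' : F} (h : T.Hc x y z t c c') (hm : T.u ≤ T.d c c') :
    T.FP x y z t := by
  by_cases s1 : T.Sig 1 x c z
  · exact fp_sig h hm s1
  by_cases s2 : T.Sig 1 x c t
  · exact (fp_sig h.sw2 hm s2).sw2
  by_cases s3 : T.Sig 1 y c z
  · exact (fp_sig h.sw1 hm s3).sw1
  by_cases s4 : T.Sig 1 y c t
  · exact (fp_sig h.sw1.sw2 hm s4).sw2.sw1
  exact fp_cut h.b1 h.sw2.b1 h.sw1.b1 h.sw1.sw2.b1 s1 s2 s3 s4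

theorem sig_spn {x y z t c c' : F} (h : T.Hc x y z t c c') (hm : T.d c c' < T.u)
    (hs : T.Sig 2 x c z) : T.Spn x c c' z := by
  obtain ⟨A, hA, a, ha, b, hb, h1, h2, h3, h4⟩ := hs
  have hc : c ∈ A := line_cvx hA _ ha _ hb _ (b_inner h.b1 h1 h2)
  have e := h.b2.dist_of_le h2 (by omega)
  exact ⟨A, hA, a, ha, b, hb, hc, line_cvx hA _ hc _ hb _ e, h1, h.b2.mid h2 (by omega),
    by omega, by omega⟩

/-- Overlaps are short, so a line following the crossbar from `x` to `z` excludes one from `x` to `y`. -/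
theorem match1 {x y z t c c' : F} (h : T.Hc x y z t c c') (s1 : T.Sig 1 x c y)
    (s2 : T.Spn x c c' z) : False := by
  have hu := T.upos
  obtain ⟨A, hA, a, ha, b, hb, h1, h2, h3, h4⟩ := s1
  obtain ⟨A', hA', a', ha', b', hb', hc, hc', g1, g2, g3, g4⟩ := s2
  have hcA : c ∈ A := line_cvx hA _ ha _ hb _ (b_inner h.xy h1 h2)
  have : A = A' := line_eq hA hA' hcA hc ha ha' h1.symm g1.symm (by rw [T.comm]; omega)
    (by rwa [T.comm])
  subst this
  have gb := h.b2.right g2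
  have := no_tripod hA hc ha hb hb' (b_inner h.xy h1 h2) (b_inner h.b1 h1 gb)
    (b_inner h.sw1.b1 h2.symm gb)
  have e1 := T.comm c b
  have e2 := T.comm c b'
  have := h.b2.drop (e := c) (B_self_left _ _)
  have : T.B c c' b' := by
    have := h.b2.symm.drop g2.symm; exact this.symm
  unfold TreeD.B at this
  omega

/-- A line following the crossbar from `x` to `z` excludes one from `x` to `t`. -/
theorem match2 {x y z t c c' : F} (h : T.Hc x y z t c c') (s1 : T.Spn x c c' z)
    (s2 : T.Spn x c c' t) : False := by
  have hu := T.upos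
  obtain ⟨A, hA, a, ha, b, hb, hc, hc', h1, h2, h3, h4⟩ := s1
  obtain ⟨A', hA', a', ha', b', hb', gc, gc', g1, g2, g3, g4⟩ := s2
  have : A = A' := line_eq hA hA' hc gc ha ha' h1.symm g1.symm (by rwa [T.comm]) (by rwa [T.comm])
  subst this
  have ea := h.b3.left h1
  have := no_tripod hA hc' ha hb hb' (b_inner h.b4 ea h2) (b_inner h.sw2.b4 ea g2)
    (b_inner h.zt h2.symm g2)
  have e1 := T.comm c' b
  have e2 := T.comm c' b'
  have := h.b3.drop h1
  unfold TreeD.B at this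
  omega

/-- The four point condition for an H with a short crossbar. -/
theorem fp_near {x y z t c c' : F} (h : T.Hc x y z t c c') (hm : T.d c c' < T.u) :
    T.FP x y z t := by
  have hcc : T.D c c' ≤ 1 := by
    have := D_le_nat (T := T) (x := c) (y := c') (θ := 1) (by omega)
    simpa using this
  have up : ∀ {x' y' z' t'}, T.Hc x' y' z' t' c c' → T.D x' z' ≤ T.D x' c + T.D z' c' + 1 := by
    intro x' y' z' t' _
    have := D_tri (T := T) x' c z'
    have := D_tri (T := T) c c' z'
    rw [D_comm z' c']
    linarith
  have low : ∀ {x' y' z' t'}, T.Hc x' y' z' t' c c' → ¬ T.Spn x' c c' z' →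
      T.D x' c + T.D z' c' - 2 ≤ T.D x' z' := by
    intro x' y' z' t' h' hs
    have e1 := near_cut h'.b1 (fun hh => hs (sig_spn h' hm hh))
    have e2 := D_mono' h'.b2
    rw [D_comm z' c']
    push_cast at e1; linarith
  have low' : ∀ {x' c y'}, T.B x' c y' → ¬ T.Sig 1 x' c y' →
      T.D x' c + T.D y' c - 1 ≤ T.D x' y' := by
    intro x' c y' hb hs
    have e1 := near_cut hb hs
    rw [D_comm y' c]
    push_cast at e1; linarith
  have u1 := up h
  have u2 := up h.sw1
  have u3 := up h.sw2
  have u4 := up h.sw1.sw2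
  have u5 := D_tri (T := T) x c y
  have u6 := D_tri (T := T) z c' t
  rw [D_comm c y] at u5
  rw [D_comm c' t] at u6
  have low1 := low' h.xy
  have low2 := low' h.zt
  have l1 := low h
  have l2 := low h.sw1
  have l3 := low h.sw2
  have l4 := low h.sw1.sw2
  have finish : ∀ {P1 P2 P3 b : ℝ}, P1 ≤ b + 2 → P2 ≤ b + 2 → P3 ≤ b + 2 →
      (b - 4 ≤ P1 ∧ b - 4 ≤ P2 ∨ b - 4 ≤ P1 ∧ b - 4 ≤ P3 ∨ b - 4 ≤ P2 ∧ b - 4 ≤ P3) →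
      P1 ≤ max P2 P3 + 6 ∧ P2 ≤ max P1 P3 + 6 ∧ P3 ≤ max P1 P2 + 6 := by
    intro P1 P2 P3 b h1 h2 h3 h4
    have := le_max_left P2 P3
    have := le_max_right P2 P3
    have := le_max_left P1 P3
    have := le_max_right P1 P3
    have := le_max_left P1 P2
    have := le_max_right P1 P2
    rcases h4 with h | h | h <;> refine ⟨?_, ?_, ?_⟩ <;> linarith
  refine finish (b := T.D x c + T.D y c + T.D z c' + T.D t c') (by linarith) (by linarith)
    (by linarith) ?_
  by_cases p1 : ¬ T.Sig 1 x c y ∧ ¬ T.Sig 1 z c' t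
  · have q1 := low1 p1.1
    have q2 := low2 p1.2
    by_cases p2 : ¬ T.Spn x c c' z ∧ ¬ T.Spn y c c' t
    · have := l1 p2.1
      have := l4 p2.2
      left; constructor <;> linarith
    · have p3 : ¬ T.Spn x c c' t ∧ ¬ T.Spn y c c' z := by
        constructor
        · intro hh
          apply p2
          exact ⟨fun h1 => match2 h h1 hh, fun h1 => match2 h.flip.sw1 hh.flip h1.flip⟩
        · intro hh
          apply p2
          exact ⟨fun h1 => match2 h.flip h1.flip hh.flip, fun h1 => match2 h.sw1 hh h1⟩
      have := l2 p3.2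
      have := l3 p3.1
      right; left; constructor <;> linarith
  · right; right
    have key : ∀ {x' y' z' t' c c'}, T.Hc x' y' z' t' c c' → T.Sig 1 x' c y' →
        ¬ T.Spn x' c c' z' ∧ ¬ T.Spn x' c c' t' ∧ ¬ T.Spn y' c c' z' ∧ ¬ T.Spn y' c c' t' :=
      fun h' s => ⟨match1 h' s, match1 h'.sw2 s, match1 h'.sw1 s.symm, match1 h'.sw1.sw2 s.symm⟩
    have all : ¬ T.Spn x c c' z ∧ ¬ T.Spn x c c' t ∧ ¬ T.Spn y c c' z ∧ ¬ T.Spn y c c' t := by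
      by_cases s : T.Sig 1 x c y
      · exact key h s
      · have s' : T.Sig 1 z c' t := by
          by_contra hh; exact p1 ⟨s, hh⟩
        obtain ⟨k1, k2, k3, k4⟩ := key h.flip s'
        exact ⟨fun q => k1 q.flip, fun q => k3 q.flip, fun q => k2 q.flip, fun q => k4 q.flip⟩
    have := l1 all.1
    have := l2 all.2.2.1
    have := l3 all.2.1
    have := l4 all.2.2.2
    constructor <;> linarith

theorem exists_hc {x y z t : F} (h1 : T.d x y + T.d z t ≤ T.d x z + T.d y t)
    (h2 : T.d x z + T.d y t = T.d x t + T.d y z) : ∃ c c', T.Hc x y z t c c' := by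
  obtain ⟨c, a1, a2, a3⟩ := T.med x y z
  obtain ⟨c', b1, b2, b3⟩ := T.med z t x
  refine ⟨c, c', a1, b1, ?_, ?_, ?_, ?_⟩ <;>
  · have := T.fp x c z c'
    have := T.fp x c c' z
    have := T.fp y c z c'
    have := T.tri c c' z
    have := T.tri x c c'
    grind [T.comm]

theorem fp_all (x y z t : F) : T.FP x y z t := by
  have key : ∀ {x y z t}, T.d x y + T.d z t ≤ T.d x z + T.d y t →
      T.d x z + T.d y t = T.d x t + T.d y z → T.FP x y z t := by
    intro x y z t h1 h2
    obtain ⟨c, c', h⟩ := exists_hc h1 h2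
    rcases le_or_gt T.u (T.d c c') with hm | hm
    · exact fp_far h hm
    · exact fp_near h hm
  have e1 := T.fp x y z t
  have e2 := T.fp x z y t
  have e3 := T.fp x y t z
  have c1 := T.comm y z
  have c2 := T.comm t z
  have c3 := T.comm y t
  by_cases h1 : T.d x y + T.d z t ≤ T.d x z + T.d y t ∧ T.d x z + T.d y t = T.d x t + T.d y z
  · exact key h1.1 h1.2
  by_cases h2 : T.d x z + T.d y t ≤ T.d x y + T.d z t ∧ T.d x y + T.d z t = T.d x t + T.d y z
  · exact (key (x := x) (y := z) (z := y) (t := t) (by omega) (by omega)).rot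
  · exact (key (x := x) (y := t) (z := y) (t := z) (by omega) (by omega)).rot.sw2

/-- `D` satisfies the four point condition up to `6`. -/
theorem D_fp (x y z t : F) :
    T.D x z + T.D y t ≤ max (T.D x y + T.D z t) (T.D x t + T.D y z) + 6 := (fp_all x y z t).2.1

end Setup

/-! ### Lifting polygons -/

namespace Setup
open TreeD
variable {F : Type u} [Group F] {T : Setup F}

theorem rot_mem {g : F} {A : Set F} {n : ℕ} (h : T.Rot g A n) : g ∈ T.K :=
  Subgroup.subset_closure ⟨A, n, h⟩

/-- One of the two rotations moves `q` past `p`. -/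
theorem rot_back {g : F} {A : Set F} {n : ℕ} (h : T.Rot g A n) {p q : F} (hp : p ∈ A) (hq : q ∈ A) :
    ∃ j : ℤ, (T.d p (g ^ j * q) : ℤ) = |(T.d p q : ℤ) - n| := by
  obtain ⟨γ, h1, h2, m, h3, h4⟩ := T.rot_tr h
  have h5 : ∀ i, g⁻¹ * γ i = γ (i - m) := by
    intro i
    rw [inv_mul_eq_iff_eq_mul, h4]; congr 1; ring
  subst h2
  obtain ⟨i, rfl⟩ := hp
  obtain ⟨l, rfl⟩ := hq
  have hs : (0 : ℤ) ≤ T.s := by positivity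
  have e : ∀ a b : ℤ, |(T.s : ℤ) * a - T.s * b| = T.s * |a - b| := by
    intro a b; rw [← mul_sub, abs_mul, abs_of_nonneg hs]
  rcases le_total i l with hl | hl
  · refine ⟨-1, ?_⟩
    rw [zpow_neg_one, h5, h1, h1, h3]
    push_cast
    rw [e]; congr 1
    rw [abs_of_nonpos (a := i - l) (by omega)]
    rw [← abs_neg]; congr 1; ring
  · refine ⟨1, ?_⟩
    rw [zpow_one, h4, h1, h1, h3]
    push_cast
    rw [e]; congr 1
    rw [abs_of_nonneg (a := i - l) (by omega)]
    congr 1; ring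

/-- Relations between points that survive translation by `K` and rotation at very long arcs. -/
def Lft (T : Setup F) (Q : F → F → Prop) : Prop :=
  (∀ k ∈ T.K, ∀ x y, Q x y → Q (k * x) (k * y)) ∧
  ∀ g A n, T.Rot g A n → ∀ x y p q, T.Gt A x p → T.Gt A y q → (T.M + 2) * T.u ≤ T.d p q →
    ∀ j : ℤ, Q x y → Q x (g ^ j * y)

theorem lft_eq : T.Lft (fun x y => x = y) := by
  refine ⟨fun k _ x y h => by rw [h], ?_⟩
  rintro g A n h x y p q hp hq hu j rfl
  have := hp.uniq hq
  subst this
  rw [T.self] at hu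
  have := T.upos
  nlinarith
theorem lft_D (c : ℝ) : T.Lft (fun x y => T.D x y ≤ c) := by
  refine ⟨fun k _ x y h => (D_smul k x y).le.trans h, ?_⟩
  intro g A n h x y p q hp hq hu j hD
  exact (D_rot h hp hq hu j).trans hD

/-- The shortening move: rotating across a Greendlinger arc. -/
theorem shorten {g : F} {A : Set F} {n : ℕ} (h : T.Rot g A n) {x y p q : F} (hp : T.Gt A x p)
    (hq : T.Gt A y q) (hn : 9 * n ≤ 10 * T.d p q) : ∃ j : ℤ, T.d x (g ^ j * y) < T.d x y := by
  obtain ⟨j, hj⟩ := rot_back h hp.1 hq.1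
  refine ⟨j, ?_⟩
  have hpos := (rot_pos h).2
  have hne : p ≠ q := by
    rintro rfl; rw [T.self] at hn; omega
  have h1 := hp.path hq hne
  have h2 := T.tri x p (g ^ j * y)
  have h3 := T.tri p (g ^ j * q) (g ^ j * y)
  rw [T.inv] at h3
  have : T.d p (g ^ j * q) < T.d p q := by
    zify; rw [hj, abs_lt]; constructor <;> omega
  omega

theorem rot_long {g : F} {A : Set F} {n : ℕ} (h : T.Rot g A n) : 40 * ((T.M + 2) * T.u) ≤ n := by
  refine le_trans ?_ (T.rot_len h)
  rw [← mul_assoc]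
  exact Nat.mul_le_mul_right _ T.hM

/-- Open quadrilaterals that close up modulo `K` can be lifted to closed ones. -/
theorem lift4 {Q1 Q2 Q3 Q4 : F → F → Prop} (H1 : T.Lft Q1) (H2 : T.Lft Q2) (H3 : T.Lft Q3)
    (H4 : T.Lft Q4) {x1 x2 x3 x4 k : F} (hk : k ∈ T.K) (h1 : Q1 x1 x2) (h2 : Q2 x2 x3)
    (h3 : Q3 x3 x4) (h4 : Q4 x4 (k * x1)) :
    ∃ k2 ∈ T.K, ∃ k3 ∈ T.K, ∃ k4 ∈ T.K, Q1 x1 (k2 * x2) ∧ Q2 (k2 * x2) (k3 * x3) ∧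
      Q3 (k3 * x3) (k4 * x4) ∧ Q4 (k4 * x4) x1 := by
  induction hd : T.d x1 (k * x1) using Nat.strong_induction_on generalizing x2 x3 x4 k with
  | _ N ih =>
    by_cases e : k = 1
    · subst e
      rw [one_mul] at h4
      exact ⟨1, one_mem _, 1, one_mem _, 1, one_mem _, by simpa using ⟨h1, h2, h3, h4⟩⟩
    obtain ⟨g, A, n, hg, p, q, hp, hq, hn⟩ := greendlinger hk e x1
    obtain ⟨j, hj⟩ := shorten hg hp hq hn
    have hgj : g ^ j ∈ T.K := zpow_mem (rot_mem hg) _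
    have hA := T.rot_line hg
    obtain ⟨p2, hp2⟩ := line_gate hA x2
    obtain ⟨p3, hp3⟩ := line_gate hA x3
    obtain ⟨p4, hp4⟩ := line_gate hA x4
    have t1 := T.tri p p2 q
    have t2 := T.tri p2 p3 q
    have t3 := T.tri p3 p4 q
    have hl := rot_long hg
    have hj' : T.d x1 (g ^ j * k * x1) < N := by rw [mul_assoc]; omega
    have hk' : g ^ j * k ∈ T.K := mul_mem hgj hk
    by_cases c1 : (T.M + 2) * T.u ≤ T.d p p2
    · obtain ⟨k2, m2, k3, m3, k4, m4, r⟩ := ih _ hj' hk' (H1.2 _ _ _ hg _ _ _ _ hp hp2 c1 j h1)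
        (H2.1 _ hgj _ _ h2) (H3.1 _ hgj _ _ h3)
        (by rw [mul_assoc]; exact H4.1 _ hgj _ _ h4) rfl
      simp only [← mul_assoc] at r
      exact ⟨_, mul_mem m2 hgj, _, mul_mem m3 hgj, _, mul_mem m4 hgj, r⟩
    by_cases c2 : (T.M + 2) * T.u ≤ T.d p2 p3
    · obtain ⟨k2, m2, k3, m3, k4, m4, r⟩ := ih _ hj' hk' h1 (H2.2 _ _ _ hg _ _ _ _ hp2 hp3 c2 j h2)
        (H3.1 _ hgj _ _ h3) (by rw [mul_assoc]; exact H4.1 _ hgj _ _ h4) rfl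
      simp only [← mul_assoc] at r
      exact ⟨_, m2, _, mul_mem m3 hgj, _, mul_mem m4 hgj, r⟩
    by_cases c3 : (T.M + 2) * T.u ≤ T.d p3 p4
    · obtain ⟨k2, m2, k3, m3, k4, m4, r⟩ := ih _ hj' hk' h1 h2
        (H3.2 _ _ _ hg _ _ _ _ hp3 hp4 c3 j h3)
        (by rw [mul_assoc]; exact H4.1 _ hgj _ _ h4) rfl
      simp only [← mul_assoc] at r
      exact ⟨_, m2, _, m3, _, mul_mem m4 hgj, r⟩
    · have c4 : (T.M + 2) * T.u ≤ T.d p4 q := by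
        have := (rot_pos hg).2; omega
      exact ih _ hj' hk' h1 h2 h3
        (by rw [mul_assoc]; exact H4.2 _ _ _ hg _ _ _ _ hp4 hq c4 j h4) rfl

/-- No rotation line follows `[x,y]` for much more than half a period. -/
def Mn (T : Setup F) (x y : F) : Prop :=
  ∀ g A n, T.Rot g A n → ∀ p q, T.Gt A x p → T.Gt A y q → 100 * T.d p q ≤ 51 * n

theorem Mn.symm {x y : F} (h : T.Mn x y) : T.Mn y x :=
  fun g A n hg p q hp hq => by rw [T.comm]; exact h g A n hg q p hq hp
theorem Mn.smul {x y : F} (h : T.Mn x y) (f : F) : T.Mn (f * x) (f * y) := by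
  intro g A n hg p q hp hq
  have h1 := T.rot_conj f⁻¹ hg
  have := h _ _ _ h1 (f⁻¹ * p) (f⁻¹ * q) (by simpa using gt_sm (g := f⁻¹) hp)
    (by simpa using gt_sm (g := f⁻¹) hq)
  rwa [T.inv] at this

theorem mn_of_le {x y : F} (h : 100 * T.d x y ≤ 51 * (T.Lam * T.u)) : T.Mn x y := by
  intro g A n hg p q hp hq
  have := T.rot_len hg
  have := hp.le hq
  omega

/-- Relations with minimal position hold without correction by `K`. -/
theorem Mn.lift {Q : F → F → Prop} (H : T.Lft Q) {x y k : F} (hm : T.Mn x y) (hk : k ∈ T.K)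
    (h : Q x (k * y)) : Q x y := by
  induction hd : T.d y (k * y) using Nat.strong_induction_on generalizing k with
  | _ N ih =>
    by_cases e : k = 1
    · subst e; rwa [one_mul] at h
    obtain ⟨g, A, n, hg, p, q, hp, hq, hn⟩ := greendlinger hk e y
    obtain ⟨j, hj⟩ := shorten hg hp hq hn
    obtain ⟨r, hr⟩ := line_gate (T.rot_line hg) x
    have h1 := hm g A n hg r p hr hp
    have h2 := T.tri p r q
    have h3 := T.comm p r
    have hl := rot_long hg
    have hpos := (rot_pos hg).2
    have := H.2 _ _ _ hg _ _ _ _ hr hq (by omega) j h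
    rw [← mul_assoc] at hj this
    exact ih _ (by omega) (mul_mem (zpow_mem (rot_mem hg) _) hk) this rfl

/-- Elements of `K` with small displacement are trivial. -/
theorem K_short {k x : F} (hk : k ∈ T.K) (h : 10 * T.d x (k * x) < 9 * (T.Lam * T.u)) : k = 1 := by
  by_contra e
  obtain ⟨g, A, n, hg, p, q, hp, hq, hn⟩ := greendlinger hk e x
  have := T.rot_len hg
  have := hp.le hq
  omega

/-! ### The quotient metric -/

instance K_normal : (T.K).Normal := by
  refine ⟨fun k hk f => ?_⟩
  induction hk using Subgroup.closure_induction with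
  | mem g h =>
    obtain ⟨A, n, h⟩ := h
    exact rot_mem (T.rot_conj f h)
  | one => simp
  | mul a b _ _ h1 h2 =>
    have : f * (a * b) * f⁻¹ = (f * a * f⁻¹) * (f * b * f⁻¹) := by group
    rw [this]; exact mul_mem h1 h2
  | inv a _ h =>
    have : f * a⁻¹ * f⁻¹ = (f * a * f⁻¹)⁻¹ := by group
    rw [this]; exact inv_mem h

/-- The metric induced by `D` on the quotient by `K`. -/
def Db (T : Setup F) (x y : F) : ℝ := ⨅ k : T.K, T.D x (k * y)

theorem Db_bdd (x y : F) : BddBelow (Set.range fun k : T.K => T.D x (k * y)) :=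
  ⟨0, by rintro _ ⟨k, rfl⟩; exact D_nonneg _ _⟩
theorem Db_le {x y k : F} (hk : k ∈ T.K) : T.Db x y ≤ T.D x (k * y) := ciInf_le (Db_bdd x y) ⟨k, hk⟩
theorem le_Db {x y : F} {c : ℝ} (h : ∀ k ∈ T.K, c ≤ T.D x (k * y)) : c ≤ T.Db x y :=
  le_ciInf fun k => h k k.2
theorem Db_lt {x y : F} {c : ℝ} (h : T.Db x y < c) : ∃ k ∈ T.K, T.D x (k * y) < c := by
  obtain ⟨k, hk⟩ := exists_lt_of_ciInf_lt h
  exact ⟨k, k.2, hk⟩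
theorem Db_le_D (x y : F) : T.Db x y ≤ T.D x y := by simpa using Db_le (T := T) (x := x) (y := y) (one_mem _)
theorem Db_nonneg (x y : F) : 0 ≤ T.Db x y := le_Db fun _ _ => D_nonneg _ _
theorem Db_self (x : F) : T.Db x x = 0 := le_antisymm ((Db_le_D x x).trans (D_self x).le) (Db_nonneg _ _)
theorem Db_comm (x y : F) : T.Db x y = T.Db y x := by
  have : ∀ x y : F, T.Db x y ≤ T.Db y x := by
    intro x y
    refine le_Db fun k hk => ?_
    rw [D_comm, ← D_smul k⁻¹, inv_mul_cancel_left]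
    exact Db_le (inv_mem hk)
  exact le_antisymm (this _ _) (this _ _)
theorem Db_K {x y k : F} (hk : k ∈ T.K) : T.Db x (k * y) = T.Db x y := by
  have : ∀ k ∈ T.K, ∀ y, T.Db x y ≤ T.Db x (k * y) := by
    intro k hk y
    refine le_Db fun k' hk' => ?_
    rw [← mul_assoc]; exact Db_le (mul_mem hk' hk)
  refine le_antisymm ?_ (this k hk y)
  simpa using this k⁻¹ (inv_mem hk) (k * y)
theorem Db_K' {x y k : F} (hk : k ∈ T.K) : T.Db (k * x) y = T.Db x y := by
  rw [Db_comm, Db_K hk, Db_comm]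
theorem Db_smul (f x y : F) : T.Db (f * x) (f * y) = T.Db x y := by
  have : ∀ f x y : F, T.Db (f * x) (f * y) ≤ T.Db x y := by
    intro f x y
    refine le_Db fun k hk => ?_
    have h := Db_le (T := T) (x := f * x) (y := f * y) (k := f * k * f⁻¹) (K_normal.conj_mem _ hk f)
    have e : f * k * f⁻¹ * (f * y) = f * (k * y) := by group
    rwa [e, D_smul] at h
  refine le_antisymm (this _ _ _) ?_
  simpa using this f⁻¹ (f * x) (f * y)
theorem Db_congr {x y x' y' : F} (hx : ∃ k ∈ T.K, x' = k * x) (hy : ∃ k ∈ T.K, y' = k * y) :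
    T.Db x' y' = T.Db x y := by
  obtain ⟨k, hk, rfl⟩ := hx
  obtain ⟨k', hk', rfl⟩ := hy
  rw [Db_K hk', Db_K' hk]

theorem Mn.Db {x y : F} (h : T.Mn x y) : T.Db x y = T.D x y :=
  le_antisymm (Db_le_D x y) (le_Db fun _ hk => h.lift (lft_D _) hk le_rfl)

/-- The quotient metric satisfies the four point condition. -/
theorem Db_fp (x y z t : F) :
    T.Db x z + T.Db y t ≤ max (T.Db x y + T.Db z t) (T.Db x t + T.Db y z) + 6 := by
  refine le_of_forall_pos_le_add fun e he => ?_
  obtain ⟨k1, m1, h1⟩ := Db_lt (T := T) (x := x) (y := y) (c := T.Db x y + e / 2) (by linarith)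
  obtain ⟨k2, m2, h2⟩ := Db_lt (T := T) (x := k1 * y) (y := z) (c := T.Db y z + e / 2)
    (by rw [Db_K' m1]; linarith)
  obtain ⟨k3, m3, h3⟩ := Db_lt (T := T) (x := k2 * z) (y := t) (c := T.Db z t + e / 2)
    (by rw [Db_K' m2]; linarith)
  obtain ⟨k4, m4, h4⟩ := Db_lt (T := T) (x := k3 * t) (y := x) (c := T.Db x t + e / 2)
    (by rw [Db_K' m3, Db_comm]; linarith)
  obtain ⟨l2, n2, l3, n3, l4, n4, q1, q2, q3, q4⟩ := lift4 (lft_D _) (lft_D _) (lft_D _) (lft_D _)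
    m4 h1.le h2.le h3.le h4.le
  have := D_fp (T := T) x (l2 * (k1 * y)) (l3 * (k2 * z)) (l4 * (k3 * t))
  rw [D_comm x (l4 * _)] at this
  have a1 : T.Db x z ≤ T.D x (l3 * (k2 * z)) := by
    rw [← mul_assoc]; exact Db_le (mul_mem n3 m2)
  have a2 : T.Db y t ≤ T.D (l2 * (k1 * y)) (l4 * (k3 * t)) := by
    refine le_trans (le_of_eq ?_) (Db_le_D _ _)
    rw [Db_K' n2, Db_K' m1, Db_K n4, Db_K m3]
  have b : max (T.D x (l2 * (k1 * y)) + T.D (l3 * (k2 * z)) (l4 * (k3 * t)))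
      (T.D (l4 * (k3 * t)) x + T.D (l2 * (k1 * y)) (l3 * (k2 * z))) ≤
      max (T.Db x y + T.Db z t) (T.Db x t + T.Db y z) + e := by
    refine max_le ?_ ?_
    · have := le_max_left (T.Db x y + T.Db z t) (T.Db x t + T.Db y z); linarith
    · have := le_max_right (T.Db x y + T.Db z t) (T.Db x t + T.Db y z); linarith
  linarith

theorem Db_tri (x y z : F) : T.Db x z ≤ T.Db x y + T.Db y z := by
  refine le_of_forall_pos_le_add fun e he => ?_
  obtain ⟨k1, m1, h1⟩ := Db_lt (T := T) (x := x) (y := y) (c := T.Db x y + e / 2) (by linarith)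
  obtain ⟨k2, m2, h2⟩ := Db_lt (T := T) (x := k1 * y) (y := z) (c := T.Db y z + e / 2)
    (by rw [Db_K' m1]; linarith)
  have := D_tri (T := T) x (k1 * y) (k2 * z)
  linarith [Db_le (T := T) (x := x) (y := z) m2]

end Setup

/-! ### Hyperbolic left-invariant pseudometrics -/

/-- A left-invariant pseudometric on a group with the four point condition up to `6`. -/
structure Hyp (F : Type u) [Group F] where
  ρ : F → F → ℝ
  nonneg : ∀ x y, 0 ≤ ρ x y
  self : ∀ x, ρ x x = 0
  comm : ∀ x y, ρ x y = ρ y x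
  tri : ∀ x y z, ρ x z ≤ ρ x y + ρ y z
  fp : ∀ x y z t, ρ x z + ρ y t ≤ max (ρ x y + ρ z t) (ρ x t + ρ y z) + 6
  inv : ∀ g x y, ρ (g * x) (g * y) = ρ x y

/-- Applied to the displacements `D n` of the `n`-th powers of an element: if the square moves a point
sufficiently further than the element itself, the displacements grow linearly. -/
theorem lox_seq {D : ℕ → ℝ} {c : ℝ} (hc : 0 < c)
    (h : ∀ n, D 2 + D (n + 1) ≤ max (D 1 + D n) (D (n + 2) + D 1) + 6) (h2 : D 1 + 6 + c ≤ D 2) (n : ℕ) :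
    D 1 + c * n ≤ D (n + 1) := by
  have key : ∀ n, D (n + 1) + c ≤ D (n + 2) := by
    intro n
    induction n with
    | zero => simp only [zero_add]; linarith
    | succ n ih =>
      have h1 := h (n + 1)
      rcases le_total (D 1 + D (n + 1)) (D (n + 1 + 2) + D 1) with hh | hh
      · rw [max_eq_right hh] at h1; linarith
      · rw [max_eq_left hh] at h1
        have : D (n + 1 + 1) = D (n + 2) := rfl
        linarith
  induction n with
  | zero => simp
  | succ n ih =>
    have := key n
    push_cast
    have e : D (n + 1 + 1) = D (n + 2) := rfl
    rw [e]; linarith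

namespace Hyp
variable {F : Type u} [Group F] (H : Hyp F)

/-- Word length type function: displacement of the base point `1`. -/
def l (g : F) : ℝ := H.ρ 1 g
/-- Gromov product of `x` and `y` at `b`. -/
def gp (b x y : F) : ℝ := (H.ρ b x + H.ρ b y - H.ρ x y) / 2
/-- Linear growth of powers with speed `c`. -/
def Lox (c : ℝ) (g : F) : Prop := ∃ B, ∀ n : ℕ, c * n - B ≤ H.ρ 1 (g ^ n)

variable {H}
theorem gp_min (b x y z : F) : min (H.gp b x y) (H.gp b y z) - 3 ≤ H.gp b x z := by
  have h := H.fp x y z b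
  have c1 := H.comm b x
  have c2 := H.comm b y
  have c3 := H.comm b z
  unfold gp
  rcases le_total (H.ρ x y + H.ρ z b) (H.ρ x b + H.ρ y z) with hh | hh
  · rw [max_eq_right hh] at h
    have := min_le_right ((H.ρ b x + H.ρ b y - H.ρ x y) / 2) ((H.ρ b y + H.ρ b z - H.ρ y z) / 2)
    linarith
  · rw [max_eq_left hh] at h
    have := min_le_left ((H.ρ b x + H.ρ b y - H.ρ x y) / 2) ((H.ρ b y + H.ρ b z - H.ρ y z) / 2)
    linarith
theorem gp_le {b x y z : F} {c : ℝ} (h : H.gp b x z ≤ c) (h' : c + 3 < H.gp b y z) :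
    H.gp b x y ≤ c + 3 := by
  have := gp_min (H := H) b x y z
  by_contra hh
  have := lt_min (not_le.1 hh) h'
  linarith
theorem gp_comm (b x y : F) : H.gp b x y = H.gp b y x := by
  unfold gp; rw [H.comm x y]; ring
/-- The three Gromov products in a triangle. -/
theorem gp_add (b x y : F) : H.gp b x y + H.gp x b y = H.ρ b x := by
  unfold gp; rw [H.comm x b]; ring
theorem gp_nonneg (b x y : F) : 0 ≤ H.gp b x y := by
  unfold gp; have := H.tri x b y; rw [H.comm x b] at this; linarith
theorem gp_le_left (b x y : F) : H.gp b x y ≤ H.ρ b x := by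
  have := gp_add (H := H) b x y; have := gp_nonneg (H := H) x b y; linarith
theorem gp_le_right (b x y : F) : H.gp b x y ≤ H.ρ b y := by
  rw [gp_comm]; exact gp_le_left b y x
theorem gp_smul (g b x y : F) : H.gp (g * b) (g * x) (g * y) = H.gp b x y := by
  unfold gp; simp [H.inv]

/-- Two points near a geodesic are as far apart as their distances to an end point suggest. -/
theorem near_geod {p p' v w : F} {c e : ℝ} (h1 : H.ρ v p + H.ρ p w ≤ H.ρ v w + c)
    (h2 : H.ρ v p' + H.ρ p' w ≤ H.ρ v w + c) (h3 : |H.ρ p w - H.ρ p' w| ≤ e) :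
    H.ρ p p' ≤ c + e + 6 := by
  have := H.fp p v p' w
  have c1 := H.comm p v
  have e1 := abs_le.1 h3
  rcases max_cases (H.ρ p v + H.ρ p' w) (H.ρ p w + H.ρ v p') with ⟨q, _⟩ | ⟨q, _⟩ <;>
    rw [q] at this <;> linarith [e1.1, e1.2]

theorem lox_of {c : ℝ} (hc : 0 < c) {g : F} (h : H.ρ 1 g + 6 + c ≤ H.ρ 1 (g ^ 2)) : H.Lox c g := by
  have key := lox_seq (D := fun n => H.ρ 1 (g ^ n)) hc (fun n => ?_) (by simpa using h)
  · refine ⟨c, fun n => ?_⟩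
    rcases n with _ | n
    · simp only [Nat.cast_zero, mul_zero, zero_sub, pow_zero, H.self]; linarith
    · have := key n
      have := H.nonneg 1 (g ^ 1)
      push_cast; beta_reduce at *; linarith
  · have h1 := H.fp 1 g (g ^ 2) (g ^ (n + 2))
    have e1 : H.ρ g (g ^ (n + 2)) = H.ρ 1 (g ^ (n + 1)) := by
      rw [← H.inv g 1]; congr 1
      · simp
      · rw [pow_succ' g (n + 1)]
    have e2 : H.ρ (g ^ 2) (g ^ (n + 2)) = H.ρ 1 (g ^ n) := by
      rw [← H.inv (g ^ 2) 1]; congr 1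
      · simp
      · rw [← pow_add]; congr 1; omega
    have e3 : H.ρ g (g ^ 2) = H.ρ 1 g := by
      rw [← H.inv g 1]; congr 1
      · simp
      · rw [pow_two]
    rw [e1, e2, e3] at h1
    simpa using h1

/-! ### Midpoints -/

/-- The distance between the midpoints of the pairs `q` and `q'`. -/
def mp (H : Hyp F) (q q' : F × F) : ℝ :=
  max (max (H.ρ q.1 q'.1) (H.ρ q.1 q'.2)) (max (H.ρ q.2 q'.1) (H.ρ q.2 q'.2)) -
    (H.ρ q.1 q.2 + H.ρ q'.1 q'.2) / 2

theorem mp_le {q q' : F × F} {c : ℝ} (h1 : H.ρ q.1 q'.1 ≤ c + (H.ρ q.1 q.2 + H.ρ q'.1 q'.2) / 2)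
    (h2 : H.ρ q.1 q'.2 ≤ c + (H.ρ q.1 q.2 + H.ρ q'.1 q'.2) / 2)
    (h3 : H.ρ q.2 q'.1 ≤ c + (H.ρ q.1 q.2 + H.ρ q'.1 q'.2) / 2)
    (h4 : H.ρ q.2 q'.2 ≤ c + (H.ρ q.1 q.2 + H.ρ q'.1 q'.2) / 2) : H.mp q q' ≤ c := by
  unfold mp
  have := max_le (max_le h1 h2) (max_le h3 h4)
  linarith
/-- Every comparison of end points is a lower bound for `mp`. -/
theorem le_mp (q q' : F × F) (a b : Bool) :
    H.ρ (cond a q.1 q.2) (cond b q'.1 q'.2) - (H.ρ q.1 q.2 + H.ρ q'.1 q'.2) / 2 ≤ H.mp q q' := by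
  unfold mp
  rcases a with _ | _ <;> rcases b with _ | _ <;> simp
theorem exists_mp (q q' : F × F) : ∃ a b : Bool,
    H.mp q q' = H.ρ (cond a q.1 q.2) (cond b q'.1 q'.2) - (H.ρ q.1 q.2 + H.ρ q'.1 q'.2) / 2 := by
  unfold mp
  rcases max_choice (max (H.ρ q.1 q'.1) (H.ρ q.1 q'.2)) (max (H.ρ q.2 q'.1) (H.ρ q.2 q'.2)) with h | h
  · rcases max_choice (H.ρ q.1 q'.1) (H.ρ q.1 q'.2) with h' | h'
    · exact ⟨true, true, by rw [h, h']; rfl⟩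
    · exact ⟨true, false, by rw [h, h']; rfl⟩
  · rcases max_choice (H.ρ q.2 q'.1) (H.ρ q.2 q'.2) with h' | h'
    · exact ⟨false, true, by rw [h, h']; rfl⟩
    · exact ⟨false, false, by rw [h, h']; rfl⟩
theorem mp_fp (x y z t : F × F) :
    H.mp x z + H.mp y t ≤ max (H.mp x y + H.mp z t) (H.mp x t + H.mp y z) + 6 := by
  obtain ⟨a, c, h1⟩ := exists_mp (H := H) x z
  obtain ⟨b, d, h2⟩ := exists_mp (H := H) y t
  have h := H.fp (cond a x.1 x.2) (cond b y.1 y.2) (cond c z.1 z.2) (cond d t.1 t.2)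
  have i1 := le_mp (H := H) x y a b
  have i2 := le_mp (H := H) z t c d
  have i3 := le_mp (H := H) x t a d
  have i4 := le_mp (H := H) y z b c
  have := le_max_left (H.mp x y + H.mp z t) (H.mp x t + H.mp y z)
  have := le_max_right (H.mp x y + H.mp z t) (H.mp x t + H.mp y z)
  rcases max_cases (H.ρ (cond a x.1 x.2) (cond b y.1 y.2) + H.ρ (cond c z.1 z.2) (cond d t.1 t.2))
    (H.ρ (cond a x.1 x.2) (cond d t.1 t.2) + H.ρ (cond b y.1 y.2) (cond c z.1 z.2)) with ⟨q, _⟩ | ⟨q, _⟩ <;>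
    rw [q] at h <;> linarith
theorem mp_self (q : F × F) : H.mp q q = 0 := by
  unfold mp
  have := H.comm q.1 q.2
  have := H.nonneg q.1 q.2
  simp [H.self, H.comm q.2 q.1, this]
theorem mp_comm (q q' : F × F) : H.mp q q' = H.mp q' q := by
  unfold mp
  rw [H.comm q'.1 q.1, H.comm q'.1 q.2, H.comm q'.2 q.1, H.comm q'.2 q.2, max_max_max_comm]
  ring
theorem mp_smul (g : F) (q q' : F × F) : H.mp (g • q) (g • q') = H.mp q q' := by
  unfold mp; simp [H.inv]
theorem mp_tri (x y z : F × F) : H.mp x z ≤ H.mp x y + H.mp y z + 6 := by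
  have := mp_fp (H := H) x y z y
  rw [mp_self, mp_comm z y] at this
  simpa using this

theorem mp_lox {c : ℝ} (hc : 0 < c) {g : F} {q : F × F}
    (h : H.mp q (g • q) + 6 + c ≤ H.mp q (g ^ 2 • q)) : H.Lox c g := by
  have key := lox_seq (D := fun n => H.mp q (g ^ n • q)) hc (fun n => ?_) (by simpa using h)
  · -- compare with the base point
    have cmp : ∃ B, ∀ n : ℕ, H.mp q (g ^ n • q) - B ≤ H.ρ 1 (g ^ n) := by
      refine ⟨2 * H.ρ 1 q.1 + 2 * H.ρ 1 q.2, fun n => ?_⟩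
      suffices H.mp q (g ^ n • q) ≤ H.ρ 1 (g ^ n) + (2 * H.ρ 1 q.1 + 2 * H.ρ 1 q.2) by linarith
      have n1 := H.nonneg 1 q.1
      have n2 := H.nonneg 1 q.2
      have n3 := H.nonneg q.1 q.2
      have t : ∀ x y, H.ρ x (g ^ n * y) ≤ H.ρ 1 x + H.ρ 1 (g ^ n) + H.ρ 1 y := by
        intro x y
        have h1 := H.tri x 1 (g ^ n * y)
        have h2 := H.tri 1 (g ^ n) (g ^ n * y)
        have h3 := H.inv (g ^ n) 1 y
        rw [mul_one] at h3
        rw [H.comm x 1] at h1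
        linarith
      have e : H.ρ (g ^ n • q).1 (g ^ n • q).2 = H.ρ q.1 q.2 := by simp [H.inv]
      refine mp_le ?_ ?_ ?_ ?_ <;> rw [e] <;> simp only [Prod.smul_fst, Prod.smul_snd, smul_eq_mul]
      · linarith [t q.1 q.1]
      · linarith [t q.1 q.2]
      · linarith [t q.2 q.1]
      · linarith [t q.2 q.2]
    obtain ⟨B, hB⟩ := cmp
    refine ⟨B + c + |H.mp q (g ^ 1 • q)|, fun n => ?_⟩
    have a1 := neg_abs_le (H.mp q (g ^ 1 • q))
    have a2 := hB n
    rcases n with _ | n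
    · have := mp_self (H := H) q
      have a3 := abs_nonneg (H.mp q (g ^ 1 • q))
      simp only [pow_zero, one_smul, this] at a2 ⊢
      push_cast; linarith
    · have := key n
      push_cast; beta_reduce at *; linarith
  · have h1 := mp_fp (H := H) q (g • q) (g ^ 2 • q) (g ^ (n + 2) • q)
    have e1 : H.mp (g • q) (g ^ (n + 2) • q) = H.mp q (g ^ (n + 1) • q) := by
      rw [← mp_smul g q, smul_smul, ← pow_succ']
    have e2 : H.mp (g ^ 2 • q) (g ^ (n + 2) • q) = H.mp q (g ^ n • q) := by
      rw [← mp_smul (g ^ 2) q, smul_smul, ← pow_add, add_comm 2 n]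
    have e3 : H.mp (g • q) (g ^ 2 • q) = H.mp q (g • q) := by
      rw [← mp_smul g q, smul_smul, ← pow_two]
    rw [e1, e2, e3] at h1
    simpa using h1

/-- If no short product has linear growth, the midpoint of a longest displacement is almost
fixed. -/
theorem step2 {c : ℝ} (hc : 0 < c) {u v : F} (hvu : H.ρ 1 v ≤ H.ρ 1 u)
    (nu : ¬ H.Lox c u) (nv : ¬ H.Lox c v) (nvu : ¬ H.Lox c (v * u)) (nvu' : ¬ H.Lox c (v⁻¹ * u))
    (nuv : ¬ H.Lox c (u * v)) :
    H.ρ 1 (v * u) ≤ H.ρ 1 u + (2 * c + 50) ∧ H.ρ u v ≤ H.ρ 1 u + (2 * c + 50) ∧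
      H.ρ u (v * u) ≤ H.ρ 1 u + (2 * c + 50) := by
  have nl : ∀ g, ¬ H.Lox c g → H.ρ 1 (g * g) ≤ H.ρ 1 g + 6 + c := by
    intro g hg
    by_contra hh
    exact hg (lox_of hc (by rw [pow_two]; linarith))
  have li : ∀ g : F, H.ρ 1 g⁻¹ = H.ρ 1 g := by
    intro g
    rw [← H.inv g 1 g⁻¹, mul_one, mul_inv_cancel, H.comm]
  have gi : ∀ g, ¬ H.Lox c g → H.ρ 1 g / 2 - (6 + c) / 2 ≤ H.gp 1 g g⁻¹ := by
    intro g hg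
    have := nl g hg
    unfold gp
    have e : H.ρ g g⁻¹ = H.ρ 1 (g * g) := by
      rw [← H.inv g g g⁻¹, mul_inv_cancel, H.comm]
    rw [e, li]; linarith
  have ninv : ∀ g, ¬ H.Lox c g → ¬ H.Lox c g⁻¹ := by
    rintro g hg ⟨B, hB⟩
    refine hg ⟨B, fun n => ?_⟩
    have := hB n
    rwa [inv_pow, li] at this
  -- the bound for `v * u`
  have main : ∀ v, H.ρ 1 v ≤ H.ρ 1 u → ¬ H.Lox c v → ¬ H.Lox c (v * u) →
      H.ρ 1 (v * u) ≤ H.ρ 1 u + (c + 30) := by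
    intro v hv nv nvu
    by_contra hh
    push Not at hh
    have e1 := gi v nv
    have e2 := gi (v * u) nvu
    have e3 := gi u nu
    have e4 : H.gp 1 v (v * u) = (H.ρ 1 v + H.ρ 1 (v * u) - H.ρ 1 u) / 2 := by
      unfold gp
      rw [← H.inv v 1 u, mul_one]
    have e5 : H.gp 1 (v * u)⁻¹ u⁻¹ = (H.ρ 1 (v * u) + H.ρ 1 u - H.ρ 1 v) / 2 := by
      unfold gp
      rw [li, li, ← H.inv (v * u) (v * u)⁻¹ u⁻¹, mul_inv_cancel, mul_inv_cancel_right]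
    have e6 : H.gp 1 v⁻¹ u = (H.ρ 1 v + H.ρ 1 u - H.ρ 1 (v * u)) / 2 := by
      unfold gp
      rw [li, ← H.inv v v⁻¹ u, mul_inv_cancel]
    have n0 := H.nonneg 1 v
    set t := H.ρ 1 v / 2 - (6 + c) / 2 with ht
    have s1 : t - 3 ≤ H.gp 1 v⁻¹ (v * u) := by
      refine le_trans ?_ (gp_min _ _ v _)
      have := le_min (c := t) (a := H.gp 1 v⁻¹ v) (b := H.gp 1 v (v * u))
        (by rw [gp_comm]; linarith) (by rw [e4]; linarith)
      linarith
    have s2 : t - 6 ≤ H.gp 1 v⁻¹ (v * u)⁻¹ := by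
      refine le_trans ?_ (gp_min _ _ (v * u) _)
      have := le_min (c := t - 3) (a := H.gp 1 v⁻¹ (v * u)) (b := H.gp 1 (v * u) (v * u)⁻¹)
        s1 (by linarith)
      linarith
    have s3 : t - 9 ≤ H.gp 1 v⁻¹ u⁻¹ := by
      refine le_trans ?_ (gp_min _ _ (v * u)⁻¹ _)
      have := le_min (c := t - 6) (a := H.gp 1 v⁻¹ (v * u)⁻¹) (b := H.gp 1 (v * u)⁻¹ u⁻¹)
        s2 (by rw [e5]; linarith)
      linarith
    have s4 : t - 12 ≤ H.gp 1 v⁻¹ u := by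
      refine le_trans ?_ (gp_min _ _ u⁻¹ _)
      have := le_min (c := t - 9) (a := H.gp 1 v⁻¹ u⁻¹) (b := H.gp 1 u⁻¹ u)
        s3 (by rw [gp_comm]; linarith)
      linarith
    rw [e6] at s4
    linarith
  have m1 := main v hvu nv nvu
  have m2 := main v⁻¹ (by rwa [li]) (ninv v nv) nvu'
  have m2' : H.ρ u v ≤ H.ρ 1 u + (c + 30) := by
    have : H.ρ u v = H.ρ 1 (v⁻¹ * u) := by
      rw [← H.inv v 1, mul_one, mul_inv_cancel_left, H.comm]
    rwa [this]
  refine ⟨by linarith, by linarith, ?_⟩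
  by_contra hh
  push Not at hh
  have ru := H.nonneg 1 u
  have rv := H.nonneg 1 v
  apply nuv
  set l := H.ρ 1 u with hl
  set q : F × F := (1, u) with hq
  set p : F × F := (1, 1) with hp
  have lq : H.ρ q.1 q.2 = l := rfl
  have gl : ∀ g : F, H.ρ (g • q).1 (g • q).2 = l := by intro g; simp [hq, hl]; rw [← H.inv g 1 u, mul_one]
  have hpp : H.ρ p.1 p.2 = 0 := H.self 1
  have fpq : H.mp p q ≤ l / 2 := by
    refine mp_le ?_ ?_ ?_ ?_ <;> rw [hpp, lq] <;> simp [hp, hq, H.self] <;> linarith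
  have fpq' : l / 2 ≤ H.mp p q := by
    have := le_mp (H := H) p q true false
    rw [hpp, lq] at this; simp [hp, hq] at this; linarith
  have fup : H.mp q (u • p) ≤ l / 2 := by
    have e : H.ρ (u • p).1 (u • p).2 = 0 := H.self _
    refine mp_le ?_ ?_ ?_ ?_ <;> rw [e, lq] <;> simp [hp, hq, H.self] <;> linarith
  have fpup : l ≤ H.mp p (u • p) := by
    have e : H.ρ (u • p).1 (u • p).2 = 0 := H.self _
    have := le_mp (H := H) p (u • p) true true
    rw [hpp, e] at this; change H.ρ 1 (u * 1) - (0 + 0) / 2 ≤ _ at this; rw [mul_one] at this; linarith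
  have fuq : H.mp q (u • q) ≤ c + 6 := by
    have := nl u nu
    have e2 : H.ρ u (u * u) = l := by rw [hl, ← H.inv u 1, mul_one]
    refine mp_le ?_ ?_ ?_ ?_ <;> rw [gl, lq] <;> simp [hq, H.self, e2] <;> linarith
  set s := H.mp q (v • q) with hs
  have hs1 : c + c + 50 ≤ s := by
    have := le_mp (H := H) q (v • q) false false
    rw [gl, lq] at this; change H.ρ u (v * u) - (l + l) / 2 ≤ s at this; linarith
  have fpv : H.mp p (v • q) ≤ l / 2 + (c + 30) := by
    refine mp_le ?_ ?_ ?_ ?_ <;> rw [gl, hpp] <;> simp [hp, hq] <;> linarith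
  have fpv' : H.mp p (v⁻¹ • q) ≤ l / 2 + (c + 30) := by
    have := li v
    refine mp_le ?_ ?_ ?_ ?_ <;> rw [gl, hpp] <;> simp [hp, hq] <;> linarith
  have hs' : H.mp q (v⁻¹ • q) = s := by
    rw [← mp_smul v, smul_smul, mul_inv_cancel, one_smul, mp_comm]
  have fupv : H.mp (u • p) ((u * v) • q) ≤ l / 2 + (c + 30) := by
    rw [← smul_smul, mp_smul]; exact fpv
  set r := H.mp q ((u * v) • q) with hr
  have hr1 : s - c - 12 ≤ r := by
    have := mp_tri (H := H) (u • q) q ((u * v) • q)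
    rw [← smul_smul, mp_smul, mp_comm _ q, smul_smul] at this
    linarith
  set X := H.mp (v⁻¹ • q) ((u * v) • q) with hX
  have hX1 : s + r - 12 ≤ X := by
    -- first compare `p` with `(u * v) • q`, then `v⁻¹ • q`
    have f1 := mp_fp (H := H) p q (u • p) ((u * v) • q)
    have f2 := mp_fp (H := H) p (v⁻¹ • q) ((u * v) • q) q
    have e1 : H.mp (v⁻¹ • q) q = s := by rw [mp_comm, hs']
    have e2 : H.mp ((u * v) • q) q = r := by rw [mp_comm]
    rw [e1, e2] at f2
    have hY : l / 2 + r - 6 ≤ H.mp p ((u * v) • q) := by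
      rcases max_cases (H.mp p q + H.mp (u • p) ((u * v) • q))
        (H.mp p ((u * v) • q) + H.mp q (u • p)) with ⟨g, _⟩ | ⟨g, _⟩ <;> rw [g] at f1 <;> linarith
    rcases max_cases (H.mp p (v⁻¹ • q) + r) (H.mp p q + X) with ⟨g, _⟩ | ⟨g, _⟩ <;>
      rw [g] at f2 <;> linarith
  have hfin : X - (c + 12) ≤ H.mp q ((u * v) ^ 2 • q) := by
    have e : X = H.mp (u • q) ((u * v) ^ 2 • q) := by
      rw [hX, ← mp_smul (u * v)]
      simp only [smul_smul, mul_inv_cancel_right, pow_two]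
    have := mp_tri (H := H) (u • q) q ((u * v) ^ 2 • q)
    rw [mp_comm (u • q) q] at this
    linarith
  refine mp_lox (q := q) hc ?_
  linarith

end Hyp

/-! ### Overlapping axes -/

namespace Hyp
variable {F : Type u} [Group F] {H : Hyp F}

/-- The powers of `h` are almost a geodesic through `1`, with long steps. -/
structure Ax (H : Hyp F) (h : F) : Prop where
  add : ∀ n m : ℕ, H.ρ 1 (h ^ n) + H.ρ 1 (h ^ m) - 1 ≤ H.ρ 1 (h ^ (n + m))
  big : 100 ≤ H.ρ 1 h
/-- `x` is almost shortest in its double coset with respect to the powers of `h`. -/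
def Red (H : Hyp F) (h x : F) : Prop := ∀ m n : ℤ, H.ρ 1 x - 1 ≤ H.ρ 1 (h ^ m * x * h ^ n)

theorem l_inv (g : F) : H.ρ 1 g⁻¹ = H.ρ 1 g := by
  rw [← H.inv g 1 g⁻¹, mul_one, mul_inv_cancel, H.comm]
theorem ρ_l (x y : F) : H.ρ x y = H.ρ 1 (x⁻¹ * y) := by
  rw [← H.inv x 1, mul_one, mul_inv_cancel_left]
theorem ρ_mul (x y : F) : H.ρ x (x * y) = H.ρ 1 y := by
  rw [← H.inv x 1, mul_one]
theorem l_mul (x y : F) : H.ρ 1 (x * y) ≤ H.ρ 1 x + H.ρ 1 y := by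
  have := H.tri 1 x (x * y); rwa [ρ_mul] at this

theorem Ax.inv {h : F} (a : H.Ax h) : H.Ax h⁻¹ :=
  ⟨fun n m => by simp only [inv_pow, l_inv]; exact a.add n m, by rw [l_inv]; exact a.big⟩
theorem Red.inv {h x : F} (a : H.Red h x) : H.Red h⁻¹ x := by
  intro m n
  have := a (-m) (-n)
  simpa using this
theorem Red.symm {h x : F} (a : H.Red h x) : H.Red h x⁻¹ := by
  intro m n
  have := a (-n) (-m)
  rw [l_inv, ← l_inv (h ^ m * x⁻¹ * h ^ n)]
  convert this using 2
  group
theorem Ax.le {h : F} (n : ℕ) : H.ρ 1 (h ^ n) ≤ n * H.ρ 1 h := by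
  induction n with
  | zero => simp [H.self]
  | succ n ih =>
    rw [pow_succ]
    have := l_mul (H := H) (h ^ n) h
    push_cast; linarith
theorem Ax.ge {h : F} (a : H.Ax h) (n : ℕ) : (n + 1) * H.ρ 1 h - n ≤ H.ρ 1 (h ^ (n + 1)) := by
  induction n with
  | zero => simp
  | succ n ih =>
    have := a.add (n + 1) 1
    rw [pow_one] at this
    push_cast at *; linarith
theorem pow_ρ (h : F) {i j : ℕ} (hij : i ≤ j) : H.ρ (h ^ i) (h ^ j) = H.ρ 1 (h ^ (j - i)) := by
  conv_lhs => rw [← Nat.add_sub_cancel' hij, pow_add, ρ_mul]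
theorem Ax.gp_pos {h : F} (a : H.Ax h) {i j : ℕ} (hij : i ≤ j) :
    H.ρ 1 (h ^ i) - 1 / 2 ≤ H.gp 1 (h ^ i) (h ^ j) := by
  unfold gp
  have := a.add i (j - i)
  rw [Nat.add_sub_cancel' hij] at this
  rw [pow_ρ h hij]; linarith
theorem Ax.gp_neg {h : F} (a : H.Ax h) (i j : ℕ) : H.gp 1 (h ^ i) (h⁻¹ ^ j) ≤ 1 / 2 := by
  unfold gp
  have := a.add j i
  have e : H.ρ (h ^ i) (h⁻¹ ^ j) = H.ρ 1 (h ^ (j + i)) := by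
    rw [H.comm, ρ_l, inv_pow, inv_inv, pow_add]
  rw [e, inv_pow, l_inv]; linarith

theorem Red.gp {h x : F} (a : H.Ax h) (r : H.Red h x) (n : ℕ) :
    H.gp 1 (h ^ n) x ≤ H.ρ 1 h / 2 + 4 := by
  have := a.big
  rcases n with _ | n
  · have : H.gp 1 (h ^ 0) x = 0 := by unfold Hyp.gp; simp [H.self]
    rw [this]; linarith
  · by_contra hh
    push Not at hh
    have h1 := a.gp_pos (Nat.le_add_left 1 n)
    rw [pow_one] at h1
    have h2 := gp_min (H := H) 1 h (h ^ (n + 1)) x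
    have h3 := lt_min (a := H.ρ 1 h / 2 + 4) (b := H.gp 1 h (h ^ (n + 1))) (by linarith) hh
    have h4 : H.ρ 1 h / 2 + 1 < H.gp 1 h x := by linarith
    have h5 := r (-1) 0
    rw [zpow_zero, mul_one, zpow_neg_one, ← ρ_l] at h5
    unfold Hyp.gp at h4
    linarith

/-- Two elements whose translates of the base point fit together without much cancellation. -/
structure SC (H : Hyp F) (a b : F) (C : ℝ) : Prop where
  aa : H.gp 1 a⁻¹ a ≤ H.ρ 1 a / 2 - C
  bb : H.gp 1 b⁻¹ b ≤ H.ρ 1 b / 2 - C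
  ab1 : H.gp 1 a⁻¹ b ≤ H.ρ 1 a / 2 - C
  ab2 : H.gp 1 a⁻¹ b ≤ H.ρ 1 b / 2 - C
  ba1 : H.gp 1 b⁻¹ a ≤ H.ρ 1 a / 2 - C
  ba2 : H.gp 1 b⁻¹ a ≤ H.ρ 1 b / 2 - C
  d1 : H.gp 1 a b ≤ H.ρ 1 a / 2 - C
  d2 : H.gp 1 a b ≤ H.ρ 1 b / 2 - C

theorem gp_mul (x y : F) : H.gp 1 x (x * y) = H.ρ 1 x - H.gp 1 x⁻¹ y := by
  have h1 := gp_add (H := H) 1 x (x * y)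
  have h2 := gp_smul (H := H) x⁻¹ x 1 (x * y)
  simp only [inv_mul_cancel, mul_one, inv_mul_cancel_left] at h2
  linarith

/-- Without overlap between the axis of `h` and its translate by `x`, long powers fit. -/
theorem sc_of {h x : F} (a : H.Ax h) (r : H.Red h x)
    (o1 : H.gp 1 (h ^ 40) (x * h ^ 40) ≤ 12 * H.ρ 1 h)
    (o2 : H.gp 1 (h⁻¹ ^ 40) (x * h ^ 40) ≤ 12 * H.ρ 1 h)
    (o3 : H.gp 1 (h ^ 40) (x * h⁻¹ ^ 40) ≤ 12 * H.ρ 1 h) :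
    H.SC (h ^ 40) (x * h ^ 40 * x⁻¹) (6 * H.ρ 1 h) := by
  have big := a.big
  have hK := a.ge 39
  have hK : 40 * H.ρ 1 h - 39 ≤ H.ρ 1 (h ^ 40) := by norm_num at hK ⊢; linarith
  have hK' := Ax.le (H := H) (h := h) 40
  have hs := H.nonneg 1 x
  -- facts valid for both `h` and its inverse
  have key : ∀ h : F, H.Ax h → H.Red h x → 100 ≤ H.ρ 1 h → 40 * H.ρ 1 h - 39 ≤ H.ρ 1 (h ^ 40) →
      H.ρ 1 x + H.ρ 1 (h ^ 40) - 3 / 2 * H.ρ 1 h - 15 ≤ H.gp 1 (x * h ^ 40) (x * h ^ 40 * x⁻¹) ∧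
      2 * H.ρ 1 x + H.ρ 1 (h ^ 40) - 2 * H.ρ 1 h - 22 ≤ H.ρ 1 (x * h ^ 40 * x⁻¹) := by
    intro h a r big hK
    have g1 := r.symm.gp a 40
    have g2 := r.symm.inv.gp a.inv 40
    have y : H.ρ 1 (x * h ^ 40) = H.ρ 1 x + H.ρ 1 (h ^ 40) - 2 * H.gp 1 (h ^ 40) x⁻¹ := by
      unfold gp
      rw [l_inv, H.comm (h ^ 40) x⁻¹, ρ_l x⁻¹, inv_inv]; ring
    have q : H.ρ 1 (h ^ 40 * x⁻¹) = H.ρ 1 x + H.ρ 1 (h ^ 40) - 2 * H.gp 1 (h⁻¹ ^ 40) x⁻¹ := by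
      unfold gp
      rw [l_inv, inv_pow, l_inv, ρ_l (h ^ 40)⁻¹, inv_inv]; ring
    have g3 : H.ρ 1 (h ^ 40) - H.gp 1 (h⁻¹ ^ 40) x⁻¹ = H.gp 1 (h ^ 40) (h ^ 40 * x⁻¹) := by
      rw [gp_mul, inv_pow]
    rw [l_inv] at g2
    have g4 : H.gp 1 x⁻¹ (h ^ 40 * x⁻¹) ≤ H.ρ 1 h / 2 + 4 + 3 :=
      gp_le (z := h ^ 40) (by rw [gp_comm]; exact g1) (by rw [gp_comm, ← g3]; linarith)
    have b : H.ρ 1 (x * h ^ 40 * x⁻¹) =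
        H.ρ 1 x + H.ρ 1 (h ^ 40 * x⁻¹) - 2 * H.gp 1 x⁻¹ (h ^ 40 * x⁻¹) := by
      unfold gp
      rw [l_inv, ρ_l x⁻¹, inv_inv, mul_assoc]; ring
    have b' : 2 * H.ρ 1 x + H.ρ 1 (h ^ 40) - 2 * H.ρ 1 h - 22 ≤ H.ρ 1 (x * h ^ 40 * x⁻¹) := by
      rw [b, q]; linarith
    refine ⟨?_, b'⟩
    unfold gp at g1 ⊢
    rw [ρ_mul, l_inv, y]
    unfold gp
    linarith
  obtain ⟨k1, k2⟩ := key h a r big hK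
  obtain ⟨k3, k4⟩ := key h⁻¹ a.inv r.inv (by rw [l_inv]; exact big)
    (by rw [l_inv, inv_pow, l_inv]; exact hK)
  have binv : (x * h ^ 40 * x⁻¹)⁻¹ = x * h⁻¹ ^ 40 * x⁻¹ := by group
  rw [l_inv, inv_pow, l_inv] at k3
  have m1 : H.gp 1 (h ^ 40) (x * h ^ 40 * x⁻¹) ≤ 12 * H.ρ 1 h + 3 :=
    gp_le (z := x * h ^ 40) o1 (by rw [gp_comm]; linarith)
  have m2 : H.gp 1 (h⁻¹ ^ 40) (x * h ^ 40 * x⁻¹) ≤ 12 * H.ρ 1 h + 3 :=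
    gp_le (z := x * h ^ 40) o2 (by rw [gp_comm]; linarith)
  have m3 : H.gp 1 (h ^ 40) (x * h⁻¹ ^ 40 * x⁻¹) ≤ 12 * H.ρ 1 h + 3 :=
    gp_le (z := x * h⁻¹ ^ 40) o3 (by rw [gp_comm, inv_pow]; linarith)
  have yy : H.gp 1 (x * h⁻¹ ^ 40) (x * h ^ 40) ≤ H.ρ 1 x + 1 / 2 := by
    have e1 := l_mul (H := H) x (h ^ 40)
    have e2 := l_mul (H := H) x (h⁻¹ ^ 40)
    have e3 := a.add 40 40
    have e4 : H.ρ (x * h⁻¹ ^ 40) (x * h ^ 40) = H.ρ 1 (h ^ (40 + 40)) := by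
      rw [H.inv, ρ_l, inv_pow, inv_inv, pow_add]
    rw [inv_pow, l_inv] at e2
    unfold gp; rw [e4, inv_pow]; linarith
  have n1 : H.gp 1 (x * h⁻¹ ^ 40) (x * h ^ 40 * x⁻¹) ≤ H.ρ 1 x + 1 / 2 + 3 :=
    gp_le (z := x * h ^ 40) yy (by rw [gp_comm]; linarith)
  have n2 : H.gp 1 (x * h ^ 40 * x⁻¹) (x * h⁻¹ ^ 40 * x⁻¹) ≤ H.ρ 1 x + 1 / 2 + 3 + 3 :=
    gp_le (z := x * h⁻¹ ^ 40) (by rw [gp_comm]; exact n1) (by rw [gp_comm, inv_pow]; linarith)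
  have aa : H.gp 1 (h ^ 40)⁻¹ (h ^ 40) ≤ 1 / 2 := by
    rw [gp_comm, ← inv_pow]; exact a.gp_neg 40 40
  rw [gp_comm] at m3 n2
  rw [← binv] at m3 n2
  rw [inv_pow] at m2
  constructor <;> linarith

/-- If the axis of `η` and its translate by `x` overlap, then `x η₂ x⁻¹` moves a long piece of the
axis like `η`. -/
theorem overlap {η η2 x : F} (a : H.Ax η) (r : H.Red η x) (h2 : η2 = η ∨ η2 = η⁻¹)
    (o : 12 * H.ρ 1 η < H.gp 1 (η ^ 40) (x * η2 ^ 40)) {i : ℕ} (hi : 3 ≤ i) (hi' : i ≤ 11) :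
    H.ρ (η ^ (i + 1)) (x * η2 * x⁻¹ * η ^ i) ≤ 60 := by
  have big := a.big
  have a2 : H.Ax η2 := by rcases h2 with rfl | rfl; exacts [a, a.inv]
  have r2 : H.Red η2 x := by rcases h2 with rfl | rfl; exacts [r, r.inv]
  have l2 : ∀ n : ℕ, H.ρ 1 (η2 ^ n) = H.ρ 1 (η ^ n) := by
    intro n; rcases h2 with rfl | rfl
    · rfl
    · rw [inv_pow, l_inv]
  have l21 : H.ρ 1 η2 = H.ρ 1 η := by have := l2 1; simpa using this
  have hs0 := H.nonneg 1 x
  -- the translated element is short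
  have hs : H.ρ 1 x ≤ H.ρ 1 η + 11 := by
    have e1 := gp_mul (H := H) x (η2 ^ 40)
    have e2 := r2.symm.gp a2 40
    rw [gp_comm, l21] at e2
    have e3 := r.gp a 40
    have e4 := gp_min (H := H) 1 (η ^ 40) (x * η2 ^ 40) x
    rw [gp_comm 1 _ x] at e4
    by_contra hh
    push Not at hh
    have := lt_min (a := H.ρ 1 η / 2 + 7) (b := H.gp 1 (η ^ 40) (x * η2 ^ 40))
      (c := H.gp 1 x (x * η2 ^ 40)) (by linarith) (by linarith)
    linarith
  have Lge : ∀ n : ℕ, (n + 1) * H.ρ 1 η - n ≤ H.ρ 1 (η ^ (n + 1)) := a.ge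
  have Lle : ∀ n : ℕ, n ≤ 12 → H.ρ 1 (η ^ n) ≤ 12 * H.ρ 1 η := by
    intro n hn
    have := Ax.le (H := H) (h := η) n
    have : (n : ℝ) ≤ 12 := by exact_mod_cast hn
    nlinarith
  set w := x * η2 ^ 40 with hw
  set w' := x * η2 ^ 39 with hw'
  have y_w : ∀ j : ℕ, j ≤ 12 → H.ρ 1 (η ^ j) - 7 / 2 ≤ H.gp 1 (η ^ j) w := by
    intro j hj
    have e1 := a.gp_pos (show j ≤ 40 by omega)
    have e2 := gp_min (H := H) 1 (η ^ j) (η ^ 40) w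
    have e3 := Lle j hj
    have := le_min (c := H.ρ 1 (η ^ j) - 1 / 2) e1 (le_of_lt (lt_of_le_of_lt (by linarith) o))
    linarith
  have y_w' : ∀ j : ℕ, j ≤ 12 → H.gp (η ^ j) 1 w ≤ 7 / 2 := by
    intro j hj
    have := y_w j hj
    have := gp_add (H := H) 1 (η ^ j) w
    linarith
  have ww : H.ρ w' w = H.ρ 1 η := by
    rw [hw, pow_succ, ← mul_assoc, ← hw', ρ_mul, l21]
  have L39 := Lge 38
  norm_num at L39
  have L40 := Lge 39
  norm_num at L40
  have xw : H.gp w' x w ≤ 1 / 2 := by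
    have e := gp_smul (H := H) (x * η2 ^ 39) 1 ((η2)⁻¹ ^ 39) η2
    have e1 := a2.gp_neg 1 39
    rw [pow_one, gp_comm] at e1
    have e2 : x * η2 ^ 39 * η2⁻¹ ^ 39 = x := by group
    have e3 : x * η2 ^ 39 * η2 = w := by rw [mul_assoc, ← pow_succ]
    rw [mul_one, e2, e3] at e
    rw [e]; exact e1
  have x39 := r2.symm.gp a2 39
  rw [gp_comm, l21] at x39
  have gw' := gp_mul (H := H) x (η2 ^ 39)
  have lxw : H.ρ x w' = H.ρ 1 (η ^ 39) := by rw [hw', ρ_mul, l2]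
  have lw' : H.ρ 1 x + H.ρ 1 (η ^ 39) - H.ρ 1 η - 8 ≤ H.ρ 1 w' := by
    have : H.gp 1 x w' = H.ρ 1 x - H.gp 1 x⁻¹ (η2 ^ 39) := gw'
    unfold gp at this x39
    rw [lxw] at this
    linarith
  have ow : H.gp w' 1 w ≤ 1 / 2 + 3 := by
    rw [gp_comm]
    refine gp_le (z := x) (by rw [gp_comm]; exact xw) ?_
    have : H.gp w' 1 x = H.ρ x w' - H.gp x w' 1 := by
      have := gp_add (H := H) x w' 1
      rw [gp_comm w' 1 x]; linarith
    have e5 : H.gp x w' 1 = H.gp 1 x⁻¹ (η2 ^ 39) := by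
      have := gp_add (H := H) 1 x w'
      rw [gp_comm x w' 1]
      change H.gp 1 x w' = _ at gw'
      linarith
    rw [this, e5, lxw]; linarith
  have yw : ∀ j : ℕ, j ≤ 12 → H.gp w' (η ^ j) w ≤ 13 / 2 := by
    intro j hj
    rw [gp_comm]
    have := gp_le (H := H) (b := w') (x := w) (y := η ^ j) (z := 1) (c := 7 / 2)
      (by rw [gp_comm]; linarith) ?_
    · linarith
    have e1 := gp_add (H := H) 1 w' (η ^ j)
    have e2 := gp_le_right (H := H) 1 w' (η ^ j)
    have e3 := Lle j hj
    rw [gp_comm w' _ 1]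
    linarith
  have far : ∀ j : ℕ, j ≤ 12 → 20 * H.ρ 1 η ≤ H.ρ (η ^ j) w' := by
    intro j hj
    have := Lle j hj
    have := H.tri 1 (η ^ j) w'
    linarith
  have Li : 4 * H.ρ 1 η - 3 ≤ H.ρ 1 (η ^ (i + 1)) ∧ 3 * H.ρ 1 η - 2 ≤ H.ρ 1 (η ^ i) := by
    have key : ∀ k, H.ρ 1 (η ^ k) ≤ H.ρ 1 (η ^ (k + 1)) := by
      intro k
      have := a.add k 1
      rw [pow_one] at this; linarith
    have m : Monotone fun k : ℕ => H.ρ 1 (η ^ k) := monotone_nat_of_le_succ key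
    have e1 := Lge 3
    have e2 := Lge 2
    have e3 : H.ρ 1 (η ^ (3 + 1)) ≤ H.ρ 1 (η ^ (i + 1)) := m (by omega)
    have e4 : H.ρ 1 (η ^ (2 + 1)) ≤ H.ρ 1 (η ^ i) := m (by omega)
    push_cast at e1 e2
    constructor <;> linarith
  -- the translated axis passes near `η ^ i`
  have q1 : H.gp (η ^ i) x w' ≤ 19 / 2 := by
    have s1 : H.gp (η ^ i) 1 w' ≤ 13 / 2 := by
      have := gp_le (H := H) (b := η ^ i) (x := 1) (y := w') (z := w) (y_w' i (by omega)) ?_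
      · linarith
      have e1 := gp_add (H := H) (η ^ i) w' w
      have e2 := yw i (by omega)
      have e3 := far i (by omega)
      linarith
    have := gp_le (H := H) (b := η ^ i) (x := w') (y := x) (z := 1) (c := 13 / 2)
      (by rw [gp_comm]; exact s1) ?_
    · rw [gp_comm]; linarith
    have e1 := gp_add (H := H) 1 (η ^ i) x
    have e2 := r.gp a i
    rw [gp_comm (η ^ i) x 1]
    linarith [Li.2]
  set η' := x * η2 * x⁻¹ with hη'
  have t1 : η' * x = x * η2 := by rw [hη']; group
  have t2 : η' * w' = w := by
    rw [hw', ← mul_assoc, t1, hw, mul_assoc, ← pow_succ']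
  have q2 : H.ρ (x * η2) (η' * η ^ i) + H.ρ (η' * η ^ i) w ≤ H.ρ (x * η2) w + 26 := by
    rw [← t1, ← t2]
    simp only [H.inv]
    unfold gp at q1
    rw [H.comm (η ^ i) x] at q1
    linarith
  have q3 : H.gp (η ^ (i + 1)) (x * η2) w ≤ 13 / 2 := by
    have := gp_le (H := H) (b := η ^ (i + 1)) (x := w) (y := x * η2) (z := 1) (c := 7 / 2)
      (by rw [gp_comm]; exact y_w' (i + 1) (by omega)) ?_
    · rw [gp_comm]; linarith
    have e1 := gp_add (H := H) 1 (η ^ (i + 1)) (x * η2)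
    have e2 := gp_le_right (H := H) 1 (η ^ (i + 1)) (x * η2)
    have e3 := l_mul (H := H) x η2
    rw [gp_comm (η ^ (i + 1)) _ 1]
    linarith [Li.1]
  have q4 : |H.ρ (η' * η ^ i) w - H.ρ (η ^ (i + 1)) w| ≤ 20 := by
    have e0 : H.ρ (η' * η ^ i) w = H.ρ (η ^ i) w' := by rw [← t2, H.inv]
    have e1 := yw i (by omega)
    have e2 := H.tri (η ^ i) w' w
    have e3 := y_w i (by omega)
    have e4 := y_w (i + 1) (by omega)
    have e5 := H.tri 1 (η ^ i) w
    have e6 := H.tri 1 (η ^ (i + 1)) w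
    have e7 := a.add i 1
    have e8 := l_mul (H := H) (η ^ i) η
    rw [← pow_succ] at e8
    rw [pow_one] at e7
    unfold gp at e1 e3 e4
    rw [H.comm w' (η ^ i)] at e1
    rw [e0, abs_le]
    constructor <;> linarith
  have := near_geod (H := H) (p := η ^ (i + 1)) (p' := η' * η ^ i) (v := x * η2) (w := w) (c := 26) (e := 20)
    ?_ q2 (by rw [abs_sub_comm]; exact q4)
  · linarith
  unfold gp at q3
  rw [H.comm (η ^ (i + 1)) (x * η2)] at q3
  linarith

end Hyp

/-! ### Free semigroups -/

/-- The product of the word in the letters `a` (for `true`) and `b` (for `false`). -/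
def wd {G : Type*} [Group G] (a b : G) (l : List Bool) : G := (l.map fun t => cond t a b).prod
theorem wd_cons {G : Type*} [Group G] (a b : G) (t : Bool) (l : List Bool) :
    wd a b (t :: l) = cond t a b * wd a b l := by simp [wd]
theorem wd_append {G : Type*} [Group G] (a b : G) (l l' : List Bool) :
    wd a b (l ++ l') = wd a b l * wd a b l' := by simp [wd]
theorem wd_nil {G : Type*} [Group G] (a b : G) : wd a b [] = 1 := rfl
theorem wd_map {G G' : Type*} [Group G] [Group G'] (f : G →* G') (a b : G) (l : List Bool) :
    f (wd a b l) = wd (f a) (f b) l := by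
  induction l with
  | nil => simp [wd_nil]
  | cons t l ih => rw [wd_cons, wd_cons, map_mul, ih]; cases t <;> rfl

namespace Hyp
variable {F : Type u} [Group F] {H : Hyp F}

theorem SC.neg {a b : F} {C : ℝ} (h : H.SC a b C) (s t : Bool) :
    H.gp 1 (cond s a b)⁻¹ (cond t a b) ≤ H.ρ 1 (cond s a b) / 2 - C ∧
    H.gp 1 (cond s a b)⁻¹ (cond t a b) ≤ H.ρ 1 (cond t a b) / 2 - C := by
  cases s <;> cases t
  exacts [⟨h.bb, h.bb⟩, ⟨h.ba2, h.ba1⟩, ⟨h.ab1, h.ab2⟩, ⟨h.aa, h.aa⟩]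

/-- A positive word does not backtrack. -/
theorem SC.word {a b : F} {C : ℝ} (h : H.SC a b C) (hC : 10 ≤ C) (s t : Bool) (l : List Bool) :
    H.gp 1 (cond s a b)⁻¹ (wd a b (t :: l)) ≤ H.gp 1 (cond s a b)⁻¹ (cond t a b) + 3 ∧
    H.ρ 1 (cond t a b) / 2 + C - 3 ≤ H.gp 1 (cond t a b) (wd a b (t :: l)) := by
  induction l generalizing s t with
  | nil =>
    have e : wd a b [t] = cond t a b := by simp [wd]
    rw [e]
    refine ⟨by linarith, ?_⟩
    have h1 := h.neg s t
    have h2 := gp_nonneg (H := H) 1 (cond s a b)⁻¹ (cond t a b)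
    have : H.gp 1 (cond t a b) (cond t a b) = H.ρ 1 (cond t a b) := by
      unfold gp; rw [H.self]; ring
    rw [this]; linarith
  | cons r l ih =>
    have h1 := (ih t r).1
    have h2 := h.neg t r
    have h4 := h.neg s t
    have h3 : H.ρ 1 (cond t a b) / 2 + C - 3 ≤ H.gp 1 (cond t a b) (wd a b (t :: r :: l)) := by
      rw [wd_cons, gp_mul]; linarith
    refine ⟨gp_le (z := cond t a b) le_rfl ?_, h3⟩
    rw [gp_comm 1 (wd a b (t :: r :: l))]; linarith

/-- Two elements without much cancellation generate a free semigroup, even modulo points at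
pseudodistance `0`. -/
theorem SC.inj {a b : F} {C : ℝ} (h : H.SC a b C) (hC : 10 ≤ C) :
    ∀ l l' : List Bool, l.length = l'.length → H.ρ (wd a b l) (wd a b l') = 0 → l = l' := by
  intro l
  -- words with different first letters
  have dif : ∀ l l', H.ρ (wd a b (true :: l)) (wd a b (false :: l')) ≠ 0 := by
    intro l l' e
    have h1 := (h.word hC true true l).2
    have h2 := (h.word hC true false l').2
    have h3 := h.d1
    have h4 := h.d2
    simp only [cond_true, cond_false] at h1 h2
    set w := wd a b (true :: l)
    set w' := wd a b (false :: l')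
    have h5 : H.gp 1 a w' ≤ H.gp 1 a b + 3 := gp_le le_rfl (by rw [gp_comm 1 w']; linarith)
    have h6 : H.gp 1 a w ≤ H.gp 1 a w' := by
      unfold gp
      have t1 := H.tri 1 w w'
      have t2 := H.tri 1 w' w
      have t3 := H.tri a w w'
      have t4 := H.tri a w' w
      have t5 := H.comm w w'
      linarith
    linarith
  induction l with
  | nil => intro l' hl _; cases l' with
    | nil => rfl
    | cons => simp at hl
  | cons t l ih =>
    intro l' hl e
    cases l' with
    | nil => simp at hl
    | cons t' l' =>
      rcases t with _ | _ <;> rcases t' with _ | _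
      · rw [wd_cons, wd_cons, H.inv] at e; rw [ih l' (by simpa using hl) e]
      · rw [H.comm] at e; exact absurd e (dif l' l)
      · exact absurd e (dif l l')
      · rw [wd_cons, wd_cons, H.inv] at e; rw [ih l' (by simpa using hl) e]

theorem exists_red (h u : F) : ∃ m n : ℤ, H.Red h (h ^ m * u * h ^ n) ∧
    H.ρ 1 (h ^ m * u * h ^ n) ≤ H.ρ 1 u := by
  let X : Set ℝ := Set.range fun p : ℤ × ℤ => H.ρ 1 (h ^ p.1 * u * h ^ p.2)
  have bdd : BddBelow X := ⟨0, by rintro _ ⟨p, rfl⟩; exact H.nonneg _ _⟩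
  have ne : X.Nonempty := ⟨_, (0, 0), rfl⟩
  obtain ⟨_, ⟨p, rfl⟩, hp⟩ := exists_lt_of_csInf_lt ne (lt_add_one (sInf X))
  have red : ∀ p : ℤ × ℤ, H.ρ 1 (h ^ p.1 * u * h ^ p.2) < sInf X + 1 →
      H.Red h (h ^ p.1 * u * h ^ p.2) := by
    intro p hp m n
    have e : h ^ m * (h ^ p.1 * u * h ^ p.2) * h ^ n = h ^ (m + p.1) * u * h ^ (p.2 + n) := by
      rw [zpow_add, zpow_add]; group
    have := csInf_le bdd ⟨(m + p.1, p.2 + n), rfl⟩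
    rw [e]; simp only at this; linarith
  rcases le_total (H.ρ 1 (h ^ p.1 * u * h ^ p.2)) (H.ρ 1 u) with hh | hh
  · exact ⟨p.1, p.2, red p hp, hh⟩
  · refine ⟨0, 0, red (0, 0) ?_, ?_⟩
    · simp only [zpow_zero, one_mul, mul_one] at hp ⊢; linarith
    · simp

/-- Either the axis of `h` and its translate by `u` give a free semigroup, or they overlap. -/
theorem step3 {h : F} (a : H.Ax h) (u : F) : ∃ m n : ℤ, ∃ x, x = h ^ m * u * h ^ n ∧
    H.ρ 1 x ≤ H.ρ 1 u ∧ (H.SC (h ^ 40) (x * h ^ 40 * x⁻¹) (6 * H.ρ 1 h) ∨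
    ∃ η η2, (η = h ∨ η = h⁻¹) ∧ (η2 = h ∨ η2 = h⁻¹) ∧ ∀ i : ℕ, 3 ≤ i → i ≤ 11 →
      H.ρ (η ^ (i + 1)) (x * η2 * x⁻¹ * η ^ i) ≤ 60) := by
  obtain ⟨m, n, r, hr⟩ := exists_red (H := H) h u
  refine ⟨m, n, _, rfl, hr, ?_⟩
  set x := h ^ m * u * h ^ n
  by_cases o1 : H.gp 1 (h ^ 40) (x * h ^ 40) ≤ 12 * H.ρ 1 h
  swap
  · exact Or.inr ⟨h, h, .inl rfl, .inl rfl, fun i => overlap a r (.inl rfl) (not_le.1 o1)⟩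
  by_cases o2 : H.gp 1 (h⁻¹ ^ 40) (x * h ^ 40) ≤ 12 * H.ρ 1 h
  swap
  · exact Or.inr ⟨h⁻¹, h, .inr rfl, .inl rfl, fun i => overlap a.inv r.inv (.inr (by simp))
      (by rw [l_inv]; exact not_le.1 o2)⟩
  by_cases o3 : H.gp 1 (h ^ 40) (x * h⁻¹ ^ 40) ≤ 12 * H.ρ 1 h
  swap
  · exact Or.inr ⟨h, h⁻¹, .inl rfl, .inr rfl, fun i => overlap a r (.inr rfl) (not_le.1 o3)⟩
  exact Or.inl (sc_of a r o1 o2 o3)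

end Hyp

/-! ### Growth -/

/-- Exponentially many elements in the balls of radius `N n` of the semigroup generated by `U`. -/
def Grow {Q : Type*} [Group Q] (U : Set Q) (N : ℕ) : Prop :=
  ∀ n : ℕ, ∃ s : Finset Q, 2 ^ n ≤ s.card ∧ ∀ x ∈ s, ∃ j ≤ N * n, x ∈ U ^ j

theorem grow_of_free {Q : Type*} [Group Q] {U : Set Q} {N : ℕ} {a b : Q} {i j : ℕ} (ha : a ∈ U ^ i)
    (hb : b ∈ U ^ j) (hi : i ≤ N) (hj : j ≤ N)
    (inj : ∀ l l' : List Bool, l.length = l'.length → wd a b l = wd a b l' → l = l') : Grow U N := by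
  classical
  intro n
  refine ⟨(Finset.univ : Finset (List.Vector Bool n)).image fun l => wd a b l.1, ?_, ?_⟩
  · rw [Finset.card_image_of_injective]
    · simp
    · intro l l' e
      exact Subtype.ext (inj _ _ (by rw [l.2, l'.2]) e)
  · intro x hx
    obtain ⟨⟨l, hl⟩, -, rfl⟩ := Finset.mem_image.1 hx
    have : ∀ l : List Bool, ∃ k ≤ N * l.length, wd a b l ∈ U ^ k := by
      intro l
      induction l with
      | nil => exact ⟨0, by simp, by simp [wd_nil]⟩
      | cons t l ih =>
        obtain ⟨k, hk, hm⟩ := ih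
        rcases t with _ | _
        · exact ⟨j + k, by simp only [List.length_cons]; nlinarith, by
            rw [wd_cons, pow_add]; exact Set.mul_mem_mul hb hm⟩
        · exact ⟨i + k, by simp only [List.length_cons]; nlinarith, by
            rw [wd_cons, pow_add]; exact Set.mul_mem_mul ha hm⟩
    subst hl; exact this l

theorem pow_step {Q : Type*} [Group Q] {U : Set Q} (hU : U⁻¹ = U) (ne : U.Nonempty) (j k : ℕ) :
    U ^ j ⊆ U ^ (j + 2 * k) := by
  obtain ⟨x, hx⟩ := ne
  have : (1 : Q) ∈ U ^ 2 := by
    rw [pow_two]; exact ⟨x, hx, x⁻¹, by rw [← hU]; simpa using hx, by simp⟩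
  intro y hy
  rw [pow_add, pow_mul]
  have h1 : (1 : Q) ∈ (U ^ 2) ^ k := by simpa using Set.pow_mem_pow this (n := k)
  exact ⟨y, hy, 1, h1, mul_one y⟩

theorem fin_pow {Q : Type*} [Group Q] {U : Set Q} (hf : U.Finite) (j : ℕ) : (U ^ j).Finite := by
  induction j with
  | zero => simp
  | succ j ih => rw [pow_succ]; exact ih.mul hf

theorem pow_card {Q : Type*} [Group Q] {U : Set Q} (hf : U.Finite) (ne : U.Nonempty) (j : ℕ) :
    (U ^ j).ncard ≤ (U ^ (j + 1)).ncard := by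
  obtain ⟨x, hx⟩ := ne
  have hfin : (U ^ (j + 1)).Finite := fin_pow hf _
  refine Set.ncard_le_ncard_of_injOn (fun y => y * x) ?_ (fun y _ z _ e => mul_right_cancel e) hfin
  intro y hy
  rw [pow_succ]; exact ⟨y, hy, x, hx, rfl⟩

/-- `Grow` bounds the growth rate. The factor `2` gives a strict inequality and absorbs the loss due to parity, as a
symmetric set only satisfies `U ^ j ⊆ U ^ (j + 2)`. -/
theorem growth_gt {Q : Type*} [Group Q] {U : Set Q} (hf : U.Finite) (hU : U⁻¹ = U) {N : ℕ}
    (hN : 0 < N) (g : Grow U N) : Real.log 2 / (2 * N) < growthRate U := by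
  classical
  have ne : U.Nonempty := by
    by_contra hh
    rw [Set.not_nonempty_iff_eq_empty] at hh
    obtain ⟨s, hs, h⟩ := g 1
    have : s ⊆ {1} := by
      intro x hx
      obtain ⟨j, -, hj⟩ := h x hx
      rw [hh] at hj
      rcases j with _ | j
      · simpa using hj
      · rw [Set.empty_pow (by omega)] at hj; exact hj.elim
    have := Finset.card_le_card this
    simp at this; omega
  -- at least half of the elements have word length of the same parity
  have key : ∀ n, 2 ^ n ≤ 2 * (U ^ (N * n + 1)).ncard := by
    intro n
    obtain ⟨s, hs, h⟩ := g n
    have sub : (s : Set Q) ⊆ U ^ (N * n) ∪ U ^ (N * n + 1) := by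
      intro x hx
      obtain ⟨j, hj, hx⟩ := h x hx
      rcases Nat.even_or_odd (N * n - j) with ⟨k, hk⟩ | ⟨k, hk⟩
      · left
        have : N * n = j + 2 * k := by omega
        rw [this]; exact pow_step hU ne _ _ hx
      · right
        have : N * n + 1 = j + 2 * (k + 1) := by omega
        rw [this]; exact pow_step hU ne _ _ hx
    have c1 := Set.ncard_le_ncard sub ((fin_pow hf _).union (fin_pow hf _))
    rw [Set.ncard_coe_finset] at c1
    have c2 := Set.ncard_union_le (U ^ (N * n)) (U ^ (N * n + 1))
    have c3 := pow_card hf ne (N * n)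
    omega
  have lt : Real.log 2 / (2 * N) < Real.log 2 / (3 / 2 * N) := by
    have : (0 : ℝ) < N := by exact_mod_cast hN
    have l2 : 0 < Real.log 2 := Real.log_pos (by norm_num)
    exact div_lt_div_of_pos_left l2 (by positivity) (by nlinarith)
  refine lt_of_lt_of_le lt ?_
  unfold growthRate
  refine le_limsup_of_frequently_le ?_ ?_
  · rw [frequently_atTop]
    intro m
    refine ⟨N * (m + 9) + 1, by nlinarith, ?_⟩
    have h1 := key (m + 9)
    have h2 : ((2 : ℝ)) ^ (m + 8) ≤ ((U ^ (N * (m + 9) + 1)).ncard : ℝ) := by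
      have : 2 ^ (m + 8) ≤ (U ^ (N * (m + 9) + 1)).ncard := by
        rw [pow_succ] at h1; omega
      exact_mod_cast this
    have h3 := Real.log_le_log (by positivity) h2
    rw [Real.log_pow] at h3
    refine le_trans ?_ (div_le_div_of_nonneg_right h3 (by positivity))
    have l2 : 0 < Real.log 2 := Real.log_pos (by norm_num)
    have hN' : (1 : ℝ) ≤ N := by exact_mod_cast hN
    rw [div_le_div_iff₀ (by positivity) (by positivity)]
    push_cast
    have : (N * ((m : ℝ) + 9) + 1) ≤ (m + 8) * (3 / 2 * N) := by
      have : (0 : ℝ) ≤ m := by positivity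
      nlinarith
    nlinarith
  · refine ⟨Real.log U.ncard, ?_⟩
    rw [eventually_map]
    refine Eventually.of_forall fun n => ?_
    have c : (U ^ n).ncard ≤ U.ncard ^ n := by
      have := Finset.card_pow_le (s := hf.toFinset) (n := n)
      rw [← Set.ncard_coe_finset, Finset.coe_pow, hf.coe_toFinset, ← Set.ncard_eq_toFinset_card U hf] at this
      exact this
    have pos : 0 < (U ^ n).ncard := (Set.ncard_pos (fin_pow hf _)).2 (ne.pow)
    rcases Nat.eq_zero_or_pos n with rfl | hn
    · simp [Real.log_natCast_nonneg]
    have h3 : Real.log ((U ^ n).ncard : ℝ) ≤ n * Real.log U.ncard := by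
      rw [← Real.log_pow]
      exact Real.log_le_log (by exact_mod_cast pos) (by exact_mod_cast c)
    beta_reduce
    rw [div_le_iff₀ (by exact_mod_cast hn)]
    linarith

/-! ### Subgroups of low energy -/

namespace Setup
open TreeD
variable {F : Type u} [Group F] {T : Setup F}

/-- The tree metric, scaled so that distinct points are at distance at least `100`. -/
def treeHyp (T : Setup F) : Hyp F where
  ρ x y := 100 * T.d x y
  nonneg x y := by positivity
  self x := by simp [T.self]
  comm x y := by rw [T.comm]
  tri x y z := by have := T.tri x y z; norm_cast; omega
  fp x y z t := by
    rcases T.fp x y z t with h | h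
    · have : (T.d x z + T.d y t : ℝ) ≤ T.d x y + T.d z t := by exact_mod_cast h
      have := le_max_left (100 * (T.d x y : ℝ) + 100 * T.d z t) (100 * (T.d x t : ℝ) + 100 * T.d y z)
      linarith
    · have : (T.d x z + T.d y t : ℝ) ≤ T.d x t + T.d y z := by exact_mod_cast h
      have := le_max_right (100 * (T.d x y : ℝ) + 100 * T.d z t) (100 * (T.d x t : ℝ) + 100 * T.d y z)
      linarith
  inv g x y := by rw [T.inv]

/-- Every nontrivial element is conjugate, by an element of at most half its length, to a
cyclically reduced one. -/
theorem exists_cyc (n : ℕ) : ∀ h : F, T.d 1 h ≤ n → h ≠ 1 →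
    ∃ w, 2 * T.d 1 w + T.d w (h * w) ≤ T.d 1 h ∧ T.d w (h * (h * w)) = 2 * T.d w (h * w) := by
  induction n using Nat.strong_induction_on with
  | _ n ih =>
    intro h hn h1
    obtain ⟨m, m1, m2, m3⟩ := T.med 1 h (h * h)
    obtain ⟨w, rfl⟩ : ∃ w, m = h * w := ⟨h⁻¹ * m, by simp⟩
    have e1 : T.d h (h * w) = T.d 1 w := by simpa using T.inv h 1 w
    have e2 : T.d (h * w) (h * h) = T.d w h := T.inv h w h
    have e3 : T.d h (h * h) = T.d 1 h := by simpa using T.inv h 1 h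
    have hw : T.B 1 w h := by unfold TreeD.B; omega
    have hhw : T.B 1 (h * w) h := by unfold TreeD.B; exact m1
    have c1 := T.comm h (h * w)
    by_cases a0 : T.d 1 w = 0
    · have hw1 : w = 1 := (T.eq_of a0).symm
      subst hw1
      refine ⟨1, ?_, ?_⟩
      · simp [T.self]
      · simp only [mul_one] at *; omega
    by_cases a1 : T.d 1 h < 2 * T.d 1 w
    · exfalso
      -- otherwise `h * h` fixes a point
      have hle : T.d 1 (h * w) ≤ T.d 1 w := by unfold TreeD.B at *; omega
      have b1 : T.B 1 (h * w) w := by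
        have := hhw.dist_of_le hw hle
        exact this
      have b2 : T.B h (h * (h * w)) (h * w) := by
        have := (B_sm (T := T) (g := h)).2 b1
        simpa using this
      have b3 : T.B h (h * (h * w)) 1 := by
        exact hhw.symm.left b2
      have b4 : T.d h (h * (h * w)) = T.d h w := by
        have e4 : T.d h (h * (h * w)) = T.d 1 (h * w) := by simpa using T.inv h 1 (h * w)
        have := T.comm h w
        unfold TreeD.B at *
        omega
      have := b3.uniq hw.symm b4
      have h2 : h * h = 1 := by
        rw [← mul_assoc] at this
        simpa using this
      exact h1 (T.tf h h2)
    · have e5 : T.d w (h * w) + 2 * T.d 1 w = T.d 1 h := by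
        have := hw.dist_of_le hhw (by unfold TreeD.B at *; omega)
        unfold TreeD.B at *
        omega
      have e6 : T.d 1 (w⁻¹ * h * w) = T.d w (h * w) := by
        rw [← T.inv w]; simp [mul_assoc]
      obtain ⟨w', p1, p2⟩ := ih (T.d w (h * w)) (by omega) (w⁻¹ * h * w) e6.le (by
        intro e
        apply h1
        have := congrArg (fun z => w * z * w⁻¹) e
        simpa [mul_assoc] using this)
      have e7 : T.d w' (w⁻¹ * h * w * w') = T.d (w * w') (h * (w * w')) := by
        rw [← T.inv w]; simp [mul_assoc]
      have e8 : T.d w' (w⁻¹ * h * w * (w⁻¹ * h * w * w')) = T.d (w * w') (h * (h * (w * w'))) := by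
        rw [← T.inv w]; simp [mul_assoc]
      refine ⟨w * w', ?_, ?_⟩
      · have := T.tri 1 w (w * w')
        have : T.d w (w * w') = T.d 1 w' := by simpa using T.inv w 1 w'
        omega
      · rw [e7, e8] at p2; exact p2

theorem cyc_pow {h : F} (h2 : T.d 1 (h * h) = 2 * T.d 1 h) (n : ℕ) : T.d 1 (h ^ n) = n * T.d 1 h := by
  have e : ∀ i j : ℕ, T.d (h ^ i) (h ^ (i + j)) = T.d 1 (h ^ j) := fun i j => by
    rw [pow_add]; simpa using T.inv (h ^ i) 1 (h ^ j)
  by_cases h0 : T.d 1 h = 0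
  · have := T.eq_of h0; subst this; simp [T.self]
  induction n using Nat.strong_induction_on with
  | _ n ih =>
    rcases n with _ | _ | n
    · simp [T.self]
    · simp
    · have i1 := ih (n + 1) (by omega)
      have i0 := ih n (by omega)
      have f := T.fp 1 (h ^ 1) (h ^ 2) (h ^ (n + 2))
      have e1 := e 1 (n + 1)
      have e2 := e 2 n
      have e3 := e 1 1
      rw [show 1 + (n + 1) = n + 2 by ring] at e1
      rw [show 2 + n = n + 2 by ring] at e2
      norm_num at e3
      rw [pow_one] at *
      have t := T.tri 1 h (h ^ (n + 2))
      rw [pow_two] at *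
      rw [h2, e1, e2, i1, i0, e3] at f
      rw [e1, i1] at t
      push_cast [Nat.add_mul] at *
      change T.d 1 (h ^ (n + 2)) = _
      rcases f with f | f <;> · nlinarith

theorem cyc_ax {h : F} (h1 : h ≠ 1) (h2 : T.d 1 (h * h) = 2 * T.d 1 h) : T.treeHyp.Ax h := by
  constructor
  · intro n m
    have a := cyc_pow h2 n
    have b := cyc_pow h2 m
    have c := cyc_pow h2 (n + m)
    simp only [treeHyp, a, b, c]; push_cast; linarith
  · have := (ne_iff (T := T.toTreeD)).1 (Ne.symm h1)
    have : (1 : ℝ) ≤ T.d 1 h := by exact_mod_cast this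
    simp only [treeHyp]; linarith

theorem line_three {A : Set F} (hA : A ∈ T.lines) {p q r : F} (hp : p ∈ A) (hq : q ∈ A)
    (hr : r ∈ A) : T.B p q r ∨ T.B q p r ∨ T.B p r q := by
  obtain ⟨γ, h, rfl⟩ := T.param A hA
  obtain ⟨i, rfl⟩ := hp
  obtain ⟨j, rfl⟩ := hq
  obtain ⟨k, rfl⟩ := hr
  unfold TreeD.B
  zify
  simp only [h, ← mul_add]
  have hs : (T.s : ℤ) ≠ 0 := by have := T.spos; omega
  simp only [mul_right_inj' hs]
  grind

/-- Two letters in general position with midpoints `c`. -/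
structure Pos (T : Setup F) (E c : Bool → F) (σ : ℕ) : Prop where
  neg1 : ∀ t t', T.d 1 (E t) + 4 * T.s ≤ T.d (E t)⁻¹ (E t')
  neg2 : ∀ t t', T.d 1 (E t') + 4 * T.s ≤ T.d (E t)⁻¹ (E t')
  dif : ∀ t t', t ≠ t' → T.d 1 (E t) + 4 * T.s ≤ T.d (E t) (E t')
  mid : ∀ t, T.B 1 (c t) (E t)
  mid1 : ∀ t, 2 * T.d 1 (c t) ≤ T.d 1 (E t)
  mid2 : ∀ t, T.d 1 (E t) ≤ 2 * T.d 1 (c t) + 2 * T.s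
  len : ∀ t, T.d 1 (E t) ≤ σ

/-- `e` is a checkpoint of `v`: the geodesics from `1` to all continuations of `v` pass
through `e`, and then through the midpoint of the next letter. -/
def Ck (T : Setup F) (E c : Bool → F) (v e : F) : Prop :=
  T.B 1 e v ∧ ∀ t, T.B 1 e (v * c t) ∧ T.B 1 (v * c t) (v * E t) ∧ ¬ T.B 1 (v * c t) v

variable {E c : Bool → F} {σ : ℕ}

theorem Pos.ck_one (h : T.Pos E c σ) : T.Ck E c 1 1 := by
  refine ⟨B_self_left _ _, fun t => ⟨B_self_left _ _, by simpa using h.mid t, ?_⟩⟩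
  intro hb
  have h1 := h.neg1 t t
  have h2 := T.tri (E t)⁻¹ 1 (E t)
  have h3 : T.d (E t)⁻¹ 1 = T.d 1 (E t) := by simpa using T.inv (E t) (E t)⁻¹ 1 |>.symm
  have h4 := h.mid2 t
  have := T.comm 1 (c t)
  have := T.self 1
  have := T.spos
  unfold TreeD.B at hb
  simp only [one_mul] at hb
  omega

theorem Pos.ck_step (h : T.Pos E c σ) {v e : F} (hv : T.Ck E c v e) (t : Bool) :
    T.Ck E c (v * E t) (v * c t) := by
  have hs := T.spos
  refine ⟨(hv.2 t).2.1, fun t' => ?_⟩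
  -- translate so that `v * E t` becomes the base point
  set v' := v * E t with hv'
  set o := v'⁻¹ with ho
  set e' := (E t)⁻¹ * c t with he'
  have tr : ∀ x y, T.B 1 (v' * x) (v' * y) ↔ T.B o x y := fun x y => by
    rw [← B_sm (T := T) (g := v') (x := o)]; simp [ho]
  have e1 : v * c t = v' * e' := by simp [hv', he', mul_assoc]
  have b1 : T.B o e' 1 := by
    rw [← tr, ← e1, mul_one]; exact (hv.2 t).2.1
  have b2 : T.B 1 e' (E t)⁻¹ := by
    rw [← B_sm (T := T) (g := E t)]; simpa [he'] using (h.mid t).symm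
  rw [e1, show T.B 1 (v' * c t') v' ↔ T.B o (c t') 1 by rw [← tr, mul_one], tr, tr]
  have n1 := h.neg1 t t'
  have n2 := h.neg2 t t'
  have m1 := h.mid1 t
  have m2 := h.mid2 t
  have m3 := h.mid1 t'
  have m4 := h.mid2 t'
  have l1 : T.d 1 (E t)⁻¹ = T.d 1 (E t) := by
    have := T.inv (E t) 1 (E t)⁻¹; rw [← this]; simp [T.comm]
  have l2 : T.d e' (E t)⁻¹ = T.d 1 (c t) := by
    rw [← T.inv (E t)]; simp [he', T.comm]
  have tr1 := T.tri (E t)⁻¹ e' (E t')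
  have c1 := T.comm (E t)⁻¹ e'
  have c2 := T.comm 1 e'
  have c3 := T.comm o e'
  have q1 : T.d 1 e' + 2 * T.s < T.d e' (E t') := by unfold TreeD.B at *; omega
  have q2 : T.d 1 (E t') < T.d 1 e' + T.d e' (E t') := by unfold TreeD.B at *; omega
  have b3 : T.B o e' (E t') := by
    have f := T.fp o e' 1 (E t')
    have := T.tri o e' (E t')
    unfold TreeD.B at *
    omega
  have hm := h.mid t'
  have no : ¬ T.B 1 (c t') e' := by
    intro hb
    have := T.tri e' (c t') (E t')
    have := T.comm e' (c t')
    unfold TreeD.B at *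
    omega
  have b4 : T.B e' (c t') (E t') := (hm.cover e').resolve_left no
  have b5 : T.B o (c t') (E t') := b3.right b4
  have b6 : T.B o e' (c t') := by
    have := T.tri o e' (c t')
    unfold TreeD.B at *
    omega
  refine ⟨b6, b5, fun hb => no (hb.drop b6).symm⟩

theorem Pos.ck_dif (h : T.Pos E c σ) {v e : F} (hv : T.Ck E c v e) {t t' : Bool} (ht : t ≠ t')
    (hb : T.B 1 (v * c t) (v * c t')) : False := by
  have b1 : T.B 1 (v * c t) (v * E t') := (hv.2 t').2.1.left hb
  rcases b1.cover v with b | b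
  · exact (hv.2 t).2.2 b
  · have b' : T.B 1 (c t) (E t') := by
      rw [← B_sm (T := T) (g := v), mul_one]; exact b
    have h1 := h.dif t t' ht
    have h2 := h.dif t' t ht.symm
    have h3 := h.mid t
    have h4 := h.mid2 t
    have := T.tri (E t) (c t) (E t')
    have := T.comm (E t) (c t)
    have := T.comm (E t) (E t')
    have := T.spos
    unfold TreeD.B at *
    omega

/-- For one of the two letters, the next midpoint leaves each line that `[1,e]` follows for long
when it ends. -/
theorem Pos.forced (h : T.Pos E c σ) {v e : F} (hv : T.Ck E c v e) :
    ∃ t, ∀ A ∈ T.lines, ∀ p ∈ A, e ∈ A → T.B 1 p e → T.u ≤ T.d p e → v * c t ∉ A := by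
  by_contra hn
  push Not at hn
  obtain ⟨A, hA, p, hp, he, b1, u1, ha⟩ := hn true
  obtain ⟨A', hA', p', hp', he', b1', u1', ha'⟩ := hn false
  have hu := T.upos
  have AA : A' = A := by
    by_contra hne
    rcases le_total (T.d 1 p) (T.d 1 p') with l | l
    · have : T.B p p' e := b1.mid b1' l
      have := T.ov A' hA' A hA hne p' hp' (line_cvx hA _ hp _ he _ this) e he' he
      omega
    · have : T.B p' p e := b1'.mid b1 l
      have := T.ov A' hA' A hA hne p (line_cvx hA' _ hp' _ he' _ this) hp e he' he
      omega
  subst AA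
  have k : ∀ t, T.B 1 p (v * c t) := fun t => (hv.2 t).1.left b1
  have k' : ∀ t, T.B p e (v * c t) := fun t => (hv.2 t).1.drop b1
  rcases line_three hA' hp ha ha' with b | b | b
  · exact h.ck_dif hv (t := true) (t' := false) (by simp) ((k false).right b)
  · have h1 := k' true
    have h2 := k' false
    have := T.tri (v * c true) e (v * c false)
    have := T.comm (v * c true) e
    have := T.comm (v * c true) p
    unfold TreeD.B at *
    omega
  · exact h.ck_dif hv (t := false) (t' := true) (by simp) ((k true).right b)

/-- Arcs of lines on `[1,e]` are bounded, those ending in `e` even more so. -/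
def Arcs (T : Setup F) (σ : ℕ) (e : F) : Prop :=
  ∀ A ∈ T.lines, ∀ p ∈ A, ∀ q ∈ A, T.B 1 p q → T.B 1 q e →
    T.d p q ≤ T.u + 6 * σ ∧ (q = e → T.d p q ≤ T.u + 2 * σ)

/-- After each letter `z` a second letter can be chosen that keeps arcs of lines short. -/
theorem Pos.arcs_step (h : T.Pos E c σ) {v e : F} (hv : T.Ck E c v e) (he : T.d e v ≤ σ)
    (ha : T.Arcs σ e) (z : Bool) : ∃ y, T.Arcs σ (v * E z * c y) := by
  have hv1 := h.ck_step hv z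
  obtain ⟨y, hy⟩ := h.forced hv1
  refine ⟨y, fun A hA p hp q hq b1 b2 => ?_⟩
  set e1 := v * c z with he1
  set e2 := v * E z * c y with he2
  have g1 : T.d e e1 ≤ 2 * σ := by
    have := T.tri e v e1
    have i : T.d v e1 = T.d 1 (c z) := by simpa using T.inv v 1 (c z)
    have := h.mid1 z
    have := h.len z
    omega
  have g2 : T.d e1 e2 ≤ 2 * σ := by
    have := T.tri e1 (v * E z) e2
    have i : T.d (v * E z) e2 = T.d 1 (c y) := by simpa using T.inv (v * E z) 1 (c y)
    have j : T.d e1 (v * E z) = T.d (c z) (E z) := T.inv v _ _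
    have := h.mid z
    have := h.mid1 y
    have := h.len z
    have := h.len y
    unfold TreeD.B at *
    omega
  have be1 : T.B 1 e e1 := (hv.2 z).1
  have be2 : T.B 1 e1 e2 := (hv1.2 y).1
  have be : T.B 1 e e2 := be2.left be1
  constructor
  · by_cases hqe : T.d 1 q ≤ T.d 1 e
    · have : T.B 1 q e := b2.dist_of_le be hqe
      exact (ha A hA p hp q hq b1 this).1
    have bq : T.B 1 e q := be.dist_of_le b2 (by omega)
    have dq : T.d e q ≤ 4 * σ := by
      have := T.tri e e1 e2
      have := be.drop (B_self_left _ _)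
      unfold TreeD.B at *
      omega
    by_cases hpe : T.d 1 p ≤ T.d 1 e
    · have b3 : T.B 1 p e := b1.dist_of_le bq hpe
      have heA : e ∈ A := line_cvx hA _ hp _ hq _ (bq.drop b3)
      have := (ha A hA p hp e heA b3 (B_self_right _ _)).2 rfl
      have := T.tri p e q
      omega
    · have : T.B 1 e p := bq.dist_of_le b1 (by omega)
      unfold TreeD.B at *
      omega
  · rintro rfl
    by_cases hpe : T.d 1 p ≤ T.d 1 e1
    · have b3 : T.B 1 p e1 := b1.dist_of_le be2 hpe
      have heA : e1 ∈ A := line_cvx hA _ hp _ hq _ (be2.drop b3)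
      have hlt : T.d p e1 < T.u := by
        by_contra hge
        exact hy A hA p hp heA b3 (by omega) hq
      have := T.tri p e1 e2
      omega
    · have : T.B 1 e1 p := be2.dist_of_le b1 (by omega)
      unfold TreeD.B at *
      omega

end Setup

/-! ### Words with short arcs -/

namespace Setup
open TreeD
variable {F : Type u} [Group F] {T : Setup F} {E c : Bool → F} {σ : ℕ}

/-- Products of pairs of letters. -/
def pw {G : Type*} [Group G] (E : Bool → G) (w : List (Bool × Bool)) : G :=
  (w.map fun p => E p.1 * E p.2).prod

/-- Each word can be interleaved with suitably chosen letters such that the resulting geodesic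
follows no line for long. -/
theorem Pos.good_word (h : T.Pos E c σ) (l : List Bool) : ∃ w : List (Bool × Bool),
    w.map Prod.fst = l ∧ ∃ e, T.Ck E c (pw E w) e ∧ T.d e (pw E w) ≤ σ ∧ T.Arcs σ e := by
  induction l using List.reverseRecOn with
  | nil =>
    refine ⟨[], rfl, 1, by simpa [pw] using h.ck_one, by simp [pw, T.self], ?_⟩
    intro A hA p hp q hq b1 b2
    have := T.self 1
    have := T.comm 1 q
    have := T.tri p 1 q
    have := T.comm 1 p
    unfold TreeD.B at *
    omega
  | append_singleton l z ih =>
    obtain ⟨w, rfl, e, h1, h2, h3⟩ := ih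
    obtain ⟨y, hy⟩ := h.arcs_step h1 h2 h3 z
    have hpw : pw E (w ++ [(z, y)]) = pw E w * E z * E y := by simp [pw, mul_assoc]
    refine ⟨w ++ [(z, y)], by simp, pw E w * E z * c y, ?_, ?_, hy⟩
    · rw [hpw]; exact h.ck_step (h.ck_step h1 z) y
    · rw [hpw, T.inv]
      have := h.mid y
      have := h.len y
      unfold TreeD.B at *
      omega

theorem arcs_total {v e : F} (b : T.B 1 e v) (hd : T.d e v ≤ σ) (ha : T.Arcs σ e)
    {A : Set F} (hA : A ∈ T.lines) {p q : F} (hp : T.Gt A 1 p) (hq : T.Gt A v q) :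
    T.d p q ≤ T.u + 7 * σ := by
  by_cases hpq : p = q
  · subst hpq; simp [T.self]
  obtain ⟨-, b2, -, b1⟩ := hp.pathB hq hpq
  by_cases hqe : T.d 1 q ≤ T.d 1 e
  · have := (ha A hA p hp.1 q hq.1 b1 (b2.dist_of_le b hqe)).1
    omega
  have bq : T.B 1 e q := b.dist_of_le b2 (by omega)
  have dq : T.d e q ≤ σ := by
    have := b2.drop bq
    unfold TreeD.B at *
    omega
  by_cases hpe : T.d 1 p ≤ T.d 1 e
  · have b3 : T.B 1 p e := b1.dist_of_le bq hpe
    have heA : e ∈ A := line_cvx hA _ hp.1 _ hq.1 _ (bq.drop b3)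
    have := (ha A hA p hp.1 e heA b3 (B_self_right _ _)).2 rfl
    have := T.tri p e q
    omega
  · have : T.B 1 e p := bq.dist_of_le b1 (by omega)
    unfold TreeD.B at *
    omega

/-- Geodesics following no line for long represent the same element of the quotient only if they
end at the same point, by Greendlinger's lemma. -/
theorem arcs_inj {v e v' e' k : F} (b : T.B 1 e v) (hd : T.d e v ≤ σ) (ha : T.Arcs σ e)
    (b' : T.B 1 e' v') (hd' : T.d e' v' ≤ σ) (ha' : T.Arcs σ e') (hk : k ∈ T.K)
    (hσ : 20 * (T.u + 7 * σ) < 9 * (T.Lam * T.u)) (e : k * v = v') : k = 1 := by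
  by_contra hne
  obtain ⟨g, A, n, hr, p, q, hp, hq, hl⟩ := greendlinger hk hne v
  obtain ⟨o, ho⟩ := line_gate (T.rot_line hr) 1
  have h1 := arcs_total b hd ha (T.rot_line hr) ho hp
  rw [e] at hq
  have h2 := arcs_total b' hd' ha' (T.rot_line hr) ho hq
  have := T.tri p o q
  have := T.comm p o
  have := T.rot_len hr
  omega

theorem pw_wd (a b : F) (w : List (Bool × Bool)) :
    pw (fun t => cond t a b) w = wd a b (w.flatMap fun p => [p.1, p.2]) := by
  induction w with
  | nil => simp [pw, wd]
  | cons p w ih =>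
    simp only [pw, List.map_cons, List.prod_cons, List.flatMap_cons, wd_append] at *
    rw [ih]; simp [wd]

theorem flat_inj : ∀ w w' : List (Bool × Bool), w.length = w'.length →
    (w.flatMap fun p => [p.1, p.2]) = (w'.flatMap fun p => [p.1, p.2]) → w = w' := by
  intro w
  induction w with
  | nil => intro w' h _; simpa [eq_comm] using h
  | cons p w ih =>
    intro w' h e
    rcases w' with _ | ⟨p', w'⟩
    · simp at h
    simp only [List.flatMap_cons, List.cons_append, List.nil_append, List.cons.injEq] at e
    rw [ih w' (by simpa using h) e.2.2, Prod.ext e.1 e.2.1]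

theorem tree_gp {x y z : F} {C : ℝ} (hc : T.s ≤ C) (h : T.treeHyp.gp 1 x y ≤ T.treeHyp.ρ 1 z / 2 - 200 * C)
    : T.d 1 x + T.d 1 y + 4 * T.s ≤ T.d x y + T.d 1 z := by
  unfold Hyp.gp treeHyp at h
  simp only at h
  have : (T.d 1 x + T.d 1 y + 4 * T.s : ℝ) ≤ T.d x y + T.d 1 z := by linarith
  exact_mod_cast this

theorem d_inv (x : F) : T.d 1 x⁻¹ = T.d 1 x := by
  rw [← T.inv x]; simp [T.comm]

theorem exists_pos {a b : F} {C : ℝ} (hc : T.s ≤ C) (h : T.treeHyp.SC a b (200 * C)) {σ : ℕ}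
    (ha : T.d 1 a ≤ σ) (hb : T.d 1 b ≤ σ) : ∃ c, T.Pos (fun t => cond t a b) c σ := by
  have hs := T.spos
  have hmid : ∀ x : F, ∃ m, T.B 1 m x ∧ 2 * T.d 1 m ≤ T.d 1 x ∧ T.d 1 x ≤ 2 * T.d 1 m + 2 * T.s := by
    intro x
    obtain ⟨k, hk⟩ := T.dvd 1 x
    obtain ⟨z, h1, h2⟩ := T.exists_pt (x := 1) (y := x) (k / 2) (by
      rw [hk]; exact Nat.mul_le_mul_left _ (Nat.div_le_self _ _))
    refine ⟨z, h2, ?_, ?_⟩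
    · rw [h1, hk]; have : 2 * (k / 2) ≤ k := by omega
      nlinarith
    · rw [h1, hk]; have : k ≤ 2 * (k / 2) + 2 := by omega
      nlinarith
  choose m hm1 hm2 hm3 using hmid
  have i1 := d_inv (T := T) a
  have i2 := d_inv (T := T) b
  have h1 := tree_gp hc h.aa
  have h2 := tree_gp hc h.bb
  have h3 := tree_gp hc h.ab1
  have h4 := tree_gp hc h.ab2
  have h5 := tree_gp hc h.ba1
  have h6 := tree_gp hc h.ba2
  have h7 := tree_gp hc h.d1
  have h8 := tree_gp hc h.d2
  have h9 := T.comm a b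
  refine ⟨fun t => m (cond t a b), ?_, ?_, ?_, fun t => hm1 _, fun t => hm2 _, fun t => hm3 _, ?_⟩
  · rintro (_ | _) (_ | _) <;> simp only [cond_true, cond_false] <;> omega
  · rintro (_ | _) (_ | _) <;> simp only [cond_true, cond_false] <;> omega
  · rintro (_ | _) (_ | _) <;> simp only [cond_true, cond_false] <;> first | omega | (intro h; simp at h)
  · rintro (_ | _) <;> simpa

/-- Growth from two letters in general position that are short compared to the relators. -/
theorem grow_of_pos {Q : Type v} [Group Q] (π : F →* Q) (hk : π.ker = T.K) {U : Set Q} {a b y : F} {N : ℕ}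
    {C : ℝ} (hc : T.s ≤ C) (hc' : 1 ≤ C) (h : T.treeHyp.SC a b (200 * C)) {σ : ℕ}
    (ha : T.d 1 a ≤ σ) (hb : T.d 1 b ≤ σ) (hσ : 20 * (T.u + 7 * σ) < 9 * (T.Lam * T.u)) {i j : ℕ}
    (Ua : π (y * a * y⁻¹) ∈ U ^ i) (Ub : π (y * b * y⁻¹) ∈ U ^ j) (hi : 2 * i ≤ N) (hj : 2 * j ≤ N) :
    Grow U N := by
  classical
  obtain ⟨c, hP⟩ := exists_pos hc h ha hb
  choose w hw e h1 h2 h3 using hP.good_word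
  set E : Bool → F := fun t => cond t a b with hE
  intro n
  refine ⟨(Finset.univ : Finset (List.Vector Bool n)).image fun l => π (y * pw E (w l.1) * y⁻¹), ?_, ?_⟩
  · rw [Finset.card_image_of_injective]
    · simp
    · rintro ⟨l, hl⟩ ⟨l', hl'⟩ eq
      simp only at eq
      have hmem : pw E (w l') * (pw E (w l))⁻¹ ∈ T.K := by
        rw [← hk, MonoidHom.mem_ker]
        simp only [map_mul, map_inv, mul_left_inj, mul_right_inj] at eq
        simp [eq]
      have k1 := arcs_inj (h1 l).1 (h2 l) (h3 l) (h1 l').1 (h2 l') (h3 l') hmem hσ (by simp)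
      have eq' : pw E (w l) = pw E (w l') := (mul_inv_eq_one.1 k1).symm
      rw [pw_wd, pw_wd] at eq'
      have ll : (w l).length = (w l').length := by
        have := congrArg List.length (hw l)
        have := congrArg List.length (hw l')
        simp only [List.length_map] at *
        omega
      have := h.inj (by linarith) ((w l).flatMap fun p => [p.1, p.2])
        ((w l').flatMap fun p => [p.1, p.2]) (by simp [List.length_flatMap, ll])
        (by rw [eq']; exact T.treeHyp.self _)
      have := flat_inj _ _ ll this
      apply Subtype.ext
      show l = l'
      rw [← hw l, ← hw l', this]
  · intro x hx
    obtain ⟨⟨l, hl⟩, -, rfl⟩ := Finset.mem_image.1 hx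
    have hE1 : ∀ t, ∃ k, 2 * k ≤ N ∧ π (y * E t * y⁻¹) ∈ U ^ k := by
      rintro (_ | _)
      · exact ⟨j, hj, Ub⟩
      · exact ⟨i, hi, Ua⟩
    have : ∀ l : List (Bool × Bool), ∃ k ≤ N * l.length, π (y * pw E l * y⁻¹) ∈ U ^ k := by
      intro l
      induction l with
      | nil => exact ⟨0, by simp, by simp [pw]⟩
      | cons p l ih =>
        obtain ⟨k, hk, hm⟩ := ih
        obtain ⟨k1, hk1, hm1⟩ := hE1 p.1
        obtain ⟨k2, hk2, hm2⟩ := hE1 p.2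
        refine ⟨k1 + k2 + k, by simp only [List.length_cons]; nlinarith, ?_⟩
        rw [pow_add, pow_add]
        have := Set.mul_mem_mul (Set.mul_mem_mul hm1 hm2) hm
        convert this using 1
        rw [← map_mul, ← map_mul]
        congr 1
        simp [pw, mul_assoc]
    have lw : (w l).length = n := by
      have := congrArg List.length (hw l)
      simp only [List.length_map] at *
      omega
    obtain ⟨k, h1, h2⟩ := this (w l)
    exact ⟨k, by rw [← lw]; exact h1, h2⟩

/-- Two elements with short lifts either generate a semigroup of exponential growth or one
normalises the other. -/
theorem low_pair {Q : Type v} [Group Q] (π : F →* Q) (hk : π.ker = T.K) {U : Set Q} (hU : U⁻¹ = U)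
    {h f : F} {σ : ℕ} (hh : T.d 1 h ≤ σ) (hf : T.d 1 f ≤ σ) (Uh : π h ∈ U) (Uf : π f ∈ U)
    (hσ : 8000 * σ ≤ T.Lam * T.u) :
    Grow U 84 ∨ f * h * f⁻¹ = h ∨ f * h * f⁻¹ = h⁻¹ := by
  by_cases h1 : h = 1
  · subst h1; simp
  obtain ⟨w, w1, w2⟩ := exists_cyc (T := T) _ h le_rfl h1
  set h0 := w⁻¹ * h * w with hh0
  set f0 := w⁻¹ * f * w with hf0
  have e1 : T.d 1 h0 = T.d w (h * w) := by
    rw [← T.inv w]; simp [hh0, mul_assoc]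
  have e2 : T.d 1 (h0 * h0) = T.d w (h * (h * w)) := by
    rw [← T.inv w]; simp [hh0, mul_assoc]
  have h0ne : h0 ≠ 1 := by
    intro e
    apply h1
    have := congrArg (fun z => w * z * w⁻¹) e
    simpa [hh0, mul_assoc] using this
  have h0len : T.d 1 h0 ≤ σ := by omega
  have f0len : T.d 1 f0 ≤ 2 * σ := by
    have e : T.d 1 f0 = T.d w (f * w) := by rw [← T.inv w]; simp [hf0, mul_assoc]
    have := T.tri w 1 (f * w)
    have := T.tri 1 f (f * w)
    have : T.d f (f * w) = T.d 1 w := by simpa using T.inv f 1 w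
    have := T.comm 1 w
    omega
  have cyc : T.d 1 (h0 * h0) = 2 * T.d 1 h0 := by omega
  have ax := cyc_ax (T := T) h0ne cyc
  obtain ⟨m, n, x, hx, xl, hcase⟩ := Hyp.step3 ax f0
  have xlen : T.d 1 x ≤ 2 * σ := by
    simp only [treeHyp] at xl
    have : (T.d 1 x : ℝ) ≤ T.d 1 f0 := by linarith
    have : T.d 1 x ≤ T.d 1 f0 := by exact_mod_cast this
    omega
  have hs := T.spos
  rcases hcase with sc | ⟨η, η2, e3, e4, e5⟩
  · left
    have hC : 6 * T.treeHyp.ρ 1 h0 = 200 * (3 * T.d 1 h0) := by simp only [treeHyp]; ring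
    rw [hC] at sc
    have hsle : T.s ≤ T.d 1 h0 := by
      obtain ⟨k, hk⟩ := T.dvd 1 h0
      have := (ne_iff (T := T.toTreeD)).1 (Ne.symm h0ne)
      rcases k with _ | k
      · omega
      · rw [hk, Nat.mul_succ]; omega
    have r1 : (T.s : ℝ) ≤ T.d 1 h0 := by exact_mod_cast hsle
    have r2 : (1 : ℝ) ≤ T.s := by exact_mod_cast hs
    have al : T.d 1 (h0 ^ 40) ≤ 44 * σ := by rw [cyc_pow cyc]; omega
    have bl : T.d 1 (x * h0 ^ 40 * x⁻¹) ≤ 44 * σ := by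
      have t1 := T.tri 1 (x * h0 ^ 40) (x * h0 ^ 40 * x⁻¹)
      have t2 := T.tri 1 x (x * h0 ^ 40)
      have t3 : T.d x (x * h0 ^ 40) = T.d 1 (h0 ^ 40) := by simpa using T.inv x 1 (h0 ^ 40)
      have t4 : T.d (x * h0 ^ 40) (x * h0 ^ 40 * x⁻¹) = T.d 1 x⁻¹ := by
        simpa using T.inv (x * h0 ^ 40) 1 x⁻¹
      have t5 := d_inv (T := T) x
      have t6 : T.d 1 (h0 ^ 40) ≤ 40 * σ := by rw [cyc_pow cyc]; omega
      omega
    have hpw : w * h0 ^ 40 * w⁻¹ = h ^ 40 := by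
      rw [← conj_pow]; congr 1; simp [hh0, mul_assoc]
    have hb : w * (x * h0 ^ 40 * x⁻¹) * w⁻¹ = h ^ m * (f * h ^ 40 * f⁻¹) * (h ^ m)⁻¹ := by
      have z1 : w * h0 ^ m * w⁻¹ = h ^ m := by
        rw [← conj_zpow]; congr 1; simp [hh0, mul_assoc]
      have z2 : w * f0 * w⁻¹ = f := by simp [hf0, mul_assoc]
      rw [← z1, ← hpw, ← z2, hx]
      have comm : h0 ^ n * h0 ^ 40 * (h0 ^ n)⁻¹ = h0 ^ 40 := by
        rw [← zpow_natCast, ← zpow_add, ← zpow_neg, ← zpow_add]; congr 1; ring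
      calc _ = w * h0 ^ m * f0 * (h0 ^ n * h0 ^ 40 * (h0 ^ n)⁻¹) * f0⁻¹ * (h0 ^ m)⁻¹ * w⁻¹ := by
            simp only [mul_inv_rev, mul_assoc]
        _ = _ := by rw [comm]; simp [mul_assoc]
    have Uinv : (π f)⁻¹ ∈ U := by rw [← hU]; simpa using Uf
    refine grow_of_pos π hk (N := 84) (C := 3 * T.d 1 h0) (by linarith) (by linarith) sc al bl ?_
      (y := (h ^ m)⁻¹ * w) (i := 40) (j := 42) ?_ ?_ (by norm_num) (by norm_num)
    · have := T.big
      have := T.upos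
      have : 1000 * T.u ≤ T.Lam * T.u := Nat.mul_le_mul_right _ T.big
      omega
    · have : (h ^ m)⁻¹ * w * h0 ^ 40 * ((h ^ m)⁻¹ * w)⁻¹ = h ^ 40 := by
        calc _ = (h ^ m)⁻¹ * (w * h0 ^ 40 * w⁻¹) * h ^ m := by simp [mul_assoc]
          _ = _ := by
            rw [hpw, ← zpow_natCast, ← zpow_neg, ← zpow_add, ← zpow_add]; congr 1; ring
      rw [this, map_pow]; exact Set.pow_mem_pow Uh
    · have : (h ^ m)⁻¹ * w * (x * h0 ^ 40 * x⁻¹) * ((h ^ m)⁻¹ * w)⁻¹ = f * h ^ 40 * f⁻¹ := by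
        calc _ = (h ^ m)⁻¹ * (w * (x * h0 ^ 40 * x⁻¹) * w⁻¹) * h ^ m := by simp [mul_assoc]
          _ = _ := by rw [hb]; simp [mul_assoc]
      rw [this, map_mul, map_mul, map_pow, map_inv]
      rw [show 42 = 1 + 40 + 1 by rfl, pow_add, pow_add, pow_one]
      exact Set.mul_mem_mul (Set.mul_mem_mul Uf (Set.pow_mem_pow Uh)) Uinv
  · right
    have e6 := e5 3 le_rfl (by norm_num)
    have e7 : η ^ (3 + 1) = x * η2 * x⁻¹ * η ^ 3 := by
      apply T.eq_of
      simp only [treeHyp] at e6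
      by_contra hne
      have : (1 : ℝ) ≤ T.d (η ^ (3 + 1)) (x * η2 * x⁻¹ * η ^ 3) := by
        exact_mod_cast Nat.one_le_iff_ne_zero.2 hne
      linarith
    rw [pow_succ', mul_left_inj] at e7
    have c1 : Commute (h0 ^ n) η2 := by
      rcases e4 with rfl | rfl
      · exact (Commute.refl h0).zpow_left n
      · exact ((Commute.refl h0).zpow_left n).inv_right
    have c2 : Commute (h0 ^ m) η := by
      rcases e3 with rfl | rfl
      · exact (Commute.refl h0).zpow_left m
      · exact ((Commute.refl h0).zpow_left m).inv_right
    have e8 : f0 * η2 * f0⁻¹ = η := by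
      have : f0 * η2 * f0⁻¹ = (h0 ^ m)⁻¹ * (h0 ^ m * f0 * h0 ^ n * η2 * (h0 ^ m * f0 * h0 ^ n)⁻¹) * h0 ^ m := by
        have : h0 ^ n * η2 * (h0 ^ n)⁻¹ = η2 := by rw [c1.eq]; simp
        calc _ = f0 * (h0 ^ n * η2 * (h0 ^ n)⁻¹) * f0⁻¹ := by rw [this]
          _ = _ := by simp [mul_assoc]
      rw [this, ← hx, ← e7, mul_assoc, ← c2.eq]; simp
    have e9 : f0 * h0 * f0⁻¹ = h0 ∨ f0 * h0 * f0⁻¹ = h0⁻¹ := by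
      rcases e3 with rfl | rfl <;> rcases e4 with rfl | rfl
      · exact Or.inl e8
      · right
        have := congrArg (·⁻¹) e8
        simpa [mul_assoc] using this
      · exact Or.inr e8
      · left
        have := congrArg (·⁻¹) e8
        simpa [mul_assoc] using this
    have t : f * h * f⁻¹ = w * (f0 * h0 * f0⁻¹) * w⁻¹ := by simp [hf0, hh0, mul_assoc]
    rw [t]
    rcases e9 with e | e <;> rw [e]
    · left; simp [hh0, mul_assoc]
    · right; simp [hh0, mul_assoc]

end Setup

/-! ### Axes of cyclically reduced elements -/

namespace TreeD
variable {F : Type u} [Group F] {T : TreeD F}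

theorem cyc_pow' (inv : ∀ g x y, T.d (g * x) (g * y) = T.d x y) {h : F}
    (h2 : T.d 1 (h * h) = 2 * T.d 1 h) (n : ℕ) : T.d 1 (h ^ n) = n * T.d 1 h := by
  have e : ∀ i j : ℕ, T.d (h ^ i) (h ^ (i + j)) = T.d 1 (h ^ j) := fun i j => by
    rw [pow_add]; simpa using inv (h ^ i) 1 (h ^ j)
  by_cases h0 : T.d 1 h = 0
  · have := T.eq_of h0; subst this; simp [T.self]
  induction n using Nat.strong_induction_on with
  | _ n ih =>
    rcases n with _ | _ | n
    · simp [T.self]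
    · simp
    · have i1 := ih (n + 1) (by omega)
      have i0 := ih n (by omega)
      have f := T.fp 1 (h ^ 1) (h ^ 2) (h ^ (n + 2))
      have e1 := e 1 (n + 1)
      have e2 := e 2 n
      have e3 := e 1 1
      rw [show 1 + (n + 1) = n + 2 by ring] at e1
      rw [show 2 + n = n + 2 by ring] at e2
      norm_num at e3
      rw [pow_one] at *
      have t := T.tri 1 h (h ^ (n + 2))
      rw [pow_two] at *
      rw [h2, e1, e2, i1, i0, e3] at f
      rw [e1, i1] at t
      push_cast [Nat.add_mul] at *
      change T.d 1 (h ^ (n + 2)) = _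
      rcases f with f | f <;> · nlinarith

/-- `h` translates the geodesic `γ`, which passes through `1` at time `0`, by `a > 0` steps. -/
structure IsAxis (T : TreeD F) (h : F) (γ : ℤ → F) (a : ℕ) : Prop where
  geo : ∀ i j, (T.d (γ i) (γ j) : ℤ) = T.s * |i - j|
  tr : ∀ i, h * γ i = γ (i + a)
  pos : 0 < a
  zero : γ 0 = 1

set_option maxHeartbeats 1000000 in
/-- A cyclically reduced element translates a geodesic through `1`. -/
theorem exists_axis (inv : ∀ g x y, T.d (g * x) (g * y) = T.d x y) {h : F} (h1 : h ≠ 1)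
    (h2 : T.d 1 (h * h) = 2 * T.d 1 h) : ∃ γ a, T.IsAxis h γ a ∧ T.d 1 h = T.s * a := by
  obtain ⟨a, ha⟩ := T.dvd 1 h
  have hs := T.spos
  have apos : 0 < a := by
    rcases Nat.eq_zero_or_pos a with h0 | h0
    · subst h0; exact absurd (T.eq_of (by simpa using ha)).symm h1
    · exact h0
  have hex : ∀ N k : ℕ, ∃ z, k ≤ 2 * N * a → T.d (h⁻¹ ^ N) z = T.s * k ∧ T.B (h⁻¹ ^ N) z (h ^ N) := by
    intro N k
    by_cases hk : k ≤ 2 * N * a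
    · have e : T.d (h⁻¹ ^ N) (h ^ N) = 2 * N * (T.s * a) := by
        rw [← inv (h ^ N), inv_pow, mul_inv_cancel, ← pow_add, cyc_pow' inv h2, ha]; ring
      obtain ⟨z, hz⟩ := T.exists_pt (x := h⁻¹ ^ N) (y := h ^ N) k (by rw [e]; nlinarith)
      exact ⟨z, fun _ => hz⟩
    · exact ⟨1, fun h => absurd h hk⟩
  choose P hP using hex
  -- `P N k` is the point at distance `k` from `h ^ (-N)` on the segment to `h ^ N`
  have ext : ∀ N k, k ≤ 2 * N * a → P (N + 1) (k + a) = P N k := by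
    intro N k hk
    obtain ⟨p1, p2⟩ := hP N k hk
    obtain ⟨q1, q2⟩ := hP (N + 1) (k + a) (by nlinarith)
    have e1 : T.d (h⁻¹ ^ (N + 1)) (h⁻¹ ^ N) = T.s * a := by
      rw [← inv (h ^ (N + 1)), inv_pow, inv_pow, mul_inv_cancel, pow_succ', mul_assoc, mul_inv_cancel, mul_one, ha]
    have e2 : T.d (h⁻¹ ^ N) (h ^ (N + 1)) = (2 * N + 1) * (T.s * a) := by
      rw [← inv (h ^ N), inv_pow, mul_inv_cancel, ← pow_add, cyc_pow' inv h2, ha]; push_cast; ring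
    have e3 : T.d (h⁻¹ ^ (N + 1)) (h ^ (N + 1)) = (2 * N + 2) * (T.s * a) := by
      rw [← inv (h ^ (N + 1)), inv_pow, mul_inv_cancel, ← pow_add, cyc_pow' inv h2, ha]; push_cast; ring
    have e4 : T.d (h⁻¹ ^ N) (h ^ N) = 2 * N * (T.s * a) := by
      rw [← inv (h ^ N), inv_pow, mul_inv_cancel, ← pow_add, cyc_pow' inv h2, ha]; ring
    have e5 : T.d (h ^ N) (h ^ (N + 1)) = T.s * a := by
      rw [pow_succ, ← ha]; simpa using inv (h ^ N) 1 h
    have b1 : T.B (h⁻¹ ^ (N + 1)) (h⁻¹ ^ N) (h ^ (N + 1)) := by unfold B; rw [e1, e2, e3]; ring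
    have b2 : T.B (h⁻¹ ^ N) (h ^ N) (h ^ (N + 1)) := by unfold B; rw [e4, e5, e2]; ring
    have b3 : T.B (h⁻¹ ^ N) (P N k) (h ^ (N + 1)) := b2.left p2
    have b4 := b1.right b3
    have b5 : T.d (h⁻¹ ^ (N + 1)) (P N k) = T.s * (k + a) := by
      unfold B at *
      rw [mul_add]
      omega
    exact q2.uniq b4 (by rw [q1, b5])
  have ext' : ∀ (i : ℤ) (N M : ℕ), |i| ≤ N * a → N ≤ M → P M (i + M * a).toNat = P N (i + N * a).toNat := by
    intro i N M hi hM
    induction M, hM using Nat.le_induction with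
    | base => rfl
    | succ M hM ih =>
      rw [← ih]
      have h3 : (N : ℤ) * a ≤ M * a := by nlinarith [(by exact_mod_cast hM : (N : ℤ) ≤ M)]
      have h4 := abs_le.1 (hi.trans h3)
      have h5 : (i + (M + 1 : ℕ) * a).toNat = (i + M * a).toNat + a := by
        push_cast
        rw [add_mul, one_mul, ← add_assoc, Int.toNat_add (by linarith) (by positivity)]; simp
      rw [h5, ext]
      zify
      rw [Int.toNat_of_nonneg (by linarith)]
      linarith
  have hab : ∀ i : ℤ, |i| ≤ (i.natAbs : ℕ) * a := fun i => by
    rw [← Int.natCast_natAbs i]; nlinarith [(by exact_mod_cast apos : (1 : ℤ) ≤ a)]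
  let γ : ℤ → F := fun i => P i.natAbs (i + i.natAbs * a).toNat
  have hγ : ∀ (i : ℤ) (N : ℕ), |i| ≤ N * a → γ i = P N (i + N * a).toNat := by
    intro i N hi
    have := ext' i N (max N i.natAbs) hi (le_max_left _ _)
    have h' := ext' i i.natAbs (max N i.natAbs) (hab i) (le_max_right _ _)
    rw [← this, h']
  refine ⟨γ, a, ⟨?_, ?_, apos, ?_⟩, ha⟩
  · -- distances
    have key : ∀ i j : ℤ, i ≤ j → (T.d (γ i) (γ j) : ℤ) = T.s * (j - i) := by
      intro i j hij
      set N := max i.natAbs j.natAbs with hN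
      have hi : |i| ≤ N * a := (hab i).trans (by gcongr; exact_mod_cast le_max_left _ _)
      have hj : |j| ≤ N * a := (hab j).trans (by gcongr; exact_mod_cast le_max_right _ _)
      have i1 := abs_le.1 hi
      have j1 := abs_le.1 hj
      rw [hγ i N hi, hγ j N hj]
      have ti : ((i + N * a).toNat : ℤ) = i + N * a := Int.toNat_of_nonneg (by linarith)
      have tj : ((j + N * a).toNat : ℤ) = j + N * a := Int.toNat_of_nonneg (by linarith)
      obtain ⟨p1, p2⟩ := hP N (i + N * a).toNat (by zify; rw [ti]; linarith)
      obtain ⟨q1, q2⟩ := hP N (j + N * a).toNat (by zify; rw [tj]; linarith)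
      have := p2.dist_of_le q2 (by rw [p1, q1]; gcongr; exact Int.toNat_le_toNat (by linarith))
      rw [p1, q1] at this
      zify at this
      rw [ti, tj] at this
      linarith
    intro i j
    rcases le_total i j with hij | hij
    · rw [key i j hij, abs_sub_comm, abs_of_nonneg (by linarith)]
    · rw [T.comm, key j i hij, abs_of_nonneg (by linarith)]
  · intro i
    set N := i.natAbs with hN
    have i1 := abs_le.1 (hab i)
    have hi2 : |i + a| ≤ (N + 1 : ℕ) * a := by
      push_cast; rw [abs_le]; constructor <;> nlinarith
    rw [hγ i N (hab i), hγ (i + a) (N + 1) hi2]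
    have ti : ((i + N * a).toNat : ℤ) = i + N * a := Int.toNat_of_nonneg (by linarith)
    have t2 : (i + a + (N + 1 : ℕ) * a).toNat = (i + N * a).toNat + 2 * a := by
      zify
      rw [Int.toNat_of_nonneg (by push_cast; nlinarith), ti]; push_cast; ring
    have hk : (i + N * a).toNat ≤ 2 * N * a := by zify; rw [ti]; linarith
    rw [t2]
    set k := (i + N * a).toNat with hkk
    obtain ⟨p1, p2⟩ := hP N k hk
    obtain ⟨q1, q2⟩ := hP (N + 1) (k + 2 * a) (by nlinarith)
    have b1 : T.B (h * h⁻¹ ^ N) (h * P N k) (h * h ^ N) := by unfold B at *; rw [inv, inv, inv]; exact p2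
    have e1 : T.d (h⁻¹ ^ (N + 1)) (h * h⁻¹ ^ N) = 2 * (T.s * a) := by
      rw [← inv (h ^ (N + 1)), inv_pow, inv_pow, mul_inv_cancel, pow_succ',
        show h * h ^ N * (h * (h ^ N)⁻¹) = h * h by
          rw [mul_assoc, ← mul_assoc (h ^ N), ← pow_succ, pow_succ']; simp, h2, ha]
    have e2 : T.d (h * h⁻¹ ^ N) (h ^ (N + 1)) = 2 * N * (T.s * a) := by
      rw [pow_succ', inv, ← inv (h ^ N), inv_pow, mul_inv_cancel, ← pow_add, cyc_pow' inv h2, ha]; ring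
    have e3 : T.d (h⁻¹ ^ (N + 1)) (h ^ (N + 1)) = (2 * N + 2) * (T.s * a) := by
      rw [← inv (h ^ (N + 1)), inv_pow, mul_inv_cancel, ← pow_add, cyc_pow' inv h2, ha]; push_cast; ring
    have b2 : T.B (h⁻¹ ^ (N + 1)) (h * h⁻¹ ^ N) (h ^ (N + 1)) := by unfold B; rw [e1, e2, e3]; ring
    rw [← pow_succ'] at b1
    have b3 := b2.right b1
    refine b3.uniq q2 ?_
    rw [q1]
    have : T.d (h * h⁻¹ ^ N) (h * P N k) = T.s * k := by rw [inv, p1]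
    have e4 : T.d (h⁻¹ ^ (N + 1)) (h * P N k) = 2 * (T.s * a) + T.s * k := by
      have b5 := (b2.symm.drop b1.symm).symm
      unfold B at b5
      rw [e1, this] at b5
      exact b5.symm
    rw [e4]; ring
  · rw [hγ 0 0 (by simp)]
    have := (hP 0 0 (by simp)).1
    have h0 := T.eq_of (by rw [this]; simp : T.d (h⁻¹ ^ 0) (P 0 0) = 0)
    simpa using h0.symm

end TreeD

/-! ### Shortest representatives of loxodromic classes -/

namespace TreeD
variable {F : Type u} {T : TreeD F}

/-- `γ` is a bi-infinite geodesic, parametrised by the edges of the tree. -/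
def Geo (T : TreeD F) (γ : ℤ → F) : Prop := ∀ i j, (T.d (γ i) (γ j) : ℤ) = T.s * |i - j|

variable {γ : ℤ → F}
theorem Geo.d_le (h : T.Geo γ) {i j : ℤ} (hij : i ≤ j) : (T.d (γ i) (γ j) : ℤ) = T.s * (j - i) := by
  rw [h, abs_sub_comm, abs_of_nonneg (by linarith)]
theorem Geo.B (h : T.Geo γ) {i j k : ℤ} (hij : i ≤ j) (hjk : j ≤ k) : T.B (γ i) (γ j) (γ k) := by
  unfold TreeD.B
  zify
  rw [h.d_le hij, h.d_le hjk, h.d_le (hij.trans hjk)]; ring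
theorem Geo.inj (h : T.Geo γ) {i j : ℤ} (e : γ i = γ j) : i = j := by
  have := h i j
  rw [e, T.self] at this
  have hs := T.spos
  have h0 : |i - j| = 0 := by
    rcases mul_eq_zero.1 this.symm with h | h
    · omega
    · exact h
  linarith [abs_eq_zero.1 h0]
theorem Geo.mem (h : T.Geo γ) {i j : ℤ} (hij : i ≤ j) {p : F} (b : T.B (γ i) p (γ j)) :
    ∃ k, i ≤ k ∧ k ≤ j ∧ p = γ k := by
  obtain ⟨t, ht⟩ := T.dvd (γ i) p
  have hs := T.spos
  have h1 := h.d_le hij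
  have h2 : T.s * t ≤ T.d (γ i) (γ j) := by unfold TreeD.B at b; omega
  zify at h2
  rw [h1] at h2
  have h3 : (t : ℤ) ≤ j - i := le_of_mul_le_mul_left h2 (by exact_mod_cast hs)
  refine ⟨i + t, by omega, by omega, ?_⟩
  refine b.uniq (h.B (by omega) (by omega)) ?_
  zify
  rw [h.d_le (by omega), ht]; push_cast; ring
theorem Geo.lt_of (h : T.Geo γ) {i j k m : ℤ} (hij : i ≤ j) (hkm : k ≤ m)
    (e : T.d (γ i) (γ j) ≤ T.d (γ k) (γ m)) : j - i ≤ m - k := by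
  zify at e
  rw [h.d_le hij, h.d_le hkm] at e
  exact le_of_mul_le_mul_left e (by exact_mod_cast T.spos)

variable [Group F] {h : F} {a : ℕ}
theorem IsAxis.g (H : T.IsAxis h γ a) : T.Geo γ := H.geo
theorem IsAxis.pow (H : T.IsAxis h γ a) (n : ℕ) (i : ℤ) : h ^ n * γ i = γ (i + n * a) := by
  induction n with
  | zero => simp
  | succ n ih => rw [pow_succ', mul_assoc, ih, H.tr]; push_cast; congr 1; ring
theorem IsAxis.zpow (H : T.IsAxis h γ a) (n i : ℤ) : h ^ n * γ i = γ (i + n * a) := by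
  rcases Int.eq_nat_or_neg n with ⟨m, rfl | rfl⟩
  · exact_mod_cast H.pow m i
  · have := H.pow m (i + -m * a)
    rw [show i + -(m : ℤ) * a + m * a = i by ring] at this
    rw [← this]; simp
theorem IsAxis.one (H : T.IsAxis h γ a) (n : ℤ) : h ^ n = γ (n * a) := by
  have := H.zpow n 0
  rwa [H.zero, mul_one, zero_add] at this
theorem IsAxis.len (H : T.IsAxis h γ a) : T.d 1 h = T.s * a := by
  have h1 := H.one 1
  rw [zpow_one, one_mul] at h1
  have := H.g.d_le (i := 0) (j := a) (by omega)
  rw [← h1, H.zero] at this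
  zify; linarith
end TreeD

namespace Setup
open TreeD
variable {F : Type u} [Group F] {T : Setup F}

/-- The metric of the quotient, as a hyperbolic left-invariant pseudometric. -/
def barHyp (T : Setup F) : Hyp F where
  ρ := T.Db
  nonneg := Db_nonneg
  self := Db_self
  comm := Db_comm
  tri := Db_tri
  fp := Db_fp
  inv := Db_smul

theorem bar_ρ (x y : F) : T.barHyp.ρ x y = T.Db x y := rfl

section
variable {Q : Type v} [Group Q] {π : F →* Q}

theorem Db_pi (hk : π.ker = T.K) {x y x' y' : F} (hx : π x' = π x) (hy : π y' = π y) :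
    T.Db x' y' = T.Db x y := by
  have : ∀ x x' : F, π x' = π x → ∃ k ∈ T.K, x' = k * x := by
    intro x x' e
    refine ⟨x' * x⁻¹, ?_, by simp⟩
    rw [← hk, MonoidHom.mem_ker]; simp [e]
  exact Db_congr (this _ _ hx) (this _ _ hy)

theorem lox_pi (hk : π.ker = T.K) {c : ℝ} {g h x : F} (e : π h = π (x * g * x⁻¹))
    (hg : T.barHyp.Lox c g) : T.barHyp.Lox c h := by
  obtain ⟨B, hB⟩ := hg
  refine ⟨B + 2 * T.Db 1 x, fun n => ?_⟩
  have h1 := hB n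
  have h2 : T.barHyp.ρ 1 (h ^ n) = T.Db 1 (x * g ^ n * x⁻¹) := by
    refine Db_pi hk rfl ?_
    rw [map_pow, e, ← map_pow, conj_pow]
  rw [h2]
  have h3 := Db_tri (T := T) 1 x⁻¹ (g ^ n)
  have h4 := Db_tri (T := T) x⁻¹ (g ^ n * x⁻¹) (g ^ n)
  have h5 := Db_smul (T := T) x x⁻¹ (g ^ n * x⁻¹)
  have h6 := Db_smul (T := T) (g ^ n) x⁻¹ 1
  have h7 := Db_smul (T := T) x 1 x⁻¹
  have h8 := Db_smul (T := T) x x⁻¹ 1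
  rw [mul_inv_cancel] at h5 h7 h8
  rw [mul_one] at h6 h7 h8
  rw [← mul_assoc] at h5
  rw [bar_ρ] at h1
  rw [Db_comm x 1] at h7
  linarith [Db_comm (T := T) x⁻¹ 1]

/-- `h` is a shortest representative of its conjugacy class modulo `K`. -/
def Short (T : Setup F) (h : F) : Prop := ∀ x, ∀ k ∈ T.K, T.d 1 h ≤ T.d 1 (x * h * k * x⁻¹)

theorem exists_short (hk : π.ker = T.K) {g : F} (g1 : π g ≠ 1) : ∃ h x, π h = π (x * g * x⁻¹) ∧
    T.Short h ∧ T.d 1 (h * h) = 2 * T.d 1 h := by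
  classical
  have hex : ∃ n, ∃ h x, π h = π (x * g * x⁻¹) ∧ T.d 1 h = n := ⟨_, g, 1, by simp, rfl⟩
  obtain ⟨h, x, e, hn⟩ := Nat.find_spec hex
  have min : ∀ h' x', π h' = π (x' * g * x'⁻¹) → T.d 1 h ≤ T.d 1 h' := by
    intro h' x' e'
    rw [hn]
    exact Nat.find_min' hex ⟨h', x', e', rfl⟩
  have hs : T.Short h := by
    intro y k hk'
    refine min _ (y * x) ?_
    have : π k = 1 := by rw [← MonoidHom.mem_ker, hk]; exact hk'
    simp only [map_mul, map_inv, e, this]; group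
  refine ⟨h, x, e, hs, ?_⟩
  have hne : h ≠ 1 := by
    rintro rfl
    apply g1
    have e2 : π (x * g * x⁻¹) = 1 := by rw [← e, map_one]
    simpa using e2
  obtain ⟨w, w1, w2⟩ := exists_cyc (T := T) _ h le_rfl hne
  have e1 : T.d 1 (w⁻¹ * h * 1 * w⁻¹⁻¹) = T.d w (h * w) := by
    rw [← T.inv w]; simp [mul_assoc]
  have h3 := hs w⁻¹ 1 (one_mem _)
  have : w = 1 := (T.eq_of (by omega : T.d 1 w = 0)).symm
  subst this
  simpa [mul_assoc] using w2
end

theorem sig_sm {θ : ℕ} {g x c y : F} (h : T.Sig θ x c y) : T.Sig θ (g * x) (g * c) (g * y) := by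
  obtain ⟨A, hA, a, ha, b, hb, h1, h2, h3, h4⟩ := h
  exact ⟨g • A, T.smul_line g A hA, g * a, mul_mem_sm.2 ha, g * b, mul_mem_sm.2 hb, B_sm.2 h1,
    B_sm.2 h2, by rwa [T.inv], by rwa [T.inv]⟩

section
variable {h : F} {γ : ℤ → F} {a : ℕ} {c : ℝ}

/-- Lines share less than one period with the axis of a loxodromic element. -/
theorem line_arc (ax : T.IsAxis h γ a) (hc : 0 < c) (lx : T.barHyp.Lox c h) {A : Set F}
    (hA : A ∈ T.lines) {i j : ℤ} (hi : γ i ∈ A) (hj : γ j ∈ A) (hij : i ≤ j) :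
    T.d (γ i) (γ j) < T.d 1 h + T.u := by
  by_contra hh
  push Not at hh
  have hd := ax.g.d_le hij
  have hl := ax.len
  have hpos := T.upos
  have haij : (a : ℤ) ≤ j - i := by
    have : (T.s : ℤ) * a ≤ T.s * (j - i) := by rw [← hd, ← Nat.cast_mul, ← hl]; exact_mod_cast (by omega)
    exact le_of_mul_le_mul_left this (by exact_mod_cast T.spos)
  have m1 : γ (i + a) ∈ A := line_cvx hA _ hi _ hj _ (ax.g.B (by omega) (by omega))
  have m2 : γ (j - a) ∈ A := line_cvx hA _ hi _ hj _ (ax.g.B (by omega) (by omega))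
  have n1 : γ (i + a) ∈ h • A := by rw [← ax.tr]; exact mul_mem_sm.2 hi
  have n2 : γ j ∈ h • A := by
    have := ax.tr (j - a)
    rw [sub_add_cancel] at this
    rw [← this]; exact mul_mem_sm.2 m2
  have e : A = h • A := by
    by_contra ne
    have := T.ov A hA _ (T.smul_line h A hA) ne _ m1 n1 _ hj n2
    have h2 := ax.g.d_le (i := i + a) (j := j) (by omega)
    have h3 : (T.d (γ (i + a)) (γ j) : ℤ) = T.d (γ i) (γ j) - T.d 1 h := by
      rw [h2, hd, hl]; push_cast; ring
    omega
  have hn : ∀ n : ℕ, h ^ n * γ i ∈ A := by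
    intro n
    induction n with
    | zero => simpa using hi
    | succ n ih => rw [pow_succ', mul_assoc, e]; exact mul_mem_sm.2 ih
  obtain ⟨B, hB⟩ := lx
  obtain ⟨n, hn'⟩ := exists_nat_gt ((B + T.cap + 2 * T.Db 1 (γ i)) / c)
  rw [div_lt_iff₀ hc] at hn'
  have h1 := hB n
  rw [bar_ρ] at h1
  have h2 := Db_tri (T := T) 1 (γ i) (h ^ n)
  have h3 := Db_tri (T := T) (γ i) (h ^ n * γ i) (h ^ n)
  have h4 := Db_smul (T := T) (h ^ n) (γ i) 1
  rw [mul_one] at h4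
  have h5 := (Db_le_D (T := T) (γ i) (h ^ n * γ i)).trans
    ((D_line hA hi (hn n)).le.trans (ph_le_cap _))
  linarith [Db_comm (T := T) (γ i) 1]

/-- Arcs of rotation lines on the axis of a shortest representative are at most about half a
turn. -/
theorem axis_mn (ax : T.IsAxis h γ a) (hc : 0 < c) (lx : T.barHyp.Lox c h) (hs : T.Short h)
    {i j : ℤ} (hij : i ≤ j) : T.Mn (γ i) (γ j) := by
  intro g A n hg p q hp hq
  have hA := T.rot_line hg
  have hn := T.rot_len hg
  have hpos := T.upos
  have hbig : 1000 * T.u ≤ n := (Nat.mul_le_mul_right _ T.big).trans hn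
  by_cases e : p = q
  · subst e; simp [T.self]
  obtain ⟨b1, b2, b3, b4⟩ := hp.pathB hq e
  obtain ⟨i', h1, h2, rfl⟩ := ax.g.mem hij b1
  obtain ⟨j', h3, h4, rfl⟩ := ax.g.mem h2 b3
  have arc := line_arc ax hc lx hA hp.1 hq.1 h3
  -- the first period of the arc
  set t := min (j' - i') a with ht
  have t1 : t ≤ j' - i' := min_le_left _ _
  have t2 : t ≤ a := min_le_right _ _
  have hapos := ax.pos
  have t0 : 0 ≤ t := le_min (by omega) (by omega)
  have m1 : γ (i' + t) ∈ A := line_cvx hA _ hp.1 _ hq.1 _ (ax.g.B (by omega) (by omega))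
  obtain ⟨z, hz⟩ := rot_back hg hp.1 m1
  have s1 := hs (γ i')⁻¹ (h⁻¹ * g ^ z * h) (by
    have := (K_normal (T := T)).conj_mem _ (zpow_mem (rot_mem hg) z) h⁻¹
    simpa using this)
  have e1 : T.d 1 ((γ i')⁻¹ * h * (h⁻¹ * g ^ z * h) * (γ i')⁻¹⁻¹) = T.d (γ i') (g ^ z * γ (i' + a)) := by
    rw [← T.inv (γ i'), ← ax.tr]; congr 1 <;> group
  rw [e1] at s1
  have s2 := T.tri (γ i') (g ^ z * γ (i' + t)) (g ^ z * γ (i' + a))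
  rw [T.inv (g ^ z)] at s2
  have d1 := ax.g.d_le (i := i' + t) (j := i' + a) (by omega)
  have d2 := ax.g.d_le (i := i') (j := i' + t) (by omega)
  have d3 := ax.g.d_le h3
  have hl := ax.len
  have hl' : (T.d 1 h : ℤ) = T.s * a := by exact_mod_cast hl
  have d4 : (T.d (γ (i' + t)) (γ (i' + a)) : ℤ) = T.d 1 h - T.d (γ i') (γ (i' + t)) := by
    rw [d1, d2, hl']; ring
  have half : 2 * T.d (γ i') (γ (i' + t)) ≤ n := by
    rcases abs_cases ((T.d (γ i') (γ (i' + t)) : ℤ) - n) with h | h <;> omega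
  rcases min_choice (j' - i') (a : ℤ) with hm | hm
  · rw [← ht] at hm
    rw [hm, show i' + (j' - i') = j' by ring] at half
    omega
  · rw [← ht] at hm
    rw [hm] at half d2
    have : T.d (γ i') (γ (i' + a)) = T.d 1 h := by zify; rw [d2, hl']; ring
    omega

/-- A cyclically reduced element of displacement at least `c` in the quotient, with axis `γ`: no
rotation line follows the axis for much more than half a period, and no line runs through the base
point `1` for long on both sides. -/
structure Good (T : Setup F) (h : F) (γ : ℤ → F) (a : ℕ) (c : ℝ) : Prop where
  ax : T.IsAxis h γ a
  mn : ∀ i j : ℤ, i ≤ j → T.Mn (γ i) (γ j)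
  ns : ∀ m n : ℕ, ¬ T.Sig 1 (h⁻¹ ^ m) 1 (h ^ n)
  big : c ≤ T.Db 1 h

theorem sig_deg {x y : F} : ¬ T.Sig 1 x y y := by
  rintro ⟨A, hA, p, hp, q, hq, h1, h2, h3, h4⟩
  have := T.upos
  unfold TreeD.B at h2
  rw [T.self] at h2
  omega

theorem sig_deg' {x y : F} : ¬ T.Sig 1 x x y := fun h => sig_deg h.symm

theorem lox_big (lx : T.barHyp.Lox c h) : c ≤ T.Db 1 h := by
  by_contra hh
  push Not at hh
  obtain ⟨B, hB⟩ := lx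
  obtain ⟨n, hn⟩ := exists_nat_gt (B / (c - T.Db 1 h))
  rw [div_lt_iff₀ (by linarith)] at hn
  have h1 := hB n
  have h2 := Hyp.Ax.le (H := T.barHyp) (h := h) n
  simp only [bar_ρ] at *
  nlinarith

theorem u_le_of_big (h1 : (1 : ℝ) ≤ c) (h2 : c ≤ T.Db 1 h) : T.u ≤ T.d 1 h := by
  have h3 := (Db_le_D (T := T) 1 h).trans (D_le_div _ _)
  have h4 : (1 : ℝ) ≤ T.d 1 h / T.u := by linarith
  rw [le_div_iff₀ u_pos, one_mul] at h4
  exact_mod_cast h4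

/-- A base point on the axis at which the axis is almost cut by the lines. -/
theorem exists_base (ax : T.IsAxis h γ a) (hc : 1 ≤ c) (lx : T.barHyp.Lox c h) :
    ∃ i : ℤ, ∀ m n : ℕ, ¬ T.Sig 1 (γ (i - m * a)) (γ i) (γ (i + n * a)) := by
  by_cases hall : ∀ m n : ℕ, ¬ T.Sig 1 (γ (0 - m * a)) (γ 0) (γ (0 + n * a))
  · exact ⟨0, hall⟩
  push Not at hall
  obtain ⟨m0, n0, A, hA, p, hp, q, hq, h1, h2, h3, h4⟩ := hall
  have hul := u_le_of_big hc (lox_big lx)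
  have hpos := T.upos
  have hs := T.spos
  have apos := ax.pos
  obtain ⟨i0, -, k2, rfl⟩ := ax.g.mem (by nlinarith) h1
  obtain ⟨j0, k3, -, rfl⟩ := ax.g.mem (by nlinarith) h2
  -- the first point of the line on the axis
  obtain ⟨i1, l1, l2⟩ : ∃ i1 : ℤ, γ i1 ∈ A ∧ ∀ i, γ i ∈ A → i1 ≤ i := by
    refine Int.exists_least_of_bdd ⟨i0 - a - T.u, fun i hi => ?_⟩ ⟨i0, hp⟩
    by_contra hh
    push Not at hh
    have h5 := line_arc ax (by linarith) lx hA hi hp (by omega)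
    have h6 := ax.g.d_le (i := i) (j := i0) (by omega)
    have h7 : (T.d (γ i) (γ i0) : ℤ) < T.s * a + T.u := by
      rw [← Nat.cast_mul, ← ax.len]; exact_mod_cast h5
    rw [h6] at h7
    have h8 : (1 : ℤ) ≤ T.s := by exact_mod_cast hs
    nlinarith
  have hle : i1 ≤ i0 := l2 _ hp
  refine ⟨i1, fun m n => ?_⟩
  rcases Nat.eq_zero_or_pos n with rfl | npos
  · simpa using sig_deg
  have na : (a : ℤ) ≤ n * a := by nlinarith
  have gate : T.Gt A (γ (i1 - m * a)) (γ i1) := by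
    obtain ⟨g, hg⟩ := line_gate hA (γ (i1 - m * a))
    obtain ⟨k, k5, k6, rfl⟩ := ax.g.mem (by nlinarith) (hg.2 _ l1)
    have := l2 _ hg.1
    have hk : k = i1 := by omega
    rwa [hk] at hg
  set t := min (j0 - i1) a with ht
  have t1 : t ≤ j0 - i1 := min_le_left _ _
  have t2 : t ≤ a := min_le_right _ _
  have t0 : 0 ≤ t := le_min (by omega) (by omega)
  have hl' : (T.d 1 h : ℤ) = T.s * a := by exact_mod_cast ax.len
  refine (not_sig_gate hA gate (r := γ (i1 + t)) ?_ (ax.g.B (by omega) (by omega)) ?_).1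
  · exact line_cvx hA _ l1 _ hq _ (ax.g.B (by omega) (by omega))
  zify
  rw [ax.g.d_le (by omega), add_sub_cancel_left]
  rcases min_choice (j0 - i1) (a : ℤ) with h | h <;> rw [← ht] at h <;> rw [h]
  · have h5 := ax.g.d_le (i := 0) (j := j0) (by omega)
    have h6 : (T.u : ℤ) ≤ T.d (γ 0) (γ j0) := by exact_mod_cast (by omega)
    rw [h5] at h6
    have h8 : (1 : ℤ) ≤ T.s := by exact_mod_cast hs
    nlinarith
  · rw [← hl']; exact_mod_cast hul

end

/-- Every loxodromic class modulo `K` contains a good representative. -/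
theorem exists_good {Q : Type v} [Group Q] {π : F →* Q} (hk : π.ker = T.K) {g : F} {c : ℝ}
    (hc : 1 ≤ c) (lx : T.barHyp.Lox c g) : ∃ h γ a x, π h = π (x * g * x⁻¹) ∧ T.Good h γ a c := by
  have g1 : π g ≠ 1 := by
    intro e
    have := lox_big lx
    rw [Db_pi (T := T) hk (x := 1) (y := 1) rfl (by simpa using e), Db_self] at this
    linarith
  obtain ⟨h, x, e, hs, cyc⟩ := exists_short hk g1
  have lh := lox_pi hk e lx
  have hne : h ≠ 1 := by
    rintro rfl
    have := lox_big lh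
    rw [Db_self] at this
    linarith
  obtain ⟨γ, a, ax, -⟩ := exists_axis T.inv hne cyc
  obtain ⟨i, hi⟩ := exists_base ax hc lh
  have e1 : ∀ n : ℕ, ((γ i)⁻¹ * h * γ i) ^ n = (γ i)⁻¹ * γ (i + n * a) := by
    intro n
    have := conj_pow (i := n) (a := (γ i)⁻¹) (b := h)
    rw [inv_inv] at this
    rw [this, mul_assoc, ax.pow]
  have e2 : ∀ n : ℕ, ((γ i)⁻¹ * h * γ i)⁻¹ ^ n = (γ i)⁻¹ * γ (i - n * a) := by
    intro n
    rw [inv_pow, e1, mul_inv_rev, inv_inv, ← ax.pow n i]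
    have := ax.pow n (i - n * a)
    rw [sub_add_cancel] at this
    rw [← this]; group
  have e3 : π ((γ i)⁻¹ * h * γ i) = π ((γ i)⁻¹ * x * g * ((γ i)⁻¹ * x)⁻¹) := by
    simp only [map_mul, e, map_inv]; group
  refine ⟨(γ i)⁻¹ * h * γ i, fun j => (γ i)⁻¹ * γ (j + i), a, (γ i)⁻¹ * x, e3, ⟨⟨?_, ?_, ax.pos, by simp⟩, ?_, ?_, ?_⟩⟩
  · intro j k
    rw [T.inv, ax.geo]; congr 2; ring
  · intro j
    have := ax.tr (j + i)
    simp only [mul_assoc, mul_inv_cancel_left, this]; congr 2; ring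
  · intro j k hjk
    exact (axis_mn ax (by linarith) lh hs (by omega)).smul _
  · intro m n hsig
    rw [e1, e2] at hsig
    have := sig_sm (g := γ i) hsig
    simp only [mul_inv_cancel_left, mul_one] at this
    exact hi m n this
  · exact lox_big (lox_pi hk e3 lx)

end Setup

/-! ### Elements moving an axis a little -/

namespace Setup
open TreeD
variable {F : Type u} [Group F] {T : Setup F}

/-- The powers of a good element form almost a geodesic in the quotient metric. -/
theorem Good.hyp {h : F} {γ : ℤ → F} {a : ℕ} {c : ℝ} (G : T.Good h γ a c) (hc : 100 ≤ c) :
    T.barHyp.Ax h := by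
  refine ⟨fun n m => ?_, hc.trans G.big⟩
  simp only [bar_ρ]
  have e1 : h⁻¹ ^ n = γ (-(n * a)) := by
    have := G.ax.one (-n); rw [zpow_neg] at this; rw [inv_pow]; simpa using this
  have e2 : h ^ m = γ (m * a) := by simpa using G.ax.one m
  have hm := G.mn (-(n * a)) (m * a) (by nlinarith)
  have hb : T.B (h⁻¹ ^ n) 1 (h ^ m) := by
    rw [e1, e2, ← G.ax.zero]; exact G.ax.g.B (by nlinarith) (by nlinarith)
  have nc := near_cut hb (G.ns n m)
  rw [← e1, ← e2] at hm
  rw [← hm.Db] at nc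
  have h1 := Db_le_D (T := T) (h⁻¹ ^ n) 1
  have h2 := Db_le_D (T := T) 1 (h ^ m)
  have h3 := Db_smul (T := T) (h ^ n) (h⁻¹ ^ n) 1
  have h4 := Db_smul (T := T) (h ^ n) (h⁻¹ ^ n) (h ^ m)
  rw [inv_pow, mul_inv_cancel] at h3 h4
  rw [← pow_add] at h4
  rw [mul_one] at h3
  rw [inv_pow] at *
  push_cast at nc
  linarith

/-- An element stabilising a line translates it, as there is no 2-torsion. -/
theorem line_tr {γ : ℤ → F} (hγ : T.Geo γ) {f : F} (hf : ∀ i, ∃ j, f * γ i = γ j) :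
    ∃ m, ∀ i, f * γ i = γ (i + m) := by
  have hs : (T.s : ℤ) ≠ 0 := by have := T.spos; omega
  have iso : ∀ i j i' j', f * γ i = γ i' → f * γ j = γ j' → |i' - j'| = |i - j| := by
    intro i j i' j' h1 h2
    have h3 := hγ i j
    have h4 := hγ i' j'
    rw [← h1, ← h2, T.inv, h3] at h4
    exact (mul_left_cancel₀ hs h4).symm
  obtain ⟨m, hm⟩ := hf 0
  obtain ⟨m1, hm1⟩ := hf 1
  have h1 := iso _ _ _ _ hm1 hm
  have key : ∀ i j, f * γ i = γ j → |j - m| = |i| ∧ |j - m1| = |i - 1| := by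
    intro i j h
    have h2 := iso _ _ _ _ h hm
    have h3 := iso _ _ _ _ h hm1
    rw [sub_zero] at h2
    exact ⟨h2, h3⟩
  rcases abs_cases (m1 - m) with h2 | h2
  · refine ⟨m, fun i => ?_⟩
    obtain ⟨j, hj⟩ := hf i
    obtain ⟨k1, k2⟩ := key i j hj
    rw [hj]; congr 1
    norm_num at h1
    clear iso key hf hm hm1 hj
    rcases abs_cases (j - m) with q | q <;> rcases abs_cases i with q' | q' <;>
      rcases abs_cases (j - m1) with q3 | q3 <;> rcases abs_cases (i - 1) with q4 | q4 <;> omega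
  · exfalso
    norm_num at h1
    have ref : ∀ i, f * γ i = γ (m - i) := by
      intro i
      obtain ⟨j, hj⟩ := hf i
      obtain ⟨k1, k2⟩ := key i j hj
      rw [hj]; congr 1
      clear iso key hf hm hm1 hj
      rcases abs_cases (j - m) with q | q <;> rcases abs_cases i with q' | q' <;>
        rcases abs_cases (j - m1) with q3 | q3 <;> rcases abs_cases (i - 1) with q4 | q4 <;> omega
    have h3 : f * f = 1 := by
      have : f * f * γ 0 = γ 0 := by rw [mul_assoc, ref, ref]; simp
      simpa using this
    have h4 := T.tf f h3
    subst h4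
    have a1 := ref 0
    have a2 := ref 1
    rw [one_mul] at a1 a2
    have a3 := hγ.inj a1
    have a4 := hγ.inj a2
    omega

theorem overlap_seg {A A' : Set F} (hA : A ∈ T.lines) (hA' : A' ∈ T.lines) {x y a1 b1 a2 b2 : F}
    (g1 : T.Gt A x a1) (g2 : T.Gt A y b1) (g3 : T.Gt A' x a2) (g4 : T.Gt A' y b2) (n1 : a1 ≠ b1)
    (n2 : a2 ≠ b2) (l1 : T.d x a1 ≤ T.d x a2) (l2 : T.d x a2 + T.u ≤ T.d x b1)
    (l3 : T.d x a2 + T.u ≤ T.d x b2) : A = A' := by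
  obtain ⟨p1, p2, p3, p4⟩ := g1.pathB g2 n1
  obtain ⟨q1, q2, q3, q4⟩ := g3.pathB g4 n2
  have e1 := q1.dist_of_le p2 (by omega)
  have e2 := p1.dist_of_le q1 l1
  have e3 := p1.dist_of_le p2 (by omega)
  have e4 := q1.dist_of_le q2 (by omega)
  have m : a2 ∈ A := line_cvx hA _ g1.1 _ g2.1 _ (by unfold TreeD.B; omega)
  by_contra hne
  rcases le_total (T.d x b1) (T.d x b2) with h | h
  · have e5 := p2.dist_of_le q2 h
    have := T.ov A hA A' hA' hne a2 m g3.1 b1 g2.1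
      (line_cvx hA' _ g3.1 _ g4.1 _ (by unfold TreeD.B; omega))
    omega
  · have e5 := q2.dist_of_le p2 h
    have := T.ov A hA A' hA' hne a2 m g3.1 b2
      (line_cvx hA _ m _ g2.1 _ (by unfold TreeD.B; omega)) g4.1
    omega

/-- Short lifts at the two ends of a segment without long arcs agree. -/
theorem acyl1 {x y f k : F} (hk : k ∈ T.K) (mn : T.Mn x y) {σ : ℕ} (hσ : 1000 * σ ≤ T.Lam * T.u)
    (hu : T.u ≤ σ) (hx : T.d x (f * x) ≤ σ) (hy : T.d y (k * (f * y)) ≤ σ) : k = 1 := by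
  by_contra hne
  obtain ⟨g, A, n, hg, p, q, hp, hq, hn⟩ := greendlinger hk hne (f * y)
  have hA := T.rot_line hg
  have hl := T.rot_len hg
  have upos := T.upos
  obtain ⟨q', hq'⟩ := line_gate hA y
  obtain ⟨p1, hp1⟩ := line_gate hA (f * x)
  obtain ⟨p2, hp2⟩ := line_gate hA x
  have d1 := hq'.le hq
  have d2 := hp2.le hp1
  have d3 := mn _ _ _ hg _ _ hp2 hq'
  have d4 := mn.smul f _ _ _ hg _ _ hp1 hp
  have t1 := T.tri p p1 q
  have t2 := T.tri p1 p2 q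
  have t3 := T.tri p2 q' q
  have c1 := T.comm p p1
  have c2 := T.comm p1 p2
  have gP := gt_sm (g := f⁻¹) hp1
  have gP' := gt_sm (g := f⁻¹) hp
  rw [inv_mul_cancel_left] at gP gP'
  have hfA := T.smul_line f⁻¹ A hA
  have e1 : T.d x (f⁻¹ * p1) = T.d (f * x) p1 := by rw [← T.inv f, mul_inv_cancel_left]
  have e2 : T.d (f⁻¹ * p1) (f⁻¹ * p) = T.d p1 p := T.inv _ _ _
  have n1 : p2 ≠ q' := by rintro rfl; rw [T.self] at *; omega
  have n2 : f⁻¹ * p1 ≠ f⁻¹ * p := by intro h; rw [h, T.self] at e2; omega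
  have s1 := T.tri x (f * x) p2
  have s2 := T.tri (f * x) p1 p2
  have s3 := T.tri (f * x) x p1
  have s4 := T.tri x p2 p1
  have c3 := T.comm x (f * x)
  have b1 := (hp2.pathB hq' n1).2.2.2
  have b2 := (gP.pathB gP' n2).2.2.2
  have hEq : A = f⁻¹ • A := by
    rcases le_total (T.d x p2) (T.d x (f⁻¹ * p1)) with h | h
    · refine overlap_seg hA hfA hp2 hq' gP gP' n1 n2 h ?_ ?_ <;> unfold TreeD.B at * <;> omega
    · refine (overlap_seg hfA hA gP gP' hp2 hq' n2 n1 h ?_ ?_).symm <;> unfold TreeD.B at * <;> omega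
  rw [← hEq] at gP gP'
  have u1 := gP.uniq hp2
  have u2 := gP'.uniq hq'
  obtain ⟨γ, hγ, hr⟩ := T.param A hA
  obtain ⟨m, hm⟩ := line_tr (T := T) (γ := γ) hγ (f := f) (by
    intro i
    have : γ i ∈ f⁻¹ • A := by rw [← hEq, ← hr]; exact ⟨i, rfl⟩
    rw [mem_sm, inv_inv] at this
    rw [← hr] at this
    obtain ⟨j, hj⟩ := this
    exact ⟨j, hj.symm⟩)
  have hp2' := hp2.1
  have hq2' := hq'.1
  rw [← hr] at hp2' hq2'
  obtain ⟨i, rfl⟩ := hp2'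
  obtain ⟨j, rfl⟩ := hq2'
  have v1 : p1 = γ (i + m) := by rw [← hm, ← u1]; simp
  have v2 : p = γ (j + m) := by rw [← hm, ← u2]; simp
  have w1 := hγ i (i + m)
  have w2 := hγ j (j + m)
  rw [← v1] at w1
  rw [← v2] at w2
  rw [show i - (i + m) = j - (j + m) by ring, ← w2] at w1
  have t4 := T.tri p (γ j) q
  have c5 := T.comm p (γ j)
  omega

/-- An element moving two far apart points of an axis a little translates the axis. -/
theorem acyl2 {h : F} {γ : ℤ → F} {a : ℕ} (ax : T.IsAxis h γ a) {f : F} {σ : ℕ}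
    (hσ : 10 * σ ≤ T.d 1 h) (hx : T.d (h ^ 3) (f * h ^ 3) ≤ σ) (hy : T.d (h ^ 11) (f * h ^ 11) ≤ σ) :
    ∃ m : ℤ, (∀ i, f * γ i = γ (i + m)) ∧ T.s * |m| ≤ σ := by
  have hs := T.spos
  have apos := ax.pos
  have hl := ax.len
  have lpos : 0 < T.d 1 h := by rw [hl]; positivity
  have on : ∀ n : ℕ, h ^ n = γ (n * a) := fun n => by simpa using ax.one n
  have dd : ∀ i j : ℕ, T.d (h ^ i) (h ^ (i + j)) = j * T.d 1 h := by
    intro i j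
    zify
    rw [on, on, ax.g.d_le (by push_cast; nlinarith), hl]; push_cast; ring
  have seg : ∀ n : ℕ, 6 ≤ n → n ≤ 7 → T.B (h ^ 3) (f * h ^ n) (h ^ 11) ∧
      T.d (h ^ 3) (f * h ^ n) ≤ (n - 3) * T.d 1 h + σ ∧ (n - 3) * T.d 1 h ≤ T.d (h ^ 3) (f * h ^ n) + σ := by
    intro n h6 h7
    have e1 := dd 3 (n - 3)
    have e2 := dd n (11 - n)
    rw [show 3 + (n - 3) = n by omega] at e1
    rw [show n + (11 - n) = 11 by omega] at e2
    have e3 := dd 3 8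
    norm_num at e3
    rw [← T.inv f] at e1 e2 e3
    have b : T.B (f * h ^ 3) (f * h ^ n) (f * h ^ 11) := by
      unfold TreeD.B; rw [e1, e2, e3, ← add_mul]; congr 1; omega
    have t1 := T.tri (h ^ 3) (f * h ^ 3) (f * h ^ n)
    have t2 := T.tri (f * h ^ 3) (h ^ 3) (f * h ^ n)
    have t3 := T.tri (f * h ^ n) (h ^ 11) (f * h ^ 11)
    have c1 := T.comm (f * h ^ 3) (h ^ 3)
    have c2 := T.comm (f * h ^ 11) (h ^ 11)
    have m1 : 3 * T.d 1 h ≤ (n - 3) * T.d 1 h := Nat.mul_le_mul_right _ (by omega)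
    have m2 : 4 * T.d 1 h ≤ (11 - n) * T.d 1 h := Nat.mul_le_mul_right _ (by omega)
    refine ⟨?_, by omega, by omega⟩
    have b1 : T.B (h ^ 3) (f * h ^ n) (f * h ^ 11) := by
      rcases b.cover (h ^ 3) with h' | h'
      · unfold TreeD.B at h'; omega
      · exact h'
    rcases b1.cover (h ^ 11) with h' | h'
    · exact h'
    · unfold TreeD.B at h'
      have := T.comm (f * h ^ n) (f * h ^ 11)
      omega
  obtain ⟨b6, l6, r6⟩ := seg 6 (by norm_num) (by norm_num)
  obtain ⟨b7, l7, r7⟩ := seg 7 (by norm_num) (by norm_num)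
  have e67 := dd 6 1
  norm_num at e67 l6 l7 r6 r7
  rw [← T.inv f] at e67
  rw [on 3, on 11] at b6 b7
  obtain ⟨i, i1, i2, hi⟩ := ax.g.mem (by push_cast; nlinarith) b6
  obtain ⟨j, j1, j2, hj⟩ := ax.g.mem (by push_cast; nlinarith) b7
  have hij : i ≤ j := by
    by_contra hh
    push Not at hh
    have := ax.g.B j1 hh.le
    rw [← hi, ← hj, ← on 3] at this
    unfold TreeD.B at this
    omega
  have hja : j = i + a := by
    have := ax.g.d_le hij
    rw [← hi, ← hj, e67, hl] at this
    push_cast at this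
    have := mul_left_cancel₀ (by omega : (T.s : ℤ) ≠ 0) this
    omega
  have comm : f * h = h * f := by
    have h1 : f * h ^ 7 = h * (f * h ^ 6) := by rw [hi, ax.tr, ← hja, hj]
    have h2 : f * h * h ^ 6 = h * f * h ^ 6 := by rw [mul_assoc, ← pow_succ', h1, mul_assoc]
    exact mul_right_cancel h2
  have cz : ∀ n : ℤ, f * h ^ n = h ^ n * f := fun n => (show Commute f h from comm).zpow_right n
  set m := i - 6 * a with hm
  have fm : f = γ m := by
    have h1 : h ^ 6 * f = γ i := by rw [← hi]; exact_mod_cast (cz 6).symm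
    have h2 := ax.pow 6 m
    rw [← mul_right_inj (h ^ 6), h1, h2, hm]; congr 1; push_cast; ring
  have trz : ∀ n : ℤ, f * γ (n * a) = γ (n * a + m) := by
    intro n
    rw [← ax.one, cz, fm, ax.zpow, add_comm]
  refine ⟨m, fun k => ?_, ?_⟩
  · have hka : |k| ≤ |k| * a := le_mul_of_one_le_right (abs_nonneg _) (by exact_mod_cast apos)
    have k1 := neg_abs_le k
    have k2 := le_abs_self k
    have b1 : T.B (γ ((-|k|) * a)) (γ k) (γ (|k| * a)) := ax.g.B (by linarith) (by linarith)
    rw [← B_sm (g := f), trz, trz] at b1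
    refine b1.uniq (ax.g.B (by linarith) (by linarith)) ?_
    have := T.inv f (γ ((-|k|) * a)) (γ k)
    rw [trz] at this
    zify
    rw [this, ax.g.d_le (by linarith), ax.g.d_le (by linarith)]; ring
  · have h1 := ax.geo m 0
    rw [← fm, ax.zero, sub_zero] at h1
    rw [← h1]
    have h2 : f * h ^ 3 = h ^ 3 * f := by exact_mod_cast cz 3
    rw [h2] at hx
    have h3 := T.inv (h ^ 3) 1 f
    rw [mul_one] at h3
    rw [T.comm]; exact_mod_cast (by omega)

theorem tr_mul {γ : ℤ → F} {f f' : F} {m m' : ℤ} (h : ∀ i, f * γ i = γ (i + m))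
    (h' : ∀ i, f' * γ i = γ (i + m')) (i : ℤ) : f * f' * γ i = γ (i + (m + m')) := by
  rw [mul_assoc, h', h]; congr 1; ring
theorem tr_inv {γ : ℤ → F} {f : F} {m : ℤ} (h : ∀ i, f * γ i = γ (i + m)) (i : ℤ) :
    f⁻¹ * γ i = γ (i + -m) := by
  have := h (i + -m)
  rw [neg_add_cancel_right] at this
  rw [← this]; simp
theorem tr_pow {γ : ℤ → F} {f : F} {m : ℤ} (h : ∀ i, f * γ i = γ (i + m)) (n : ℕ) (i : ℤ) :
    f ^ n * γ i = γ (i + n * m) := by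
  induction n with
  | zero => simp
  | succ n ih => rw [pow_succ', mul_assoc, ih, h]; push_cast; congr 1; ring
/-- A translation of the axis of `h` and `h` itself have a common power. -/
theorem tr_root {h : F} {γ : ℤ → F} {a : ℕ} (ax : T.IsAxis h γ a) {f : F} {m : ℤ}
    (hf : ∀ i, f * γ i = γ (i + m)) : f ^ a = h ^ m := by
  have h1 := tr_pow hf a 0
  have h2 := ax.one m
  rw [ax.zero, mul_one] at h1
  rw [h1, h2]; congr 1; ring
theorem tr_zero {h : F} {γ : ℤ → F} {a : ℕ} (ax : T.IsAxis h γ a) {f : F}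
    (hf : ∀ i, f * γ i = γ (i + 0)) : f = 1 := by
  have := hf 0
  rwa [add_zero, ax.zero, mul_one] at this

/-- The parameters of the loxodromic case: `Θ` bounds the tree length, in units of `u`,
of chains of cost at most `61`. -/
structure Par (T : Setup F) (Θ : ℕ) (c : ℝ) : Prop where
  cap : 61 < T.cap
  exp : Real.exp 61 ≤ Θ
  lam : 1000 * Θ ≤ T.Lam
  c : 10 * Θ ≤ c

theorem Par.c100 {Θ : ℕ} {c : ℝ} (P : T.Par Θ c) : 100 ≤ c := by
  have := P.c
  have := P.exp
  have := Real.add_one_le_exp (61 : ℝ)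
  linarith

/-- Elements moving two far apart points of a good axis a little in the quotient come from
translations of the axis. -/
theorem Good.acyl {h : F} {γ : ℤ → F} {a : ℕ} {c : ℝ} (G : T.Good h γ a c) {Θ : ℕ} (P : T.Par Θ c)
    {Q : Type v} [Group Q] {π : F →* Q} (hk : π.ker = T.K) {f : F}
    (hx : T.Db (h ^ 3) (f * h ^ 3) ≤ 60) (hy : T.Db (h ^ 11) (f * h ^ 11) ≤ 60) :
    ∃ f' : F, ∃ m : ℤ, π f' = π f ∧ (∀ i, f' * γ i = γ (i + m)) ∧ |m| < a := by
  have Θ1 : 1 ≤ Θ := by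
    have := P.exp
    have := Real.add_one_le_exp (61 : ℝ)
    have : (1 : ℝ) ≤ Θ := by linarith
    exact_mod_cast this
  have lift : ∀ x : F, T.Db x (f * x) ≤ 60 → ∃ k ∈ T.K, T.d x (k * (f * x)) ≤ Θ * T.u := by
    intro x hx
    obtain ⟨k, hk, h1⟩ := Db_lt (T := T) (c := 61) (lt_of_le_of_lt hx (by norm_num))
    refine ⟨k, hk, ?_⟩
    have h2 := ph_lt_cap ((D_lb _ _).trans h1.le) P.cap
    have h3 : (T.d x (k * (f * x)) : ℝ) ≤ Θ * T.u :=
      h2.trans (mul_le_mul_of_nonneg_right P.exp u_pos.le)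
    exact_mod_cast h3
  obtain ⟨k1, hk1, d1⟩ := lift _ hx
  obtain ⟨k2, hk2, d2⟩ := lift _ hy
  have on : ∀ n : ℕ, h ^ n = γ (n * a) := fun n => by simpa using G.ax.one n
  have mn : T.Mn (h ^ 3) (h ^ 11) := by
    rw [on, on]; exact G.mn _ _ (by push_cast; nlinarith [G.ax.pos])
  have e := acyl1 (k := k2 * k1⁻¹) (f := k1 * f) (mul_mem hk2 (inv_mem hk1)) mn
    (σ := Θ * T.u) (by rw [← mul_assoc]; exact Nat.mul_le_mul_right _ P.lam)
    (Nat.le_mul_of_pos_left _ Θ1) (by rwa [mul_assoc]) (by simpa [mul_assoc] using d2)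
  have e' : k2 = k1 := by rwa [mul_inv_eq_one] at e
  subst e'
  have hl : 10 * (Θ * T.u) ≤ T.d 1 h := by
    have h1 := G.big.trans ((Db_le_D (T := T) 1 h).trans (D_le_div _ _))
    have h2 := P.c.trans h1
    rw [le_div_iff₀ u_pos] at h2
    have h3 : (10 * (Θ * T.u) : ℝ) ≤ T.d 1 h := by linarith
    exact_mod_cast h3
  obtain ⟨m, h1, h2⟩ := acyl2 G.ax (f := k2 * f) hl (by rwa [mul_assoc]) (by rwa [mul_assoc])
  refine ⟨k2 * f, m, ?_, h1, ?_⟩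
  · have : π k2 = 1 := by rw [← MonoidHom.mem_ker, hk]; exact hk2
    rw [map_mul, this, one_mul]
  · rw [G.ax.len] at hl
    have hpos := T.upos
    have : (T.s : ℤ) * |m| < T.s * a := by
      refine lt_of_le_of_lt h2 ?_
      have : 0 < Θ * T.u := by positivity
      exact_mod_cast (by omega)
    exact lt_of_mul_lt_mul_left this (by positivity)

end Setup

/-! ### The normaliser of a loxodromic element -/

namespace Hyp
variable {F : Type u} [Group F] {H : Hyp F}

theorem Ax.ge' {h : F} (a : H.Ax h) (n : ℕ) : (n : ℝ) ≤ H.ρ 1 (h ^ n) := by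
  rcases n with _ | n
  · simp [H.self]
  · have h1 := a.ge n
    have h2 := a.big
    have h3 : (0 : ℝ) ≤ n := by positivity
    push_cast
    nlinarith

theorem Ax.bdd {h : F} (a : H.Ax h) {p q : ℕ} {E : ℝ}
    (hE : ∀ n : ℕ, H.ρ 1 (h ^ (q * n)) ≤ H.ρ 1 (h ^ (p * n)) + E) : q ≤ p := by
  by_contra hh
  push Not at hh
  obtain ⟨n, hn⟩ := exists_nat_gt (E + 1)
  have h1 := hE n
  have h2 := a.add (p * n) ((q - p) * n)
  rw [← add_mul, Nat.add_sub_cancel' hh.le] at h2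
  have h3 := a.ge' ((q - p) * n)
  have h4 : (1 : ℝ) ≤ (q - p : ℕ) := by exact_mod_cast (by omega)
  have h5 : (0 : ℝ) ≤ n := by positivity
  push_cast at h3
  nlinarith

/-- `c` commutes with the powers of `h` as far as the pseudometric can see. -/
def Cm (H : Hyp F) (h c : F) : Prop := ∀ (n : ℤ) (x : F), H.ρ (c * h ^ n) x = H.ρ (h ^ n * c) x

theorem Cm.dist {h c : F} (m : H.Cm h c) (n : ℤ) : H.ρ (c * h ^ n) (h ^ n) = H.ρ 1 c := by
  rw [m n, H.comm, ρ_mul]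

theorem Cm.near {h c : F} (m : H.Cm h c) (a : H.Ax h) {N : ℕ} (hN : H.ρ 1 c + 10 < N) :
    H.ρ (h⁻¹ ^ N) c + H.ρ c (h ^ N) ≤ H.ρ (h⁻¹ ^ N) (h ^ N) + 13 := by
  have d1 := m.dist N
  have d2 := m.dist (-N)
  rw [zpow_neg, zpow_natCast, ← inv_pow] at d2
  rw [zpow_natCast] at d1
  have g0 := a.gp_neg N N
  rw [← gp_smul c, mul_one] at g0
  have n1 := a.ge' N
  have n2 := a.inv.ge' N
  have t1 := H.tri (c * h ^ N) (h ^ N) c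
  have t2 := H.tri (c * h⁻¹ ^ N) (h⁻¹ ^ N) c
  have r1 := ρ_mul (H := H) c (h ^ N)
  have r2 := ρ_mul (H := H) c (h⁻¹ ^ N)
  have c1 := H.comm c (c * h ^ N)
  have c2 := H.comm c (c * h⁻¹ ^ N)
  have c3 := H.comm (h ^ N) c
  have c4 := H.comm (h⁻¹ ^ N) c
  have c5 := H.comm (h⁻¹ ^ N) (h ^ N)
  have k1 : (1 / 2 : ℝ) + 3 < H.gp c (h ^ N) (c * h ^ N) := by
    unfold gp; rw [H.comm (h ^ N) (c * h ^ N)]; linarith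
  rw [gp_comm] at g0
  have k2 := gp_le g0 k1
  have k3 : (1 / 2 : ℝ) + 3 + 3 < H.gp c (h⁻¹ ^ N) (c * h⁻¹ ^ N) := by
    unfold gp; rw [H.comm (h⁻¹ ^ N) (c * h⁻¹ ^ N)]; linarith
  rw [gp_comm] at k2
  have k4 := gp_le k2 k3
  unfold gp at k4
  linarith

theorem Cm.coord {h c c' : F} (m : H.Cm h c) (a : H.Ax h) {N : ℕ}
    (hN : H.ρ 1 c + H.ρ 1 c' + 10 < N) :
    |H.ρ (c * c') (h ^ N) + H.ρ 1 (h ^ N) - H.ρ c' (h ^ N) - H.ρ c (h ^ N)| ≤ 6 := by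
  have d1 := m.dist N
  rw [zpow_natCast] at d1
  have n1 := a.ge' N
  have r1 := ρ_mul (H := H) c (h ^ N)
  have r2 := H.inv c c' (h ^ N)
  have r3 := ρ_mul (H := H) c c'
  have f1 := H.fp (c * c') (c * h ^ N) (h ^ N) c
  have f2 := H.fp (c * c') (h ^ N) (c * h ^ N) c
  have k1 := H.comm (h ^ N) (c * h ^ N)
  have k2 := H.comm (c * c') c
  have k3 := H.comm (c * h ^ N) c
  have k4 := H.comm (h ^ N) c
  have t1 := H.tri 1 c (h ^ N)
  have t2 := H.tri 1 c' (h ^ N)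
  have p1 := H.nonneg 1 c
  have p2 := H.nonneg 1 c'
  have p3 := H.nonneg (c * c') (h ^ N)
  rw [abs_le]
  constructor
  · rcases max_cases (H.ρ (c * c') (h ^ N) + H.ρ (c * h ^ N) c)
      (H.ρ (c * c') c + H.ρ (h ^ N) (c * h ^ N)) with ⟨q, _⟩ | ⟨q, _⟩ <;> rw [q] at f2 <;> linarith
  · rcases max_cases (H.ρ (c * c') (c * h ^ N) + H.ρ (h ^ N) c)
      (H.ρ (c * c') c + H.ρ (c * h ^ N) (h ^ N)) with ⟨q, _⟩ | ⟨q, _⟩ <;> rw [q] at f1 <;> linarith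

/-- Elements commuting with a loxodromic element almost commute with each other. -/
theorem Cm.comm_close {h c c' : F} (a : H.Ax h) (m : H.Cm h c) (m' : H.Cm h c')
    (n : H.Cm h (c * c')) (n' : H.Cm h (c' * c)) : H.ρ (c' * c) (c * c') ≤ 31 := by
  obtain ⟨N, hN⟩ := exists_nat_gt (H.ρ 1 c + H.ρ 1 c' + 10)
  have h1 := l_mul (H := H) c c'
  have h2 := l_mul (H := H) c' c
  have e1 := abs_le.1 (m.coord a hN)
  have e2 := abs_le.1 (m'.coord (c' := c) a (by linarith))
  have := near_geod (e := 12) (n'.near a (N := N) (by linarith)) (n.near a (N := N) (by linarith))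
    (by rw [abs_le]; constructor <;> linarith [e1.1, e1.2, e2.1, e2.2])
  linarith
end Hyp

namespace Setup
open TreeD
variable {F : Type u} [Group F] {T : Setup F} {h : F} {γ : ℤ → F} {a : ℕ} {c : ℝ}

theorem Good.inv (G : T.Good h γ a c) : T.Good h⁻¹ (fun i => γ (-i)) a c where
  ax := { geo := fun i j => by
            rw [G.ax.geo, show -i - -j = -(i - j) by ring, abs_neg]
          tr := fun i => by
            have := G.ax.zpow (-1) (-i)
            rw [zpow_neg_one] at this
            rw [this]; congr 1; ring
          pos := G.ax.pos
          zero := by simpa using G.ax.zero }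
  mn := fun i j hij => (G.mn _ _ (by linarith)).symm
  ns := fun m n hs => G.ns n m (by simpa using hs.symm)
  big := by
    have := Hyp.l_inv (H := T.barHyp) h
    simp only [bar_ρ] at this
    rw [this]; exact G.big

variable {Q : Type v} [Group Q] {π : F →* Q} {Θ : ℕ}

/-- If a conjugate of `h^±1` fellow travels the axis of `h` then it equals `h` in the quotient. -/
theorem Good.norm (G : T.Good h γ a c) (P : T.Par Θ c) (hk : π.ker = T.K) {x η : F}
    (hη : η = h ∨ η = h⁻¹)
    (hx : ∀ i : ℕ, 3 ≤ i → i ≤ 11 → T.Db (h ^ (i + 1)) (x * η * x⁻¹ * h ^ i) ≤ 60) :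
    π (x * η * x⁻¹) = π h := by
  have A := G.hyp P.c100
  have sh : ∀ i : ℕ, 3 ≤ i → i ≤ 11 → T.Db (h ^ i) (h⁻¹ * (x * η * x⁻¹) * h ^ i) ≤ 60 := by
    intro i h3 h11
    rw [← Db_smul h, ← pow_succ']
    have := hx i h3 h11
    rwa [show h * (h⁻¹ * (x * η * x⁻¹) * h ^ i) = x * η * x⁻¹ * h ^ i by group]
  obtain ⟨f, m, e, tr, hm⟩ := G.acyl P hk (sh 3 le_rfl (by norm_num)) (sh 11 (by norm_num) le_rfl)
  have tr2 := tr_mul (fun i => G.ax.tr i) tr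
  have rt := tr_root G.ax tr2
  have e1 : π (h * f) = π (x * η * x⁻¹) := by rw [map_mul, e, ← map_mul, mul_inv_cancel_left]
  obtain ⟨b, hb⟩ : ∃ b : ℕ, (a : ℤ) + m = b := ⟨(a + m).toNat, by
    have := abs_lt.1 hm; omega⟩
  rw [hb, zpow_natCast] at rt
  have pw : ∀ n, T.Db 1 (h ^ (b * n)) = T.Db 1 (x * η ^ (a * n) * x⁻¹) := by
    intro n
    refine Db_pi hk rfl ?_
    rw [pow_mul, ← rt, map_pow, map_pow, e1, ← conj_pow, pow_mul, ← map_pow, ← map_pow]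
  have ηh : ∀ n, T.Db 1 (η ^ n) = T.Db 1 (h ^ n) := by
    intro n
    rcases hη with rfl | rfl
    · rfl
    · rw [inv_pow]; exact Hyp.l_inv (H := T.barHyp) _
  have q1 : b ≤ a := A.bdd (E := 2 * T.Db 1 x) (fun n => by
    have h1 := Hyp.l_mul (H := T.barHyp) (x * η ^ (a * n)) x⁻¹
    have h2 := Hyp.l_mul (H := T.barHyp) x (η ^ (a * n))
    rw [Hyp.l_inv] at h1
    simp only [bar_ρ] at *
    rw [pw]; rw [ηh] at h2; linarith)
  have q2 : a ≤ b := A.bdd (E := 2 * T.Db 1 x) (fun n => by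
    have h1 := Hyp.l_mul (H := T.barHyp) (x⁻¹ * (x * η ^ (a * n) * x⁻¹)) x
    have h2 := Hyp.l_mul (H := T.barHyp) x⁻¹ (x * η ^ (a * n) * x⁻¹)
    rw [Hyp.l_inv] at h2
    rw [show x⁻¹ * (x * η ^ (a * n) * x⁻¹) * x = η ^ (a * n) by group] at h1
    simp only [bar_ρ] at *
    rw [← pw] at h2; rw [ηh] at h1; linarith)
  have m0 : m = 0 := by omega
  subst m0
  have := tr_zero G.ax tr
  rw [← e1, this, mul_one]

/-- An element of `U` moving the axis of `h` off itself produces a free semigroup; otherwise it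
centralises or inverts `h`. -/
theorem Good.lox_norm (G : T.Good h γ a c) (P : T.Par Θ c) (hk : π.ker = T.K) {U : Set Q}
    (hU : U⁻¹ = U) {j : ℕ} (hj : j ≤ 2) (hh : π h ∈ U ^ j) {v : F} (hv : π v ∈ U) :
    Grow U 84 ∨ π v * π h * (π v)⁻¹ = π h ∨ π v * π h * (π v)⁻¹ = (π h)⁻¹ := by
  obtain ⟨m, n, x, hx, -, sc | ⟨η, η2, h1, h2, hf⟩⟩ := Hyp.step3 (G.hyp P.c100) v
  · left
    have hv' : (π v)⁻¹ ∈ U := by rw [← hU]; exact Set.inv_mem_inv.2 hv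
    have p1 : π h ^ 40 ∈ U ^ (j * 40) := by rw [pow_mul]; exact Set.pow_mem_pow hh
    have p2 : π v * π h ^ 40 * (π v)⁻¹ ∈ U ^ (1 + j * 40 + 1) := by
      rw [pow_add, pow_add, pow_one]
      exact Set.mul_mem_mul (Set.mul_mem_mul hv p1) hv'
    refine grow_of_free p1 p2 (by omega) (by omega) fun l l' hl e => ?_
    refine sc.inj ?_ l l' hl ?_
    · have := G.big
      have := P.c100
      simp only [bar_ρ]; linarith
    · rw [bar_ρ, ← Db_self (T := T) (wd (h ^ 40) (x * h ^ 40 * x⁻¹) l)]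
      refine Db_pi hk rfl ?_
      have cj : ∀ l, π (wd (h ^ 40) (x * h ^ 40 * x⁻¹) l) =
          π h ^ m * wd (π h ^ 40) (π v * π h ^ 40 * (π v)⁻¹) l * (π h ^ m)⁻¹ := by
        intro l
        have := wd_map (MulAut.conj (π h ^ m)).toMonoidHom (π h ^ 40) (π v * π h ^ 40 * (π v)⁻¹) l
        simp only [MulEquiv.coe_toMonoidHom, MulAut.conj_apply] at this
        rw [this, wd_map]
        congr 1
        · rw [map_pow]; group
        · rw [hx]; simp only [map_mul, map_inv, map_pow, map_zpow]; group
      rw [cj, cj, e]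
  · right
    have key : π (x * η2 * x⁻¹) = π η := by
      rcases h1 with rfl | rfl
      · exact G.norm P hk h2 hf
      · exact G.inv.norm P hk (by rw [inv_inv]; exact h2.symm) hf
    have ce : η2 = h ∧ (π v * π h * (π v)⁻¹ = (π h) ^ (-m) * π (x * h * x⁻¹) * π h ^ m) ∨
        η2 = h⁻¹ ∧ (π v * π h * (π v)⁻¹ = ((π h) ^ (-m) * π (x * h⁻¹ * x⁻¹) * π h ^ m)⁻¹) := by
      rcases h2 with rfl | rfl
      · left; refine ⟨rfl, ?_⟩; rw [hx]; simp only [map_mul, map_inv, map_zpow]; group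
      · right; refine ⟨rfl, ?_⟩; rw [hx]; simp only [map_mul, map_inv, map_zpow]; group
    rcases ce with ⟨rfl, ce⟩ | ⟨rfl, ce⟩ <;> rw [ce, key] <;> rcases h1 with rfl | rfl
    · left; group
    · right; rw [map_inv]; group
    · right; group
    · left; rw [map_inv]; group

theorem cm_of (hk : π.ker = T.K) {x : F} (hx : Commute (π x) (π h)) : T.barHyp.Cm h x := by
  intro n y
  refine Db_pi hk ?_ rfl
  rw [map_mul, map_mul, map_zpow]; exact hx.zpow_right n

/-- Commutators of elements centralising `h` lift to translations of the axis of `h`. -/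
theorem Good.comm_tr (G : T.Good h γ a c) (P : T.Par Θ c) (hk : π.ker = T.K) {x y : F}
    (hx : Commute (π x) (π h)) (hy : Commute (π y) (π h)) :
    ∃ f m, π f = π ((y * x)⁻¹ * (x * y)) ∧ ∀ i, f * γ i = γ (i + m) := by
  have A := G.hyp P.c100
  have xy : Commute (π (x * y)) (π h) := by rw [map_mul]; exact hx.mul_left hy
  have yx : Commute (π (y * x)) (π h) := by rw [map_mul]; exact hy.mul_left hx
  have cl := Hyp.Cm.comm_close A (cm_of hk hx) (cm_of hk hy) (cm_of hk xy) (cm_of hk yx)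
  set f := (y * x)⁻¹ * (x * y) with hf
  have cf : Commute (π f) (π h) := by
    rw [hf, map_mul, map_inv]; exact yx.inv_left.mul_left xy
  have sh : ∀ i : ℕ, T.Db (h ^ i) (f * h ^ i) ≤ 60 := by
    intro i
    rw [Db_pi (T := T) hk (x := h ^ i) (y := h ^ i * f) rfl (by
      rw [map_mul π f, map_mul π _ f, map_pow]; exact cf.pow_right i)]
    have h1 := Hyp.ρ_mul (H := T.barHyp) (h ^ i) f
    have h2 := Hyp.ρ_l (H := T.barHyp) (y * x) (x * y)
    rw [bar_ρ] at h1
    rw [h1, hf, ← h2]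
    linarith
  obtain ⟨f', m, e, tr, -⟩ := G.acyl P hk (sh 3) (sh 11)
  exact ⟨f', m, e, tr⟩

theorem Good.inf (G : T.Good h γ a c) (P : T.Par Θ c) (hk : π.ker = T.K) {m : ℤ}
    (e : π h ^ m = 1) : m = 0 := by
  have A := G.hyp P.c100
  have h1 := A.ge' m.natAbs
  have h2 : π h ^ m.natAbs = 1 := by
    rcases Int.natAbs_eq m with q | q
    · rw [q] at e; exact_mod_cast e
    · rw [q, zpow_neg, inv_eq_one] at e; exact_mod_cast e
  have h3 : T.Db 1 (h ^ m.natAbs) = T.Db 1 1 := Db_pi hk rfl (by rw [map_pow, h2, map_one])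
  rw [bar_ρ, h3, Db_self] at h1
  have : m.natAbs = 0 := by
    have : (0 : ℝ) ≤ m.natAbs := by positivity
    exact_mod_cast le_antisymm h1 this
  omega

/-- The centraliser of a loxodromic element is nilpotent of class at most two. -/
theorem Good.comm3 (G : T.Good h γ a c) (P : T.Par Θ c) (hk : π.ker = T.K) {x y z : F}
    (hx : Commute (π x) (π h)) (hy : Commute (π y) (π h)) (hz : Commute (π z) (π h)) :
    Commute (π z) (π ((y * x)⁻¹ * (x * y))) := by
  obtain ⟨f, m, e, tr⟩ := G.comm_tr P hk hx hy
  have cf : Commute (π f) (π h) := by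
    rw [e]; simp only [map_mul, map_inv]
    exact (hy.mul_left hx).inv_left.mul_left (hx.mul_left hy)
  obtain ⟨g, m2, e2, tr2⟩ := G.comm_tr P hk hz cf
  have t3 := tr_mul tr2 (tr_inv tr)
  have r1 := tr_root G.ax t3
  have r2 := tr_root G.ax tr
  have e3 : π (g * f⁻¹) = (π z)⁻¹ * (π f)⁻¹ * (π z)⁻¹⁻¹ := by
    rw [map_mul, e2]; simp only [map_mul, map_inv]; group
  have e4 : π h ^ (m2 + -m) = π h ^ (-m) := by
    rw [← map_zpow, ← r1, map_pow, e3, conj_pow, inv_pow, ← map_pow, r2, map_zpow, ← zpow_neg]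
    have := (hz.zpow_right (-m)).inv_left
    rw [this.eq]; group
  have m20 : m2 = 0 := by
    apply G.inf P hk
    rw [zpow_add] at e4
    exact mul_eq_right.1 e4
  subst m20
  have g1 := tr_zero G.ax tr2
  rw [g1, map_one, eq_comm, map_mul, map_inv, inv_mul_eq_one, map_mul, map_mul] at e2
  rw [← e]; exact e2.symm

end Setup

/-! ### Points moved a little when there is no loxodromic element -/

/-- If `1, u` and `v, v u` are at most a little further apart than `1, u`, then `v` moves
points near the middle of `1` and `u` a little. -/
theorem Hyp.disp {F : Type u} [Group F] {H : Hyp F} {u v z z' : F} {E m m' : ℝ}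
    (h1 : H.ρ 1 v ≤ H.ρ 1 u + E) (h2 : H.ρ 1 (v * u) ≤ H.ρ 1 u + E) (h3 : H.ρ u v ≤ H.ρ 1 u + E)
    (h4 : H.ρ u (v * u) ≤ H.ρ 1 u + E) (a1 : H.ρ 1 z ≤ m) (a2 : H.ρ z u ≤ m) (b1 : H.ρ 1 z' ≤ m')
    (b2 : H.ρ z' u ≤ m') : H.ρ z (v * z') ≤ m + m' - H.ρ 1 u + E + 12 := by
  have key : ∀ y, H.ρ 1 y ≤ H.ρ 1 u + E → H.ρ u y ≤ H.ρ 1 u + E → H.ρ z y ≤ m + E + 6 := by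
    intro y y1 y2
    have f := H.fp z 1 y u
    have c1 := H.comm z 1
    have c2 := H.comm y u
    rcases max_cases (H.ρ z 1 + H.ρ y u) (H.ρ z u + H.ρ 1 y) with ⟨q, _⟩ | ⟨q, _⟩ <;>
      rw [q] at f <;> linarith
  have k1 := key v h1 h3
  have k2 := key (v * u) h2 h4
  have f := H.fp z v (v * z') (v * u)
  have e1 := H.inv v z' u
  have e2 := ρ_mul (H := H) v z'
  have e3 := ρ_mul (H := H) v u
  rcases max_cases (H.ρ z v + H.ρ (v * z') (v * u)) (H.ρ z (v * u) + H.ρ v (v * z')) with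
    ⟨q, _⟩ | ⟨q, _⟩ <;> rw [q] at f <;> linarith

theorem TreeD.cross {V : Type u} {T : TreeD V} {P : V → Prop} {x y : V} (hx : ¬ P x) (hy : P y) :
    ∃ w w', T.d w w' = T.s ∧ T.B x w w' ∧ T.B x w' y ∧ ¬ P w ∧ P w' := by
  induction hn : T.d x y using Nat.strong_induction_on generalizing x with
  | _ n ih =>
    have hne : x ≠ y := by rintro rfl; exact hx hy
    obtain ⟨z, h1, h2⟩ := T.step hne
    have hs := T.spos
    by_cases hz : P z
    · exact ⟨x, z, h1, B_self_left _ _, by unfold TreeD.B; omega, hx, hz⟩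
    · obtain ⟨w, w', e, b1, b2, n1, n2⟩ := ih (T.d z y) (by omega) hz rfl
      have t1 := T.tri x z w
      have t2 := T.tri x z w'
      have t3 := T.tri x w' y
      have t4 := T.tri x w w'
      refine ⟨w, w', e, ?_, ?_, n1, n2⟩ <;> unfold TreeD.B at * <;> omega

namespace Setup
open TreeD
variable {F : Type u} [Group F] {T : Setup F}

/-- Modulo `K`, two points can be joined by a geodesic following no rotation line for much more than
half a period. -/
theorem exists_mn (x y : F) : ∃ k ∈ T.K, T.Mn x (k * y) := by
  classical
  have hex : ∃ n, ∃ k ∈ T.K, T.d x (k * y) = n := ⟨_, 1, one_mem _, rfl⟩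
  obtain ⟨k, hk, e⟩ := Nat.find_spec hex
  refine ⟨k, hk, fun g A n hg p q hp hq => ?_⟩
  by_contra hh
  push Not at hh
  obtain ⟨j, hj⟩ := rot_back hg hp.1 hq.1
  have hne : p ≠ q := by rintro rfl; rw [T.self] at hh; omega
  have h1 := hp.path hq hne
  have h2 := T.tri x p (g ^ j * (k * y))
  have h3 := T.tri p (g ^ j * q) (g ^ j * (k * y))
  rw [T.inv] at h3
  have h4 := Nat.find_min' hex ⟨g ^ j * k, mul_mem (zpow_mem (rot_mem hg) j) hk, rfl⟩
  rw [mul_assoc] at h4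
  rcases abs_cases ((T.d p q : ℤ) - n) with ⟨q1, _⟩ | ⟨q1, _⟩ <;> rw [q1] at hj
  · have := (rot_pos hg).2
    omega
  · omega

theorem Mn.sub {x y p q : F} (h : T.Mn x y) (h1 : T.B x p y) (h2 : T.B p q y) : T.Mn p q := by
  intro g A n hg a b ha hb
  have hA := T.rot_line hg
  obtain ⟨a', ha'⟩ := line_gate hA x
  obtain ⟨b', hb'⟩ := line_gate hA y
  have m1 := Gt.mono (line_cvx hA) ha' hb' ha h1
  have m2 := Gt.mono (line_cvx hA) ha hb' hb h2
  have := h g A n hg a' b' ha' hb'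
  unfold TreeD.B at *
  omega

/-- A point halfway on a segment, or a line around the middle of the segment. -/
theorem halfway {x y : F} (hr : 0 < T.D x y) :
    (∃ w, T.D x w ≤ T.D x y / 2 ∧ T.D w y ≤ T.D x y / 2 + 2) ∨
    ∃ A ∈ T.lines, ∃ p q, T.Gt A x p ∧ T.Gt A y q ∧ T.u ≤ T.d p q ∧ T.D x p ≤ T.D x y / 2 ∧
      T.D x y / 2 < T.D x q := by
  obtain ⟨w, w', hs, b1, b2, n1, n2⟩ := TreeD.cross (T := T.toTreeD)
    (P := fun z => T.D x y / 2 < T.D x z) (x := x) (y := y) (by rw [D_self]; linarith) (by linarith)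
  push Not at n1
  have hpos := T.upos
  have bwy : T.B x w y ∧ T.B w w' y := by
    have t1 := T.tri x w y
    have t2 := T.tri w w' y
    unfold TreeD.B at *; constructor <;> omega
  by_cases sg : T.Sig 1 x w y
  · right
    obtain ⟨A, hA, a, ha, b, hb, h1, h2, h3, h4⟩ := sg
    obtain ⟨p, hp⟩ := line_gate hA x
    obtain ⟨q, hq⟩ := line_gate hA y
    have k1 := hp.2 a ha
    have k2 := hq.2 b hb
    have c1 := T.comm y q
    have c2 := T.comm q b
    have c3 := T.comm y b
    have xb : T.B x b y := bwy.1.right h2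
    have sb : T.s ≤ T.d w b := Nat.le_of_dvd (by omega) (T.dvd w b)
    have xwb : T.d x w + T.d w b = T.d x b := by
      have t1 := T.tri x w b
      have := bwy.1
      unfold TreeD.B at *; omega
    have e1 := b2.dist_of_le xb (by unfold TreeD.B at b1; omega)
    have t1 := T.tri x p w
    have t2 := T.tri p a w
    have t3 := T.tri x w' q
    have t4 := T.tri w' b q
    have t5 := T.tri x q y
    have t6 := T.tri x p q
    have t7 := T.tri p q y
    have t8 := T.tri x b q
    have t9 := T.tri x a p
    have xq : T.B x w' q := by unfold TreeD.B at *; omega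
    have xp : T.B x p w := by unfold TreeD.B at *; omega
    refine ⟨A, hA, p, q, hp, hq, ?_, (D_mono xp).trans n1, lt_of_lt_of_le n2 (D_mono xq)⟩
    unfold TreeD.B at *; omega
  have nc := near_cut bwy.1 sg
  obtain ⟨A, hA, hw, hw'⟩ := T.cov w w' hs
  obtain ⟨p, hp⟩ := line_gate hA x
  obtain ⟨q, hq⟩ := line_gate hA y
  have k1 := hp.2 w hw
  have k2 := hq.2 w' hw'
  have xq : T.B x w' q := by
    have t1 := T.tri x w' q
    have t5 := T.tri x q y
    have c1 := T.comm y q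
    have c2 := T.comm q w'
    have c3 := T.comm y w'
    unfold TreeD.B at *; omega
  by_cases hu : T.u ≤ T.d p q
  · right
    exact ⟨A, hA, p, q, hp, hq, hu, (D_mono k1).trans n1, lt_of_lt_of_le n2 (D_mono xq)⟩
  · left
    have sle : T.d w w' ≤ T.u := by
      have t1 := T.tri x p q
      unfold TreeD.B at *; omega
    have e1 := D_le_nat (T := T) (x := w) (y := w') (θ := 1) (by omega)
    have e2 := D_tri (T := T) x w w'
    push_cast at *
    exact ⟨w, n1, by linarith⟩

/-- Without loxodromic elements, there is a point moved less than `cap` by all elements, or all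
elements move a line only a little. -/
theorem apex {V : Set F} {u : F} {E C : ℝ} (hE : 0 ≤ E) (hC : 0 ≤ C) (hcap : C + E + 17 ≤ T.cap)
    (h1 : ∀ v ∈ V, T.Db 1 v ≤ T.Db 1 u + E) (h2 : ∀ v ∈ V, T.Db 1 (v * u) ≤ T.Db 1 u + E)
    (h3 : ∀ v ∈ V, T.Db u v ≤ T.Db 1 u + E) (h4 : ∀ v ∈ V, T.Db u (v * u) ≤ T.Db 1 u + E) :
    (∃ w, ∀ v ∈ V, T.Db w (v * w) ≤ T.cap - C) ∨
    ∃ A ∈ T.lines, ∃ p ∈ A, ∃ q ∈ A, T.Mn p q ∧ T.cap - (C + E + 17) ≤ T.ph (T.d p q) ∧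
      ∀ v ∈ V, ∀ z ∈ A, ∀ z' ∈ A, T.Db z (v * z') ≤ T.cap + (C + 2 * E + 34) := by
  obtain ⟨k, hk, mn⟩ := exists_mn (T := T) 1 u
  have eu : ∀ z, T.Db z u ≤ T.D z (k * u) := fun z => Db_le hk
  have e0 : T.Db 1 u = T.D 1 (k * u) := by rw [← mn.Db, Db_K hk]
  have dsp : ∀ v ∈ V, ∀ z z' : F, ∀ m m' : ℝ, T.D 1 z ≤ m → T.D z (k * u) ≤ m → T.D 1 z' ≤ m' →
      T.D z' (k * u) ≤ m' → T.Db z (v * z') ≤ m + m' - T.D 1 (k * u) + E + 12 := by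
    intro v hv z z' m m' a1 a2 a3 a4
    have := Hyp.disp (H := T.barHyp) (h1 v hv) (h2 v hv) (h3 v hv) (h4 v hv)
      ((Db_le_D 1 z).trans a1) ((eu z).trans a2) ((Db_le_D 1 z').trans a3) ((eu z').trans a4)
    simp only [bar_ρ] at this
    rwa [e0] at this
  set y := k * u with hy
  clear_value y
  rcases (D_nonneg (T := T) 1 y).lt_or_eq with hr | hr
  swap
  · left
    refine ⟨1, fun v hv => ?_⟩
    have := dsp v hv 1 1 0 0 (D_self 1).le hr.symm.le (D_self 1).le hr.symm.le
    linarith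
  rcases halfway hr with ⟨w, w1, w2⟩ | ⟨A, hA, p, q, hp, hq, hu, p1, q1⟩
  · left
    refine ⟨w, fun v hv => ?_⟩
    have := dsp v hv w w _ _ (w1.trans (by linarith)) w2 (w1.trans (by linarith)) w2
    linarith
  have hne : p ≠ q := by
    rintro rfl; rw [T.self] at hu; have := T.upos; omega
  have sum := arc_sum hA hp hq hu
  have f0 := ph_le_cap (T := T) (T.d p q)
  have dpq := D_line hA hp.1 hq.1
  have t1 := D_tri (T := T) 1 p q
  have t2 := D_tri (T := T) p q y
  by_cases g1 : T.D 1 y / 2 - T.D 1 p ≤ T.cap / 2 - (C + E + 17) / 2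
  · left
    refine ⟨p, fun v hv => ?_⟩
    have m1 : T.D 1 p ≤ T.D 1 y - T.D 1 p + 2 := by linarith
    have m2 : T.D p y ≤ T.D 1 y - T.D 1 p + 2 := by linarith
    have := dsp v hv p p _ _ m1 m2 m1 m2
    linarith
  by_cases g2 : T.ph (T.d p q) - (T.D 1 y / 2 - T.D 1 p) ≤ T.cap / 2 - (C + E + 17) / 2
  · left
    refine ⟨q, fun v hv => ?_⟩
    have m1 : T.D 1 q ≤ T.D 1 p + T.ph (T.d p q) + 2 := by linarith
    have m2 : T.D q y ≤ T.D 1 p + T.ph (T.d p q) + 2 := by linarith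
    have := dsp v hv q q _ _ m1 m2 m1 m2
    linarith
  right
  push Not at g1 g2
  have pb := hp.pathB hq hne
  refine ⟨A, hA, p, hp.1, q, hq.1, mn.sub pb.1 pb.2.2.1, by linarith, fun v hv z hz z' hz' => ?_⟩
  have bd : ∀ z ∈ A, T.D 1 z ≤ T.D 1 y / 2 + T.cap / 2 + (C + E + 17) / 2 + 2 ∧
      T.D z y ≤ T.D 1 y / 2 + T.cap / 2 + (C + E + 17) / 2 + 2 := by
    intro z hz
    have a1 := D_tri (T := T) 1 p z
    have a2 := D_tri (T := T) z q y
    rw [D_line hA hp.1 hz] at a1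
    rw [D_line hA hz hq.1] at a2
    have a3 := ph_le_cap (T := T) (T.d p z)
    have a4 := ph_le_cap (T := T) (T.d z q)
    constructor <;> linarith
  have := dsp v hv z z' _ _ (bd z hz).1 (bd z hz).2 (bd z' hz').1 (bd z' hz').2
  linarith

end Setup

/-! ### Lines moved a little -/

namespace Setup
open TreeD
variable {F : Type u} [Group F] {T : Setup F}

theorem gates_two {A B : Set F} (hA : A ∈ T.lines) (hB : B ∈ T.lines) (hne : A ≠ B) {x y a b : F}
    (hx : x ∈ A) (hy : y ∈ A) (ha : T.Gt B x a) (hb : T.Gt B y b) : T.d a b < T.u := by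
  by_cases e : a = b
  · rw [e, T.self]; exact T.upos
  obtain ⟨h1, h2, -, -⟩ := ha.pathB hb e
  exact T.ov A hA B hB hne a (line_cvx hA x hx y hy a h1) ha.1 b (line_cvx hA x hx y hy b h2) hb.1

theorem rot_zsm {g : F} {A : Set F} {n : ℕ} (h : T.Rot g A n) (j : ℤ) : g ^ j • A = A :=
  rot_smul h j

/-- The relation of lying at the translates of `p` and `q` on a common translate of `A` can be lifted. -/
theorem lft_line {A : Set F} (hA : A ∈ T.lines) {p q : F} (hp : p ∈ A) (hq : q ∈ A) :
    T.Lft (fun x y => ∃ k1 ∈ T.K, ∃ k2 ∈ T.K, x = k1 * p ∧ y = k2 * q ∧ k1 • A = k2 • A) := by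
  refine ⟨?_, ?_⟩
  · rintro k hk x y ⟨k1, h1, k2, h2, rfl, rfl, e⟩
    exact ⟨k * k1, mul_mem hk h1, k * k2, mul_mem hk h2, by group, by group, by
      rw [mul_smul, mul_smul, e]⟩
  · rintro g B n hg x y a b ha hb hu j ⟨k1, h1, k2, h2, rfl, rfl, e⟩
    refine ⟨k1, h1, g ^ j * k2, mul_mem (zpow_mem (rot_mem hg) j) h2, rfl, by group, ?_⟩
    have hB : k2 • A = B := by
      by_contra hne
      have := gates_two (T.smul_line k2 A hA) (T.rot_line hg) hne
        (by rw [← e]; exact mul_mem_sm.2 hp) (mul_mem_sm.2 hq) ha hb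
      have : T.u ≤ (T.M + 2) * T.u := Nat.le_mul_of_pos_left _ (by omega)
      omega
    rw [mul_smul, e, hB, rot_zsm hg]

/-- Translates of a point of the line by `v` come close to the line, modulo `K`. -/
theorem apex_near {A : Set F} (hA : A ∈ T.lines) {p q : F} (hp : p ∈ A) (hq : q ∈ A)
    (mn : T.Mn p q) {E1 E2 : ℝ} (hE1 : 0 ≤ E1) (hf : T.cap - E1 ≤ T.ph (T.d p q)) {y : F}
    (c1 : E1 + 2 < T.cap) (h1 : T.Db q y ≤ T.cap + E2) (h2 : T.Db p y ≤ T.cap + E2) :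
    ∃ k ∈ T.K, ∃ s ∈ A, T.D s (k * y) ≤ E1 + E2 + 4 := by
  obtain ⟨a, ka, ha⟩ := Db_lt (T := T) (x := q) (y := y) (c := T.cap + E2 + 1) (by linarith)
  obtain ⟨b, kb, hb⟩ := Db_lt (T := T) (x := a * y) (y := p) (c := T.cap + E2 + 1) (by
    rw [Db_K' ka, Db_comm]; linarith)
  obtain ⟨k2, m2, k3, m3, k4, m4, r1, r2, r3, r4⟩ := lift4 (lft_line hA hp hq)
    (lft_D (T.cap + E2 + 1)) (lft_D (T.cap + E2 + 1)) lft_eq (x1 := p) (x2 := q) (x3 := a * y)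
    (x4 := b * p) kb
    ⟨1, one_mem _, 1, one_mem _, by simp, by simp, rfl⟩ ha.le hb.le rfl
  obtain ⟨k, hk, k2', hk2', e1, e2, e3⟩ := r1
  have e4 : k = 1 := by simpa using e1.symm
  have e5 : k2' = k2 := (mul_right_cancel e2).symm
  subst e4 e5
  rw [one_smul] at e3
  rw [r4] at r3
  rw [D_comm] at r3
  have hq2 : k2' * q ∈ A := by rw [e3]; exact mul_mem_sm.2 hq
  have hpos := T.upos
  have far : T.cap - E1 ≤ T.ph (T.d p (k2' * q)) := by
    by_cases e : k2' = 1
    · rwa [e, one_mul]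
    obtain ⟨g, B, n, hg, a', b', ha', hb', hn⟩ := greendlinger m2 e p
    have hl := rot_long hg
    have hp2 : k2' * p ∈ A := by rw [e3]; exact mul_mem_sm.2 hp
    have hBA : A = B := by
      by_contra hne
      have := gates_two hA (T.rot_line hg) hne hp hp2 ha' hb'
      have : T.u ≤ (T.M + 2) * T.u := Nat.le_mul_of_pos_left _ (by omega)
      omega
    subst hBA
    rw [ha'.eq_of_mem hp, hb'.eq_of_mem hp2] at hn
    have d1 := mn g A n hg p q (.of_mem hp) (.of_mem hq)
    rw [← T.inv k2'] at d1
    have t1 := T.tri p (k2' * q) (k2' * p)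
    have t2 := T.comm (k2' * q) (k2' * p)
    have t3 : T.M * T.u ≤ (T.M + 2) * T.u := Nat.mul_le_mul_right _ (by omega)
    rw [ph_cap (by omega)]
    linarith
  refine ⟨k3 * a, mul_mem m3 ka, ?_⟩
  rw [mul_assoc]
  set x := k3 * (a * y)
  obtain ⟨s, hs⟩ := line_gate hA x
  refine ⟨s, hs.1, ?_⟩
  have key : ∀ z ∈ A, T.D z x ≤ T.cap + E2 + 1 → T.cap - E1 - 1 ≤ T.ph (T.d z s) →
      T.D s x ≤ E1 + E2 + 4 := by
    intro z hz hD hz2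
    have hu : T.u ≤ T.d z s := by
      by_contra hh
      push Not at hh
      have := ph_le_nat (T := T) (k := T.d z s) (θ := 1) (by omega)
      push_cast at this
      linarith
    have := arc_sum hA (.of_mem hz) hs hu
    rw [D_self] at this
    linarith
  have m1 := ph_mono (T := T) (T.tri p s (k2' * q))
  have m2 := ph_add_max (T := T) (T.d p s) (T.d s (k2' * q))
  rcases max_cases (T.ph (T.d p s)) (T.ph (T.d s (k2' * q))) with ⟨q1, _⟩ | ⟨q1, _⟩ <;> rw [q1] at m2
  · exact key p hp r3 (by linarith)
  · exact key _ hq2 r2 (by rw [T.comm]; linarith)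

/-- An element moving a line a little has a lift stabilising the line. -/
theorem apex_stab {A : Set F} (hA : A ∈ T.lines) {p q : F} (hp : p ∈ A) (hq : q ∈ A)
    (mn : T.Mn p q) {E1 E2 : ℝ} (hE1 : 0 ≤ E1) (hE2 : 0 ≤ E2) (hf : T.cap - E1 ≤ T.ph (T.d p q))
    {v : F} {κ : ℕ} (hκ : Real.exp (E1 + E2 + 4) ≤ κ) (c1 : E1 + E2 + 2 * κ + 4 < T.cap)
    (hM : 2 * κ + 1 ≤ T.M)
    (hv : ∀ z ∈ A, ∀ z' ∈ A, T.Db z (v * z') ≤ T.cap + E2) :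
    ∃ k ∈ T.K, (k * v) • A = A := by
  have κ0 : (0 : ℝ) ≤ κ := by positivity
  have hpos := T.upos
  have near : ∀ z ∈ A, ∃ k ∈ T.K, ∃ s ∈ A, T.d s (k * (v * z)) ≤ κ * T.u := by
    intro z hz
    obtain ⟨k, hk, s, hs, h⟩ := apex_near hA hp hq mn hE1 hf (by linarith) (hv q hq z hz)
      (hv p hp z hz)
    have := ph_lt_cap ((D_lb _ _).trans h) (by linarith)
    have h3 : (T.d s (k * (v * z)) : ℝ) ≤ κ * T.u :=
      this.trans (mul_le_mul_of_nonneg_right hκ u_pos.le)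
    exact ⟨k, hk, s, hs, by exact_mod_cast h3⟩
  have dpq : (2 * κ + 1) * T.u < T.d p q := by
    by_contra hh
    push Not at hh
    have := ph_le_nat hh
    push_cast at this
    linarith
  obtain ⟨k0, hk0, s0, hs0, d0⟩ := near p hp
  refine ⟨k0, hk0, ?_⟩
  by_contra hne
  have hA' := T.smul_line (k0 * v) A hA
  set A' := (k0 * v) • A
  have my : k0 * v * p ∈ A' := mul_mem_sm.2 hp
  have my' : k0 * v * q ∈ A' := mul_mem_sm.2 hq
  have mn' := mn.smul (k0 * v)
  rw [← T.inv (k0 * v)] at dpq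
  rw [← mul_assoc] at d0
  obtain ⟨k1, hk1, s1', hs1', d1'⟩ := near q hq
  classical
  have hex : ∃ n, ∃ k ∈ T.K, T.d (k0 * v * p) (k * (k0 * v * q)) = n ∧
      ∃ s ∈ A, T.d s (k * (k0 * v * q)) ≤ κ * T.u :=
    ⟨_, k1 * k0⁻¹, mul_mem hk1 (inv_mem hk0), rfl, s1', hs1', by
      rwa [show k1 * k0⁻¹ * (k0 * v * q) = k1 * (v * q) by group]⟩
  obtain ⟨k, hk, en, s, hs, ds⟩ := Nat.find_spec hex
  have hmin : ∀ k ∈ T.K, (∃ s ∈ A, T.d s (k * (k0 * v * q)) ≤ κ * T.u) →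
      Nat.find hex ≤ T.d (k0 * v * p) (k * (k0 * v * q)) :=
    fun k hk h => Nat.find_min' hex ⟨k, hk, rfl, h⟩
  rw [← en] at hmin
  clear_value A'
  generalize k0 * v * p = y0 at *
  generalize k0 * v * q = y1 at *
  have κu : (2 * κ + 1) * T.u = 2 * (κ * T.u) + T.u := by ring
  have hMu : (2 * κ + 1) * T.u ≤ (T.M + 2) * T.u := Nat.mul_le_mul_right _ (by omega)
  have k1 : k = 1 := by
    by_contra hk1
    obtain ⟨g, B, n, hg, a, b, ha, hb, hn⟩ := greendlinger hk hk1 y1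
    have hB := T.rot_line hg
    have hl := rot_long hg
    obtain ⟨a0, ha0⟩ := line_gate hB y0
    by_cases hBA : A = B
    · subst hBA
      have e1 := gates_two hA' hA hne my my' ha0 ha
      have t1 := T.tri a0 a b
      have t2 := T.tri a a0 b
      have t3 := T.comm a a0
      obtain ⟨j, hj⟩ := rot_back hg ha0.1 hb.1
      have h1 := hmin (g ^ j * k) (mul_mem (zpow_mem (rot_mem hg) j) hk) ⟨g ^ j * s, by
        rw [← rot_zsm hg j]; exact mul_mem_sm.2 hs, by rw [mul_assoc, T.inv]; exact ds⟩
      have hn0 : a0 ≠ b := by rintro rfl; rw [T.self] at t2; omega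
      have h2 := ha0.path hb hn0
      have h3 := T.tri y0 a0 (g ^ j * (k * y1))
      have h4 := T.tri a0 (g ^ j * b) (g ^ j * (k * y1))
      rw [T.inv] at h4
      rw [mul_assoc] at h1
      rcases abs_cases ((T.d a0 b : ℤ) - n) with ⟨q1, _⟩ | ⟨q1, _⟩ <;> rw [q1] at hj <;> omega
    · obtain ⟨b0, hb0⟩ := line_gate hB s0
      obtain ⟨b1, hb1⟩ := line_gate hB s
      have e1 := mn' g B n hg a0 a ha0 ha
      have e2 := hb0.le ha0
      have e3 := gates_two hA hB hBA hs0 hs hb0 hb1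
      have e4 := hb1.le hb
      have t1 := T.tri a a0 b
      have t2 := T.tri a0 b0 b
      have t3 := T.tri b0 b1 b
      have c2 := T.comm a a0
      have c3 := T.comm a0 b0
      omega
  subst k1
  rw [one_mul] at ds
  obtain ⟨a0, ha0⟩ := line_gate hA y0
  obtain ⟨a1, ha1⟩ := line_gate hA y1
  have e1 := gates_two hA' hA hne my my' ha0 ha1
  have e2 := ha0.2 s0 hs0
  have e3 := ha1.2 s hs
  have c1 := T.comm s0 y0
  have c2 := T.comm s y1
  have t1 := T.tri y0 a0 y1
  have t2 := T.tri a0 a1 y1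
  have c3 := T.comm a1 y1
  unfold TreeD.B at *
  omega

/-- The stabiliser of a line is abelian: as there is no `2`-torsion, it acts by translations. -/
theorem stab_comm {A : Set F} (hA : A ∈ T.lines) {f g : F} (hf : f • A = A) (hg : g • A = A) :
    f * g = g * f := by
  obtain ⟨γ, h1, h2⟩ := T.param A hA
  have tr : ∀ f : F, f • A = A → ∃ m, ∀ i, f * γ i = γ (i + m) := by
    intro f hf
    refine line_tr (T := T) h1 fun i => ?_
    have : f * γ i ∈ A := by rw [← hf, mul_mem_sm, ← h2]; exact ⟨i, rfl⟩
    rw [← h2] at this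
    obtain ⟨j, hj⟩ := this
    exact ⟨j, hj.symm⟩
  obtain ⟨m, hm⟩ := tr f hf
  obtain ⟨n, hn⟩ := tr g hg
  have e1 := tr_mul hm hn 0
  have e2 := tr_mul hn hm 0
  rw [add_comm n m, ← e1] at e2
  exact (mul_right_cancel e2).symm

end Setup

/-! ### The trichotomy -/

namespace Setup
open TreeD
variable {F : Type u} [Group F] {T : Setup F}

section
variable {Q : Type v} [Group Q] {π : F →* Q}

/-- A homomorphism followed by an inner automorphism. -/
def cj (π : F →* Q) (q : Q) : F →* Q := (MulAut.conj q).toMonoidHom.comp π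

theorem cj_apply (q : Q) (x : F) : cj π q x = q * π x * q⁻¹ := rfl

theorem cj_ker (q : Q) : (cj π q).ker = π.ker := by
  ext x
  simp only [MonoidHom.mem_ker, cj_apply]
  constructor
  · intro h
    have : π x = q⁻¹ * (q * π x * q⁻¹) * q := by group
    rw [this, h]; group
  · intro h; rw [h]; group

/-- The trichotomy if a product of at most two elements of `U` is loxodromic. -/
theorem lox_case {Θ : ℕ} {c : ℝ} (P : T.Par Θ c) (hc : 1 ≤ c) (hs : Function.Surjective π)
    (hk : π.ker = T.K) {U : Set Q} (hU : U⁻¹ = U) {j : ℕ} (hj : j ≤ 2) {g : F} (hg : π g ∈ U ^ j)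
    (lx : T.barHyp.Lox c g) :
    Grow U 84 ∨ ∃ h : Q, (∀ v ∈ U, v * h * v⁻¹ = h ∨ v * h * v⁻¹ = h⁻¹) ∧
      ∀ x y z : Q, Commute x h → Commute y h → Commute z h → Commute z ((y * x)⁻¹ * (x * y)) := by
  obtain ⟨h, γ, a, x0, e, G⟩ := exists_good hk hc lx
  set ψ := cj π (π x0)⁻¹ with hψ
  have kψ : ψ.ker = T.K := by rw [hψ, cj_ker, hk]
  have e1 : ψ h = π g := by
    rw [hψ, cj_apply, e]; simp only [map_mul, map_inv]; group
  have sψ : ∀ q, ∃ x, ψ x = q := by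
    intro q
    obtain ⟨x, hx⟩ := hs (π x0 * q * (π x0)⁻¹)
    exact ⟨x, by rw [hψ, cj_apply, hx]; group⟩
  by_cases gr : Grow U 84
  · exact Or.inl gr
  right
  refine ⟨ψ h, fun v hv => ?_, fun x y z hx hy hz => ?_⟩
  · obtain ⟨v, rfl⟩ := sψ v
    exact (G.lox_norm P kψ hU hj (by rwa [e1]) hv).resolve_left gr
  · obtain ⟨x, rfl⟩ := sψ x
    obtain ⟨y, rfl⟩ := sψ y
    obtain ⟨z, rfl⟩ := sψ z
    have := G.comm3 P kψ hx hy hz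
    simpa only [map_mul, map_inv] using this

/-- The trichotomy if some point is moved by less than the cap by all of `U`, so that after conjugation
all of `U` lifts to elements much shorter than the rotations. -/
theorem low_case (hs : Function.Surjective π) (hk : π.ker = T.K) {U : Set Q} (hU : U⁻¹ = U)
    {w : F} (hw : ∀ v, π v ∈ U → T.Db w (v * w) ≤ T.cap - 7) :
    Grow U 84 ∨ ∀ x ∈ U, ∀ y ∈ U, x * y * x⁻¹ = y ∨ x * y * x⁻¹ = y⁻¹ := by
  set ψ := cj π (π w) with hψ
  have kψ : ψ.ker = T.K := by rw [hψ, cj_ker, hk]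
  set σ : ℕ := ⌊Real.exp (T.cap - 6) * T.u⌋₊ with hσ
  have lft : ∀ x ∈ U, ∃ f, ψ f = x ∧ T.d 1 f ≤ σ := by
    intro x hx
    obtain ⟨v, rfl⟩ := hs x
    have h1 := hw v hx
    have h2 := Db_smul (T := T) w 1 (w⁻¹ * (v * w))
    rw [mul_one, mul_inv_cancel_left] at h2
    obtain ⟨k, kk, hd⟩ := Db_lt (T := T) (x := 1) (y := w⁻¹ * (v * w)) (c := T.cap - 6) (by linarith)
    refine ⟨k * (w⁻¹ * (v * w)), ?_, ?_⟩
    · have : π k = 1 := by rw [← MonoidHom.mem_ker, hk]; exact kk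
      rw [hψ, cj_apply, map_mul, this]; simp only [map_mul, map_inv]; group
    · refine Nat.le_floor ?_
      exact ph_lt_cap ((D_lb _ _).trans hd.le) (by linarith)
  have hb : 8000 * σ ≤ T.Lam * T.u := by
    have h1 : (σ : ℝ) ≤ Real.exp (T.cap - 6) * T.u := Nat.floor_le (by positivity)
    have h2 : Real.exp (T.cap - 6) = (1 + T.M) / Real.exp 6 := by
      rw [Real.exp_sub, cap, Real.exp_log (by positivity)]
    have h3 : (200 : ℝ) ≤ Real.exp 6 := by
      have := Real.exp_one_gt_d9
      have h4 : Real.exp 6 = Real.exp 1 ^ 6 := by rw [← Real.exp_nat_mul]; norm_num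
      rw [h4]
      calc (200 : ℝ) ≤ 2.7 ^ 6 := by norm_num
        _ ≤ _ := by gcongr; linarith
    have h4 : Real.exp (T.cap - 6) ≤ (1 + T.M) / 200 := by
      rw [h2]; gcongr
    have h5 : (40 * (T.M + 2) : ℝ) ≤ T.Lam := by exact_mod_cast T.hM
    have hu := u_pos (T := T)
    have : (8000 * σ : ℝ) ≤ T.Lam * T.u := by nlinarith
    exact_mod_cast this
  by_cases gr : Grow U 84
  · exact Or.inl gr
  right
  intro x hx y hy
  obtain ⟨f, rfl, hf⟩ := lft x hx
  obtain ⟨h, rfl, hh⟩ := lft y hy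
  rcases (low_pair ψ kψ hU hh hf hy hx hb).resolve_left gr with e | e
  · left; rw [← map_inv, ← map_mul, ← map_mul, e]
  · right; rw [← map_inv, ← map_mul, ← map_mul, e, map_inv]

/-- A symmetric finite set either generates with uniform exponential growth, or its elements normalise
one another's cyclic subgroups, or they all centralise or invert an element whose centraliser is
nilpotent of class at most two. -/
theorem trichotomy {Θ : ℕ} {c E E1 E2 : ℝ} {κ : ℕ} (P : T.Par Θ c) (hc : 1 ≤ c) (hE : E = 2 * c + 50)
    (hE1 : E1 = 24 + E) (hE2 : E2 = 41 + 2 * E) (hκ : Real.exp (E1 + E2 + 4) ≤ κ)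
    (c1 : E1 + E2 + 2 * κ + 4 < T.cap) (hM : 2 * κ + 1 ≤ T.M)
    (hs : Function.Surjective π) (hk : π.ker = T.K) {U : Set Q} (hf : U.Finite) (hU : U⁻¹ = U) :
    Grow U 84 ∨ (∀ x ∈ U, ∀ y ∈ U, x * y * x⁻¹ = y ∨ x * y * x⁻¹ = y⁻¹) ∨
    ∃ h : Q, (∀ v ∈ U, v * h * v⁻¹ = h ∨ v * h * v⁻¹ = h⁻¹) ∧
      ∀ x y z : Q, Commute x h → Commute y h → Commute z h → Commute z ((y * x)⁻¹ * (x * y)) := by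
  by_cases lx : ∃ g : F, ∃ j ≤ 2, π g ∈ U ^ j ∧ T.barHyp.Lox c g
  · obtain ⟨g, j, hj, hg, lx⟩ := lx
    rcases lox_case P hc hs hk hU hj hg lx with h | h
    · exact Or.inl h
    · exact Or.inr (Or.inr h)
  push Not at lx
  rcases U.eq_empty_or_nonempty with rfl | ne
  · right; left; simp
  choose! l hl using hs
  obtain ⟨u, hu, hmax⟩ := Set.exists_max_image U (fun x => T.Db 1 (l x)) hf ne
  have hmax' : ∀ v, π v ∈ U → T.Db 1 v ≤ T.Db 1 (l u) := fun v hv => by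
    rw [← Db_pi (T := T) hk (x := 1) (x' := 1) (y := v) (y' := l (π v)) rfl (hl _)]
    exact hmax _ hv
  have n1 : ∀ v, π v ∈ U → ¬ T.barHyp.Lox c v := fun v hv => lx v 1 (by norm_num) (by rwa [pow_one])
  have n2 : ∀ v w, π v ∈ U → π w ∈ U → ¬ T.barHyp.Lox c (v * w) := fun v w hv hw =>
    lx _ 2 le_rfl (by rw [pow_two, map_mul]; exact Set.mul_mem_mul hv hw)
  have hui : π (l u) ∈ U := by rwa [hl]
  have hinv : ∀ v, π v ∈ U → π v⁻¹ ∈ U := fun v hv => by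
    rw [map_inv, ← hU]; exact Set.inv_mem_inv.2 hv
  have s2 : ∀ v, π v ∈ U → _ := fun v hv => Hyp.step2 (H := T.barHyp) (c := c) (by linarith) (u := l u) (v := v)
    (hmax' v hv) (n1 _ hui) (n1 v hv) (n2 _ _ hv hui) (n2 _ _ (hinv v hv) hui) (n2 _ _ hui hv)
  simp only [bar_ρ] at s2
  rw [← hE] at s2
  have κ0 : (0 : ℝ) ≤ κ := by positivity
  rcases apex (T := T) (V := {v | π v ∈ U}) (u := l u) (E := E) (C := 7) (by linarith) (by norm_num)
    (by linarith) (fun v hv => (hmax' v hv).trans (by linarith)) (fun v hv => (s2 v hv).1)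
    (fun v hv => (s2 v hv).2.1) (fun v hv => (s2 v hv).2.2) with ⟨w, hw⟩ | ⟨A, hA, p, hp, q, hq, mn, hph, hv⟩
  · rcases low_case (fun q => ⟨l q, hl q⟩) hk hU hw with h | h
    · exact Or.inl h
    · exact Or.inr (Or.inl h)
  · right; left
    have st : ∀ x ∈ U, ∃ f, π f = x ∧ f • A = A := by
      intro x hx
      obtain ⟨k, kk, e⟩ := apex_stab hA hp hq mn (E1 := E1) (E2 := E2) (by linarith) (by linarith)
        (by linarith) hκ c1 hM (v := l x) (fun z hz z' hz' =>
          (hv (l x) (by simpa only [Set.mem_setOf_eq, hl] using hx) z hz z' hz').trans (by linarith))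
      have : π k = 1 := by rw [← MonoidHom.mem_ker, hk]; exact kk
      exact ⟨k * l x, by rw [map_mul, this, one_mul, hl], e⟩
    intro x hx y hy
    obtain ⟨f, rfl, hf⟩ := st x hx
    obtain ⟨g, rfl, hg⟩ := st y hy
    left
    rw [← map_mul, stab_comm hA hf hg, map_mul]; group

end
end Setup

/-! ### Virtual nilpotency -/

theorem nilpotent_of_comm3 {G : Type*} [Group G]
    (h : ∀ x y z : G, Commute z ((y * x)⁻¹ * (x * y))) : Group.IsNilpotent G := by
  refine Group.of_quotient_center_nilpotent ?_
  letI : CommGroup (G ⧸ Subgroup.center G) :=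
    { (inferInstance : Group (G ⧸ Subgroup.center G)) with
      mul_comm := by
        intro a b
        induction a using QuotientGroup.induction_on with | H x => ?_
        induction b using QuotientGroup.induction_on with | H y => ?_
        rw [← QuotientGroup.mk_mul, ← QuotientGroup.mk_mul, eq_comm, QuotientGroup.eq,
          Subgroup.mem_center_iff]
        exact fun z => h x y z }
  exact CommGroup.isNilpotent

theorem conj_closure {Q : Type*} [Group Q] {U : Set Q} {h : Q}
    (hh : ∀ v ∈ U, v * h * v⁻¹ = h ∨ v * h * v⁻¹ = h⁻¹) {x : Q} (hx : x ∈ Subgroup.closure U) :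
    x * h * x⁻¹ = h ∨ x * h * x⁻¹ = h⁻¹ := by
  induction hx using Subgroup.closure_induction with
  | mem x hx => exact hh x hx
  | one => left; simp
  | mul x y _ _ hx hy =>
    have e : x * y * h * (x * y)⁻¹ = x * (y * h * y⁻¹) * x⁻¹ := by group
    have e2 : x * h⁻¹ * x⁻¹ = (x * h * x⁻¹)⁻¹ := by group
    rw [e]
    rcases hy with hy | hy <;> rw [hy]
    · exact hx
    · rw [e2]
      rcases hx with hx | hx <;> rw [hx] <;> simp
  | inv x _ hx =>
    rcases hx with hx | hx
    · left
      nth_rewrite 1 [← hx]; group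
    · right
      calc x⁻¹ * h * x⁻¹⁻¹ = x⁻¹ * (h⁻¹)⁻¹ * x := by group
        _ = x⁻¹ * (x * h * x⁻¹)⁻¹ * x := by rw [hx]
        _ = h⁻¹ := by group

theorem finite_index_of_conj {Q : Type*} [Group Q] {H : Subgroup Q} {h : Q}
    (hh : ∀ v ∈ H, v * h * v⁻¹ = h ∨ v * h * v⁻¹ = h⁻¹) :
    ((Subgroup.centralizer {h}).subgroupOf H).FiniteIndex := by
  rw [Subgroup.finiteIndex_iff_finite_quotient]
  let f : H ⧸ ((Subgroup.centralizer {h}).subgroupOf H) → ({h, h⁻¹} : Set Q) := fun q =>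
    ⟨q.out * h * (q.out : Q)⁻¹, by simpa using hh _ q.out.2⟩
  refine Finite.of_injective f fun p q e => ?_
  have e : (p.out : Q) * h * (p.out : Q)⁻¹ = q.out * h * (q.out : Q)⁻¹ := congrArg Subtype.val e
  rw [← QuotientGroup.out_eq' p, ← QuotientGroup.out_eq' q, QuotientGroup.eq, Subgroup.mem_subgroupOf,
    Subgroup.mem_centralizer_singleton_iff]
  push_cast
  generalize (p.out : Q) = a at *
  generalize (q.out : Q) = b at *
  calc a⁻¹ * b * h = a⁻¹ * (b * h * b⁻¹) * b := by group
    _ = h * (a⁻¹ * b) := by rw [← e]; group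

theorem growthRate_val {Q : Type*} [Group Q] {H : Subgroup Q} (U : Set H) :
    growthRate ((↑) '' U : Set Q) = growthRate U := by
  unfold growthRate
  congr 1
  ext n
  have : ((↑) '' U : Set Q) ^ n = H.subtype '' (U ^ n) := by
    rw [Set.image_pow]; rfl
  rw [this, Set.ncard_image_of_injective _ H.subtype_injective]

namespace Setup
variable {F : Type u} [Group F] {T : Setup F} {Q : Type v} [Group Q] {π : F →* Q}

/-- The last two cases of the trichotomy generate virtually nilpotent groups; the first gives
growth rate larger than `log 2 / (2 * 84)`. -/
theorem uueg {Θ : ℕ} {c E E1 E2 : ℝ} {κ : ℕ} (P : T.Par Θ c) (hc : 1 ≤ c) (hE : E = 2 * c + 50)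
    (hE1 : E1 = 24 + E) (hE2 : E2 = 41 + 2 * E) (hκ : Real.exp (E1 + E2 + 4) ≤ κ)
    (c1 : E1 + E2 + 2 * κ + 4 < T.cap) (hM : 2 * κ + 1 ≤ T.M)
    (hs : Function.Surjective π) (hk : π.ker = T.K) : UUEG (Real.log 2 / 168) Q := by
  intro H _
  by_cases vn : VirtuallyNilpotent H
  · exact Or.inl vn
  right
  intro U hf hU hcl
  rw [← growthRate_val]
  set V : Set Q := (↑) '' U with hV
  have fV : V.Finite := hf.image _
  have iV : V⁻¹ = V := by
    ext x
    rw [Set.mem_inv]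
    constructor
    · rintro ⟨y, hy, e⟩
      exact ⟨y⁻¹, by rw [← hU]; exact Set.inv_mem_inv.2 hy, by push_cast; rw [e, inv_inv]⟩
    · rintro ⟨y, hy, e⟩
      exact ⟨y⁻¹, by rw [← hU]; exact Set.inv_mem_inv.2 hy, by push_cast; rw [e]⟩
  have cV : Subgroup.closure V = H := by
    have := congrArg (Subgroup.map H.subtype) hcl
    rw [MonoidHom.map_closure] at this
    rw [hV]
    simpa [← MonoidHom.range_eq_map] using this
  rcases trichotomy P hc hE hE1 hE2 hκ c1 hM hs hk fV iV with g | g | ⟨h, h1, h2⟩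
  · have := growth_gt fV iV (by norm_num) g
    norm_num at this
    exact this
  · exfalso
    apply vn
    have fi : ∀ y ∈ V, ((Subgroup.centralizer {y}).subgroupOf H).FiniteIndex := fun y hy =>
      finite_index_of_conj fun v hv => conj_closure (U := V) (fun x hx => g x hx y hy) (by rwa [cV])
    haveI := fV.to_subtype
    refine ⟨⨅ y : V, (Subgroup.centralizer {(y : Q)}).subgroupOf H, nilpotent_of_comm3 fun x y z => ?_,
      Subgroup.finiteIndex_iInf fun y => fi y y.2⟩
    have cen : ∀ x : (⨅ y : V, (Subgroup.centralizer {(y : Q)}).subgroupOf H : Subgroup H), ∀ w ∈ H,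
        Commute ((x : H) : Q) w := by
      intro x w hw
      rw [← cV] at hw
      have hx := x.2
      rw [Subgroup.mem_iInf] at hx
      induction hw using Subgroup.closure_induction with
      | mem w hw =>
        have := hx ⟨w, hw⟩
        rw [Subgroup.mem_subgroupOf, Subgroup.mem_centralizer_singleton_iff] at this
        exact this
      | one => exact Commute.one_right _
      | mul a b _ _ ha hb => exact ha.mul_right hb
      | inv a _ ha => exact ha.inv_right
    apply Subtype.ext
    apply Subtype.ext
    push_cast
    have e := cen y ((x : H) : Q) (x : H).2
    rw [e]; group
  · exfalso
    apply vn
    refine ⟨(Subgroup.centralizer {h}).subgroupOf H, nilpotent_of_comm3 fun x y z => ?_,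
      finite_index_of_conj fun v hv => conj_closure (U := V) h1 (by rwa [cV])⟩
    have cen : ∀ x : ((Subgroup.centralizer {h}).subgroupOf H : Subgroup H), Commute ((x : H) : Q) h := by
      intro x
      have := x.2
      rw [Subgroup.mem_subgroupOf, Subgroup.mem_centralizer_singleton_iff] at this
      exact this
    apply Subtype.ext
    apply Subtype.ext
    push_cast
    exact h2 _ _ _ (cen x) (cen y) (cen z)

end Setup

/-! ### The Cayley tree of a free group -/

/-- The length of the longest common prefix of two lists. -/
def cpl {β : Type*} [DecidableEq β] : List β → List β → ℕ
  | a :: l, b :: l' => if a = b then cpl l l' + 1 else 0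
  | _, _ => 0

section
variable {β : Type*} [DecidableEq β]

theorem cpl_split (l l' : List β) : ∃ p a b, l = p ++ a ∧ l' = p ++ b ∧ p.length = cpl l l' ∧
    ∀ e ∈ a.head?, ∀ f ∈ b.head?, e ≠ f := by
  induction l generalizing l' with
  | nil => exact ⟨[], [], l', by simp [cpl]⟩
  | cons x l ih =>
    cases l' with
    | nil => exact ⟨[], x :: l, [], by simp [cpl]⟩
    | cons y l' =>
      by_cases h : x = y
      · subst h
        obtain ⟨p, a, b, h1, h2, h3, h4⟩ := ih l'
        exact ⟨x :: p, a, b, by simp [h1], by simp [h2], by simp [cpl, h3], h4⟩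
      · exact ⟨[], x :: l, y :: l', by simp [cpl, h]⟩

theorem cpl_comm (l l' : List β) : cpl l l' = cpl l' l := by
  induction l generalizing l' with
  | nil => cases l' <;> simp [cpl]
  | cons x l ih =>
    cases l' with
    | nil => simp [cpl]
    | cons y l' => simp only [cpl, ih l', eq_comm]

theorem cpl_ultra (l l' l'' : List β) : min (cpl l l') (cpl l' l'') ≤ cpl l l'' := by
  induction l generalizing l' l'' with
  | nil => simp [cpl]
  | cons x l ih =>
    cases l' with
    | nil => simp [cpl]
    | cons y l' =>
      cases l'' with
      | nil => simp [cpl]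
      | cons z l'' =>
        have := ih l' l''
        simp only [cpl]
        by_cases h : x = y
        · subst h
          by_cases h' : x = z
          · subst h'; simp only [if_true]; omega
          · simp [h']
        · simp [h]

end

namespace FreeGroup
variable {S : Type u}

theorem fgNorm_eq [DecidableEq S] (w : FreeGroup S) : fgNorm w = w.toWord.length := by
  unfold fgNorm
  congr!

theorem fgNorm_eq' [DecidableEq S] (w : FreeGroup S) : fgNorm w = norm w := fgNorm_eq w

theorem fgNorm_mk {L : List (S × Bool)} (h : IsReduced L) : fgNorm (mk L) = L.length := by
  classical
  rw [fgNorm_eq, toWord_mk, h.reduce_eq]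

/-- Two elements share a longest common prefix. -/
theorem split [DecidableEq S] (x y : FreeGroup S) : ∃ m : FreeGroup S, fgNorm m = cpl x.toWord y.toWord ∧
    fgNorm x = fgNorm m + fgNorm (m⁻¹ * x) ∧ fgNorm y = fgNorm m + fgNorm (m⁻¹ * y) ∧
    fgNorm (x⁻¹ * y) = fgNorm (m⁻¹ * x) + fgNorm (m⁻¹ * y) := by
  obtain ⟨p, a, b, h1, h2, h3, h4⟩ := cpl_split x.toWord y.toWord
  have rx : IsReduced (p ++ a) := h1 ▸ isReduced_toWord
  have ry : IsReduced (p ++ b) := h2 ▸ isReduced_toWord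
  have ra : IsReduced a := (List.isChain_append.1 rx).2.1
  have rb : IsReduced b := (List.isChain_append.1 ry).2.1
  have rp : IsReduced p := (List.isChain_append.1 rx).1
  have ex : x = mk p * mk a := by rw [mul_mk, ← h1, mk_toWord]
  have ey : y = mk p * mk b := by rw [mul_mk, ← h2, mk_toWord]
  have ria : IsReduced (invRev a) := by
    have := isReduced_toWord (x := (mk a)⁻¹)
    rwa [toWord_inv, toWord_mk, ra.reduce_eq] at this
  have rab : IsReduced (invRev a ++ b) := by
    unfold IsReduced
    rw [List.isChain_append]
    refine ⟨ria, rb, ?_⟩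
    intro e he f hf
    cases a with
    | nil => simp [invRev] at he
    | cons a0 a =>
      have he : e = (a0.1, !a0.2) := by simpa [invRev, eq_comm] using he
      subst he
      have h5 := h4 a0 (by simp) f hf
      intro h6
      by_contra h7
      apply h5
      refine Prod.ext h6 ?_
      cases h : a0.2 <;> cases h' : f.2 <;> simp_all
  refine ⟨mk p, by rw [fgNorm_mk rp, h3], ?_, ?_, ?_⟩
  · rw [fgNorm_eq x, h1, ex, inv_mul_cancel_left, fgNorm_mk rp, fgNorm_mk ra, List.length_append]
  · rw [fgNorm_eq y, h2, ey, inv_mul_cancel_left, fgNorm_mk rp, fgNorm_mk rb, List.length_append]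
  · have : x⁻¹ * y = mk (invRev a ++ b) := by
      rw [ex, ey, ← mul_mk, ← inv_mk]; group
    rw [this, fgNorm_mk rab, ex, ey, inv_mul_cancel_left, inv_mul_cancel_left, fgNorm_mk ra, fgNorm_mk rb,
      List.length_append, invRev_length]

theorem fgNorm_step {x : FreeGroup S} (hx : x ≠ 1) : ∃ z, fgNorm z = 1 ∧ 1 + fgNorm (z⁻¹ * x) = fgNorm x := by
  classical
  have rx := isReduced_toWord (x := x)
  have ex := mk_toWord (x := x)
  cases h : x.toWord with
  | nil => exact absurd (toWord_eq_nil_iff.1 h) hx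
  | cons a l =>
    rw [h] at rx ex
    have ra : IsReduced [a] := by simp
    have rl : IsReduced l := List.IsChain.tail rx
    refine ⟨mk [a], fgNorm_mk ra, ?_⟩
    have : x = mk [a] * mk l := by rw [mul_mk, ← ex]; rfl
    rw [fgNorm_eq x, h, this, inv_mul_cancel_left, fgNorm_mk rl, List.length_cons, add_comm]

theorem fgNorm_inv (x : FreeGroup S) : fgNorm x⁻¹ = fgNorm x := by
  classical
  rw [fgNorm_eq', fgNorm_eq', norm_inv_eq]

theorem fgNorm_one : fgNorm (1 : FreeGroup S) = 0 := by
  classical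
  rw [fgNorm_eq', norm_one]

theorem fgNorm_eq_zero {x : FreeGroup S} : fgNorm x = 0 ↔ x = 1 := by
  classical
  rw [fgNorm_eq', norm_eq_zero]

/-- The word metric of a free group, scaled by `Λ`. -/
def tree (S : Type u) (Λ : ℕ) (hΛ : 0 < Λ) : TreeD (FreeGroup S) where
  d x y := Λ * fgNorm (x⁻¹ * y)
  s := Λ
  spos := hΛ
  self x := by rw [inv_mul_cancel, fgNorm_one, mul_zero]
  eq_of {x y} h := by
    have : fgNorm (x⁻¹ * y) = 0 := by
      rcases Nat.mul_eq_zero.1 h with h | h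
      · omega
      · exact h
    exact inv_mul_eq_one.1 (fgNorm_eq_zero.1 this)
  comm x y := by rw [← fgNorm_inv]; congr 2; group
  tri x y z := by
    classical
    rw [← mul_add]
    refine Nat.mul_le_mul_left _ ?_
    have := norm_mul_le (x⁻¹ * y) (y⁻¹ * z)
    rwa [mul_assoc, mul_inv_cancel_left, ← fgNorm_eq', ← fgNorm_eq', ← fgNorm_eq'] at this
  fp x y z t := by
    classical
    have f : ∀ x y : FreeGroup S, fgNorm (x⁻¹ * y) + 2 * cpl x.toWord y.toWord = fgNorm x + fgNorm y := by
      intro x y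
      obtain ⟨m, h0, h1, h2, h3⟩ := split x y
      omega
    have u := fun x y z : FreeGroup S => cpl_ultra x.toWord y.toWord z.toWord
    have c := fun x y : FreeGroup S => cpl_comm x.toWord y.toWord
    have main : fgNorm (x⁻¹ * z) + fgNorm (y⁻¹ * t) ≤ fgNorm (x⁻¹ * y) + fgNorm (z⁻¹ * t) ∨
        fgNorm (x⁻¹ * z) + fgNorm (y⁻¹ * t) ≤ fgNorm (x⁻¹ * t) + fgNorm (y⁻¹ * z) := by
      have f1 := f x z
      have f2 := f y t
      have f3 := f x y
      have f4 := f z t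
      have f5 := f x t
      have f6 := f y z
      have u1 := u x y z
      have u2 := u x t z
      have u3 := u y x t
      have u4 := u y z t
      rw [c t z] at u2
      rw [c y x] at u3
      omega
    simp only [← mul_add]
    rcases main with h | h
    · exact Or.inl (Nat.mul_le_mul_left _ h)
    · exact Or.inr (Nat.mul_le_mul_left _ h)
  med x y z := by
    classical
    obtain ⟨m, -, h1, h2, h3⟩ := split (y⁻¹ * x) (y⁻¹ * z)
    refine ⟨y * m, ?_⟩
    simp only [← mul_add]
    have e1 : fgNorm (x⁻¹ * (y * m)) = fgNorm (m⁻¹ * (y⁻¹ * x)) := by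
      rw [← fgNorm_inv]; congr 1; group
    have e2 : fgNorm ((y * m)⁻¹ * y) = fgNorm m := by
      rw [← fgNorm_inv]; congr 1; group
    have e3 : y⁻¹ * (y * m) = m := by group
    have e4 : (y * m)⁻¹ * z = m⁻¹ * (y⁻¹ * z) := by group
    have e5 : fgNorm (x⁻¹ * y) = fgNorm (y⁻¹ * x) := by
      rw [← fgNorm_inv]; congr 1; group
    have e6 : (y⁻¹ * x)⁻¹ * (y⁻¹ * z) = x⁻¹ * z := by group
    rw [e1, e2, e3, e4, e5, ← e6, h1, h2, h3]
    refine ⟨?_, ?_, ?_⟩ <;> congr 1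
    · omega
  step {x y} h := by
    obtain ⟨z, h1, h2⟩ := fgNorm_step (x := x⁻¹ * y) (fun e => h (inv_mul_eq_one.1 e))
    refine ⟨x * z, by rw [inv_mul_cancel_left, h1, mul_one], ?_⟩
    rw [← h2, mul_inv_rev, mul_assoc]
    ring

end FreeGroup

/-! ### Axes of relators -/

namespace TreeD
variable {F : Type u} [Group F] {T : TreeD F}

theorem IsAxis.dist {h : F} {γ : ℤ → F} {a : ℕ} (ax : T.IsAxis h γ a) (i : ℤ) (m : ℕ) :
    T.d (γ i) (γ (i + m)) = T.s * m := by
  have h1 := ax.geo i (i + m)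
  have : |i - (i + (m : ℤ))| = m := by rw [sub_add_cancel_left, abs_neg, Nat.abs_cast]
  rw [this] at h1
  exact_mod_cast h1

theorem IsAxis.dist' {h : F} {γ : ℤ → F} {a : ℕ} (ax : T.IsAxis h γ a) {i j : ℤ} {m : ℕ} (e : j = i + m) :
    T.d (γ i) (γ j) = T.s * m := by
  rw [e, ax.dist]

/-- A geodesic is determined on an interval by its values at the endpoints. -/
theorem IsAxis.agree {h h' : F} {γ γ' : ℤ → F} {a a' : ℕ} (ax : T.IsAxis h γ a) (ax' : T.IsAxis h' γ' a')
    {i : ℤ} {m k : ℕ} (e1 : γ i = γ' i) (e2 : γ (i + m) = γ' (i + m)) (hk : k ≤ m) :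
    γ (i + k) = γ' (i + k) := by
  obtain ⟨l, rfl⟩ := Nat.exists_eq_add_of_le hk
  have b1 : T.B (γ i) (γ (i + k)) (γ (i + (k + l : ℕ))) := by
    unfold TreeD.B
    rw [ax.dist, ax.dist, ax.dist' (i := i + k) (m := l) (by push_cast; ring)]; ring
  have b2 : T.B (γ' i) (γ' (i + k)) (γ' (i + (k + l : ℕ))) := by
    unfold TreeD.B
    rw [ax'.dist, ax'.dist, ax'.dist' (i := i + k) (m := l) (by push_cast; ring)]; ring
  rw [← e1, ← e2] at b2
  refine b1.uniq b2 ?_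
  rw [ax.dist, e1, ax'.dist]

theorem IsAxis.unique {h : F} {γ γ' : ℤ → F} {a a' : ℕ} (ax : T.IsAxis h γ a) (ax' : T.IsAxis h γ' a') :
    γ = γ' := by
  have ha : a = a' := by
    have h1 := ax.len
    rw [ax'.len] at h1
    exact (Nat.eq_of_mul_eq_mul_left T.spos h1).symm
  subst ha
  have e : ∀ k : ℤ, γ (k * a) = γ' (k * a) := by
    intro k
    have h1 := ax.zpow k 0
    have h2 := ax'.zpow k 0
    rw [ax.zero, zero_add] at h1
    rw [ax'.zero, zero_add] at h2
    rw [← h1, h2]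
  have ha := ax.pos
  ext i
  -- `i` lies between `-|i| a` and `|i| a`
  set N := i.natAbs with hN
  have e1 := e (-N)
  have e2 := e N
  have b : (N : ℤ) ≤ N * a := by nlinarith
  obtain ⟨k, hk⟩ := Int.eq_ofNat_of_zero_le (a := i - (-N * a)) (by
    rw [neg_mul]; omega)
  have hi : i = -N * a + k := by omega
  rw [hi]
  refine ax.agree ax' (m := 2 * N * a) e1 ?_ ?_
  · have : -(N : ℤ) * a + (2 * N * a : ℕ) = N * a := by push_cast; ring
    rw [this, e2]
  · zify; rw [← hk, neg_mul]
    have : i ≤ N := by omega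
    linarith

theorem IsAxis.rebase (inv : ∀ g x y, T.d (g * x) (g * y) = T.d x y) {h : F} {γ : ℤ → F} {a : ℕ} (ax : T.IsAxis h γ a) (i : ℤ) :
    T.IsAxis ((γ i)⁻¹ * h * γ i) (fun k => (γ i)⁻¹ * γ (i + k)) a where
  geo j k := by rw [inv, ax.geo]; congr 2; ring
  tr k := by
    rw [mul_assoc, mul_assoc, mul_inv_cancel_left, ax.tr]; congr 2; ring
  pos := ax.pos
  zero := by rw [add_zero, inv_mul_cancel]

theorem IsAxis.flip {h : F} {γ : ℤ → F} {a : ℕ} (ax : T.IsAxis h γ a) :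
    T.IsAxis h⁻¹ (fun k => γ (-k)) a where
  geo j k := by rw [ax.geo, ← abs_neg]; congr 2; ring
  tr k := by
    have := ax.tr (-(k + a))
    rw [inv_mul_eq_iff_eq_mul, this]; congr 1; ring
  pos := ax.pos
  zero := by rw [neg_zero, ax.zero]

end TreeD

namespace FreeGroup
variable {S : Type u}

/-- A set of nontrivial cyclically reduced elements closed under inverses and cyclic permutations. -/
structure Sym (P : Set (FreeGroup S)) : Prop where
  ne : ∀ r ∈ P, r ≠ 1
  cyc : ∀ r ∈ P, fgNorm (r * r) = 2 * fgNorm r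
  inv : ∀ r ∈ P, r⁻¹ ∈ P
  perm : ∀ r ∈ P, ∀ r', IsCyclicPerm r r' → r' ∈ P

section
variable {Λ : ℕ} {hΛ : 0 < Λ}

theorem tree_inv (g x y : FreeGroup S) : (tree S Λ hΛ).d (g * x) (g * y) = (tree S Λ hΛ).d x y := by
  simp only [tree, mul_inv_rev, mul_assoc, inv_mul_cancel_left]

theorem tree_d (x y : FreeGroup S) : (tree S Λ hΛ).d x y = Λ * fgNorm (x⁻¹ * y) := rfl

theorem norm_ax {h : FreeGroup S} {γ : ℤ → FreeGroup S} {a : ℕ} (ax : (tree S Λ hΛ).IsAxis h γ a)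
    {i j : ℤ} {m : ℕ} (e : j = i + m) : fgNorm ((γ i)⁻¹ * γ j) = m := by
  have := ax.dist' e
  rw [tree_d] at this
  exact Nat.eq_of_mul_eq_mul_left hΛ this

theorem norm_gen {h : FreeGroup S} {γ : ℤ → FreeGroup S} {a : ℕ} (ax : (tree S Λ hΛ).IsAxis h γ a) :
    fgNorm h = a := by
  have := ax.len
  rw [tree_d, inv_one, one_mul] at this
  exact Nat.eq_of_mul_eq_mul_left hΛ this

variable {P : Set (FreeGroup S)}

theorem Sym.axis (hP : Sym P) {h : FreeGroup S} (hh : h ∈ P) : ∃ γ a, (tree S Λ hΛ).IsAxis h γ a := by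
  obtain ⟨γ, a, ax, -⟩ := (tree S Λ hΛ).exists_axis tree_inv (hP.ne h hh) (by
    rw [tree_d, tree_d, inv_one, one_mul, one_mul, hP.cyc h hh]; ring)
  exact ⟨γ, a, ax⟩

/-- Reading the relator from another vertex of its axis gives a cyclic permutation. -/
theorem Sym.rebase (hP : Sym P) {h : FreeGroup S} (hh : h ∈ P) {γ : ℤ → FreeGroup S} {a : ℕ}
    (ax : (tree S Λ hΛ).IsAxis h γ a) (i : ℤ) : (γ i)⁻¹ * h * γ i ∈ P := by
  have ha : (0 : ℤ) < a := by exact_mod_cast ax.pos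
  obtain ⟨j, hj⟩ := Int.eq_ofNat_of_zero_le (Int.emod_nonneg i ha.ne')
  have hj2 := Int.emod_lt_of_pos i ha
  have hi : γ i = h ^ (i / a) * γ j := by
    rw [ax.zpow]; congr 1; rw [← hj]; have := Int.emod_add_mul_ediv i a; linarith
  have e : (γ i)⁻¹ * h * γ i = (γ j)⁻¹ * h * γ j := by
    rw [hi]; group
  rw [e]
  have hja : j < a := by omega
  obtain ⟨l, hl⟩ := Nat.exists_eq_add_of_lt hja
  have e2 : h = γ a := by have := ax.tr 0; rwa [ax.zero, mul_one, zero_add] at this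
  have n1 : fgNorm (γ j) = j := by
    have := norm_ax ax (i := 0) (j := j) (m := j) (by ring)
    rwa [ax.zero, inv_one, one_mul] at this
  have n2 : fgNorm ((γ j)⁻¹ * h) = l + 1 := by
    rw [e2]; exact norm_ax ax (by rw [hl]; push_cast; ring)
  have n3 : fgNorm ((γ j)⁻¹ * h * γ j) = a := by
    rw [mul_assoc, ax.tr]; exact norm_ax ax rfl
  refine hP.perm h hh _ ⟨γ j, (γ j)⁻¹ * h, by group, ?_, rfl, ?_⟩
  · rw [norm_gen ax, n1, n2]; omega
  · rw [n3, n1, n2]; omega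

/-- The translate by `x` of the axis `γ` of `h` can be read from any of its points `p` in the
direction of any other point `q`. -/
theorem Sym.read (hP : Sym P) {h : FreeGroup S} (hh : h ∈ P) {γ : ℤ → FreeGroup S} {a : ℕ}
    (ax : (tree S Λ hΛ).IsAxis h γ a) {x p q : FreeGroup S} (hp : p ∈ x • Set.range γ)
    (hq : q ∈ x • Set.range γ) :
    ∃ h' ∈ P, ∃ γ', (tree S Λ hΛ).IsAxis h' γ' a ∧ x • Set.range γ = p • Set.range γ' ∧
      (x * h * x⁻¹ = p * h' * p⁻¹ ∨ (x * h * x⁻¹)⁻¹ = p * h' * p⁻¹) ∧ ∃ m : ℕ, q = p * γ' m := by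
  obtain ⟨_, ⟨i, rfl⟩, rfl⟩ := hp
  obtain ⟨_, ⟨j, rfl⟩, rfl⟩ := hq
  simp only [smul_eq_mul]
  have ax' := ax.rebase tree_inv i
  have m' := hP.rebase hh ax i
  have rg : x • Set.range γ = (x * γ i) • Set.range fun k => (γ i)⁻¹ * γ (i + k) := by
    ext z
    constructor
    · rintro ⟨_, ⟨k, rfl⟩, rfl⟩
      exact ⟨_, ⟨k - i, rfl⟩, by simp⟩
    · rintro ⟨_, ⟨k, rfl⟩, rfl⟩
      exact ⟨_, ⟨i + k, rfl⟩, by simp⟩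
  rcases le_total i j with h1 | h1
  · obtain ⟨m, rfl⟩ := Int.le.dest h1
    exact ⟨_, m', _, ax', rg, Or.inl (by group), m, by group⟩
  · obtain ⟨m, hm⟩ := Int.le.dest h1
    refine ⟨_, hP.inv _ m', _, ax'.flip, ?_, Or.inr (by group), m, ?_⟩
    · rw [rg]
      congr 1
      ext z
      constructor
      · rintro ⟨k, rfl⟩; exact ⟨-k, by simp⟩
      · rintro ⟨k, rfl⟩; exact ⟨-k, rfl⟩
    · have : i + -(m : ℤ) = j := by omega
      rw [this]; group

/-- Two relators whose axes through `1` agree up to time `m` have a common prefix. -/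
theorem common {h h' : FreeGroup S} {γ γ' : ℤ → FreeGroup S} {a a' : ℕ}
    (ax : (tree S Λ hΛ).IsAxis h γ a) (ax' : (tree S Λ hΛ).IsAxis h' γ' a') {m k : ℕ}
    (e : γ m = γ' m) (km : k ≤ m) (ka : k ≤ a) (ka' : k ≤ a') :
    fgNorm (γ k) = k ∧ FGPrefix (γ k) h ∧ FGPrefix (γ k) h' := by
  have e1 : γ k = γ' k := by
    have := ax.agree ax' (i := 0) (m := m) (k := k) (by rw [ax.zero, ax'.zero]) (by simpa using e) km
    simpa using this
  have pre : ∀ {h : FreeGroup S} {γ : ℤ → FreeGroup S} {a : ℕ}, (tree S Λ hΛ).IsAxis h γ a → k ≤ a →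
      fgNorm (γ k) = k ∧ FGPrefix (γ k) h := by
    intro h γ a ax ka
    have n1 : fgNorm (γ k) = k := by
      have := norm_ax ax (i := 0) (j := k) (m := k) (by ring)
      rwa [ax.zero, inv_one, one_mul] at this
    have e2 : h = γ a := by have := ax.tr 0; rwa [ax.zero, mul_one, zero_add] at this
    refine ⟨n1, ?_⟩
    obtain ⟨l, rfl⟩ := Nat.exists_eq_add_of_le ka
    unfold FGPrefix
    rw [n1, norm_gen ax]
    rw [e2, norm_ax ax (m := l) (by push_cast; ring)]
  refine ⟨(pre ax ka).1, (pre ax ka).2, ?_⟩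
  rw [e1]
  exact (pre ax' ka').2

end
end FreeGroup

/-! ### The rotations of a small cancellation presentation -/

namespace FreeGroup
variable {S : Type u}

/-- The relators together with the letters that are not the first letter of any relator. The latter
have axes of their own, so that every edge of the Cayley tree lies on an axis. -/
def full (R : Set (FreeGroup S)) : Set (FreeGroup S) := R ∪ {h | fgNorm h = 1 ∧ ∀ r ∈ R, ¬ FGPrefix h r}

variable {R : Set (FreeGroup S)}

theorem letter {h : FreeGroup S} (hh : fgNorm h = 1) : ∃ a, h = mk [a] := by
  classical
  rw [fgNorm_eq, List.length_eq_one_iff] at hh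
  obtain ⟨a, ha⟩ := hh
  exact ⟨a, by rw [← ha, mk_toWord]⟩

/-- The axis of `h` starts with the first letter of `h`. -/
theorem first_letter {Λ : ℕ} {hΛ : 0 < Λ} {h p : FreeGroup S} {γ : ℤ → FreeGroup S} {a : ℕ}
    (ax : (tree S Λ hΛ).IsAxis h γ a) (h1 : fgNorm p = 1) (pre : FGPrefix p h) : γ 1 = p := by
  have e2 : h = γ a := by have := ax.tr 0; rwa [ax.zero, mul_one, zero_add] at this
  obtain ⟨b, hb⟩ := Nat.exists_eq_add_of_lt ax.pos
  have d1 := ax.dist' (i := 0) (j := 1) (m := 1) (by simp)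
  have d2 := ax.dist' (i := 1) (j := a) (m := b) (by rw [hb]; push_cast; ring)
  rw [ax.zero] at d1
  rw [← e2] at d2
  have dp : (tree S Λ hΛ).d 1 p = (tree S Λ hΛ).s * 1 := by
    rw [tree_d, inv_one]
    simp only [one_mul]
    rw [h1]; rfl
  have b1 : (tree S Λ hΛ).B 1 p h := by
    unfold TreeD.B
    unfold FGPrefix at pre
    rw [tree_d, tree_d, tree_d, inv_one]
    simp only [one_mul]
    rw [pre]; ring
  have b2 : (tree S Λ hΛ).B 1 (γ 1) h := by
    unfold TreeD.B
    rw [d1, d2, ax.len, hb]; ring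
  exact b2.uniq b1 (d1.trans dp.symm)

theorem full_sym (hR : Sym R) : Sym (full R) where
  ne := by
    rintro r (hr | ⟨h1, -⟩)
    · exact hR.ne r hr
    · rintro rfl; rw [fgNorm_one] at h1; omega
  cyc := by
    rintro r (hr | ⟨h1, -⟩)
    · exact hR.cyc r hr
    · obtain ⟨a, rfl⟩ := letter h1
      rw [h1, mul_mk, fgNorm_mk (by simp [IsReduced])]; rfl
  inv := by
    rintro r (hr | ⟨h1, h2⟩)
    · exact Or.inl (hR.inv r hr)
    · refine Or.inr ⟨by rw [fgNorm_inv, h1], fun t ht hp => ?_⟩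
      -- if `t = r⁻¹ * v` then the inverse of the cyclic permutation `v * r⁻¹` starts with `r`
      unfold FGPrefix at hp
      rw [fgNorm_inv, h1, inv_inv] at hp
      obtain ⟨γ, a, ax⟩ := hR.axis (Λ := 1) (hΛ := one_pos) ht
      have ha := norm_gen ax
      have n1 : fgNorm (r * t * r⁻¹) = a := by
        have e : γ 1 = r⁻¹ := first_letter ax (by rw [fgNorm_inv, h1]) (by
          unfold FGPrefix; rw [fgNorm_inv, h1, inv_inv, hp])
        have e' : r = (γ 1)⁻¹ := by rw [e, inv_inv]
        rw [e', inv_inv, mul_assoc, ax.tr, norm_ax ax rfl]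
      have c : IsCyclicPerm t (r * t * r⁻¹) := ⟨r⁻¹, r * t, by group, by
        rw [fgNorm_inv, h1, hp], rfl, by rw [n1, fgNorm_inv, h1]; omega⟩
      refine h2 _ (hR.inv _ (hR.perm t ht _ c)) ?_
      unfold FGPrefix
      have : r⁻¹ * (r * t * r⁻¹)⁻¹ = (r * t)⁻¹ := by group
      rw [this, fgNorm_inv, fgNorm_inv, n1, h1]; omega
  perm := by
    rintro r (hr | ⟨h1, h2⟩) r' hr'
    · exact Or.inl (hR.perm r hr r' hr')
    · have : r' = r := by
        obtain ⟨w, v, rfl, e1, rfl, e2⟩ := hr'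
        rw [h1] at e1
        rcases Nat.eq_zero_or_pos (fgNorm w) with h | h
        · rw [fgNorm_eq_zero.1 h]; simp
        · have : fgNorm v = 0 := by omega
          rw [fgNorm_eq_zero.1 this]; simp
      rw [this]; exact Or.inr ⟨h1, h2⟩

/-- Common prefixes of distinct elements of `full R` are shorter than both and shorter than `L / Λ`. -/
theorem full_piece {Λ L : ℕ} (hΛ : 0 < Λ) (hL : ∀ r ∈ R, L ≤ fgNorm r)
    (hp : ∀ q, IsPiece R q → Λ * fgNorm q < L) {h h' q : FreeGroup S} (hh : h ∈ full R)
    (hh' : h' ∈ full R) (ne : h ≠ h') (q1 : q ≠ 1) (p1 : FGPrefix q h) (p2 : FGPrefix q h') :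
    Λ * fgNorm q < L ∧ fgNorm q < fgNorm h ∧ fgNorm q < fgNorm h' := by
  have q0 : fgNorm q ≠ 0 := fun e => q1 (fgNorm_eq_zero.1 e)
  have lt : ∀ {h}, FGPrefix q h → fgNorm h = 1 → q = h := by
    intro h p e
    unfold FGPrefix at p
    have : fgNorm (q⁻¹ * h) = 0 := by omega
    exact inv_mul_eq_one.1 (fgNorm_eq_zero.1 this)
  rcases hh with hh | ⟨e1, e2⟩
  · rcases hh' with hh' | ⟨e1, e2⟩
    · have := hp q ⟨q1, h, hh, h', hh', ne, p1, p2⟩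
      have h1 := hL h hh
      have h2 := hL h' hh'
      have : fgNorm q ≤ Λ * fgNorm q := Nat.le_mul_of_pos_left _ hΛ
      omega
    · exact absurd (lt p2 e1 ▸ p1) (e2 h hh)
  · rcases hh' with hh' | ⟨e1', -⟩
    · exact absurd (lt p1 e1 ▸ p2) (e2 h' hh')
    · exact absurd ((lt p1 e1).symm.trans (lt p2 e1')) ne

section
variable (R) (Λ : ℕ) (hΛ : 0 < Λ)

/-- The translates of the axes of the elements of `full R`. -/
def axes : Set (Set (FreeGroup S)) :=
  {A | ∃ h ∈ full R, ∃ (γ : ℤ → FreeGroup S) (a : ℕ) (x : FreeGroup S),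
    (tree S Λ hΛ).IsAxis h γ a ∧ A = x • Set.range γ}

/-- `g` is a conjugate of a relator, of axis `A` and translation length `n`. -/
def IsRot (g : FreeGroup S) (A : Set (FreeGroup S)) (n : ℕ) : Prop :=
  ∃ h ∈ R, ∃ (γ : ℤ → FreeGroup S) (a : ℕ) (x : FreeGroup S),
    (tree S Λ hΛ).IsAxis h γ a ∧ A = x • Set.range γ ∧ g = x * h * x⁻¹ ∧ n = Λ * a

end

/-- The action of the free group on its Cayley tree, rotating about the axes of relators. Edges have
length `Λ` and `u = L` bounds the length of relators from below, so that a piece has tree length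
less than `u`, and a relator translates its axis by at least `Λ * u`. -/
def setup (hR : Sym R) {Λ L M : ℕ} (hΛ : 1000 ≤ Λ) (hM : 40 * (M + 2) ≤ Λ) (L0 : 0 < L)
    (hL : ∀ r ∈ R, L ≤ fgNorm r) (hp : ∀ q, IsPiece R q → Λ * fgNorm q < L) : Setup (FreeGroup S) where
  toTreeD := tree S Λ (by omega)
  inv := tree_inv
  u := L
  Lam := Λ
  upos := L0
  big := hΛ
  M := M
  hM := hM
  lines := axes R Λ (by omega)
  param := by
    rintro A ⟨h, hh, γ, a, x, ax, rfl⟩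
    refine ⟨fun i => x * γ i, fun i j => ?_, ?_⟩
    · rw [tree_inv, ax.geo]
    · ext z
      constructor
      · rintro ⟨i, rfl⟩; exact ⟨_, ⟨i, rfl⟩, rfl⟩
      · rintro ⟨_, ⟨i, rfl⟩, rfl⟩; exact ⟨i, rfl⟩
  smul_line := by
    rintro g A ⟨h, hh, γ, a, x, ax, rfl⟩
    exact ⟨h, hh, γ, a, g * x, ax, by rw [mul_smul]⟩
  ov := by
    rintro A ⟨h, hh, γ, a, x, ax, rfl⟩ B ⟨h', hh', γ', a', x', ax', rfl⟩ ne p hpA hpB q hqA hqB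
    have hS := full_sym hR
    obtain ⟨k, kk, δ, bx, e1, -, m, rfl⟩ := hS.read hh ax hpA hqA
    obtain ⟨k', kk', δ', bx', e1', -, m', e⟩ := hS.read hh' ax' hpB hqB
    rw [e1, e1'] at ne
    have e := mul_left_cancel e
    have nm : ∀ {h : FreeGroup S} {γ : ℤ → FreeGroup S} {a : ℕ} (m : ℕ),
        (tree S Λ (by omega)).IsAxis h γ a → fgNorm (γ m) = m := by
      intro h γ a m ax
      have := norm_ax ax (i := 0) (j := m) (m := m) (by ring)
      rwa [ax.zero, inv_one, one_mul] at this
    have mm : m' = m := by rw [← nm m bx, e, nm m' bx']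
    subst mm
    by_cases kne : k = k'
    · subst kne
      exact absurd (by rw [bx.unique bx']) ne
    rw [tree_d, inv_mul_cancel_left, nm m' bx]
    by_cases m0 : m' = 0
    · subst m0; simpa using L0
    set t := min m' (min a a') with ht
    have t0 : 0 < t := by
      have := bx.pos
      have := bx'.pos
      omega
    obtain ⟨c1, c2, c3⟩ := common bx bx' (k := t) e (by omega) (by omega) (by omega)
    obtain ⟨d1, d2, d3⟩ := full_piece (by omega) hL hp kk kk' kne (q := δ t) (by
      intro e; rw [e, fgNorm_one] at c1; omega) c2 c3
    rw [c1, norm_gen bx] at d2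
    rw [c1, norm_gen bx'] at d3
    have : t = m' := by omega
    rwa [c1, this] at d1
  cov := by
    intro p q hpq
    have h1 : fgNorm (p⁻¹ * q) = 1 := by
      rw [tree_d] at hpq
      have : Λ * fgNorm (p⁻¹ * q) = Λ * 1 := by rw [hpq, mul_one]; rfl
      exact Nat.eq_of_mul_eq_mul_left (by omega) this
    have key : ∀ {h : FreeGroup S}, h ∈ full R → FGPrefix (p⁻¹ * q) h →
        ∃ A ∈ axes R Λ (by omega), p ∈ A ∧ q ∈ A := by
      intro h hh pre
      obtain ⟨γ, a, ax⟩ := (full_sym hR).axis (Λ := Λ) (hΛ := by omega) hh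
      refine ⟨_, ⟨h, hh, γ, a, p, ax, rfl⟩, ⟨_, ⟨0, ax.zero⟩, by simp⟩, ⟨p⁻¹ * q, ⟨1, ?_⟩, by simp⟩⟩
      exact first_letter ax h1 pre
    by_cases ex : ∃ r ∈ R, FGPrefix (p⁻¹ * q) r
    · obtain ⟨r, hr, pre⟩ := ex
      exact key (Or.inl hr) pre
    · push Not at ex
      refine key (h := p⁻¹ * q) (Or.inr ⟨h1, ex⟩) ?_
      unfold FGPrefix
      rw [inv_mul_cancel, fgNorm_one, add_zero]
  Rot := IsRot R Λ (by omega)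
  rot_line := by
    rintro g A n ⟨h, hh, γ, a, x, ax, rfl, -, -⟩
    exact ⟨h, Or.inl hh, γ, a, x, ax, rfl⟩
  rot_tr := by
    rintro g A n ⟨h, hh, γ, a, x, ax, rfl, rfl, rfl⟩
    refine ⟨fun i => x * γ i, fun i j => ?_, ?_, a, rfl, fun i => ?_⟩
    · rw [tree_inv, ax.geo]
    · ext z
      constructor
      · rintro ⟨i, rfl⟩; exact ⟨_, ⟨i, rfl⟩, rfl⟩
      · rintro ⟨_, ⟨i, rfl⟩, rfl⟩; exact ⟨i, rfl⟩
    · beta_reduce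
      rw [← ax.tr]; group
  rot_len := by
    rintro g A n ⟨h, hh, γ, a, x, ax, rfl, rfl, rfl⟩
    rw [← norm_gen ax]
    exact Nat.mul_le_mul_left _ (hL h hh)
  rot_conj := by
    rintro g A n f ⟨h, hh, γ, a, x, ax, rfl, rfl, rfl⟩
    exact ⟨h, hh, γ, a, f * x, ax, by rw [mul_smul], by group, rfl⟩
  rot_inv := by
    rintro g A n ⟨h, hh, γ, a, x, ax, rfl, rfl, rfl⟩
    refine ⟨h⁻¹, hR.inv h hh, _, a, x, ax.flip, ?_, by group, rfl⟩
    congr 1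
    ext z
    constructor
    · rintro ⟨k, rfl⟩; exact ⟨-k, by simp⟩
    · rintro ⟨k, rfl⟩; exact ⟨-k, rfl⟩
  rot_uniq := by
    rintro g g' A n n' ⟨h, hh, γ, a, x, ax, rfl, rfl, rfl⟩ ⟨h', hh', γ', a', x', ax', eA, rfl, rfl⟩
    have hpA : x * γ 0 ∈ x • Set.range γ := ⟨_, ⟨0, rfl⟩, rfl⟩
    have hqA : x * γ a ∈ x • Set.range γ := ⟨_, ⟨a, rfl⟩, rfl⟩
    have hpB := eA ▸ hpA
    have hqB := eA ▸ hqA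
    obtain ⟨k, kk, δ, bx, -, r, m, e0⟩ := hR.read hh ax hpA hqA
    obtain ⟨k', kk', δ', bx', -, r', m', e⟩ := hR.read hh' ax' hpB hqB
    have nm : ∀ {h : FreeGroup S} {γ : ℤ → FreeGroup S} {a : ℕ} (m : ℕ),
        (tree S Λ (by omega)).IsAxis h γ a → fgNorm (γ m) = m := by
      intro h γ a m ax
      have := norm_ax ax (i := 0) (j := m) (m := m) (by ring)
      rwa [ax.zero, inv_one, one_mul] at this
    have ma : m = a := by
      rw [← nm m bx, ← norm_ax ax (i := 0) (j := a) (m := a) (by ring)]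
      congr 1
      have : δ m = (x * γ 0)⁻¹ * (x * γ a) := by rw [e0]; group
      rw [this]; group
    rw [e0] at e
    have e := mul_left_cancel e
    have mm : m' = m := by rw [← nm m bx, e, nm m' bx']
    subst mm
    have kk2 : k' = k := by
      by_contra kne
      set t := min a a' with ht
      have t0 : 0 < t := by
        have := bx.pos
        have := bx'.pos
        omega
      obtain ⟨c1, c2, c3⟩ := common bx bx' (k := t) e (by omega) (by omega) (by omega)
      obtain ⟨d1, d2, d3⟩ := full_piece (by omega) hL hp (Or.inl kk) (Or.inl kk') (Ne.symm kne) (q := δ t) (by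
        intro e; rw [e, fgNorm_one] at c1; omega) c2 c3
      rw [c1, norm_gen bx] at d2
      rw [c1, norm_gen bx'] at d3
      omega
    subst kk2
    rcases r with r | r <;> rcases r' with r' | r' <;> rw [← r] at r'
    · exact Or.inl r'
    · right; rw [← r', inv_inv]
    · exact Or.inr r'
    · left; exact inv_injective r'
  tf f hf := by
    have : f ^ 2 = 1 ^ 2 := by rw [pow_two, hf, one_pow]
    exact pow_left_injective (by norm_num) this

/-- The rotations are the conjugates of the relators. -/
theorem setup_K (hR : Sym R) {Λ L M : ℕ} (hΛ : 1000 ≤ Λ) (hM : 40 * (M + 2) ≤ Λ) (L0 : 0 < L)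
    (hL : ∀ r ∈ R, L ≤ fgNorm r) (hp : ∀ q, IsPiece R q → Λ * fgNorm q < L) :
    (setup hR hΛ hM L0 hL hp).K = Subgroup.normalClosure R := by
  unfold Setup.K Subgroup.normalClosure
  congr 1
  ext g
  rw [Group.mem_conjugatesOfSet_iff]
  constructor
  · rintro ⟨A, n, h, hh, γ, a, x, ax, rfl, rfl, rfl⟩
    exact ⟨h, hh, isConj_iff.2 ⟨x, rfl⟩⟩
  · rintro ⟨h, hh, c⟩
    obtain ⟨x, rfl⟩ := isConj_iff.1 c
    obtain ⟨γ, a, ax⟩ := hR.axis (Λ := Λ) (hΛ := by omega) hh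
    exact ⟨_, _, h, hh, γ, a, x, ax, rfl, rfl, rfl⟩

end FreeGroup

/-- classical `C''(λ)`-small cancellation groups have uniform
uniform exponential growth with a universal growth constant. -/
theorem classical_small_cancellation_uueg :
    ∃ ξ lam₀ : ℝ, 0 < ξ ∧ 0 < lam₀ ∧
      ∀ lam : ℝ, 0 < lam → lam ≤ lam₀ →
      ∀ (S : Type u) (R : Set (FreeGroup S)),
        (∀ r ∈ R, r ≠ 1) →
        (∀ r ∈ R, fgNorm (r * r) = 2 * fgNorm r) →
        (∀ r ∈ R, r⁻¹ ∈ R) →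
        (∀ r ∈ R, ∀ r' : FreeGroup S, IsCyclicPerm r r' → r' ∈ R) →
        (∀ q : FreeGroup S, IsPiece R q →
          (fgNorm q : ℝ) < lam * sInf ((fun r : FreeGroup S => (fgNorm r : ℝ)) '' R)) →
        UUEG ξ (FreeGroup S ⧸ Subgroup.normalClosure R) := by
  -- `Θ` bounds the length of chains of cost `61`, and an element is loxodromic if its powers grow with
  -- slope `c`. Without such elements, distances between `1, u` and their images exceed that of
  -- `1` and `u` by at most `E`, and the line found by `Setup.apex` is moved within `E1` and `E2` of
  -- the cap, which itself must be large compared to `E1 + E2`.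
  obtain ⟨Θ, hΘ⟩ := exists_nat_ge (Real.exp 61)
  set c : ℝ := 10 * Θ with hc
  set E : ℝ := 2 * c + 50 with hE
  set E1 : ℝ := 24 + E with hE1
  set E2 : ℝ := 41 + 2 * E with hE2
  obtain ⟨κ, hκ⟩ := exists_nat_ge (Real.exp (E1 + E2 + 4))
  obtain ⟨M0, hM0⟩ := exists_nat_ge (Real.exp (E1 + E2 + 2 * κ + 4))
  set M := M0 + 2 * κ + 1 with hM
  set Λ := 40 * (M + 2) + 1000 + 1000 * Θ with hΛ
  have Λ0 : (0 : ℝ) < Λ := by rw [hΛ]; positivity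
  refine ⟨Real.log 2 / 168, 1 / Λ, by positivity, by positivity, ?_⟩
  intro lam l0 l1 S R r1 r2 r3 r4 r5
  have hR : FreeGroup.Sym R := ⟨r1, r2, r3, r4⟩
  -- `L` is the length of a shortest relator, and arbitrary without relators, when `sInf` is `0`.
  obtain ⟨L, L0, hL, hp⟩ : ∃ L : ℕ, 0 < L ∧ (∀ r ∈ R, L ≤ fgNorm r) ∧ ∀ q, IsPiece R q → Λ * fgNorm q < L := by
    rcases R.eq_empty_or_nonempty with rfl | ne
    · refine ⟨1, one_pos, by simp, ?_⟩
      rintro q ⟨-, r, hr, -⟩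
      exact absurd hr (Set.notMem_empty r)
    · obtain ⟨r0, h0, hmin⟩ := exists_minimalFor_of_wellFoundedLT (· ∈ R) fgNorm ne
      have hmin' : ∀ r ∈ R, fgNorm r0 ≤ fgNorm r := fun r hr => by
        rcases le_total (fgNorm r0) (fgNorm r) with h | h
        · exact h
        · exact hmin hr h
      refine ⟨fgNorm r0, Nat.pos_of_ne_zero fun e => r1 r0 h0 (FreeGroup.fgNorm_eq_zero.1 e), hmin', fun q hq => ?_⟩
      have h1 := r5 q hq
      have h2 : sInf ((fun r : FreeGroup S => (fgNorm r : ℝ)) '' R) ≤ fgNorm r0 :=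
        csInf_le ⟨0, by rintro _ ⟨r, -, rfl⟩; positivity⟩ ⟨r0, h0, rfl⟩
      have h3 : (fgNorm q : ℝ) < 1 / Λ * fgNorm r0 := by
        refine h1.trans_le ((mul_le_mul_of_nonneg_left h2 l0.le).trans ?_)
        gcongr
      rw [one_div, ← div_eq_inv_mul, lt_div_iff₀ Λ0] at h3
      have h4 : ((Λ * fgNorm q : ℕ) : ℝ) < fgNorm r0 := by push_cast; linarith
      exact_mod_cast h4
  have hΘ1 : (62 : ℝ) ≤ Θ := by
    have := Real.add_one_le_exp (61 : ℝ)
    linarith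
  set T := FreeGroup.setup hR (Λ := Λ) (M := M) (by omega) (by omega) L0 hL hp with hT
  have TM : T.M = M := rfl
  have TL : T.Lam = Λ := rfl
  have cap : E1 + E2 + 2 * κ + 4 < T.cap := by
    unfold Setup.cap
    rw [Real.lt_log_iff_exp_lt (by positivity), TM, hM]
    push_cast
    have : (0 : ℝ) ≤ κ := by positivity
    linarith
  have κ0 : (0 : ℝ) ≤ κ := by positivity
  have P : T.Par Θ c := ⟨by linarith, hΘ, by rw [TL]; omega, le_rfl⟩
  exact Setup.uueg (T := T) (π := QuotientGroup.mk' (Subgroup.normalClosure R)) P (by linarith) hE hE1 hE2 hκ cap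
    (by rw [TM]; omega) (QuotientGroup.mk'_surjective _) (by rw [QuotientGroup.ker_mk', hT, FreeGroup.setup_K])
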